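/- Let M = {F = 0} be a germ of an irreducible singular real-analytic Levi-flat hypersurface at 0 ∈ ℂⁿ, n ≥ 2, such that F(z) = Re(z₁² + … + zₙ²) + H(z, z̄), where H is a germ of real-analytic function with H(z, z̄) = O(|z|³) and H(z, z̄) = conj(H(z̄, z)). Then there exist a germ of volume-preserving biholomorphism φ : (ℂⁿ,0) → (ℂⁿ,0) and a germ of automorphism ψ : (ℂ,0) → (ℂ,0) such that φ(M) = {Re(ψ(z₁² + … + zₙ²)) = 0} as germs of sets at 0. -/

import Mathlib

/-!
Write `q(z) = z₁² + ⋯ + zₙ²` (`sqs`) and let `A(z, w)` be the polarization of `F`, a holomorphic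
germ with `F(z) = A(z, z̄)` (`exists_polarization`); its two-jet is `(q(z) + q(w)) / 2`.

**Step 1: a holomorphic first integral.**  A parametric Morse lemma gives coordinates, fibred over
the `z`-space, in which `A = 0` is the quadric cone `q(Z) + q(W) = 0` (`exists_coneChart`). An
identity theorem on this cone (`cone_identity`, valid since `n ≥ 2`) spreads the Levi condition
from the real points `w = z̄` to the whole complexified hypersurface (`ConeChart.leviE_eq_zero`).
Flatness then says that the conormal `∂_z A` at a point of `A = 0` depends, up to a factor, on `z`
alone. Choosing a point `(0, w₀)` of `A = 0` with `w₀ ≠ 0`, where the hypersurface is a graph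
`w = w₀ + h(z) e`, produces a holomorphic function `h` with `dh` parallel to `∂_z A` all along
`A = 0`, and not `O(|z|³)` because `A` is nondegenerate in `z`
(`ConeChart.exists_first_integral`). Comparing leading terms along a section `(σ(w), w)` of `A = 0`
with `dσ = -i` shows `h = (l/2) q + O(3)` with `l ≠ 0` (`first_integral_jet`), and `h(z)` equals
`h(σ(w))` on `A = 0` (`ConeChart.first_integral_eq`). On `w = z̄` this reads
`h(z) = conj(K(z))` with `K` holomorphic, so that `g = h/l - K/l̄` satisfies `g = q + O(3)` and
`Re g = 0` on `M` (`exists_holomorphic_re`).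

**Step 2: equality of zero sets.**  In Morse coordinates for `g`, the function `F` equals
`Re q + O(3)` and vanishes only where `Re q` does. The set `Re q > 0` is connected for `n ≥ 2`, so
`F` has the sign of `Re q` there and likewise on `Re q < 0`; hence `F = 0` on `Re q = 0`
(`zero_of_re_sqs_zero`, `zero_iff_re_zero`). So `M = {Re g = 0}`.

**Step 3: isochore Morse lemma.**  By the Morse lemma `g = q ∘ φ₁`, and it remains to correct the
Jacobian of `φ₁` by maps preserving `q`. The property `VP p` says that every nonvanishing density
is brought by a map preserving `p` to a function of `p`. It holds for `u v` by averaging over the circle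
action (`VP_mul`), for three variables by rotating two coordinate planes in
turn (`VP_space`), and it passes from `p` to `p + u v` by a radial integration
(`exists_merge`, `VP.step`); hence it holds for `q` in every dimension `n ≥ 2`
(`VP_sqs`). A radial
rescaling turns the remaining function of `q` into `1`; this changes `q` into a function of `q`,
which accounts for `ψ` (`exists_isochore_morse`).
-/

open Filter Topology

/-- Wirtinger derivative ∂/∂z_j of a (complex-valued) function at `p`:
`(1/2)(∂F/∂x_j − i ∂F/∂y_j)`. -/
noncomputable def wirtZ {n : ℕ} (F : (Fin n → ℂ) → ℂ) (j : Fin n) (p : Fin n → ℂ) : ℂ :=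
  (fderiv ℝ F p (Pi.single j 1) - Complex.I * fderiv ℝ F p (Pi.single j Complex.I)) / 2

/-- Wirtinger derivative ∂/∂z̄_j of a (complex-valued) function at `p`:
`(1/2)(∂F/∂x_j + i ∂F/∂y_j)`. -/
noncomputable def wirtZbar {n : ℕ} (F : (Fin n → ℂ) → ℂ) (j : Fin n) (p : Fin n → ℂ) : ℂ :=
  (fderiv ℝ F p (Pi.single j 1) + Complex.I * fderiv ℝ F p (Pi.single j Complex.I)) / 2

/-- The germ `M = {F = 0}` at `0` is Levi-flat: for every point `p` of `M* = M \ Sing(M)`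
near `0` and every `v` with `Σ_j F_{z_j}(p) v_j = 0` one has
`Σ_{i,j} F_{z_i z̄_j}(p) v_i conj(v_j) = 0`. -/
def LeviFlatGerm {n : ℕ} (F : (Fin n → ℂ) → ℝ) : Prop :=
  ∀ᶠ p in 𝓝 (0 : Fin n → ℂ), F p = 0 → fderiv ℝ F p ≠ 0 →
    ∀ v : Fin n → ℂ,
      (∑ j, wirtZ (fun z => ((F z : ℝ) : ℂ)) j p * v j) = 0 →
      (∑ i, ∑ j, wirtZbar (wirtZ (fun z => ((F z : ℝ) : ℂ)) i) j p * v i * (starRingEnd ℂ) (v j)) = 0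

/-- `F` is irreducible in the ring of germs at `0` of real-valued real-analytic functions:
in any factorization `F = g·h` one of the factors is a unit (i.e. does not vanish at `0`). -/
def IrreducibleRGerm {n : ℕ} (F : (Fin n → ℂ) → ℝ) : Prop :=
  ∀ g h : (Fin n → ℂ) → ℝ, AnalyticAt ℝ g 0 → AnalyticAt ℝ h 0 →
    (∀ᶠ z in 𝓝 (0 : Fin n → ℂ), F z = g z * h z) → g 0 ≠ 0 ∨ h 0 ≠ 0

/-- `φ` is a germ of biholomorphism `(ℂⁿ,0) → (ℂⁿ,0)` with local inverse `ι`. -/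
def IsGermBiholo {n : ℕ} (φ ι : (Fin n → ℂ) → (Fin n → ℂ)) : Prop :=
  AnalyticAt ℂ φ 0 ∧ AnalyticAt ℂ ι 0 ∧ φ 0 = 0 ∧ ι 0 = 0 ∧
  (∀ᶠ z in 𝓝 (0 : Fin n → ℂ), ι (φ z) = z) ∧ (∀ᶠ z in 𝓝 (0 : Fin n → ℂ), φ (ι z) = z)

/-- `φ` is volume-preserving (isochore): the determinant of its complex Jacobian is
identically `1` near `0`. -/
def IsVolumePreserving {n : ℕ} (φ : (Fin n → ℂ) → (Fin n → ℂ)) : Prop :=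
  ∀ᶠ z in 𝓝 (0 : Fin n → ℂ), LinearMap.det ((fderiv ℂ φ z).toLinearMap) = 1

/-- `ψ` is a germ of automorphism of `(ℂ,0)`. -/
def IsGermAuto (ψ : ℂ → ℂ) : Prop :=
  AnalyticAt ℂ ψ 0 ∧ ψ 0 = 0 ∧ deriv ψ 0 ≠ 0

/-! ### Analyticity of composition operators -/

section CompOp
variable {E F K : Type*} [NormedAddCommGroup E] [NormedSpace ℂ E]
  [NormedAddCommGroup F] [NormedSpace ℂ F] [TopologicalSpace K] [CompactSpace K]

/-- The multilinear map on `C(K, E)` induced pointwise by a multilinear map on `E`. -/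
noncomputable def cmapMultilinear {k : ℕ} (p : ContinuousMultilinearMap ℂ (fun _ : Fin k => E) F) :
    ContinuousMultilinearMap ℂ (fun _ : Fin k => C(K, E)) C(K, F) :=
  MultilinearMap.mkContinuous
    { toFun := fun Y => ⟨fun t => p (fun i => Y i t), by
        exact p.cont.comp (continuous_pi fun i => (Y i).continuous)⟩
      map_update_add' := by
        intro _ Y i a b
        ext t
        have h : ∀ c : C(K, E), (fun j => Function.update Y i c j t)
            = Function.update (fun j => Y j t) i (c t) := by
          intro c; ext j; by_cases hj : j = i
          · subst hj; simp
          · simp [hj]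
        simp [h]
      map_update_smul' := by
        intro _ Y i a b
        ext t
        have h : ∀ c : C(K, E), (fun j => Function.update Y i c j t)
            = Function.update (fun j => Y j t) i (c t) := by
          intro c; ext j; by_cases hj : j = i
          · subst hj; simp
          · simp [hj]
        simp [h] } ‖p‖ (by
      intro Y
      rw [ContinuousMap.norm_le _ (by positivity)]
      intro t
      refine (p.le_opNorm _).trans ?_
      gcongr with i
      exact (Y i).norm_coe_le_norm t)

theorem cmapMultilinear_apply {k : ℕ} (p : ContinuousMultilinearMap ℂ (fun _ : Fin k => E) F)
    (Y : Fin k → C(K, E)) (t : K) : cmapMultilinear p Y t = p (fun i => Y i t) := rfl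

theorem cmapMultilinear_norm {k : ℕ} (p : ContinuousMultilinearMap ℂ (fun _ : Fin k => E) F) :
    ‖(cmapMultilinear p : ContinuousMultilinearMap ℂ (fun _ : Fin k => C(K, E)) C(K, F))‖ ≤ ‖p‖ :=
  MultilinearMap.mkContinuous_norm_le _ (norm_nonneg _) _

/-- Post-composition with an analytic map is analytic on spaces of continuous functions. -/
theorem exists_comp_op [CompleteSpace F] {f : E → F} {x : E} {p : FormalMultilinearSeries ℂ E F}
    {r : ENNReal} (hf : HasFPowerSeriesOnBall f p x r) :
    ∃ g : C(K, E) → C(K, F), AnalyticOnNhd ℂ g (Metric.eball 0 r) ∧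
      ∀ Y ∈ Metric.eball (0 : C(K, E)) r, ∀ t, g Y t = f (x + Y t) := by
  let P : FormalMultilinearSeries ℂ C(K, E) C(K, F) := fun k => cmapMultilinear (p k)
  have hr : r ≤ P.radius := by
    refine hf.r_le.trans ?_
    refine ENNReal.le_of_forall_nnreal_lt fun s hs => ?_
    obtain ⟨C, -, hC⟩ := p.norm_mul_pow_le_of_lt_radius hs
    refine P.le_radius_of_bound C fun k => le_trans ?_ (hC k)
    gcongr
    exact cmapMultilinear_norm _
  have hP : HasFPowerSeriesOnBall P.sum P 0 P.radius :=
    P.hasFPowerSeriesOnBall (hf.r_pos.trans_le hr)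
  refine ⟨P.sum, (hP.mono hf.r_pos hr).analyticOnNhd, fun Y hY t => ?_⟩
  have h1 := (hP.mono hf.r_pos hr).hasSum hY
  have h2 := (ContinuousMap.evalCLM ℂ (M := F) t).hasSum h1
  have hYt : Y t ∈ Metric.eball (0 : E) r := by
    have : ‖Y t‖ₑ ≤ ‖Y‖ₑ := by
      simpa using ENNReal.ofReal_le_ofReal (Y.norm_coe_le_norm t)
    simp only [Metric.mem_eball, edist_zero_right] at hY ⊢
    exact this.trans_lt hY
  have h3 := hf.hasSum hYt
  have h4 := h2.unique (h3)
  simpa using h4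
end CompOp

/-! ### Integrals depending on a parameter -/

section ParamIntegral
set_option linter.unusedSectionVars false
variable {E F : Type*} [NormedAddCommGroup E] [NormedSpace ℂ E]
  [NormedAddCommGroup F] [NormedSpace ℂ F] [CompleteSpace F]

/-- Integration over `[α, β]` as a continuous linear map on `C([α, β], F)`. -/
noncomputable def iccIntegralCLM {α β : ℝ} (h : α ≤ β) : C(Set.Icc α β, F) →L[ℂ] F :=
  LinearMap.mkContinuous
    { toFun := fun φ => ∫ t in α..β, φ (Set.projIcc α β h t)
      map_add' := by
        intro φ χ
        simp only [ContinuousMap.add_apply]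
        apply intervalIntegral.integral_add
        · exact (φ.continuous.comp continuous_projIcc).intervalIntegrable _ _
        · exact (χ.continuous.comp continuous_projIcc).intervalIntegrable _ _
      map_smul' := by
        intro c φ
        simp } |β - α| (by
    intro φ
    rw [mul_comm]
    refine intervalIntegral.norm_integral_le_of_norm_le_const fun t _ => ?_
    exact φ.norm_coe_le_norm _)

theorem iccIntegralCLM_apply {α β : ℝ} (h : α ≤ β) (φ : C(Set.Icc α β, F)) :
    iccIntegralCLM h φ = ∫ t in α..β, φ (Set.projIcc α β h t) := rfl

/-- Local version of `analyticAt_integral`: near each `τ₀` the integral over a short interval is a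
bounded linear functional applied to a composition operator, which is analytic. -/
theorem analyticAt_integral_local {G : E → ℂ → F} {x₀ : E} {τ₀ : ℝ}
    (hG : AnalyticAt ℂ (fun p : E × ℂ => G p.1 p.2) (x₀, (τ₀ : ℂ))) :
    ∃ ε > 0, ∀ α β : ℝ, α ≤ β → Set.Icc α β ⊆ Metric.ball τ₀ ε →
      AnalyticAt ℂ (fun x => ∫ t in α..β, G x (t : ℂ)) x₀ := by
  obtain ⟨p, r, hp⟩ := hG
  obtain ⟨ε, hε, hεr⟩ : ∃ ε : ℝ, 0 < ε ∧ ENNReal.ofReal ε ≤ r := by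
    obtain ⟨s, hs0, hs⟩ := ENNReal.lt_iff_exists_nnreal_btwn.1 hp.r_pos
    exact ⟨s, by exact_mod_cast hs0, by simpa using hs.le⟩
  have hball : ∀ {H : Type _} [SeminormedAddCommGroup H] (y : H), ‖y‖ < ε →
      y ∈ Metric.eball (0 : H) r := by
    intro H _ y hy
    simp only [Metric.mem_eball, edist_zero_right]
    refine lt_of_lt_of_le ?_ hεr
    rw [← ofReal_norm]
    exact (ENNReal.ofReal_lt_ofReal_iff hε).2 hy
  refine ⟨ε, hε, fun α β hαβ hsub => ?_⟩
  obtain ⟨g, hg, hgf⟩ := exists_comp_op (K := Set.Icc α β) hp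
  let T : C(Set.Icc α β, E × ℂ) := ⟨fun t => (0, ((t : ℝ) : ℂ) - τ₀), by fun_prop⟩
  let c : E →L[ℂ] C(Set.Icc α β, E × ℂ) := LinearMap.mkContinuous
    { toFun := fun x => ContinuousMap.const _ (x, 0)
      map_add' := by intro x y; ext t <;> simp
      map_smul' := by intro a x; ext t <;> simp } 1 (by
        intro x
        rw [ContinuousMap.norm_le _ (by positivity)]
        intro t
        simp [Prod.norm_def])
  let X : E → C(Set.Icc α β, E × ℂ) := fun x => c (x - x₀) + T
  have hX : AnalyticAt ℂ X x₀ := by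
    refine AnalyticAt.add ?_ analyticAt_const
    exact (c.analyticAt _).comp (analyticAt_id.sub analyticAt_const)
  have hXt : ∀ x t, (x₀, (τ₀ : ℂ)) + X x t = (x, ((t : ℝ) : ℂ)) := by
    intro x t
    have : X x t = (x - x₀, 0) + (0, ((t : ℝ) : ℂ) - τ₀) := rfl
    rw [this]; ext <;> simp
  have hX0 : ‖X x₀‖ < ε := by
    rw [ContinuousMap.norm_lt_iff _ hε]
    intro t
    have : X x₀ t = (0, ((t : ℝ) : ℂ) - τ₀) := by
      have : X x₀ t = (x₀ - x₀, 0) + (0, ((t : ℝ) : ℂ) - τ₀) := rfl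
      rw [this]; simp
    rw [this]
    have h1 := hsub t.2
    rw [Metric.mem_ball, dist_eq_norm] at h1
    have h2 : ‖((t : ℝ) : ℂ) - τ₀‖ = ‖(t : ℝ) - τ₀‖ := by
      rw [← Complex.ofReal_sub, Complex.norm_real]
    rw [← h2] at h1
    simpa [Prod.norm_def, hε] using h1
  have hmem : ∀ᶠ x in 𝓝 x₀, ‖X x‖ < ε :=
    hX.continuousAt.norm.eventually_lt_const hX0
  have h1 : AnalyticAt ℂ (fun x => iccIntegralCLM hαβ (g (X x))) x₀ :=
    ((iccIntegralCLM (F := F) hαβ).analyticAt _).fun_comp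
      ((hg _ (hball _ hX0)).fun_comp hX)
  refine h1.congr ?_
  filter_upwards [hmem] with x hx
  rw [iccIntegralCLM_apply]
  apply intervalIntegral.integral_congr
  intro t ht
  rw [Set.uIcc_of_le hαβ] at ht
  simp only
  rw [hgf _ (hball _ hx), hXt, Set.projIcc_of_mem _ ht]

/-- Integrals depending analytically on a parameter are analytic. -/
theorem analyticAt_integral {G : E → ℂ → F} {x₀ : E} {a b : ℝ} (hab : a ≤ b)
    (hG : ∀ t ∈ Set.Icc a b, AnalyticAt ℂ (fun p : E × ℂ => G p.1 p.2) (x₀, (t : ℂ))) :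
    AnalyticAt ℂ (fun x => ∫ t in a..b, G x (t : ℂ)) x₀ := by
  choose! ε hε hloc using fun t (ht : t ∈ Set.Icc a b) => analyticAt_integral_local (hG t ht)
  obtain ⟨t, ht0, htm, ⟨m, hm⟩, hcov⟩ := exists_monotone_Icc_subset_open_cover_Icc hab
    (c := fun i : Set.Icc a b => {s : Set.Icc a b | (s : ℝ) ∈ Metric.ball (i : ℝ) (ε i)})
    (fun i => Metric.isOpen_ball.preimage continuous_subtype_val)
    (fun i _ => Set.mem_iUnion.2 ⟨i, by simpa using hε i i.2⟩)
  have hpiece : ∀ n, AnalyticAt ℂ (fun x => ∫ s in (t n : ℝ)..(t (n+1) : ℝ), G x (s : ℂ)) x₀ := by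
    intro n
    obtain ⟨i, hi⟩ := hcov n
    refine hloc i i.2 _ _ (htm n.le_succ) ?_
    intro s hs
    have hs' : s ∈ Set.Icc a b := ⟨(t n).2.1.trans hs.1, hs.2.trans (t (n+1)).2.2⟩
    exact hi (a := ⟨s, hs'⟩) ⟨hs.1, hs.2⟩
  have hsum : AnalyticAt ℂ (fun x => ∑ n ∈ Finset.range m,
      ∫ s in (t n : ℝ)..(t (n+1) : ℝ), G x (s : ℂ)) x₀ :=
    Finset.analyticAt_fun_sum _ fun n _ => hpiece n
  refine hsum.congr ?_
  have hev : ∀ᶠ x in 𝓝 x₀, ∀ s ∈ Set.Icc a b,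
      AnalyticAt ℂ (fun p : E × ℂ => G p.1 p.2) (x, (s : ℂ)) := by
    refine isCompact_Icc.eventually_forall_of_forall_eventually fun s hs => ?_
    have h1 := (hG s hs).eventually_analyticAt
    have h2 : Tendsto (fun z : E × ℝ => (z.1, (z.2 : ℂ))) (𝓝 (x₀, s)) (𝓝 (x₀, (s : ℂ))) := by
      apply Continuous.tendsto' <;> [fun_prop; rfl]
    exact h2.eventually h1
  filter_upwards [hev] with x hx
  have hcont : ContinuousOn (fun s : ℝ => G x (s : ℂ)) (Set.Icc a b) := by
    intro s hs
    have h1 : ContinuousAt (fun s : ℝ => (x, (s : ℂ))) s := by fun_prop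
    exact ((hx s hs).continuousAt.comp (f := fun s : ℝ => (x, (s : ℂ))) h1).continuousWithinAt
  rw [intervalIntegral.sum_integral_adjacent_intervals (a := fun n => (t n : ℝ))]
  · simp only [ht0, hm m le_rfl]
  · intro k _
    apply ContinuousOn.intervalIntegrable
    rw [Set.uIcc_of_le (Subtype.coe_le_coe.2 (htm k.le_succ))]
    exact hcont.mono (Set.Icc_subset_Icc (t k).2.1 (t (k+1)).2.2)
end ParamIntegral

/-! ### Analytic inverse function theorems -/

section Inverse
variable {E F X Y Z : Type*} [NormedAddCommGroup E] [NormedSpace ℂ E] [CompleteSpace E]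
  [NormedAddCommGroup F] [NormedSpace ℂ F]
  [NormedAddCommGroup X] [NormedSpace ℂ X] [CompleteSpace X]
  [NormedAddCommGroup Y] [NormedSpace ℂ Y] [CompleteSpace Y]
  [NormedAddCommGroup Z] [NormedSpace ℂ Z]

/-- Analytic inverse function theorem. -/
theorem exists_local_inverse {f : E → F} {a : E} (hf : AnalyticAt ℂ f a) (f' : E ≃L[ℂ] F)
    (hf' : fderiv ℂ f a = f') :
    ∃ g : F → E, AnalyticAt ℂ g (f a) ∧ g (f a) = a ∧ (∀ᶠ x in 𝓝 a, g (f x) = x) ∧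
      (∀ᶠ y in 𝓝 (f a), f (g y) = y) := by
  have hs : HasStrictFDerivAt f (f' : E →L[ℂ] F) a := hf' ▸ hf.hasStrictFDerivAt
  let e := hs.toOpenPartialHomeomorph f
  have hea : a ∈ e.source := hs.mem_toOpenPartialHomeomorph_source
  have hcoe : (e : E → F) = f := hs.toOpenPartialHomeomorph_coe
  have hfa : f a ∈ e.target := hs.image_mem_toOpenPartialHomeomorph_target
  refine ⟨e.symm, ?_, ?_, ?_, ?_⟩
  · have := e.analyticAt_symm' (i := f') hea (by rw [hcoe]; exact hf) (by rw [hcoe]; exact hf')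
    rwa [hcoe] at this
  · have := e.left_inv hea
    rwa [hcoe] at this
  · filter_upwards [e.open_source.mem_nhds hea] with x hx
    have := e.left_inv hx
    rwa [hcoe] at this
  · filter_upwards [e.open_target.mem_nhds hfa] with x hx
    have := e.right_inv hx
    rwa [hcoe] at this

theorem exists_local_inverse_id {f : E → E} {a : E} (hf : AnalyticAt ℂ f a)
    (hf' : fderiv ℂ f a = ContinuousLinearMap.id ℂ E) :
    ∃ g : E → E, AnalyticAt ℂ g (f a) ∧ g (f a) = a ∧ (∀ᶠ x in 𝓝 a, g (f x) = x) ∧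
      (∀ᶠ y in 𝓝 (f a), f (g y) = y) :=
  exists_local_inverse hf (ContinuousLinearEquiv.refl ℂ E) (by rw [hf']; rfl)

/-- Analytic inverse function theorem with parameters: if `y ↦ f (x₀, y)` has invertible
derivative at `y₀`, then `f (x, ·)` has a local inverse `g (x, ·)` analytic in both variables. -/
theorem exists_param_inverse {f : X × Y → Z} {x₀ : X} {y₀ : Y} (hf : AnalyticAt ℂ f (x₀, y₀))
    (f' : Y ≃L[ℂ] Z) (hf' : ∀ v, fderiv ℂ f (x₀, y₀) (0, v) = f' v) :
    ∃ g : X × Z → Y, AnalyticAt ℂ g (x₀, f (x₀, y₀)) ∧ g (x₀, f (x₀, y₀)) = y₀ ∧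
      (∀ᶠ p in 𝓝 (x₀, y₀), g (p.1, f p) = p.2) ∧
      (∀ᶠ p in 𝓝 (x₀, f (x₀, y₀)), f (p.1, g p) = p.2) := by
  let D := fderiv ℂ f (x₀, y₀)
  let Φ : X × Y → X × Z := fun p => (p.1, f p)
  have hΦ : AnalyticAt ℂ Φ (x₀, y₀) := analyticAt_fst.prod hf
  have hD : ∀ x y, D (x, y) = D (x, 0) + f' y := by
    intro x y
    rw [← hf' y, ← map_add]; simp
  let L : (X × Y) ≃L[ℂ] (X × Z) := ContinuousLinearEquiv.equivOfInverse
    ((ContinuousLinearMap.fst ℂ X Y).prod D)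
    ((ContinuousLinearMap.fst ℂ X Z).prod ((f'.symm : Z →L[ℂ] Y).comp
      (ContinuousLinearMap.snd ℂ X Z - D.comp ((ContinuousLinearMap.inl ℂ X Y).comp
        (ContinuousLinearMap.fst ℂ X Z)))))
    (by rintro ⟨x, y⟩; simp [hD x y])
    (by rintro ⟨x, z⟩; simp only [ContinuousLinearMap.prod_apply, ContinuousLinearMap.coe_fst', ContinuousLinearMap.coe_comp, Function.comp_apply, sub_apply]; rw [hD]; simp)
  have hL : fderiv ℂ Φ (x₀, y₀) = L := by
    have h1 : HasFDerivAt Φ ((ContinuousLinearMap.fst ℂ X Y).prod D) (x₀, y₀) :=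
      hasFDerivAt_fst.prodMk hf.differentiableAt.hasFDerivAt
    rw [h1.fderiv]; rfl
  obtain ⟨g, hga, hg0, hg1, hg2⟩ := exists_local_inverse hΦ L hL
  have hfst : ∀ᶠ p in 𝓝 (x₀, f (x₀, y₀)), (g p).1 = p.1 ∧ f (g p) = p.2 := by
    filter_upwards [hg2] with p hp
    exact ⟨congrArg Prod.fst hp, congrArg Prod.snd hp⟩
  refine ⟨fun p => (g p).2, ?_, ?_, ?_, ?_⟩
  · exact (analyticAt_snd).fun_comp hga
  · exact congrArg Prod.snd hg0
  · filter_upwards [hg1] with p hp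
    exact congrArg Prod.snd hp
  · filter_upwards [hfst] with p hp
    rw [← hp.1]; exact hp.2

end Inverse

/-! ### Constancy along fibres and uniqueness from totally real points -/

section FiberConst
variable {X Y : Type*} 
  [NormedAddCommGroup X] [NormedSpace ℂ X] [CompleteSpace X]
  [NormedAddCommGroup Y] [NormedSpace ℂ Y] [CompleteSpace Y]

/-- If `A` is a submersion in its second variable at a zero `P` and the derivative of `f`
vanishes along the fibres of `(z, w) ↦ (z, A (z, w))` inside `{A = 0}`, then `f` is constant on
those fibres near `P`. -/
theorem fiber_const {A f : X × Y → ℂ} {P : X × Y} (hA : AnalyticAt ℂ A P)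
    (hf : AnalyticAt ℂ f P) {e : Y} (he : fderiv ℂ A P (0, e) ≠ 0)
    (h : ∀ᶠ p in 𝓝 P, A p = 0 → ∀ u : Y, fderiv ℂ A p (0, u) = 0 → fderiv ℂ f p (0, u) = 0) :
    ∃ N ∈ 𝓝 P, ∀ p ∈ N, ∀ p₂ ∈ N, p.1 = p₂.1 → A p = 0 → A p₂ = 0 → f p = f p₂ := by
  -- straightening: `Ψ` has derivative the identity at `P` and `ℓ ∘ Ψ = A`
  set ℓ := fderiv ℂ A P with hℓ
  set ε : X × Y := (0, (ℓ (0, e))⁻¹ • e) with hε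
  have hℓε : ℓ ε = 1 := by
    have : ε = (ℓ (0, e))⁻¹ • ((0, e) : X × Y) := by simp [hε]
    rw [this, map_smul, smul_eq_mul, inv_mul_cancel₀ he]
  let Ψ : X × Y → X × Y := fun x => x + (A x - ℓ x) • ε
  have hΨ : AnalyticAt ℂ Ψ P :=
    analyticAt_id.add ((hA.sub (ℓ.analyticAt _)).smul analyticAt_const)
  have hΨ' : fderiv ℂ Ψ P = ContinuousLinearMap.id ℂ _ := by
    have h1 : HasFDerivAt Ψ (ContinuousLinearMap.id ℂ _ + (ℓ - ℓ).smulRight ε) P :=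
      (hasFDerivAt_id P).add ((hA.differentiableAt.hasFDerivAt.sub ℓ.hasFDerivAt).smul_const ε)
    rw [h1.fderiv]; ext <;> simp
  have hℓΨ : ∀ x, ℓ (Ψ x) = A x := by
    intro x; simp [Ψ, hℓε]
  have hΨ1 : ∀ x, (Ψ x).1 = x.1 := by intro x; simp [Ψ, hε]
  obtain ⟨G, hG, hGP, hG1, hG2⟩ := exists_local_inverse_id hΨ hΨ'
  have hGc : Tendsto G (𝓝 (Ψ P)) (𝓝 P) := by
    have := hG.continuousAt.tendsto; rwa [hGP] at this
  have hgood : ∀ᶠ y in 𝓝 (Ψ P), Ψ (G y) = y ∧ (A (G y) = 0 → ∀ u : Y,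
      fderiv ℂ A (G y) (0, u) = 0 → fderiv ℂ f (G y) (0, u) = 0) ∧
      AnalyticAt ℂ G y ∧ AnalyticAt ℂ A (G y) ∧ AnalyticAt ℂ f (G y) := by
    filter_upwards [hG2, hGc.eventually h, hG.eventually_analyticAt,
      hGc.eventually hA.eventually_analyticAt, hGc.eventually hf.eventually_analyticAt]
      with y h1 h2 h3 h4 h5
    exact ⟨h1, h2, h3, h4, h5⟩
  obtain ⟨r, hr, hball⟩ := Metric.eventually_nhds_iff_ball.1 hgood
  refine ⟨{x | Ψ x ∈ Metric.ball (Ψ P) r ∧ G (Ψ x) = x}, ?_, ?_⟩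
  · exact (hΨ.continuousAt.eventually (Metric.ball_mem_nhds _ hr)).and hG1
  rintro p ⟨hp, hpG⟩ p' ⟨hp', hpG'⟩ h1 h2 h3
  -- `f ∘ G` is constant on the slice `ball ∩ {first coordinate fixed} ∩ {ℓ = 0}`
  let S : Set (X × Y) := {y | y ∈ Metric.ball (Ψ P) r ∧ y.1 = p.1 ∧ ℓ y = 0}
  have hconv : ∀ y ∈ S, ∀ y' ∈ S, f (G y) = f (G y') := by
    rintro y ⟨hy1, hy2, hy3⟩ y' ⟨hy1', hy2', hy3'⟩
    let γ : ℝ → X × Y := fun t => y + t • (y' - y)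
    have hγb : ∀ t ∈ Set.Icc (0:ℝ) 1, γ t ∈ Metric.ball (Ψ P) r := by
      intro t ht
      exact (convex_ball (Ψ P) r).add_smul_sub_mem hy1 hy1' ht
    have hγℓ : ∀ t, ℓ (γ t) = 0 := by
      intro t; simp [γ, hy3, hy3', ← Complex.coe_smul]
    obtain ⟨u, hu⟩ : ∃ u : Y, y' - y = (0, u) := ⟨(y' - y).2, by ext <;> simp [hy2, hy2']⟩
    have hder : ∀ t ∈ Set.Icc (0:ℝ) 1, HasDerivAt (fun t => f (G (γ t))) 0 t := by
      intro t ht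
      obtain ⟨g1, g2, g3, g4, g5⟩ := hball _ (hγb t ht)
      have hγ' : HasDerivAt γ (y' - y) t := by
        simpa [γ] using ((hasDerivAt_id t).smul_const (y' - y)).const_add y
      have hGd := g3.differentiableAt.hasFDerivAt
      -- the derivative of `G` along the fibre
      have e1 : ∀ᶠ y in 𝓝 (γ t), (G y).1 = y.1 ∧ A (G y) = ℓ y := by
        filter_upwards [Metric.isOpen_ball.mem_nhds (hγb t ht)] with z hz
        have := (hball z hz).1
        constructor
        · rw [← hΨ1 (G z), this]
        · rw [← hℓΨ, this]
      have e2 : (fderiv ℂ G (γ t) (0, u)).1 = 0 := by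
        have k1 : HasFDerivAt (fun y => (G y).1)
          ((ContinuousLinearMap.fst ℂ X Y).comp (fderiv ℂ G (γ t))) (γ t) := hGd.fst
        have k2 : HasFDerivAt (fun y : X × Y => (G y).1) (ContinuousLinearMap.fst ℂ X Y) (γ t) :=
          (hasFDerivAt_fst).congr_of_eventuallyEq (e1.mono fun z hz => hz.1)
        have := DFunLike.congr_fun (k1.unique k2) (0, u)
        simpa using this
      have e3 : fderiv ℂ A (G (γ t)) (fderiv ℂ G (γ t) (0, u)) = 0 := by
        have k1 : HasFDerivAt (fun y => A (G y))
          ((fderiv ℂ A (G (γ t))).comp (fderiv ℂ G (γ t))) (γ t) :=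
          g4.differentiableAt.hasFDerivAt.comp _ hGd
        have k2 : HasFDerivAt (fun y : X × Y => A (G y)) ℓ (γ t) :=
          (ℓ.hasFDerivAt).congr_of_eventuallyEq (e1.mono fun z hz => hz.2)
        have := DFunLike.congr_fun (k1.unique k2) (0, u)
        have hℓu : ℓ (0, u) = 0 := by rw [← hu, map_sub, hy3, hy3', sub_zero]
        simpa [hℓu] using this
      have e4 : fderiv ℂ G (γ t) (0, u) = (0, (fderiv ℂ G (γ t) (0, u)).2) := by
        ext <;> simp [e2]
      have e5 : fderiv ℂ f (G (γ t)) (fderiv ℂ G (γ t) (0, u)) = 0 := by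
        rw [e4]
        refine g2 ?_ _ ?_
        · rw [(e1.self_of_nhds).2, hγℓ]
        · rw [← e4]; exact e3
      have k3 : HasFDerivAt (fun y => f (G y))
          ((fderiv ℂ f (G (γ t))).comp (fderiv ℂ G (γ t))) (γ t) :=
          g5.differentiableAt.hasFDerivAt.comp _ hGd
      have k4 := (k3.restrictScalars ℝ).comp_hasDerivAt t hγ'
      have : ((fderiv ℂ f (G (γ t))).comp (fderiv ℂ G (γ t))) (y' - y) = 0 := by
        rw [hu]; exact e5
      have k5 : HasDerivAt (fun t => f (G (γ t)))
          (((fderiv ℂ f (G (γ t))).comp (fderiv ℂ G (γ t))) (y' - y)) t := k4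
      rwa [this] at k5
    have := constant_of_has_deriv_right_zero (f := fun t => f (G (γ t))) (a := 0) (b := 1)
      (fun t ht => (hder t ht).continuousAt.continuousWithinAt)
      (fun t ht => (hder t (Set.Ico_subset_Icc_self ht)).hasDerivWithinAt) 1 (by simp)
    simpa [γ] using this.symm
  have := hconv (Ψ p) ⟨hp, hΨ1 p, by rw [hℓΨ, h2]⟩ (Ψ p') ⟨hp', by rw [hΨ1, h1], by rw [hℓΨ, h3]⟩
  rwa [hpG, hpG'] at this
end FiberConst

section RealPoints

/-- A holomorphic function vanishing at the real points near a real point vanishes. -/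
theorem eventually_zero_of_real {ι : Type*} [Fintype ι] {f : (ι → ℂ) → ℂ} {x : ι → ℝ}
    (hf : AnalyticAt ℂ f (fun i => (x i : ℂ)))
    (h : ∀ᶠ y in 𝓝 x, f (fun i => (y i : ℂ)) = 0) :
    ∀ᶠ z in 𝓝 (fun i => (x i : ℂ)), f z = 0 := by
  classical
  obtain ⟨r₁, hr₁, hb₁⟩ := Metric.eventually_nhds_iff_ball.1 h
  obtain ⟨r₂, hr₂, hb₂⟩ := Metric.eventually_nhds_iff_ball.1 hf.eventually_analyticAt
  set c : ι → ℂ := fun i => (x i : ℂ) with hc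
  set r := min r₁ r₂ with hr
  have hr0 : 0 < r := lt_min hr₁ hr₂
  have key : ∀ S : Finset ι, ∀ z ∈ Metric.ball c r, (∀ i, i ∉ S → (z i).im = 0) → f z = 0 := by
    intro S
    induction S using Finset.induction_on with
    | empty =>
      intro z hz him
      have hz' : z = fun i => (((z i).re : ℝ) : ℂ) := by
        ext i; apply Complex.ext <;> simp [him i]
      rw [hz']
      apply hb₁
      rw [Metric.mem_ball, dist_pi_lt_iff hr₁]
      intro i
      have h1 : dist (z i) (c i) < r := (dist_le_pi_dist z c i).trans_lt hz
      have h2 : dist ((z i).re) (x i) ≤ dist (z i) (c i) := by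
        rw [dist_eq_norm, dist_eq_norm]
        have := Complex.abs_re_le_norm (z i - c i)
        simpa [hc] using this
      exact h2.trans_lt (h1.trans_le (min_le_left _ _))
    | insert j S hj ih =>
      intro z hz him
      have hup : ∀ t ∈ Metric.ball (c j) r, Function.update z j t ∈ Metric.ball c r := by
        intro t ht
        rw [Metric.mem_ball, dist_pi_lt_iff hr0]
        intro i
        by_cases hi : i = j
        · subst hi; simpa using ht
        · simpa [hi] using (dist_le_pi_dist z c i).trans_lt hz
      have hana : AnalyticOnNhd ℂ (fun t : ℂ => f (Function.update z j t)) (Metric.ball (c j) r) := by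
        intro t ht
        have h1 : AnalyticAt ℂ (fun t : ℂ => Function.update z j t) t := by
          refine AnalyticAt.pi fun i => ?_
          by_cases hi : i = j
          · subst hi; simp only [Function.update_self]; exact analyticAt_id
          · simpa [hi] using analyticAt_const
        have h2 := hb₂ _ (Metric.ball_subset_ball (min_le_right _ _) (hup t ht))
        exact AnalyticAt.fun_comp h2 h1
      have hcj : c j ∈ Metric.ball (c j) r := Metric.mem_ball_self hr0
      have hfreq : ∃ᶠ t in 𝓝[≠] (c j), f (Function.update z j t) = 0 := by
        have hreal : ∀ᶠ s : ℝ in 𝓝[≠] (x j), f (Function.update z j (s : ℂ)) = 0 := by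
          have h1 : ∀ᶠ s : ℝ in 𝓝 (x j), (s : ℂ) ∈ Metric.ball (c j) r :=
            Complex.continuous_ofReal.continuousAt.eventually (Metric.ball_mem_nhds _ hr0)
          filter_upwards [h1.filter_mono nhdsWithin_le_nhds] with s hs
          refine ih _ (hup _ hs) fun i hi => ?_
          by_cases hij : i = j
          · subst hij; simp
          · simpa [hij] using him i (by simp [hij, hi])
        have htend : Tendsto (fun s : ℝ => (s : ℂ)) (𝓝[≠] (x j)) (𝓝[≠] (c j)) := by
          refine tendsto_nhdsWithin_of_tendsto_nhds_of_eventually_within _ ?_ ?_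
          · exact Complex.continuous_ofReal.continuousAt.tendsto.mono_left nhdsWithin_le_nhds
          · filter_upwards [self_mem_nhdsWithin] with s hs
            simpa [hc] using hs
        exact htend.frequently hreal.frequently
      have := hana.eqOn_zero_of_preconnected_of_frequently_eq_zero
        (convex_ball _ _).isPreconnected hcj hfreq
      have hzj : z j ∈ Metric.ball (c j) r := (dist_le_pi_dist z c j).trans_lt hz
      simpa using this hzj
  filter_upwards [Metric.ball_mem_nhds c hr0] with z hz
  exact key Finset.univ z hz (by simp)

/-- A holomorphic function of `(z, w)` vanishing on the totally real space `w = z̄` near a point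
of it vanishes near that point. -/
theorem eventually_zero_of_antidiag {n : ℕ} {G : (Fin n → ℂ) × (Fin n → ℂ) → ℂ} {p : Fin n → ℂ}
    (hG : AnalyticAt ℂ G (p, star p)) (h : ∀ᶠ z in 𝓝 p, G (z, star z) = 0) :
    ∀ᶠ P in 𝓝 (p, star p), G P = 0 := by
  let L : (Fin n ⊕ Fin n → ℂ) → (Fin n → ℂ) × (Fin n → ℂ) := fun x =>
    (fun i => x (.inl i) + Complex.I * x (.inr i), fun i => x (.inl i) - Complex.I * x (.inr i))
  let L' : (Fin n → ℂ) × (Fin n → ℂ) → (Fin n ⊕ Fin n → ℂ) := fun P =>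
    Sum.elim (fun i => (P.1 i + P.2 i) / 2) (fun i => (P.1 i - P.2 i) / (2 * Complex.I))
  have hLL' : ∀ P, L (L' P) = P := by
    intro P
    have hI : Complex.I ≠ 0 := Complex.I_ne_zero
    ext i
    · simp [L, L']; field_simp; ring
    · simp [L, L']; field_simp; ring
  let x : Fin n ⊕ Fin n → ℝ := Sum.elim (fun i => (p i).re) (fun i => (p i).im)
  have hLreal : ∀ y : Fin n ⊕ Fin n → ℝ, L (fun i => (y i : ℂ)) =
      ((fun i => (y (.inl i) : ℂ) + Complex.I * y (.inr i)),
        star (fun i => (y (.inl i) : ℂ) + Complex.I * y (.inr i))) := by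
    intro y; ext i
    · simp [L]
    · simp [L, sub_eq_add_neg]
  have hx : L (fun i => (x i : ℂ)) = (p, star p) := by
    have : (fun i => (x (.inl i) : ℂ) + Complex.I * x (.inr i)) = p := by
      ext i; simp only [x, Sum.elim_inl, Sum.elim_inr]; rw [mul_comm]; exact Complex.re_add_im _
    rw [hLreal, this]
  have hLa : AnalyticAt ℂ L (fun i => (x i : ℂ)) := by
    have hpr : ∀ j, AnalyticAt ℂ (fun y : Fin n ⊕ Fin n → ℂ => y j) (fun i => (x i : ℂ)) :=
      fun j => (ContinuousLinearMap.proj (R := ℂ) (φ := fun _ : Fin n ⊕ Fin n => ℂ) j).analyticAt _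
    refine AnalyticAt.prod (AnalyticAt.pi fun i => ?_) (AnalyticAt.pi fun i => ?_)
    · exact (hpr _).add (analyticAt_const.mul (hpr _))
    · exact (hpr _).sub (analyticAt_const.mul (hpr _))
  have hf : AnalyticAt ℂ (fun y => G (L y)) (fun i => (x i : ℂ)) :=
    AnalyticAt.fun_comp (by rw [hx]; exact hG) hLa
  have hL'c : Continuous L' := by
    refine continuous_pi fun i => ?_
    rcases i with i | i <;> simp only [L', Sum.elim_inl, Sum.elim_inr] <;> fun_prop
  have hL'x : L' (p, star p) = fun i => (x i : ℂ) := by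
    ext i
    rcases i with i | i
    · simp only [L', x, Sum.elim_inl, Pi.star_apply]
      apply Complex.ext <;> simp
    · simp only [L', x, Sum.elim_inr, Pi.star_apply]
      have : p i - star (p i) = 2 * Complex.I * ((p i).im : ℂ) := by
        apply Complex.ext <;> simp; ring
      rw [this]; field_simp
  have hz := eventually_zero_of_real hf (by
    have hc : Tendsto (fun y : Fin n ⊕ Fin n → ℝ =>
        (fun i => (y (.inl i) : ℂ) + Complex.I * y (.inr i))) (𝓝 x) (𝓝 p) := by
      refine Continuous.tendsto' (by fun_prop) _ _ ?_
      ext i; simp only [x, Sum.elim_inl, Sum.elim_inr]; rw [mul_comm]; exact Complex.re_add_im _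
    filter_upwards [hc.eventually h] with y hy
    rw [hLreal]; exact hy)
  rw [← hL'x] at hz
  filter_upwards [hL'c.continuousAt.eventually hz] with P hP
  rwa [hLL'] at hP
end RealPoints

/-! ### Complexification and polarization -/

section Complexification
variable {ι : Type*} [Fintype ι]

/-- The complex-multilinear extension of a real multilinear form on `ℝ^ι`. -/
noncomputable def complexifyMultilinear {k : ℕ}
    (p : ContinuousMultilinearMap ℝ (fun _ : Fin k => ι → ℝ) ℝ) :
    ContinuousMultilinearMap ℂ (fun _ : Fin k => ι → ℂ) ℂ := by
  classical
  exact ∑ i : Fin k → ι, ((p (fun j => Pi.single (i j) 1) : ℝ) : ℂ) •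
    (ContinuousMultilinearMap.mkPiAlgebra ℂ (Fin k) ℂ).compContinuousLinearMap
      (fun j => ContinuousLinearMap.proj (R := ℂ) (φ := fun _ : ι => ℂ) (i j))

theorem complexifyMultilinear_ofReal {k : ℕ}
    (p : ContinuousMultilinearMap ℝ (fun _ : Fin k => ι → ℝ) ℝ) (x : ι → ℝ) :
    complexifyMultilinear p (fun _ i => (x i : ℂ)) = ((p (fun _ => x) : ℝ) : ℂ) := by
  classical
  have hx : x = ∑ i, x i • (Pi.single i (1 : ℝ) : ι → ℝ) := by
    ext j; simp [Finset.sum_apply, Pi.single_apply]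
  have h1 : p (fun _ => x) = ∑ i : Fin k → ι, p (fun j => x (i j) • (Pi.single (i j) (1 : ℝ) : ι → ℝ)) := by
    conv_lhs => rw [hx]
    exact p.map_sum (fun (_ : Fin k) (i : ι) => x i • (Pi.single i (1 : ℝ) : ι → ℝ))
  rw [h1]
  simp only [complexifyMultilinear, ContinuousMultilinearMap.map_smul_univ]
  simp [mul_comm]

theorem complexifyMultilinear_star {k : ℕ}
    (p : ContinuousMultilinearMap ℝ (fun _ : Fin k => ι → ℝ) ℝ) (x : ι → ℂ) :
    complexifyMultilinear p (fun _ => star x) = star (complexifyMultilinear p (fun _ => x)) := by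
  simp [complexifyMultilinear]

theorem complexifyMultilinear_norm {k : ℕ}
    (p : ContinuousMultilinearMap ℝ (fun _ : Fin k => ι → ℝ) ℝ) :
    ‖complexifyMultilinear p‖ ≤ (Fintype.card ι : ℝ) ^ k * ‖p‖ := by
  classical
  have hone : ∀ i : Fin k → ι, ‖p (fun j => Pi.single (i j) 1)‖ ≤ ‖p‖ := by
    intro i
    refine (p.le_opNorm _).trans ?_
    simp [Pi.norm_single]
  unfold complexifyMultilinear
  refine (norm_sum_le _ _).trans ?_
  have : ∀ i ∈ (Finset.univ : Finset (Fin k → ι)), ‖((p (fun j => Pi.single (i j) 1) : ℝ) : ℂ) •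
    (ContinuousMultilinearMap.mkPiAlgebra ℂ (Fin k) ℂ).compContinuousLinearMap
      (fun j => ContinuousLinearMap.proj (R := ℂ) (φ := fun _ : ι => ℂ) (i j))‖ ≤ ‖p‖ := by
    intro i _
    rw [norm_smul, Complex.norm_real]
    have h2 : ‖(ContinuousMultilinearMap.mkPiAlgebra ℂ (Fin k) ℂ).compContinuousLinearMap
      (fun j => ContinuousLinearMap.proj (R := ℂ) (φ := fun _ : ι => ℂ) (i j))‖ ≤ 1 := by
      refine ContinuousMultilinearMap.opNorm_le_bound zero_le_one fun m => ?_
      simp only [ContinuousMultilinearMap.compContinuousLinearMap_apply,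
        ContinuousMultilinearMap.mkPiAlgebra_apply, ContinuousLinearMap.proj_apply, norm_prod, one_mul]
      gcongr with j
      exact norm_le_pi_norm (m j) (i j)
    calc _ ≤ ‖p‖ * 1 := by gcongr; exact hone i
      _ = ‖p‖ := mul_one _
  refine (Finset.sum_le_card_nsmul _ _ _ this).trans ?_
  simp

/-- A real-analytic germ on `ℝ^ι` extends to a holomorphic germ on `ℂ^ι`. -/
theorem exists_complexification {f : (ι → ℝ) → ℝ} (hf : AnalyticAt ℝ f 0) :
    ∃ g : (ι → ℂ) → ℂ, AnalyticAt ℂ g 0 ∧ (∀ x, g (star x) = star (g x)) ∧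
      ∀ᶠ x in 𝓝 (0 : ι → ℝ), g (fun i => (x i : ℂ)) = f x := by
  obtain ⟨p, r, hp⟩ := hf
  let P : FormalMultilinearSeries ℂ (ι → ℂ) ℂ := fun k => complexifyMultilinear (p k)
  obtain ⟨s, hs0, hs⟩ := ENNReal.lt_iff_exists_nnreal_btwn.1 (hp.r_pos.trans_le hp.r_le)
  obtain ⟨C, -, hC⟩ := p.norm_mul_pow_le_of_lt_radius hs
  have hs0' : (0 : NNReal) < s := by exact_mod_cast hs0
  let s' : NNReal := s / (Fintype.card ι + 1)
  have hs' : 0 < s' := by positivity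
  have hrad : (s' : ENNReal) ≤ P.radius := by
    refine P.le_radius_of_bound C fun k => le_trans ?_ (hC k)
    have hle : (Fintype.card ι : ℝ) * s' ≤ s := by
      simp only [s', NNReal.coe_div, NNReal.coe_add, NNReal.coe_natCast, NNReal.coe_one]
      rw [mul_div_assoc', div_le_iff₀ (by positivity)]
      nlinarith [s.2]
    calc ‖P k‖ * (s' : ℝ) ^ k ≤ ((Fintype.card ι : ℝ) ^ k * ‖p k‖) * (s' : ℝ) ^ k := by
          gcongr; exact complexifyMultilinear_norm _
      _ = ‖p k‖ * ((Fintype.card ι : ℝ) * s') ^ k := by rw [mul_pow]; ring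
      _ ≤ ‖p k‖ * (s : ℝ) ^ k := by gcongr
  have hpos : 0 < P.radius := lt_of_lt_of_le (by exact_mod_cast hs') hrad
  have hP := P.hasFPowerSeriesOnBall hpos
  refine ⟨P.sum, hP.analyticAt, fun x => ?_, ?_⟩
  · change ∑' k, P k (fun _ => star x) = star (∑' k, P k (fun _ => x))
    rw [tsum_star]
    exact tsum_congr fun k => complexifyMultilinear_star _ _
  have hc : Tendsto (fun x : ι → ℝ => (fun i => (x i : ℂ))) (𝓝 0) (𝓝 (0 : ι → ℂ)) :=
    Continuous.tendsto' (by fun_prop) _ _ (by ext; simp)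
  filter_upwards [hc.eventually (Metric.eball_mem_nhds _ hpos), Metric.eball_mem_nhds _ hp.r_pos]
    with x hx1 hx2
  have h1 := hP.hasSum hx1
  have h2 := (Complex.ofRealCLM).hasSum (hp.hasSum hx2)
  have h3 : HasSum (fun k => P k fun _ i => (x i : ℂ)) ((f (0 + x) : ℝ) : ℂ) := by
    convert h2 using 1
    · ext k
      exact complexifyMultilinear_ofReal _ _
    · rfl
  have := h1.unique h3
  simpa using this
end Complexification

section StarStar
variable {E : Type*} [NormedAddCommGroup E] [NormedSpace ℂ E] [StarAddMonoid E] [NormedStarGroup E]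
  [StarModule ℂ E]

/-- Conjugate of a multilinear form by complex conjugation. -/
noncomputable def starMultilinear {k : ℕ}
    (p : ContinuousMultilinearMap ℂ (fun _ : Fin k => E) ℂ) :
    ContinuousMultilinearMap ℂ (fun _ : Fin k => E) ℂ :=
  MultilinearMap.mkContinuous
    { toFun := fun v => star (p (fun i => star (v i)))
      map_update_add' := by
        intro _ Y i a b
        have h : ∀ c : E, (fun j => star (Function.update Y i c j))
            = Function.update (fun j => star (Y j)) i (star c) := by
          intro c; ext j; by_cases hj : j = i
          · subst hj; simp
          · simp [hj]
        simp [h]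
      map_update_smul' := by
        intro _ Y i a b
        have h : ∀ c : E, (fun j => star (Function.update Y i c j))
            = Function.update (fun j => star (Y j)) i (star c) := by
          intro c; ext j; by_cases hj : j = i
          · subst hj; simp
          · simp [hj]
        simp [h] } ‖p‖ (by
      intro Y
      have := p.le_opNorm (fun i => star (Y i))
      simpa using this)

/-- `z ↦ conj (f (conj z))` is holomorphic when `f` is. -/
theorem AnalyticAt.star_star' {f : E → ℂ} {a : E} (hf : AnalyticAt ℂ f (star a)) :
    AnalyticAt ℂ (fun z => star (f (star z))) a := by
  obtain ⟨p, r, hp⟩ := hf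
  refine ⟨fun k => starMultilinear (p k), r, ?_, hp.r_pos, ?_⟩
  · refine hp.r_le.trans ?_
    refine ENNReal.le_of_forall_nnreal_lt fun s hs => ?_
    obtain ⟨C, -, hC⟩ := p.norm_mul_pow_le_of_lt_radius hs
    refine FormalMultilinearSeries.le_radius_of_bound _ C fun k => le_trans ?_ (hC k)
    gcongr
    exact MultilinearMap.mkContinuous_norm_le _ (norm_nonneg _) _
  · intro y hy
    have hy' : star y ∈ Metric.eball (0 : E) r := by
      simp only [Metric.mem_eball, edist_zero_right] at hy ⊢
      rwa [← ofReal_norm, norm_star, ofReal_norm]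
    have := (hp.hasSum hy').star
    simpa [starMultilinear] using this
end StarStar

/-- Polarization `F(z) = A(z, z̄)` of a real-analytic germ. -/
theorem exists_polarization {n : ℕ} {F : (Fin n → ℂ) → ℝ} (hF : AnalyticAt ℝ F 0) :
    ∃ A : (Fin n → ℂ) × (Fin n → ℂ) → ℂ, AnalyticAt ℂ A 0 ∧
      (∀ P, A (star P.2, star P.1) = star (A P)) ∧ ∀ᶠ z in 𝓝 (0 : Fin n → ℂ), A (z, star z) = F z := by
  let R : (Fin n ⊕ Fin n → ℝ) → (Fin n → ℂ) := fun x i => (x (.inl i) : ℂ) + Complex.I * x (.inr i)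
  have hR : AnalyticAt ℝ R 0 := by
    have hpr : ∀ j, AnalyticAt ℝ (fun y : Fin n ⊕ Fin n → ℝ => (y j : ℂ)) 0 := fun j =>
      (Complex.ofRealCLM.comp
        (ContinuousLinearMap.proj (R := ℝ) (φ := fun _ : Fin n ⊕ Fin n => ℝ) j)).analyticAt _
    refine AnalyticAt.pi fun i => ?_
    exact (hpr _).add (analyticAt_const.mul (hpr _))
  have hR0 : R 0 = 0 := by ext; simp [R]
  have hf : AnalyticAt ℝ (fun x => F (R x)) 0 := AnalyticAt.fun_comp (by rwa [hR0]) hR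
  obtain ⟨g, hg, hgs, hgf⟩ := exists_complexification hf
  let L' : (Fin n → ℂ) × (Fin n → ℂ) → (Fin n ⊕ Fin n → ℂ) := fun P =>
    Sum.elim (fun i => (P.1 i + P.2 i) / 2) (fun i => (P.1 i - P.2 i) / (2 * Complex.I))
  have hL' : AnalyticAt ℂ L' 0 := by
    have h1 : ∀ j, AnalyticAt ℂ (fun P : (Fin n → ℂ) × (Fin n → ℂ) => P.1 j) 0 := fun j =>
      analyticAt_pi_iff.1 analyticAt_fst j
    have h2 : ∀ j, AnalyticAt ℂ (fun P : (Fin n → ℂ) × (Fin n → ℂ) => P.2 j) 0 := fun j =>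
      analyticAt_pi_iff.1 analyticAt_snd j
    refine AnalyticAt.pi fun i => ?_
    rcases i with i | i
    · exact ((h1 i).add (h2 i)).div analyticAt_const (by simp)
    · exact ((h1 i).sub (h2 i)).div analyticAt_const (by simp)
  have hL'0 : L' 0 = 0 := by ext i; rcases i with i | i <;> simp [L']
  refine ⟨fun P => g (L' P), AnalyticAt.fun_comp (by rwa [hL'0]) hL', fun P => ?_, ?_⟩
  · have : L' (star P.2, star P.1) = star (L' P) := by
      ext i; rcases i with i | i
      · simp [L', add_comm]
      · simp only [L', Sum.elim_inr, Pi.star_apply, star_div₀, star_sub, star_mul']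
        simp only [Complex.star_def, Complex.conj_I, map_ofNat]
        rw [← neg_sub, mul_neg, neg_div, div_neg]
    simp only [this, hgs]
  · let x : (Fin n → ℂ) → (Fin n ⊕ Fin n → ℝ) := fun z => Sum.elim (fun i => (z i).re) (fun i => (z i).im)
    have hxc : Tendsto x (𝓝 0) (𝓝 0) := by
      refine Continuous.tendsto' ?_ _ _ (by ext i; rcases i with i | i <;> simp [x])
      refine continuous_pi fun i => ?_
      rcases i with i | i <;> simp only [x, Sum.elim_inl, Sum.elim_inr]
      · exact Complex.continuous_re.comp (continuous_apply i)
      · exact Complex.continuous_im.comp (continuous_apply i)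
    filter_upwards [hxc.eventually hgf] with z hz
    have h1 : R (x z) = z := by
      ext i; simp only [x, R, Sum.elim_inl, Sum.elim_inr]; rw [mul_comm]; exact Complex.re_add_im _
    have h2 : L' (z, star z) = fun i => (x z i : ℂ) := by
      ext i
      rcases i with i | i
      · simp only [L', x, Sum.elim_inl, Pi.star_apply]
        apply Complex.ext <;> simp
      · simp only [L', x, Sum.elim_inr, Pi.star_apply]
        have : z i - star (z i) = 2 * Complex.I * ((z i).im : ℂ) := by
          apply Complex.ext <;> simp; ring
        rw [this]; field_simp
    simp only [h2, hz, h1]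

/-! ### Hadamard division and Taylor expansion -/

section FunProp
variable {E F G : Type*} [NormedAddCommGroup E] [NormedSpace ℂ E]
  [NormedAddCommGroup F] [NormedSpace ℂ F] [NormedAddCommGroup G] [NormedSpace ℂ G]

@[fun_prop]
theorem AnalyticAt.fp_fst {f : E → F × G} {x : E} (hf : AnalyticAt ℂ f x) :
    AnalyticAt ℂ (fun y => (f y).1) x := analyticAt_fst.fun_comp hf

@[fun_prop]
theorem AnalyticAt.fp_snd {f : E → F × G} {x : E} (hf : AnalyticAt ℂ f x) :
    AnalyticAt ℂ (fun y => (f y).2) x := analyticAt_snd.fun_comp hf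

@[fun_prop]
theorem AnalyticAt.fp_clm {f : E → F} {x : E} (L : F →L[ℂ] G) (hf : AnalyticAt ℂ f x) :
    AnalyticAt ℂ (fun y => L (f y)) x := (L.analyticAt _).fun_comp hf

@[fun_prop]
theorem AnalyticAt.fp_clm_apply {L : E → F →L[ℂ] G} {f : E → F} {x : E} (hL : AnalyticAt ℂ L x)
    (hf : AnalyticAt ℂ f x) : AnalyticAt ℂ (fun y => L y (f y)) x := by
  have h : AnalyticAt ℂ (fun p : (F →L[ℂ] G) × F => p.1 p.2) (L x, f x) :=
    (ContinuousLinearMap.id ℂ (F →L[ℂ] G)).analyticAt_bilinear (L x, f x)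
  exact AnalyticAt.fun_comp (g := fun p : (F →L[ℂ] G) × F => p.1 p.2) (f := fun y => (L y, f y))
    h (hL.prod hf)

@[fun_prop]
theorem analyticAt_coord {ι : Type*} [Fintype ι] (i : ι) (x : ι → F) :
    AnalyticAt ℂ (fun y : ι → F => y i) x := analyticAt_pi_iff.1 analyticAt_id i

@[fun_prop]
theorem AnalyticAt.fp_pi {ι : Type*} [Fintype ι] {f : E → ι → F} {x : E}
    (hf : ∀ i, AnalyticAt ℂ (fun y => f y i) x) : AnalyticAt ℂ f x := analyticAt_pi_iff.2 hf

@[fun_prop]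
theorem AnalyticAt.fp_prod {f : E → F} {g : E → G} {x : E} (hf : AnalyticAt ℂ f x)
    (hg : AnalyticAt ℂ g x) : AnalyticAt ℂ (fun y => (f y, g y)) x := hf.prod hg

@[fun_prop]
theorem AnalyticAt.fp_sum {ι : Type*} (s : Finset ι) {f : E → ι → F} {x : E}
    (hf : ∀ i, AnalyticAt ℂ (fun y => f y i) x) : AnalyticAt ℂ (fun y => ∑ i ∈ s, f y i) x :=
  Finset.analyticAt_fun_sum _ fun i _ => hf i
end FunProp

section Hadamard
variable {X Y F : Type*} [NormedAddCommGroup X] [NormedSpace ℂ X]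
  [NormedAddCommGroup Y] [NormedSpace ℂ Y] [NormedAddCommGroup F] [NormedSpace ℂ F] [CompleteSpace F]

/-- An even analytic function of `t` is an analytic function of `t²` (with parameters). -/
theorem exists_even_factor {f : X × ℂ → ℂ} (hf : AnalyticAt ℂ f 0)
    (heven : ∀ᶠ p in 𝓝 (0 : X × ℂ), f (p.1, -p.2) = f p) :
    ∃ c : X × ℂ → ℂ, AnalyticAt ℂ c 0 ∧ ∀ᶠ p in 𝓝 (0 : X × ℂ), f p = c (p.1, p.2 ^ 2) := by
  obtain ⟨R, hR, hball⟩ := Metric.eventually_nhds_iff_ball.1 (hf.eventually_analyticAt.and heven)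
  set r := R / 2 with hr
  have hr0 : 0 < r := by positivity
  have hrR : r < R := by linarith
  let e : ℂ → ℂ := fun τ => r * Complex.exp (τ * Complex.I)
  have he : ∀ τ, AnalyticAt ℂ e τ := fun τ => by
    have : Differentiable ℂ e := by fun_prop
    exact this.analyticAt τ
  have hen : ∀ t : ℝ, ‖e t‖ = r := by
    intro t; simp [e, Complex.norm_exp_ofReal_mul_I, abs_of_pos hr0]
  have he0 : ∀ τ, e τ ≠ 0 := by
    intro τ; simp [e, hr0.ne']
  let G : X × ℂ → ℂ → ℂ := fun p τ => (e τ * Complex.I) * (f (p.1, e τ) * e τ / (e τ ^ 2 - p.2))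
  refine ⟨fun p => (2 * Real.pi * Complex.I)⁻¹ * ∫ t in (0:ℝ)..(2 * Real.pi), G p t, ?_, ?_⟩
  · refine analyticAt_const.mul (analyticAt_integral (by positivity) fun t _ => ?_)
    have hfe : AnalyticAt ℂ f (0, e t) := (hball _ (by
      rw [Metric.mem_ball, dist_zero_right, Prod.norm_def]; simp [hen, hR, hrR])).1
    have he' : AnalyticAt ℂ (fun p : (X × ℂ) × ℂ => e p.2) (0, (t : ℂ)) :=
      AnalyticAt.fun_comp (he _) (by fun_prop)
    have hfe' : AnalyticAt ℂ (fun p : (X × ℂ) × ℂ => f (p.1.1, e p.2)) (0, (t : ℂ)) := by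
      refine AnalyticAt.fun_comp (g := f) (f := fun p : (X × ℂ) × ℂ => (p.1.1, e p.2)) ?_ ?_
      · exact hfe
      · fun_prop
    refine (he'.mul analyticAt_const).mul ((hfe'.mul he').div ((he'.pow 2).sub (by fun_prop)) ?_)
    simp [he0]
  · filter_upwards [Metric.ball_mem_nhds (0 : X × ℂ) hr0] with p hp
    have hp' := hp
    rw [Metric.mem_ball, dist_zero_right, Prod.norm_def, sup_lt_iff] at hp
    have hmem : ∀ τ ∈ Metric.closedBall (0:ℂ) r, (p.1, τ) ∈ Metric.ball (0 : X × ℂ) R := by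
      intro τ hτ
      rw [mem_closedBall_zero_iff] at hτ
      rw [Metric.mem_ball, dist_zero_right, Prod.norm_def, sup_lt_iff]
      exact ⟨hp.1.trans hrR, hτ.trans_lt hrR⟩
    have hd : DifferentiableOn ℂ (fun τ => f (p.1, τ)) (Metric.closedBall 0 r) := by
      intro τ hτ
      have h1 : AnalyticAt ℂ f (p.1, τ) := (hball _ (hmem τ hτ)).1
      have : AnalyticAt ℂ (fun τ => f (p.1, τ)) τ := by fun_prop
      exact this.differentiableAt.differentiableWithinAt
    have hw : p.2 ∈ Metric.ball (0:ℂ) r := by rw [mem_ball_zero_iff]; exact hp.2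
    have hw' : -p.2 ∈ Metric.ball (0:ℂ) r := by rw [mem_ball_zero_iff, norm_neg]; exact hp.2
    have c1 := hd.circleIntegral_sub_inv_smul hw
    have c2 := hd.circleIntegral_sub_inv_smul hw'
    have hev : f (p.1, -p.2) = f p := (hball p (Metric.ball_subset_ball hrR.le hp')).2
    simp only [smul_eq_mul] at c1 c2
    have hcont : ∀ w ∈ Metric.ball (0:ℂ) r,
        CircleIntegrable (fun z => (z - w)⁻¹ * f (p.1, z)) 0 r := by
      intro w hw
      refine ContinuousOn.circleIntegrable hr0.le ?_
      refine ContinuousOn.mul (ContinuousOn.inv₀ (by fun_prop) ?_)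
        (hd.continuousOn.mono Metric.sphere_subset_closedBall)
      intro z hz h0
      rw [sub_eq_zero] at h0
      subst h0
      rw [mem_sphere_zero_iff_norm] at hz
      rw [mem_ball_zero_iff] at hw
      exact absurd hz hw.ne
    have hadd : (∮ z in C(0, r), ((z - p.2)⁻¹ * f (p.1, z) + (z - -p.2)⁻¹ * f (p.1, z)))
        = 2 * (2 * Real.pi * Complex.I * f p) := by
      rw [circleIntegral.integral_add (hcont _ hw) (hcont _ hw'), c1, c2, hev]; ring
    have hGe : (∫ t in (0:ℝ)..(2 * Real.pi), G (p.1, p.2 ^ 2) t)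
        = 2⁻¹ * ∮ z in C(0, r), ((z - p.2)⁻¹ * f (p.1, z) + (z - -p.2)⁻¹ * f (p.1, z)) := by
      rw [← smul_eq_mul (2⁻¹ : ℂ), ← circleIntegral.integral_smul, circleIntegral]
      refine intervalIntegral.integral_congr fun t _ => ?_
      have hct : circleMap 0 r t = e t := by simp [circleMap, e]
      simp only [deriv_circleMap, hct, smul_eq_mul, G]
      have hne1 : e t - p.2 ≠ 0 := by
        intro h0; rw [sub_eq_zero] at h0
        have := hen t; rw [h0] at this; exact absurd this hp.2.ne
      have hne2 : e t + p.2 ≠ 0 := by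
        intro h0; rw [add_eq_zero_iff_eq_neg] at h0
        have := hen t; rw [h0, norm_neg] at this; exact absurd this hp.2.ne
      have hne3 : e t ^ 2 - p.2 ^ 2 ≠ 0 := by
        rw [sq_sub_sq]; exact mul_ne_zero hne2 hne1
      rw [sub_neg_eq_add]
      field_simp
      ring
    have hpi : (2 * Real.pi * Complex.I : ℂ) ≠ 0 := by simp [Real.pi_ne_zero]
    rw [hGe, hadd]
    field_simp

/-- Hadamard division: `f (x, y) = f (x, 0) + D (x, y) y`. -/
theorem exists_hadamard {f : X × Y → F} (hf : AnalyticAt ℂ f 0) :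
    ∃ D : X × Y → (Y →L[ℂ] F), AnalyticAt ℂ D 0 ∧
      (∀ᶠ p in 𝓝 (0 : X × Y), f p = f (p.1, 0) + D p p.2) ∧
      (∀ x, D (x, 0) = (fderiv ℂ f (x, 0)).comp (ContinuousLinearMap.inr ℂ X Y)) := by
  obtain ⟨R, hR, hball⟩ := Metric.eventually_nhds_iff_ball.1 hf.eventually_analyticAt
  let d : X × Y → (Y →L[ℂ] F) := fun p => (fderiv ℂ f p).comp (ContinuousLinearMap.inr ℂ X Y)
  have hd : ∀ p, AnalyticAt ℂ f p → AnalyticAt ℂ d p := by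
    intro p hp
    exact (((ContinuousLinearMap.compL ℂ Y (X × Y) F).flip
      (ContinuousLinearMap.inr ℂ X Y)).analyticAt _).fun_comp hp.fderiv
  refine ⟨fun p => ∫ t in (0:ℝ)..1, d (p.1, (t : ℂ) • p.2), ?_, ?_, ?_⟩
  · refine analyticAt_integral (G := fun (p : X × Y) (t : ℂ) => d (p.1, t • p.2)) zero_le_one
      fun t _ => ?_
    refine AnalyticAt.fun_comp (g := d)
      (f := fun q : (X × Y) × ℂ => (q.1.1, q.2 • q.1.2)) ?_ (by fun_prop)
    have h0 := hd 0 hf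
    rw [← Prod.mk_zero_zero] at h0
    simpa using h0
  · filter_upwards [Metric.ball_mem_nhds (0 : X × Y) hR] with p hp
    have hmem : ∀ t ∈ Set.Icc (0:ℝ) 1, (p.1, (t : ℂ) • p.2) ∈ Metric.ball (0 : X × Y) R := by
      intro t ht
      rw [Metric.mem_ball, dist_zero_right, Prod.norm_def, sup_lt_iff] at hp ⊢
      refine ⟨hp.1, ?_⟩
      simp only [norm_smul, Complex.norm_real, Real.norm_eq_abs, abs_of_nonneg ht.1]
      exact (mul_le_of_le_one_left (norm_nonneg _) ht.2).trans_lt hp.2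
    have hcont : ContinuousOn (fun t : ℝ => d (p.1, (t : ℂ) • p.2)) (Set.uIcc 0 1) := by
      rw [Set.uIcc_of_le zero_le_one]
      intro t ht
      have h1 : ContinuousAt (fun t : ℝ => (p.1, (t : ℂ) • p.2)) t := by fun_prop
      exact ((hd _ (hball _ (hmem t ht))).continuousAt.comp
        (f := fun t : ℝ => (p.1, (t : ℂ) • p.2)) h1).continuousWithinAt
    have hitg := hcont.intervalIntegrable (μ := MeasureTheory.volume)
    rw [ContinuousLinearMap.intervalIntegral_apply hitg]
    have hder : ∀ t ∈ Set.uIcc (0:ℝ) 1, HasDerivAt (fun t : ℝ => f (p.1, (t : ℂ) • p.2))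
        (d (p.1, (t : ℂ) • p.2) p.2) t := by
      intro t ht
      rw [Set.uIcc_of_le zero_le_one] at ht
      have h0 : HasDerivAt (fun t : ℝ => (t : ℂ)) 1 t := Complex.ofRealCLM.hasDerivAt
      have h1 : HasDerivAt (fun t : ℝ => (p.1, (t : ℂ) • p.2)) (0, p.2) t := by
        have := (hasDerivAt_const t p.1).prodMk (h0.smul_const p.2)
        simpa using this
      exact ((hball _ (hmem t ht)).differentiableAt.hasFDerivAt.restrictScalars ℝ).comp_hasDerivAt t h1
    have h3 := intervalIntegral.integral_eq_sub_of_hasDerivAt hder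
      (ContinuousOn.intervalIntegrable (hcont.clm_apply continuousOn_const))
    rw [h3]; simp
  · intro x
    simp [d]

/-- Second order Taylor expansion. -/
theorem taylor_two {f : Y → F} (hf : AnalyticAt ℂ f 0) :
    (fun y => f y - f 0 - fderiv ℂ f 0 y - (2⁻¹ : ℂ) • fderiv ℂ (fderiv ℂ f) 0 y y)
      =O[𝓝 0] fun y => ‖y‖ ^ 3 := by
  obtain ⟨p, hp⟩ := hf
  have h := hp.isBigO_sub_partialSum_pow 3
  obtain ⟨r, hr⟩ := hp
  have h2 : ∀ y, p 2 (fun _ => y) = (2⁻¹ : ℂ) • fderiv ℂ (fderiv ℂ f) 0 y y := by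
    intro y
    have := hr.factorial_smul y 2
    rw [iteratedFDeriv_two_apply] at this
    rw [← this]
    simp [Nat.factorial, ← Nat.cast_smul_eq_nsmul ℂ]
  have h1' : ∀ y, p 1 (fun _ => y) = fderiv ℂ f 0 y := by
    intro y
    have := hr.factorial_smul y 1
    rw [iteratedFDeriv_one_apply] at this
    simpa using this
  have h0' : ∀ y, p 0 (fun _ => y) = f 0 := by
    intro y
    have := hr.coeff_zero (fun _ => y)
    rw [← this]
  refine h.congr_left fun y => ?_
  simp [FormalMultilinearSeries.partialSum, Finset.sum_range_succ, h0', h1', h2]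
  abel

/-- A function homogeneous of degree two which is `O(‖y‖³)` vanishes. -/
theorem eq_zero_of_homogeneous_of_isBigO {Q : Y → F} (hQ : ∀ (t : ℝ) y, Q (t • y) = (t ^ 2) • Q y)
    (h : Q =O[𝓝 0] fun y => ‖y‖ ^ 3) (y : Y) : Q y = 0 := by
  have ht : Tendsto (fun t : ℝ => t • y) (𝓝 0) (𝓝 0) := by
    have : Continuous fun t : ℝ => t • y := by fun_prop
    simpa using this.tendsto 0
  obtain ⟨C, hC⟩ := (h.comp_tendsto ht).bound
  have h1 : ∀ᶠ t in 𝓝[>] (0:ℝ), ‖Q y‖ ≤ t * (C * ‖y‖ ^ 3) := by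
    filter_upwards [hC.filter_mono nhdsWithin_le_nhds, self_mem_nhdsWithin] with t ht1 ht0
    have ht0 : 0 < t := ht0
    simp only [Function.comp, hQ, norm_smul, norm_pow, Real.norm_eq_abs, abs_of_pos ht0, abs_norm,
      norm_mul] at ht1
    have : t ^ 2 * ‖Q y‖ ≤ t ^ 2 * (t * (C * ‖y‖ ^ 3)) := by linarith
    exact le_of_mul_le_mul_left this (by positivity)
  have h2 : Tendsto (fun t : ℝ => t * (C * ‖y‖ ^ 3)) (𝓝[>] 0) (𝓝 0) := by
    have : Continuous fun t : ℝ => t * (C * ‖y‖ ^ 3) := by fun_prop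
    simpa using (this.tendsto 0).mono_left nhdsWithin_le_nhds
  have := ge_of_tendsto h2 h1
  simpa using this
end Hadamard

/-! ### The Morse lemma with parameters -/

section Morse
variable {ι : Type*} [Fintype ι]

/-- The standard quadratic form `z₁² + … + zₙ²`. -/
noncomputable def sqs (z : ι → ℂ) : ℂ := ∑ i, z i ^ 2

@[fun_prop]
theorem analyticAt_sqs (z : ι → ℂ) : AnalyticAt ℂ (sqs (ι := ι)) z := by
  unfold sqs; fun_prop

@[fun_prop]
theorem AnalyticAt.fp_sqs {E : Type*} [NormedAddCommGroup E] [NormedSpace ℂ E] {f : E → ι → ℂ}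
    {x : E} (hf : AnalyticAt ℂ f x) : AnalyticAt ℂ (fun y => sqs (f y)) x :=
  (analyticAt_sqs _).fun_comp hf

theorem sqs_smul (t : ℂ) (z : ι → ℂ) : sqs (t • z) = t ^ 2 * sqs z := by
  simp [sqs, mul_pow, Finset.mul_sum]

@[simp] theorem sqs_zero : sqs (0 : ι → ℂ) = 0 := by simp [sqs]

@[simp] theorem sqs_neg (z : ι → ℂ) : sqs (-z) = sqs z := by simp [sqs]

/-- Analytic square root of symmetric matrices near the identity. -/
theorem exists_matrix_sqrt [DecidableEq ι] : ∃ r : (ι → ι → ℂ) → (ι → ι → ℂ),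
    AnalyticAt ℂ r (fun i j => if i = j then 1 else 0) ∧
    r (fun i j => if i = j then 1 else 0) = (fun i j => if i = j then 1 else 0) ∧
    ∀ᶠ T in 𝓝 (fun i j : ι => if i = j then (1:ℂ) else 0), (∀ i j, T i j = T j i) →
      (∀ i j, r T i j = r T j i) ∧ ∀ i j, ∑ k, r T i k * r T k j = T i j := by
  let δ : ι → ι → ℂ := fun i j => if i = j then 1 else 0
  let f : (ι → ι → ℂ) → (ι → ι → ℂ) := fun B i j => 2⁻¹ * ((∑ k, B i k * B k j) + δ i j)
  have hf : ∀ B, AnalyticAt ℂ f B := fun B => by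
    have h : ∀ i k (B : ι → ι → ℂ), AnalyticAt ℂ (fun B : ι → ι → ℂ => B i k) B := by
      intro i k B
      exact AnalyticAt.fun_comp (g := fun y : ι → ℂ => y k) (f := fun B : ι → ι → ℂ => B i)
        (analyticAt_coord k (B i)) (analyticAt_coord i B)
    fun_prop
  have hfδ : f δ = δ := by
    funext i j; by_cases hij : i = j <;> simp [f, δ, hij]; norm_num
  have hf' : fderiv ℂ f δ = ContinuousLinearMap.id ℂ _ := by
    have hd : ∀ i k, HasFDerivAt (fun B : ι → ι → ℂ => B i k)
        ((ContinuousLinearMap.proj (R := ℂ) (φ := fun _ : ι => ℂ) k).comp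
          (ContinuousLinearMap.proj (R := ℂ) (φ := fun _ : ι => ι → ℂ) i)) δ := fun i k =>
      ((ContinuousLinearMap.proj (R := ℂ) (φ := fun _ : ι => ℂ) k).comp
          (ContinuousLinearMap.proj (R := ℂ) (φ := fun _ : ι => ι → ℂ) i)).hasFDerivAt
    have hh : ∀ i j, HasFDerivAt (fun B => f B i j) ((ContinuousLinearMap.proj (R := ℂ) (φ := fun _ : ι => ℂ) j).comp
          (ContinuousLinearMap.proj (R := ℂ) (φ := fun _ : ι => ι → ℂ) i)) δ := by
      intro i j
      have := ((HasFDerivAt.fun_sum (u := Finset.univ)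
        (fun k _ => (hd i k).mul (hd k j))).add_const (δ i j)).const_mul (2⁻¹ : ℂ)
      refine this.congr_fderiv ?_
      ext H
      simp only [smul_apply, sum_apply,
        add_apply, ContinuousLinearMap.comp_apply, ContinuousLinearMap.proj_apply, δ,
        smul_eq_mul, Finset.sum_add_distrib]
      simp
      ring
    have : HasFDerivAt f (ContinuousLinearMap.id ℂ _) δ := by
      rw [hasFDerivAt_pi']
      intro i
      rw [hasFDerivAt_pi']
      intro j
      exact hh i j
    exact this.fderiv
  obtain ⟨g, hg, hgδ, h1, h2⟩ := exists_local_inverse_id (hf δ) hf'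
  rw [hfδ] at hg hgδ h2
  -- `f B = T'` means `B² = 2 T' - 1`; so the root of `T` is `g ((T + 1) / 2)`
  let s : (ι → ι → ℂ) → (ι → ι → ℂ) := fun T i j => 2⁻¹ * (T i j + δ i j)
  have hs : ∀ B, AnalyticAt ℂ s B := fun B => by
    have h : ∀ i k (B : ι → ι → ℂ), AnalyticAt ℂ (fun B : ι → ι → ℂ => B i k) B := by
      intro i k B
      exact AnalyticAt.fun_comp (g := fun y : ι → ℂ => y k) (f := fun B : ι → ι → ℂ => B i)
        (analyticAt_coord k (B i)) (analyticAt_coord i B)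
    fun_prop
  have hsδ : s δ = δ := by
    funext i j; by_cases hij : i = j <;> simp [s, δ, hij]; norm_num
  have hgs : AnalyticAt ℂ (fun T => g (s T)) δ := by
    refine AnalyticAt.fun_comp (g := g) (f := s) ?_ (hs δ)
    rwa [hsδ]
  have hst : Tendsto s (𝓝 δ) (𝓝 δ) := by simpa [hsδ] using (hs δ).continuousAt.tendsto
  have htr : Tendsto (fun B : ι → ι → ℂ => fun i j => B j i) (𝓝 δ) (𝓝 δ) := by
    have : Continuous (fun B : ι → ι → ℂ => fun i j => B j i) := by fun_prop
    have h := this.tendsto δ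
    have e : (fun i j => δ j i) = δ := by funext i j; simp [δ, eq_comm]
    rwa [e] at h
  have hgt : Tendsto (fun T => g (s T)) (𝓝 δ) (𝓝 δ) := by
    have h := hgs.continuousAt.tendsto
    rwa [hsδ, hgδ] at h
  refine ⟨fun T => g (s T), hgs, (congrArg g hsδ).trans hgδ, ?_⟩
  filter_upwards [hst.eventually h2, (htr.comp hgt).eventually h1] with T k1 k2 hT
  have hsym : ∀ i j, g (s T) i j = g (s T) j i := by
    have : f (fun i j => g (s T) j i) = s T := by
      funext i j
      have : s T i j = s T j i := by simp [s, hT i j, δ, eq_comm]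
      rw [this, ← congrFun (congrFun k1 j) i]
      simp only [f]
      congr 2
      · exact Finset.sum_congr rfl fun k _ => mul_comm _ _
      · simp [δ, eq_comm]
    simp only [Function.comp, this] at k2
    intro i j
    exact congrFun (congrFun k2 i) j
  refine ⟨hsym, fun i j => ?_⟩
  have := congrFun (congrFun k1 i) j
  simp only [f, s] at this
  have h2 : (2:ℂ)⁻¹ ≠ 0 := by norm_num
  exact add_right_cancel (mul_left_cancel₀ h2 this)

theorem hasFDerivAt_fderiv_apply {E F : Type*} [NormedAddCommGroup E] [NormedSpace ℂ E]
    [NormedAddCommGroup F] [NormedSpace ℂ F] [CompleteSpace F] {f : E → F} {a : E}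
    (hf : AnalyticAt ℂ f a) (w : E) :
    HasFDerivAt (fun p => fderiv ℂ f p w) ((fderiv ℂ (fderiv ℂ f) a).flip w) a := by
  have := hf.fderiv.differentiableAt.hasFDerivAt.clm_apply (hasFDerivAt_const w a)
  simpa using this

theorem sum_single_smul [DecidableEq ι] (v : ι → ℂ) : (∑ i, v i • (Pi.single i 1 : ι → ℂ)) = v := by
  funext j; simp [Finset.sum_apply, Pi.single_apply]

theorem bilin_expand [DecidableEq ι] (B : (ι → ℂ) →L[ℂ] (ι → ℂ) →L[ℂ] ℂ) (u v : ι → ℂ) :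
    B u v = ∑ i, ∑ j, u i * v j * B (Pi.single i 1) (Pi.single j 1) := by
  conv_lhs => rw [← sum_single_smul u, ← sum_single_smul v]
  simp only [map_sum, map_smul, sum_apply, smul_apply, smul_eq_mul, Finset.mul_sum]
  rw [Finset.sum_comm]
  exact Finset.sum_congr rfl fun i _ => Finset.sum_congr rfl fun j _ => by ring

theorem sqs_add (u v : ι → ℂ) : sqs (u + v) = sqs u + sqs v + 2 * ∑ i, u i * v i := by
  simp only [sqs, Pi.add_apply, Finset.mul_sum, ← Finset.sum_add_distrib]
  exact Finset.sum_congr rfl fun i _ => by ring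

theorem sqs_mulVec (B : ι → ι → ℂ) (hB : ∀ i j, B i j = B j i) (u : ι → ℂ) :
    sqs (fun i => ∑ j, B i j * u j) = ∑ i, ∑ j, (∑ k, B i k * B k j) * u i * u j := by
  simp only [sqs, sq, Finset.sum_mul_sum]
  simp only [Finset.sum_mul]
  rw [Finset.sum_comm]
  refine Finset.sum_congr rfl fun i _ => ?_
  rw [Finset.sum_comm]
  refine Finset.sum_congr rfl fun j _ => Finset.sum_congr rfl fun k _ => ?_
  rw [hB k i]; ring

variable {X : Type*} [NormedAddCommGroup X] [NormedSpace ℂ X] [CompleteSpace X]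

set_option maxHeartbeats 1000000 in

/-- Morse lemma with parameters. -/
theorem exists_param_morse {f : X × (ι → ℂ) → ℂ} (hf : AnalyticAt ℂ f 0)
    (h1 : ∀ v, fderiv ℂ f 0 (0, v) = 0)
    (h2 : ∀ u v, fderiv ℂ (fderiv ℂ f) 0 (0, u) (0, v) = ∑ i, u i * v i) :
    ∃ (W : X × (ι → ℂ) → (ι → ℂ)) (e : X → ℂ), AnalyticAt ℂ W 0 ∧ W 0 = 0 ∧
      (∀ v, fderiv ℂ W 0 (0, v) = v) ∧ AnalyticAt ℂ e 0 ∧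
      ∀ᶠ p in 𝓝 (0 : X × (ι → ℂ)), f p = e p.1 + 2⁻¹ * sqs (W p) := by
  classical
  -- the critical point `c x` of `f (x, ·)`
  let g : X × (ι → ℂ) → (ι → ℂ) := fun p i => fderiv ℂ f p (0, Pi.single i 1)
  have hg : AnalyticAt ℂ g 0 := by
    have := hf.fderiv
    fun_prop
  have hf' : AnalyticAt ℂ f ((0 : X), (0 : ι → ℂ)) := hf
  have hg0 : g 0 = 0 := by funext i; exact h1 _
  have hg' : ∀ v, fderiv ℂ g (0, 0) (0, v) = ContinuousLinearEquiv.refl ℂ (ι → ℂ) v := by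
    intro v
    have : HasFDerivAt g (ContinuousLinearMap.pi fun i =>
        (fderiv ℂ (fderiv ℂ f) 0).flip (0, Pi.single i 1)) 0 :=
      hasFDerivAt_pi.2 fun i => hasFDerivAt_fderiv_apply hf _
    rw [Prod.mk_zero_zero, this.fderiv]
    funext i
    simp [h2, Pi.single_apply]
  obtain ⟨c0, hc0, hc00, -, hc1⟩ := exists_param_inverse (x₀ := (0:X)) (y₀ := (0 : ι → ℂ)) hg _ hg'
  rw [Prod.mk_zero_zero, hg0, Prod.mk_zero_zero] at hc0 hc00 hc1
  let c : X → (ι → ℂ) := fun x => c0 (x, 0)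
  have hcA : AnalyticAt ℂ c 0 := by
    refine AnalyticAt.fun_comp (g := c0) (f := fun x : X => (x, (0 : ι → ℂ))) ?_ (by fun_prop)
    exact hc0
  have hcz : c 0 = 0 := hc00
  have hcg : ∀ᶠ x in 𝓝 (0:X), g (x, c x) = 0 := by
    have : Tendsto (fun x : X => (x, (0 : ι → ℂ))) (𝓝 0) (𝓝 0) := by
      have : Continuous (fun x : X => (x, (0 : ι → ℂ))) := by fun_prop
      exact this.tendsto 0
    exact this.eventually hc1
  -- shift the critical point to the origin
  have hcf : AnalyticAt ℂ (fun p : X × (ι → ℂ) => c p.1) 0 :=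
    AnalyticAt.fun_comp (g := c) (f := fun p : X × (ι → ℂ) => p.1) hcA (by fun_prop)
  let f₁ : X × (ι → ℂ) → ℂ := fun p => f (p.1, c p.1 + p.2)
  have hf₁ : AnalyticAt ℂ f₁ 0 := by
    refine AnalyticAt.fun_comp (g := f) (f := fun p : X × (ι → ℂ) => (p.1, c p.1 + p.2)) ?_
      (by fun_prop)
    simpa [hcz] using hf'
  obtain ⟨D, hD, hD1, hD2⟩ := exists_hadamard hf₁
  obtain ⟨S, hS, hS1, -⟩ := exists_hadamard hD
  have hxc : Tendsto (fun x : X => (x, c x)) (𝓝 0) (𝓝 0) := by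
    have : ContinuousAt (fun x : X => (x, c x)) 0 := continuousAt_id.prodMk hcA.continuousAt
    rw [ContinuousAt, hcz] at this
    exact this
  have hD0 : ∀ᶠ x in 𝓝 (0:X), D (x, 0) = 0 := by
    filter_upwards [hcg, hxc.eventually hf.eventually_analyticAt, hcA.eventually_analyticAt]
      with x hx1 hx2 hx3
    rw [hD2]
    ext v
    have hin : HasFDerivAt (fun p : X × (ι → ℂ) => (p.1, c p.1 + p.2))
        ((ContinuousLinearMap.fst ℂ X (ι → ℂ)).prod
          (((fderiv ℂ c x).comp (ContinuousLinearMap.fst ℂ X (ι → ℂ)) +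
            ContinuousLinearMap.snd ℂ X (ι → ℂ)))) (x, 0) := by
      refine hasFDerivAt_fst.prodMk (HasFDerivAt.add ?_ hasFDerivAt_snd)
      exact HasFDerivAt.comp (g := c) (x, (0 : ι → ℂ)) hx3.differentiableAt.hasFDerivAt hasFDerivAt_fst
    have hfx : HasFDerivAt f (fderiv ℂ f (x, c x)) (x, c x + 0) := by
      rw [add_zero]; exact hx2.differentiableAt.hasFDerivAt
    have := HasFDerivAt.comp (g := f) (x, (0 : ι → ℂ)) hfx hin
    have e : fderiv ℂ f₁ (x, 0) = _ := this.fderiv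
    rw [e]
    have hv : (0, v) = ∑ i, v i • ((0 : X), (Pi.single i 1 : ι → ℂ)) := by
      ext1
      · simp [Prod.fst_sum]
      · simp [Prod.snd_sum, sum_single_smul]
    simp only [ContinuousLinearMap.comp_apply, ContinuousLinearMap.inr_apply,
      ContinuousLinearMap.prod_apply, ContinuousLinearMap.coe_fst', add_apply,
      ContinuousLinearMap.coe_snd', map_zero, zero_add]
    rw [hv, map_sum]
    simp only [map_smul]
    simpa using Finset.sum_eq_zero fun i _ => by
      have := congrFun hx1 i
      simp only [g, Pi.zero_apply] at this
      rw [this, mul_zero]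
  have hfst : Tendsto (fun p : X × (ι → ℂ) => p.1) (𝓝 0) (𝓝 0) := continuous_fst.tendsto 0
  have hquad : ∀ᶠ p in 𝓝 (0 : X × (ι → ℂ)), f₁ p = f₁ (p.1, 0) + S p p.2 p.2 := by
    filter_upwards [hD1, hS1, hfst.eventually hD0] with p k1 k2 k3
    rw [k1, k2, k3, zero_add]
  let T : X × (ι → ℂ) → (ι → ι → ℂ) := fun p i j =>
    S p (Pi.single i 1) (Pi.single j 1) + S p (Pi.single j 1) (Pi.single i 1)
  have hT : AnalyticAt ℂ T 0 := by fun_prop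
  have hTsym : ∀ p i j, T p i j = T p j i := fun p i j => add_comm _ _
  have hTS : ∀ p v, S p v v = 2⁻¹ * ∑ i, ∑ j, T p i j * v i * v j := by
    intro p v
    have e : ∑ i, ∑ j, T p i j * v i * v j = S p v v + S p v v := by
      rw [bilin_expand (S p) v v]
      conv_rhs => enter [2]; rw [Finset.sum_comm]
      simp only [← Finset.sum_add_distrib, T]
      exact Finset.sum_congr rfl fun i _ => Finset.sum_congr rfl fun j _ => by ring
    rw [e]; ring
  have hinc : Tendsto (fun v : ι → ℂ => ((0 : X), v)) (𝓝 0) (𝓝 0) := by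
    have : Continuous (fun v : ι → ℂ => ((0 : X), v)) := by fun_prop
    exact this.tendsto 0
  have hS0 : ∀ v, S 0 v v = 2⁻¹ * sqs v := by
    intro v
    rw [← sub_eq_zero]
    refine eq_zero_of_homogeneous_of_isBigO (Q := fun v => S 0 v v - 2⁻¹ * sqs v) ?_ ?_ v
    · intro t y
      have e : t • y = (t : ℂ) • y := by ext i; simp
      have e' : ∀ z : ℂ, (t ^ 2) • z = (t : ℂ) ^ 2 * z := by intro z; simp
      simp only [e, sqs_smul, map_smul, smul_apply, smul_eq_mul, e']
      ring
    · have t1 := (taylor_two hf).comp_tendsto hinc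
      have t2 : (fun v : ι → ℂ => S (0, v) - S 0) =O[𝓝 0] fun v => ‖v‖ := by
        have := (hS.differentiableAt.isBigO_sub).comp_tendsto hinc
        refine this.trans (Asymptotics.IsBigO.of_bound 1 (Eventually.of_forall fun v => ?_))
        simp [Prod.norm_def]
      have t3 : (fun v : ι → ℂ => (S (0, v) - S 0) v v) =O[𝓝 0] fun v => ‖v‖ ^ 3 := by
        have k : (fun v : ι → ℂ => (S (0, v) - S 0) v v) =O[𝓝 0]
            fun v => ‖S (0, v) - S 0‖ * ‖v‖ * ‖v‖ := by
          refine Asymptotics.IsBigO.of_bound 1 (Eventually.of_forall fun v => ?_)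
          rw [one_mul, Real.norm_of_nonneg (by positivity)]
          exact ContinuousLinearMap.le_opNorm₂ _ _ _
        refine k.trans ?_
        have := (t2.norm_left.mul (Asymptotics.isBigO_refl (fun v : ι → ℂ => ‖v‖) (𝓝 0))).mul
          (Asymptotics.isBigO_refl (fun v : ι → ℂ => ‖v‖) (𝓝 0))
        refine this.congr_right fun v => by ring
      have t4 : (fun v : ι → ℂ => f (0, v) - f 0 - 2⁻¹ * sqs v) =O[𝓝 0] fun v => ‖v‖ ^ 3 := by
        refine (t1.congr_left fun v => ?_).trans
          (Asymptotics.IsBigO.of_bound 1 (Eventually.of_forall fun v => ?_))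
        · simp [h1, h2, sqs, sq]
        · simp [Prod.norm_def]
      refine (t4.sub t3).congr' ?_ EventuallyEq.rfl
      filter_upwards [hinc.eventually hquad] with v hv
      have e1 : f₁ (0, v) = f (0, v) := by simp [f₁, hcz]
      have e2 : f₁ (0, 0) = f 0 := by simp [f₁, hcz]; rfl
      simp only [e1, e2] at hv
      rw [hv]
      simp only [sub_apply]
      ring
  have hT0 : T 0 = fun i j => if i = j then 1 else 0 := by
    funext i j
    have k := hS0 (Pi.single i 1 + Pi.single j 1)
    rw [sqs_add, mul_add, mul_add, ← hS0, ← hS0] at k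
    simp only [map_add, add_apply] at k
    have k' : T 0 i j = ∑ l, (Pi.single i 1 : ι → ℂ) l * (Pi.single j 1 : ι → ℂ) l := by
      simp only [T]
      linear_combination k
    rw [k']
    simp [Pi.single_apply, eq_comm]
  obtain ⟨r, hr, hr0, hr1⟩ := exists_matrix_sqrt (ι := ι)
  rw [← hT0] at hr hr1
  -- undo the shift
  let σ : X × (ι → ℂ) → X × (ι → ℂ) := fun p => (p.1, p.2 - c p.1)
  have hσ : AnalyticAt ℂ σ 0 := by fun_prop
  have hσ0 : σ 0 = 0 := by simp [σ, hcz]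
  have hBσ : AnalyticAt ℂ (fun p => r (T (σ p))) 0 := by
    have k1 : AnalyticAt ℂ T (σ 0) := by rw [hσ0]; exact hT
    have k2 : AnalyticAt ℂ (fun p => T (σ p)) 0 := AnalyticAt.fun_comp (g := T) (f := σ) k1 hσ
    have k3 : AnalyticAt ℂ r (T (σ 0)) := by rw [hσ0]; exact hr
    exact AnalyticAt.fun_comp (g := r) (f := fun p => T (σ p)) k3 k2
  have hBij : ∀ i j, AnalyticAt ℂ (fun p => r (T (σ p)) i j) 0 := fun i j =>
    analyticAt_pi_iff.1 (analyticAt_pi_iff.1 hBσ i) j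
  let W : X × (ι → ℂ) → (ι → ℂ) := fun p i => ∑ j, r (T (σ p)) i j * (p.2 j - c p.1 j)
  have hcj : ∀ j, AnalyticAt ℂ (fun p : X × (ι → ℂ) => c p.1 j) 0 := analyticAt_pi_iff.1 hcf
  have hpj : ∀ j, AnalyticAt ℂ (fun p : X × (ι → ℂ) => p.2 j) 0 := analyticAt_pi_iff.1 analyticAt_snd
  have hW : AnalyticAt ℂ W 0 := analyticAt_pi_iff.2 fun i =>
    Finset.analyticAt_fun_sum _ fun j _ => (hBij i j).mul ((hpj j).sub (hcj j))
  refine ⟨W, fun x => f (x, c x), hW, ?_, ?_, ?_, ?_⟩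
  · funext i; simp [W, hcz]
  · intro v
    have hd : HasFDerivAt W (ContinuousLinearMap.pi fun i => ∑ j,
        (r (T (σ 0)) i j • ((ContinuousLinearMap.proj (R := ℂ) (φ := fun _ : ι => ℂ) j).comp
          (ContinuousLinearMap.snd ℂ X (ι → ℂ) -
            (fderiv ℂ c 0).comp (ContinuousLinearMap.fst ℂ X (ι → ℂ)))) +
         ((0 : X × (ι → ℂ)).2 j - c (0 : X × (ι → ℂ)).1 j) •
           fderiv ℂ (fun p => r (T (σ p)) i j) 0)) 0 := by
      refine hasFDerivAt_pi.2 fun i => HasFDerivAt.fun_sum fun j _ => ?_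
      refine (hBij i j).differentiableAt.hasFDerivAt.mul ?_
      have k : HasFDerivAt (fun p : X × (ι → ℂ) => p.2 - c p.1) (ContinuousLinearMap.snd ℂ X (ι → ℂ) -
            (fderiv ℂ c 0).comp (ContinuousLinearMap.fst ℂ X (ι → ℂ))) 0 := by
        refine hasFDerivAt_snd.sub ?_
        exact HasFDerivAt.comp (g := c) (0 : X × (ι → ℂ)) hcA.differentiableAt.hasFDerivAt hasFDerivAt_fst
      exact HasFDerivAt.comp (g := fun y : ι → ℂ => y j) (0 : X × (ι → ℂ))
        (ContinuousLinearMap.proj (R := ℂ) (φ := fun _ : ι => ℂ) j).hasFDerivAt k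
    rw [hd.fderiv, hσ0, hT0, hr0]
    funext i
    simp only [ContinuousLinearMap.pi_apply, sum_apply, add_apply, smul_apply,
      ContinuousLinearMap.comp_apply, sub_apply, ContinuousLinearMap.coe_snd',
      ContinuousLinearMap.coe_fst', map_zero, sub_zero, ContinuousLinearMap.proj_apply]
    simp [hcz]
  · refine AnalyticAt.fun_comp (g := f) (f := fun x : X => (x, c x)) ?_ (by fun_prop)
    simpa [hcz] using hf'
  · have hσt : Tendsto σ (𝓝 0) (𝓝 0) := by simpa [ContinuousAt, hσ0] using hσ.continuousAt
    filter_upwards [hσt.eventually hquad, hσt.eventually (hT.continuousAt.eventually hr1)]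
      with p k1 k2
    obtain ⟨k3, k4⟩ := k2 (hTsym _)
    have e1 : f₁ (σ p) = f p := by simp [f₁, σ]
    rw [← e1, k1, hTS]
    simp only [f₁, σ, add_zero]
    congr 2
    have := sqs_mulVec (r (T (σ p))) k3 (fun j => p.2 j - c p.1 j)
    simp only [k4] at this
    exact this.symm
end Morse

/-! ### Second derivatives and the Morse lemma -/

section Second
variable {E F G : Type*} [NormedAddCommGroup E] [NormedSpace ℂ E]
  [NormedAddCommGroup F] [NormedSpace ℂ F] [CompleteSpace F]
  [NormedAddCommGroup G] [NormedSpace ℂ G] [CompleteSpace G]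

theorem second_fderiv_symm {f : E → F} {a : E} (hf : AnalyticAt ℂ f a) (u v : E) :
    fderiv ℂ (fderiv ℂ f) a u v = fderiv ℂ (fderiv ℂ f) a v u := by
  have := (hf.contDiffAt (n := ⊤)).isSymmSndFDerivAt (by simp)
  exact this.eq u v

/-- The second derivative is read off a second order expansion. -/
theorem second_fderiv_of_expansion {f : E → F} (hf : AnalyticAt ℂ f 0) {Q : E → F}
    (hQ : ∀ (t : ℝ) y, Q (t • y) = (t ^ 2) • Q y)
    (h : (fun y => f y - f 0 - fderiv ℂ f 0 y - Q y) =O[𝓝 0] fun y => ‖y‖ ^ 3) (u v : E) :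
    fderiv ℂ (fderiv ℂ f) 0 u v = Q (u + v) - Q u - Q v := by
  have key : ∀ y, Q y = (2⁻¹ : ℂ) • fderiv ℂ (fderiv ℂ f) 0 y y := by
    intro y
    rw [← sub_eq_zero, ← neg_eq_zero]
    refine eq_zero_of_homogeneous_of_isBigO
      (Q := fun y => -(Q y - (2⁻¹ : ℂ) • fderiv ℂ (fderiv ℂ f) 0 y y)) ?_ ?_ y
    · intro t y
      have e : ∀ y : E, t • y = (t : ℂ) • y := fun y => (Complex.coe_smul t y).symm
      have e' : (t ^ 2) • Q y = ((t : ℂ) ^ 2) • Q y := by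
        rw [← Complex.coe_smul]; push_cast; rfl
      have e'' : ∀ z : F, (t ^ 2) • z = ((t : ℂ) ^ 2) • z := by
        intro z; rw [← Complex.coe_smul]; push_cast; rfl
      rw [hQ, e y]
      simp only [map_smul, smul_apply, e'']
      rw [smul_neg, smul_sub, smul_comm _ (2⁻¹ : ℂ), sq, mul_smul, mul_smul]
    · refine (h.sub (taylor_two hf)).congr_left fun y => ?_
      abel
  have hs := second_fderiv_symm hf u v
  rw [key, key, key]
  simp only [map_add, add_apply, ← hs, ← smul_sub]
  rw [eq_comm, inv_smul_eq_iff₀ two_ne_zero, two_smul]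
  abel

theorem second_fderiv_comp_clm {f : F → G} {L : E →L[ℂ] F} (hf : AnalyticAt ℂ f 0) (u v : E) :
    fderiv ℂ (fderiv ℂ fun x => f (L x)) 0 u v = fderiv ℂ (fderiv ℂ f) 0 (L u) (L v) := by
  have hfL : AnalyticAt ℂ f (L 0) := by rwa [map_zero]
  have hev : ∀ᶠ x in 𝓝 (0 : E), fderiv ℂ (fun x => f (L x)) x = (fderiv ℂ f (L x)).comp L := by
    filter_upwards [L.continuous.continuousAt.eventually hfL.eventually_analyticAt] with x hx
    exact ((hx.differentiableAt.hasFDerivAt).comp x L.hasFDerivAt).fderiv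
  have hL0 : HasFDerivAt (fderiv ℂ f) (fderiv ℂ (fderiv ℂ f) 0) (L 0) := by
    rw [map_zero]; exact hf.fderiv.differentiableAt.hasFDerivAt
  have h1 := (hL0.comp (0 : E) L.hasFDerivAt).clm_comp (hasFDerivAt_const L (0:E))
  rw [EventuallyEq.fderiv_eq hev]
  erw [h1.fderiv]
  simp

theorem fderiv_sqs {ι : Type*} [Fintype ι] {W : E → (ι → ℂ)} {a : E} (hW : DifferentiableAt ℂ W a)
    (v : E) : fderiv ℂ (fun x => sqs (W x)) a v = 2 * ∑ i, W a i * fderiv ℂ W a v i := by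
  have h : ∀ i, HasFDerivAt (fun x => W x i)
      ((ContinuousLinearMap.proj (R := ℂ) (φ := fun _ : ι => ℂ) i).comp (fderiv ℂ W a)) a :=
    fun i => HasFDerivAt.comp (g := fun y : ι → ℂ => y i) a
      (ContinuousLinearMap.proj (R := ℂ) (φ := fun _ : ι => ℂ) i).hasFDerivAt hW.hasFDerivAt
  have h2 : HasFDerivAt (fun x => sqs (W x)) _ a :=
    HasFDerivAt.fun_sum (u := Finset.univ) fun i _ => (h i).pow 2
  rw [h2.fderiv]
  simp [Finset.mul_sum, mul_assoc]

theorem second_fderiv_sqs {ι : Type*} [Fintype ι] {W : E → (ι → ℂ)} (hW : AnalyticAt ℂ W 0)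
    (hW0 : W 0 = 0) (u v : E) :
    fderiv ℂ (fderiv ℂ fun x => sqs (W x)) 0 u v
      = 2 * ∑ i, fderiv ℂ W 0 u i * fderiv ℂ W 0 v i := by
  rw [← ContinuousLinearMap.flip_apply, ← (hasFDerivAt_fderiv_apply (by fun_prop) v).fderiv]
  have hev : ∀ᶠ x in 𝓝 (0 : E), fderiv ℂ (fun x => sqs (W x)) x v
      = 2 * ∑ i, W x i * fderiv ℂ W x v i := by
    filter_upwards [hW.eventually_analyticAt] with x hx
    exact fderiv_sqs hx.differentiableAt v
  rw [EventuallyEq.fderiv_eq hev]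
  have h1 : ∀ i, HasFDerivAt (fun x => W x i)
      ((ContinuousLinearMap.proj (R := ℂ) (φ := fun _ : ι => ℂ) i).comp (fderiv ℂ W 0)) 0 :=
    fun i => HasFDerivAt.comp (g := fun y : ι → ℂ => y i) 0
      (ContinuousLinearMap.proj (R := ℂ) (φ := fun _ : ι => ℂ) i).hasFDerivAt
        hW.differentiableAt.hasFDerivAt
  have h2 : ∀ i, HasFDerivAt (fun x => fderiv ℂ W x v i)
      ((ContinuousLinearMap.proj (R := ℂ) (φ := fun _ : ι => ℂ) i).comp
        ((fderiv ℂ (fderiv ℂ W) 0).flip v)) 0 :=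
    fun i => HasFDerivAt.comp (g := fun y : ι → ℂ => y i) 0
      (ContinuousLinearMap.proj (R := ℂ) (φ := fun _ : ι => ℂ) i).hasFDerivAt
        (hasFDerivAt_fderiv_apply hW v)
  have h3 := (HasFDerivAt.fun_sum (u := Finset.univ) fun i _ => (h1 i).mul (h2 i)).const_mul (2:ℂ)
  have h4 : fderiv ℂ (fun x => 2 * ∑ i, W x i * fderiv ℂ W x v i) 0 = _ := h3.fderiv
  rw [h4]
  simp [hW0, mul_comm]


end Second

/-- Morse lemma. -/
theorem exists_morse {ι : Type*} [Fintype ι] {f : (ι → ℂ) → ℂ} (hf : AnalyticAt ℂ f 0)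
    (h0 : f 0 = 0) (h1 : fderiv ℂ f 0 = 0) {l : ℂ} (hl : l ≠ 0)
    (h2 : ∀ u v, fderiv ℂ (fderiv ℂ f) 0 u v = l * ∑ i, u i * v i) :
    ∃ (μ : ℂ) (φ : (ι → ℂ) → (ι → ℂ)), μ ≠ 0 ∧ AnalyticAt ℂ φ 0 ∧ φ 0 = 0 ∧
      (∀ v, fderiv ℂ φ 0 v = μ • v) ∧ μ ^ 2 * 2 = l ∧ ∀ᶠ z in 𝓝 (0 : ι → ℂ), f z = sqs (φ z) := by
  let g : ℂ × (ι → ℂ) → ℂ := fun p => l⁻¹ * f (ContinuousLinearMap.snd ℂ ℂ (ι → ℂ) p)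
  have hff : AnalyticAt ℂ (fun z => l⁻¹ * f z) 0 := analyticAt_const.mul hf
  have hg : AnalyticAt ℂ g 0 := 
    AnalyticAt.fun_comp (g := fun z => l⁻¹ * f z) (f := fun p => ContinuousLinearMap.snd ℂ ℂ (ι → ℂ) p)
      hff (by fun_prop)
  have hff' : fderiv ℂ (fun z => l⁻¹ * f z) 0 = 0 := by
    rw [fderiv_const_mul hf.differentiableAt, h1]; ext; simp
  have hff'' : ∀ u v, fderiv ℂ (fderiv ℂ fun z => l⁻¹ * f z) 0 u v = ∑ i, u i * v i := by
    intro u v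
    rw [← ContinuousLinearMap.flip_apply, ← (hasFDerivAt_fderiv_apply hff v).fderiv]
    have hev : ∀ᶠ x in 𝓝 (0 : ι → ℂ), fderiv ℂ (fun z => l⁻¹ * f z) x v = l⁻¹ * fderiv ℂ f x v := by
      filter_upwards [hf.eventually_analyticAt] with x hx
      rw [fderiv_const_mul hx.differentiableAt _]; simp
    rw [EventuallyEq.fderiv_eq hev, ((hasFDerivAt_fderiv_apply hf v).const_mul _).fderiv]
    simp only [smul_apply, smul_eq_mul, ContinuousLinearMap.flip_apply, h2]
    rw [inv_mul_cancel_left₀ hl]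
  obtain ⟨W, e, hW, hW0, hW', he, hWe⟩ := exists_param_morse hg (by
    intro v
    have := (hff.differentiableAt.hasFDerivAt (x := (0 : ι → ℂ))).comp (0 : ℂ × (ι → ℂ))
      (ContinuousLinearMap.snd ℂ ℂ (ι → ℂ)).hasFDerivAt
    have e : fderiv ℂ g 0 = _ := this.fderiv
    rw [e]
    erw [hff']; simp) (by
    intro u v
    have := second_fderiv_comp_clm (L := ContinuousLinearMap.snd ℂ ℂ (ι → ℂ)) hff (0, u) (0, v)
    rw [hff''] at this
    exact this)
  obtain ⟨κ, hκ⟩ := IsAlgClosed.exists_pow_nat_eq (l / 2) two_pos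
  have hκ0 : κ ≠ 0 := by
    rintro rfl
    simp only [ne_eq, OfNat.ofNat_ne_zero, not_false_eq_true, zero_pow] at hκ
    exact hl (by linear_combination (-2) * hκ)
  have hinc : Tendsto (fun v : ι → ℂ => ((0 : ℂ), v)) (𝓝 0) (𝓝 0) := by
    have : Continuous (fun v : ι → ℂ => ((0 : ℂ), v)) := by fun_prop
    exact this.tendsto 0
  have he0 : e 0 = 0 := by
    have := hWe.self_of_nhds
    simpa [g, h0, hW0] using this.symm
  refine ⟨κ, fun z => κ • W (0, z), hκ0, ?_, ?_, ?_, ?_, ?_⟩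
  · have : AnalyticAt ℂ (fun z => W (0, z)) 0 :=
      AnalyticAt.fun_comp (g := W) (f := fun z : ι → ℂ => ((0:ℂ), z)) hW (by fun_prop)
    exact analyticAt_const.fun_smul this
  · have : W (0, 0) = 0 := hW0
    simp [this]
  · intro v
    have : HasFDerivAt (fun z => W (0, z)) _ 0 :=
      HasFDerivAt.comp (g := W) (f := fun z : ι → ℂ => ((0:ℂ), z)) (0 : ι → ℂ)
        hW.differentiableAt.hasFDerivAt (ContinuousLinearMap.inr ℂ ℂ (ι → ℂ)).hasFDerivAt
    rw [(this.fun_const_smul κ).fderiv]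
    simp only [smul_apply, ContinuousLinearMap.comp_apply, ContinuousLinearMap.inr_apply, hW']
  · rw [hκ]; ring
  · filter_upwards [hinc.eventually hWe] with z hz
    rw [sqs_smul, hκ]
    simp only [g, he0, ContinuousLinearMap.coe_snd', zero_add] at hz
    field_simp at hz ⊢
    rw [hz]

/-! ### Densities modulo maps preserving a function -/

section Det
variable {E E₂ : Type*} [NormedAddCommGroup E] [NormedSpace ℂ E] [FiniteDimensional ℂ E]
  [NormedAddCommGroup E₂] [NormedSpace ℂ E₂] [FiniteDimensional ℂ E₂]

theorem det_shear (S : E₂ →ₗ[ℂ] E) :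
    LinearMap.det ((LinearMap.fst ℂ E E₂ + S ∘ₗ LinearMap.snd ℂ E E₂).prod (LinearMap.snd ℂ E E₂)) = 1 := by
  -- the shear is conjugate to its own square
  let U : (E × E₂) →ₗ[ℂ] (E × E₂) :=
    (LinearMap.fst ℂ E E₂ + S ∘ₗ LinearMap.snd ℂ E E₂).prod (LinearMap.snd ℂ E E₂)
  let U' : (E × E₂) →ₗ[ℂ] (E × E₂) :=
    (LinearMap.fst ℂ E E₂ - S ∘ₗ LinearMap.snd ℂ E E₂).prod (LinearMap.snd ℂ E E₂)
  let D : (E × E₂) ≃ₗ[ℂ] (E × E₂) :=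
    (LinearEquiv.smulOfNeZero ℂ E (2:ℂ) two_ne_zero).prodCongr (LinearEquiv.refl ℂ E₂)
  have h1 : U ∘ₗ U = (D : (E × E₂) →ₗ[ℂ] (E × E₂)) ∘ₗ U ∘ₗ (D.symm : (E × E₂) →ₗ[ℂ] (E × E₂)) := by
    refine LinearMap.ext fun x => ?_
    have hx : D (D.symm x) = x := D.apply_symm_apply x
    have e : D (D.symm x) = ((2:ℂ) • (D.symm x).1, (D.symm x).2) := rfl
    rw [e] at hx
    obtain ⟨e1, e2⟩ := Prod.ext_iff.1 hx
    simp only at e1 e2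
    ext1
    · change x.1 + S x.2 + S x.2 = (2:ℂ) • ((D.symm x).1 + S (D.symm x).2)
      rw [smul_add, e1, e2, two_smul, add_assoc]
    · change x.2 = (D.symm x).2
      rw [e2]
  have h2 : LinearMap.det U * LinearMap.det U = LinearMap.det U := by
    rw [← LinearMap.det_comp, h1, LinearMap.det_conj]
  have h3 : U ∘ₗ U' = LinearMap.id := by
    refine LinearMap.ext fun x => ?_
    ext1
    · change x.1 - S x.2 + S x.2 = x.1
      abel
    · rfl
  have h4 : LinearMap.det U ≠ 0 := by
    intro h0
    have := congrArg LinearMap.det h3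
    rw [LinearMap.det_comp, h0, LinearMap.det_id] at this
    simp at this
  exact mul_left_cancel₀ h4 (h2.trans (mul_one _).symm)

/-- Determinant of a block triangular map. -/
theorem det_block (T : (E × E₂) →L[ℂ] (E × E₂)) (P : E →L[ℂ] E) (S : E₂ →L[ℂ] E)
    (Q : E₂ →L[ℂ] E₂) (hT : ∀ x, T x = (P x.1 + S x.2, Q x.2)) : T.det = P.det * Q.det := by
  have h : (T : (E × E₂) →ₗ[ℂ] (E × E₂)) =
      ((LinearMap.id : E →ₗ[ℂ] E).prodMap (Q : E₂ →ₗ[ℂ] E₂)) ∘ₗ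
      ((LinearMap.fst ℂ E E₂ + (S : E₂ →ₗ[ℂ] E) ∘ₗ LinearMap.snd ℂ E E₂).prod (LinearMap.snd ℂ E E₂))
      ∘ₗ ((P : E →ₗ[ℂ] E).prodMap (LinearMap.id : E₂ →ₗ[ℂ] E₂)) := by
    refine LinearMap.ext fun x => ?_
    change T x = _
    rw [hT]
    rfl
  rw [ContinuousLinearMap.det, h, LinearMap.det_comp, LinearMap.det_comp, det_shear,
    LinearMap.det_prodMap, LinearMap.det_prodMap]
  simp [ContinuousLinearMap.det, mul_comm]

/-- Determinant of a rank one perturbation of a homothety. -/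
theorem det_smul_add_rank_one (T : E →L[ℂ] E) (l : ℂ) (hl : l ≠ 0) (f : E →L[ℂ] ℂ) (y : E)
    (hT : ∀ v, T v = l • v + f v • y) {k : ℕ} (hk : Module.finrank ℂ E = k + 1) :
    T.det = l ^ k * (l + f y) := by
  have h : (T : E →ₗ[ℂ] E) = l • LinearMap.transvection (f : E →ₗ[ℂ] ℂ) (l⁻¹ • y) := by
    refine LinearMap.ext fun v => ?_
    change T v = l • (v + f v • l⁻¹ • y)
    rw [hT, smul_add, smul_comm l, smul_inv_smul₀ hl]
  rw [ContinuousLinearMap.det, h, LinearMap.det_smul, LinearMap.transvection.det, hk]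
  simp
  field_simp
  ring
end Det

section VRel
set_option linter.unusedSectionVars false
variable {E E₂ R R' : Type} [NormedAddCommGroup E] [NormedSpace ℂ E] [FiniteDimensional ℂ E]
  [NormedAddCommGroup E₂] [NormedSpace ℂ E₂] [FiniteDimensional ℂ E₂]
  [NormedAddCommGroup R'] [NormedSpace ℂ R'] [CompleteSpace R']
  [NormedAddCommGroup R] [NormedSpace ℂ R] [CompleteSpace R]

/-- Two families of densities `J, J'` on `E`, depending on parameters in `R`, are related if
a family of germs of maps of `E` preserving the function `p` pulls `J'` back to `J`. -/
def VRel (p : E → ℂ) (J J' : E × R → ℂ) : Prop :=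
  ∃ θ : E × R → E, AnalyticAt ℂ θ 0 ∧ θ 0 = 0 ∧ ∀ᶠ P in 𝓝 (0 : E × R), p (θ P) = p P.1 ∧
    ((fderiv ℂ θ P).comp (ContinuousLinearMap.inl ℂ E R)).det * J' (θ P, P.2) = J P

theorem VRel.trans {p : E → ℂ} {J J' J'' : E × R → ℂ} (h : VRel p J J') (h' : VRel p J' J'') :
    VRel p J J'' := by
  obtain ⟨θ, hθ, hθ0, H⟩ := h
  obtain ⟨θ', hθ', hθ'0, H'⟩ := h'
  have hs : AnalyticAt ℂ (fun P : E × R => (θ P, P.2)) 0 := by fun_prop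
  have hst : Tendsto (fun P : E × R => (θ P, P.2)) (𝓝 0) (𝓝 0) := by
    have := hs.continuousAt.tendsto
    simp only [hθ0] at this
    exact this
  refine ⟨fun P => θ' (θ P, P.2), ?_, ?_, ?_⟩
  · refine AnalyticAt.fun_comp (g := θ') (f := fun P : E × R => (θ P, P.2)) ?_ hs
    rw [hθ0]; exact hθ'
  · simp only [hθ0]; exact hθ'0
  · filter_upwards [H, hst.eventually H', hst.eventually hθ'.eventually_analyticAt,
      hθ.eventually_analyticAt] with P h1 h2 h3 h4
    refine ⟨h2.1.trans h1.1, ?_⟩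
    rw [← h1.2, ← h2.2, ← mul_assoc]
    congr 1
    have hd : HasFDerivAt (fun P : E × R => (θ P, P.2))
        ((fderiv ℂ θ P).prod (ContinuousLinearMap.snd ℂ E R)) P :=
      h4.differentiableAt.hasFDerivAt.prodMk hasFDerivAt_snd
    have hd2 : HasFDerivAt (fun P : E × R => θ' (θ P, P.2)) _ P :=
      HasFDerivAt.comp (g := θ') P h3.differentiableAt.hasFDerivAt hd
    rw [hd2.fderiv, mul_comm, ContinuousLinearMap.det, ContinuousLinearMap.det,
      ContinuousLinearMap.det, ← LinearMap.det_comp]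
    congr 1

/-- The relation survives a change of parameters. -/
theorem VRel.pullback {p : E → ℂ} {J J' : E × R' → ℂ} (h : VRel p J J') {ρ : R → R'}
    (hρ : AnalyticAt ℂ ρ 0) (hρ0 : ρ 0 = 0) :
    VRel p (fun P : E × R => J (P.1, ρ P.2)) (fun P => J' (P.1, ρ P.2)) := by
  obtain ⟨θ, hθ, hθ0, H⟩ := h
  have hρ' : AnalyticAt ℂ (fun P : E × R => ρ P.2) 0 :=
    AnalyticAt.fun_comp (g := ρ) (f := fun P : E × R => P.2) hρ (by fun_prop)
  have hs : AnalyticAt ℂ (fun P : E × R => (P.1, ρ P.2)) 0 := by fun_prop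
  have hst : Tendsto (fun P : E × R => (P.1, ρ P.2)) (𝓝 0) (𝓝 0) := by
    have := hs.continuousAt.tendsto
    simp only [Prod.snd_zero, hρ0] at this
    exact this
  refine ⟨fun P => θ (P.1, ρ P.2), ?_, ?_, ?_⟩
  · refine AnalyticAt.fun_comp (g := θ) (f := fun P : E × R => (P.1, ρ P.2)) ?_ hs
    simp only [Prod.snd_zero, hρ0]; exact hθ
  · simp only [Prod.snd_zero, hρ0]; exact hθ0
  · have hsnd : Tendsto (fun P : E × R => P.2) (𝓝 0) (𝓝 0) := continuous_snd.tendsto 0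
    filter_upwards [hst.eventually H, hst.eventually hθ.eventually_analyticAt,
      hsnd.eventually hρ.eventually_analyticAt] with P h1 h2 h3
    refine ⟨h1.1, ?_⟩
    rw [← h1.2]
    congr 2
    have hd : HasFDerivAt (fun P : E × R => (P.1, ρ P.2))
        ((ContinuousLinearMap.fst ℂ E R).prod ((fderiv ℂ ρ P.2).comp (ContinuousLinearMap.snd ℂ E R))) P :=
      hasFDerivAt_fst.prodMk
        (HasFDerivAt.comp (g := ρ) P h3.differentiableAt.hasFDerivAt hasFDerivAt_snd)
    have hd2 : HasFDerivAt (fun P : E × R => θ (P.1, ρ P.2)) _ P :=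
      HasFDerivAt.comp (g := θ) P h2.differentiableAt.hasFDerivAt hd
    rw [hd2.fderiv]
    ext v
    simp

/-- Variables of a second factor, treated as parameters, may be absorbed into the space. -/
theorem VRel.lift {p : E → ℂ} (p₂ : E₂ → ℂ) {J J' : (E × E₂) × R → ℂ}
    (h : VRel (R := E₂ × R) p (fun P => J ((P.1, P.2.1), P.2.2)) (fun P => J' ((P.1, P.2.1), P.2.2))) :
    VRel (fun Y : E × E₂ => p Y.1 + p₂ Y.2) J J' := by
  obtain ⟨θ, hθ, hθ0, H⟩ := h
  let s : (E × E₂) × R →L[ℂ] E × (E₂ × R) := (ContinuousLinearEquiv.prodAssoc ℂ E E₂ R : _ →L[ℂ] _)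
  have hss : ∀ P, s P = (P.1.1, (P.1.2, P.2)) := fun P => rfl
  have hst : Tendsto s (𝓝 0) (𝓝 0) := s.continuous.tendsto' _ _ (map_zero s)
  have hθs : AnalyticAt ℂ (fun P => θ (s P)) 0 := by
    refine AnalyticAt.fun_comp (g := θ) (f := s) ?_ (s.analyticAt 0)
    rwa [map_zero]
  refine ⟨fun P => (θ (s P), P.1.2), by fun_prop, ?_, ?_⟩
  · simp [hθ0]
  · filter_upwards [hst.eventually H, hst.eventually hθ.eventually_analyticAt] with P h1 h2
    refine ⟨congrArg (· + p₂ P.1.2) h1.1, ?_⟩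
    rw [← (show _ = J P from h1.2)]
    congr 1
    have hd : HasFDerivAt (fun P => θ (s P)) ((fderiv ℂ θ (s P)).comp s) P :=
      HasFDerivAt.comp (g := θ) P h2.differentiableAt.hasFDerivAt s.hasFDerivAt
    have hd2 : HasFDerivAt (fun P : (E × E₂) × R => (θ (s P), P.1.2)) _ P :=
      hd.prodMk (((ContinuousLinearMap.snd ℂ E E₂).comp
        (ContinuousLinearMap.fst ℂ (E × E₂) R)).hasFDerivAt)
    rw [hd2.fderiv]
    rw [det_block (P := (fderiv ℂ θ (s P)).comp (ContinuousLinearMap.inl ℂ E (E₂ × R)))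
      (S := (fderiv ℂ θ (s P)).comp ((ContinuousLinearMap.inr ℂ E (E₂ × R)).comp
        (ContinuousLinearMap.inl ℂ E₂ R))) (Q := ContinuousLinearMap.id ℂ E₂)]
    · simp [ContinuousLinearMap.det]
    · intro x
      simp only [ContinuousLinearMap.comp_apply, ← map_add]
      simp [hss]

theorem VRel.transport {p : E₂ → ℂ} {J J' : E₂ × R → ℂ} (h : VRel p J J') (L : E ≃L[ℂ] E₂) :
    VRel (fun Y => p (L Y)) (fun P : E × R => J (L P.1, P.2)) (fun P => J' (L P.1, P.2)) := by
  obtain ⟨θ, hθ, hθ0, H⟩ := h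
  let s : E × R →L[ℂ] E₂ × R := (L : E →L[ℂ] E₂).prodMap (ContinuousLinearMap.id ℂ R)
  have hss : ∀ P, s P = (L P.1, P.2) := fun P => rfl
  have hst : Tendsto s (𝓝 0) (𝓝 0) := s.continuous.tendsto' _ _ (map_zero s)
  have hθs : AnalyticAt ℂ (fun P => θ (s P)) 0 := by
    refine AnalyticAt.fun_comp (g := θ) (f := s) ?_ (s.analyticAt 0)
    rwa [map_zero]
  refine ⟨fun P => (L.symm : E₂ →L[ℂ] E) (θ (s P)),
    ((L.symm : E₂ →L[ℂ] E).analyticAt _).fun_comp hθs, by simp [hθ0], ?_⟩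
  filter_upwards [hst.eventually H, hst.eventually hθ.eventually_analyticAt] with P h1 h2
  refine ⟨by simpa [hss] using h1.1, ?_⟩
  rw [← (show _ = J (L P.1, P.2) from h1.2)]
  have hLs : L ((L.symm : E₂ →L[ℂ] E) (θ (s P))) = θ (s P) := L.apply_symm_apply _
  rw [hLs]
  change _ = _ * J' (θ (s P), (s P).2)
  congr 1
  have hd : HasFDerivAt (fun P => θ (s P)) ((fderiv ℂ θ (s P)).comp s) P :=
    HasFDerivAt.comp (g := θ) P h2.differentiableAt.hasFDerivAt s.hasFDerivAt
  have hd2 : HasFDerivAt (fun P => (L.symm : E₂ →L[ℂ] E) (θ (s P))) _ P :=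
    (L.symm : E₂ →L[ℂ] E).hasFDerivAt.comp P hd
  erw [hd2.fderiv]
  rw [ContinuousLinearMap.det, ContinuousLinearMap.det,
    ← LinearMap.det_conj (↑((fderiv ℂ θ (s P)).comp (ContinuousLinearMap.inl ℂ E₂ R)))
      L.symm.toLinearEquiv]
  congr 1
end VRel

/-! ### The hyperbolic plane and its circle action -/

/-- The one-parameter group `(u, v) ↦ (e^{it} u, e^{-it} v)` of symmetries of `u v`. -/
noncomputable def rot (t : ℂ) (Y : ℂ × ℂ) : ℂ × ℂ :=
  (Complex.exp (Complex.I * t) * Y.1, Complex.exp (-(Complex.I * t)) * Y.2)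

theorem rot_zero_left (Y : ℂ × ℂ) : rot 0 Y = Y := by simp [rot]
theorem rot_zero_right (t : ℂ) : rot t 0 = 0 := by simp [rot]
theorem rot_add (s t : ℂ) (Y : ℂ × ℂ) : rot s (rot t Y) = rot (t + s) Y := by
  simp only [rot, ← mul_assoc, ← Complex.exp_add]
  ring_nf
theorem rot_mul (t : ℂ) (Y : ℂ × ℂ) : (rot t Y).1 * (rot t Y).2 = Y.1 * Y.2 := by
  have : Complex.exp (Complex.I * t) * Complex.exp (-(Complex.I * t)) = 1 := by
    rw [← Complex.exp_add]; simp
  simp only [rot]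
  linear_combination (Y.1 * Y.2) * this
theorem norm_rot (t : ℝ) (Y : ℂ × ℂ) : ‖rot t Y‖ = ‖Y‖ := by
  simp only [rot, Prod.norm_def, norm_mul]
  have h1 : ‖Complex.exp (Complex.I * t)‖ = 1 := by
    rw [mul_comm]; exact Complex.norm_exp_ofReal_mul_I t
  have h2 : ‖Complex.exp (-(Complex.I * t))‖ = 1 := by
    rw [mul_comm]
    have := Complex.norm_exp_ofReal_mul_I (-t)
    push_cast at this
    rwa [neg_mul] at this
  rw [h1, h2, one_mul, one_mul]
theorem rot_two_pi (t : ℝ) (Y : ℂ × ℂ) : rot ((t + 2 * Real.pi : ℝ) : ℂ) Y = rot t Y := by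
  have h1 : Complex.exp (Complex.I * ((t + 2 * Real.pi : ℝ) : ℂ)) = Complex.exp (Complex.I * t) := by
    push_cast
    rw [mul_add, mul_comm Complex.I (2 * Real.pi), Complex.exp_periodic]
  simp only [rot, Complex.exp_neg, h1]

@[fun_prop] theorem AnalyticAt.fp_rot {X : Type*} [NormedAddCommGroup X] [NormedSpace ℂ X]
    {f : X → ℂ} {g : X → ℂ × ℂ} {a : X} (hf : AnalyticAt ℂ f a) (hg : AnalyticAt ℂ g a) :
    AnalyticAt ℂ (fun x => rot (f x) (g x)) a := by
  have h1 : AnalyticAt ℂ (fun x => Complex.exp (Complex.I * f x)) a :=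
    (analyticAt_const.mul hf).cexp
  have h2 : AnalyticAt ℂ (fun x => Complex.exp (-(Complex.I * f x))) a :=
    (analyticAt_const.mul hf).neg.cexp
  have h3 : AnalyticAt ℂ (fun x => (g x).1) a := by fun_prop
  have h4 : AnalyticAt ℂ (fun x => (g x).2) a := by fun_prop
  exact (h1.mul h3).prod (h2.mul h4)

/-- Density normalisation: every family of nonvanishing densities on `E` can be brought to a
function of `p` by maps preserving `p`. -/
def VP {E : Type} [NormedAddCommGroup E] [NormedSpace ℂ E] (p : E → ℂ) : Prop :=
  ∀ (R : Type) [NormedAddCommGroup R] [NormedSpace ℂ R] [CompleteSpace R] (J : E × R → ℂ),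
    AnalyticAt ℂ J 0 → J 0 ≠ 0 → ∃ c : ℂ × R → ℂ, AnalyticAt ℂ c 0 ∧ c 0 ≠ 0 ∧
      VRel p J (fun P => c (p P.1, P.2))

section
set_option linter.unusedSectionVars false
variable {R : Type} [NormedAddCommGroup R] [NormedSpace ℂ R] [CompleteSpace R]

/-- Average of `J` over the circle action. -/
noncomputable def rotMean (J : (ℂ × ℂ) × R → ℂ) (P : (ℂ × ℂ) × R) : ℂ :=
  (2 * Real.pi : ℂ)⁻¹ * ∫ t in (0:ℝ)..(2 * Real.pi), J (rot t P.1, P.2)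

theorem analyticAt_rotMean {J : (ℂ × ℂ) × R → ℂ} (hJ : AnalyticAt ℂ J 0) :
    AnalyticAt ℂ (rotMean J) 0 := by
  unfold rotMean
  refine analyticAt_const.mul (analyticAt_integral (G := fun (P : (ℂ × ℂ) × R) t => J (rot t P.1, P.2))
    Real.two_pi_pos.le fun t _ => ?_)
  refine AnalyticAt.fun_comp (g := J) (f := fun p : ((ℂ × ℂ) × R) × ℂ => (rot p.2 p.1.1, p.1.2)) ?_
    (by fun_prop)
  simp only [Prod.fst_zero, Prod.snd_zero, rot_zero_right]; exact hJ

theorem rotMean_zero (J : (ℂ × ℂ) × R → ℂ) : rotMean J 0 = J 0 := by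
  have : (Real.pi : ℂ) ≠ 0 := by exact_mod_cast Real.pi_ne_zero
  simp only [rotMean, Prod.fst_zero, rot_zero_right, Prod.snd_zero, intervalIntegral.integral_const]
  rw [show ((0 : ℂ × ℂ), (0:R)) = 0 from rfl]
  simp
  field_simp

theorem rotMean_rot (J : (ℂ × ℂ) × R → ℂ) (s : ℝ) (Y : ℂ × ℂ) (x : R) :
    rotMean J (rot s Y, x) = rotMean J (Y, x) := by
  simp only [rotMean, rot_add]
  congr 1
  have hper : Function.Periodic (fun t : ℝ => J (rot t Y, x)) (2 * Real.pi) := by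
    intro t
    simp only [rot_two_pi]
  have h1 := intervalIntegral.integral_comp_add_right (a := 0) (b := 2 * Real.pi)
    (fun t : ℝ => J (rot t Y, x)) s
  have h2 := hper.intervalIntegral_add_eq s 0
  simp only [zero_add] at h1 h2
  rw [← h2, add_comm s, ← h1]
  congr 1
  ext t
  push_cast
  rw [add_comm]

/-- The mean is invariant under the action, hence a function of `u v`. -/
theorem exists_rotMean_factor {J : (ℂ × ℂ) × R → ℂ} (hJ : AnalyticAt ℂ J 0) :
    ∃ c : ℂ × R → ℂ, AnalyticAt ℂ c 0 ∧
      ∀ᶠ P in 𝓝 (0 : (ℂ × ℂ) × R), rotMean J P = c (P.1.1 * P.1.2, P.2) := by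
  have hA := analyticAt_rotMean hJ
  obtain ⟨c, hc, hcA⟩ := exists_even_factor (f := fun p : R × ℂ => rotMean J ((p.2, p.2), p.1))
    (AnalyticAt.fun_comp (g := rotMean J) (f := fun p : R × ℂ => ((p.2, p.2), p.1)) hA
      (by fun_prop)) (Eventually.of_forall fun p => by
        have := rotMean_rot J Real.pi (p.2, p.2) p.1
        rw [← this]
        congr 2
        have h1 : Complex.exp (Complex.I * Real.pi) = -1 := by
          rw [mul_comm]; exact Complex.exp_pi_mul_I
        simp [rot, Complex.exp_neg, h1])
  have hc' : AnalyticAt ℂ (fun p : ℂ × R => c (p.2, p.1)) 0 :=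
    AnalyticAt.fun_comp (g := c) (f := fun p : ℂ × R => (p.2, p.1)) hc (by fun_prop)
  refine ⟨fun p => c (p.2, p.1), hc', ?_⟩
  let B : (ℂ × ℂ) × R → ℂ := fun P => rotMean J P - c (P.2, P.1.1 * P.1.2)
  have hB : AnalyticAt ℂ B 0 := by
    refine hA.sub (AnalyticAt.fun_comp (g := c)
      (f := fun P : (ℂ × ℂ) × R => (P.2, P.1.1 * P.1.2)) ?_ ?_)
    · simp only [Prod.fst_zero, Prod.snd_zero, mul_zero]; exact hc
    · have : AnalyticAt ℂ (fun P : (ℂ × ℂ) × R => P.1.1 * P.1.2) 0 :=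
        AnalyticAt.mul (by fun_prop) (by fun_prop)
      fun_prop
  have hBrot : ∀ (s : ℝ) Y x, B (rot s Y, x) = B (Y, x) := by
    intro s Y x
    simp only [B, rotMean_rot, rot_mul]
  obtain ⟨r, hr, hrB⟩ := Metric.eventually_nhds_iff_ball.1
    (hB.eventually_analyticAt.and (((by fun_prop : Continuous
      (fun P : (ℂ × ℂ) × R => ((P.2, P.1.1) : R × ℂ))).tendsto' 0 0 rfl).eventually hcA))
  filter_upwards [Metric.ball_mem_nhds _ hr] with P hP
  have hball : ∀ Y : ℂ × ℂ, ∀ x : R, ‖Y‖ < r → ‖x‖ < r → (Y, x) ∈ Metric.ball (0 : (ℂ × ℂ) × R) r := by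
    intro Y x h1 h2
    simpa [Prod.norm_def] using ⟨by simpa [Prod.norm_def] using h1, h2⟩
  have hPx : ‖P.1‖ < r ∧ ‖P.2‖ < r := by
    simpa [Prod.norm_def] using hP
  suffices h : Set.EqOn (fun Y => B (Y, P.2)) 0 (Metric.ball (0 : ℂ × ℂ) r) by
    have := h (x := P.1) (by simpa using hPx.1)
    exact sub_eq_zero.1 this
  refine AnalyticOnNhd.eqOn_zero_of_preconnected_of_eventuallyEq_zero (𝕜 := ℂ) (z₀ := 0) ?_
    (convex_ball _ _).isPreconnected (Metric.mem_ball_self hr) ?_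
  · intro Y hY
    refine AnalyticAt.fun_comp (g := B) (f := fun Y => (Y, P.2)) (hrB _ (hball _ _ ?_ hPx.2)).1
      (by fun_prop)
    simpa using hY
  · have h0 : ∀ w : ℂ, ‖w‖ < r → B ((w, star w), P.2) = 0 := by
      intro w hw
      have e : ((w, star w) : ℂ × ℂ) = rot (w.arg : ℂ) ((‖w‖ : ℂ), (‖w‖ : ℂ)) := by
        have h1 := Complex.norm_mul_exp_arg_mul_I w
        have h2 : star w = (‖w‖ : ℂ) * Complex.exp (-(w.arg * Complex.I)) := by
          conv_lhs => rw [← h1]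
          rw [star_mul', Complex.star_def, ← Complex.exp_conj]
          simp
        simp only [rot]
        ext1
        · simp only; rw [mul_comm, mul_comm Complex.I, h1]
        · simp only; rw [h2, mul_comm, mul_comm Complex.I]
      rw [e, hBrot]
      have := (hrB (((‖w‖ : ℂ), (‖w‖ : ℂ)), P.2) (hball _ _ (by simpa [Prod.norm_def] using hw) hPx.2)).2
      simp only at this
      simp only [B, this, pow_two, sub_self]
    let G : (Fin 1 → ℂ) × (Fin 1 → ℂ) → ℂ := fun Q => B ((Q.1 0, Q.2 0), P.2)
    have hG : AnalyticAt ℂ G 0 := by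
      refine AnalyticAt.fun_comp (g := B) (f := fun Q : (Fin 1 → ℂ) × (Fin 1 → ℂ) => ((Q.1 0, Q.2 0), P.2))
        (hrB _ (hball _ _ (by simpa [Prod.norm_def] using hr) hPx.2)).1 (by fun_prop)
    have h1 := eventually_zero_of_antidiag (G := G) (p := 0) (by rw [star_zero]; exact hG) (by
      filter_upwards [Metric.ball_mem_nhds _ hr] with z hz
      refine h0 _ (lt_of_le_of_lt (norm_le_pi_norm z 0) (by simpa using hz)))
    have h2 : Tendsto (fun Y : ℂ × ℂ => ((fun _ : Fin 1 => Y.1), (fun _ : Fin 1 => Y.2))) (𝓝 0)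
        (𝓝 (0, star 0)) := (by fun_prop : Continuous _).tendsto' _ _ (by ext <;> simp)
    exact h2.eventually h1

/-- Solution of the cohomological equation `L f = J / mean(J) - 1` along the circle action. -/
noncomputable def rotPot (J : (ℂ × ℂ) × R → ℂ) (P : (ℂ × ℂ) × R) : ℂ :=
  (2 * Real.pi : ℂ)⁻¹ * ∫ t in (0:ℝ)..(2 * Real.pi), (t : ℂ) * (J (rot t P.1, P.2) / rotMean J P - 1)

theorem analyticAt_rotPot {J : (ℂ × ℂ) × R → ℂ} (hJ : AnalyticAt ℂ J 0) (hJ0 : J 0 ≠ 0) :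
    AnalyticAt ℂ (rotPot J) 0 := by
  unfold rotPot
  refine analyticAt_const.mul (analyticAt_integral
    (G := fun (P : (ℂ × ℂ) × R) t => t * (J (rot t P.1, P.2) / rotMean J P - 1))
    Real.two_pi_pos.le fun t _ => ?_)
  have h1 : AnalyticAt ℂ (fun p : ((ℂ × ℂ) × R) × ℂ => J (rot p.2 p.1.1, p.1.2)) (0, (t:ℂ)) := by
    refine AnalyticAt.fun_comp (g := J) (f := fun p : ((ℂ × ℂ) × R) × ℂ => (rot p.2 p.1.1, p.1.2)) ?_
      (by fun_prop)
    simp only [Prod.fst_zero, Prod.snd_zero, rot_zero_right]; exact hJ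
  have h2 : AnalyticAt ℂ (fun p : ((ℂ × ℂ) × R) × ℂ => rotMean J p.1) (0, (t:ℂ)) :=
    AnalyticAt.fun_comp (g := rotMean J) (f := fun p : ((ℂ × ℂ) × R) × ℂ => p.1)
      (analyticAt_rotMean hJ) (by fun_prop)
  exact AnalyticAt.mul (by fun_prop) ((h1.div h2 (by rw [rotMean_zero]; exact hJ0)).sub analyticAt_const)

/-- `rotPot` solves its cohomological equation (differentiate along the action and use periodicity). -/
theorem hasDerivAt_rotPot {J : (ℂ × ℂ) × R → ℂ} {P : (ℂ × ℂ) × R} (hJ : Continuous fun t : ℝ => J (rot t P.1, P.2))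
    (hA : rotMean J P ≠ 0) :
    HasDerivAt (fun s : ℝ => rotPot J (rot s P.1, P.2)) (J P / rotMean J P - 1) 0 := by
  have hpi : (2 * Real.pi : ℂ) ≠ 0 := by
    have := Real.two_pi_pos.ne'
    exact_mod_cast this
  let k : ℝ → ℂ := fun t => J (rot t P.1, P.2) / rotMean J P - 1
  have hk : Continuous k := (hJ.div_const _).sub continuous_const
  have hper : Function.Periodic k (2 * Real.pi) := by
    intro t
    simp only [k, rot_two_pi]
  have hk0 : ∀ s : ℝ, ∫ t in s..(s + 2 * Real.pi), k t = 0 := by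
    intro s
    rw [hper.intervalIntegral_add_eq s 0, zero_add]
    simp only [k]
    rw [intervalIntegral.integral_sub ((hJ.div_const _).intervalIntegrable _ _)
      (continuous_const.intervalIntegrable _ _), intervalIntegral.integral_div]
    have : ∫ t in (0:ℝ)..(2 * Real.pi), J (rot t P.1, P.2) = (2 * Real.pi) * rotMean J P := by
      simp only [rotMean]
      rw [mul_inv_cancel_left₀ hpi]
    rw [this]
    simp [mul_div_assoc, div_self hA]
  have hform : ∀ s : ℝ, rotPot J (rot s P.1, P.2) =
      (2 * Real.pi : ℂ)⁻¹ * ∫ t in s..(s + 2 * Real.pi), (t : ℂ) * k t := by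
    intro s
    simp only [rotPot, rot_add, rotMean_rot]
    congr 1
    have h1 := intervalIntegral.integral_comp_add_right (a := 0) (b := 2 * Real.pi)
      (fun t : ℝ => ((t : ℂ) - s) * k t) s
    have h2 : ∫ t in s..(s + 2 * Real.pi), ((t : ℂ) - s) * k t =
        ∫ t in s..(s + 2 * Real.pi), (t : ℂ) * k t := by
      simp only [sub_mul]
      rw [intervalIntegral.integral_sub
        ((by fun_prop : Continuous fun t : ℝ => (t : ℂ) * k t).intervalIntegrable _ _)
        ((by fun_prop : Continuous fun t : ℝ => (s : ℂ) * k t).intervalIntegrable _ _),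
        intervalIntegral.integral_const_mul, hk0, mul_zero, sub_zero]
    rw [← h2, show s + 2 * Real.pi = 2 * Real.pi + s from add_comm _ _]
    conv_rhs => rw [← zero_add s]
    simp only [zero_add] at h1 ⊢
    rw [← h1]
    congr 1
    ext t
    simp only [k]
    push_cast
    rw [add_sub_cancel_right, add_comm (s:ℂ)]
  simp only [hform]
  have hg : Continuous fun t : ℝ => (t : ℂ) * k t := Complex.continuous_ofReal.mul hk
  have hitg : ∀ b : ℝ, HasDerivAt (fun u : ℝ => ∫ t in (0:ℝ)..u, (t : ℂ) * k t) ((b : ℂ) * k b) b :=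
    fun b => intervalIntegral.integral_hasDerivAt_right (hg.intervalIntegrable _ _)
      (hg.stronglyMeasurableAtFilter _ _) hg.continuousAt
  have hsplit : ∀ s : ℝ, ∫ t in s..(s + 2 * Real.pi), (t : ℂ) * k t =
      (∫ t in (0:ℝ)..(s + 2 * Real.pi), (t : ℂ) * k t) - ∫ t in (0:ℝ)..s, (t : ℂ) * k t := by
    intro s
    rw [intervalIntegral.integral_interval_sub_left (hg.intervalIntegrable _ _) (hg.intervalIntegrable _ _)]
  simp only [hsplit]
  have h2 : HasDerivAt (fun s : ℝ => ∫ t in (0:ℝ)..(s + 2 * Real.pi), (t : ℂ) * k t)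
      (((2 * Real.pi : ℝ) : ℂ) * k (2 * Real.pi)) 0 := by
    have := hitg (0 + 2 * Real.pi)
    have := HasDerivAt.comp_add_const (0:ℝ) (2 * Real.pi) this
    simpa using this
  have h3 := (h2.sub (hitg 0)).const_mul (2 * Real.pi : ℂ)⁻¹
  refine h3.congr_deriv ?_
  have e : k (2 * Real.pi) = k 0 := by simpa using hper 0
  rw [e]
  simp only [k, Complex.ofReal_zero, rot_zero_left]
  push_cast
  field_simp
  ring

/-- The circle action solves the normalisation problem for the hyperbolic form `u v`. -/
theorem VP_mul : VP (fun Y : ℂ × ℂ => Y.1 * Y.2) := by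
  intro R _ _ _ J hJ hJ0
  obtain ⟨c, hc, hcA⟩ := exists_rotMean_factor hJ
  have hA := analyticAt_rotMean hJ
  have hA0 : rotMean J 0 ≠ 0 := by rwa [rotMean_zero]
  have hf := analyticAt_rotPot hJ hJ0
  refine ⟨c, hc, ?_, fun P => rot (rotPot J P) P.1, by fun_prop, by simp [rot_zero_right], ?_⟩
  · have := hcA.self_of_nhds
    simp only [Prod.fst_zero, Prod.snd_zero, mul_zero] at this
    change c ((0:ℂ), (0:R)) ≠ 0
    rwa [← this]
  obtain ⟨r, hr, hrJ⟩ := Metric.eventually_nhds_iff_ball.1 hJ.eventually_analyticAt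
  filter_upwards [hcA, hf.eventually_analyticAt, hA.continuousAt.eventually_ne hA0,
    Metric.ball_mem_nhds _ hr] with P h1 h2 h3 h4
  refine ⟨rot_mul _ _, ?_⟩
  simp only [rot_mul, ← h1]
  have hPx : ‖P.1‖ < r ∧ ‖P.2‖ < r := by
    simpa [Prod.norm_def] using h4
  have hcont : Continuous fun t : ℝ => J (rot t P.1, P.2) := by
    refine continuous_iff_continuousAt.2 fun t => ?_
    have e : (rot t P.1, P.2) ∈ Metric.ball (0 : (ℂ × ℂ) × R) r := by
      have := norm_rot t P.1
      rw [mem_ball_zero_iff, Prod.norm_def]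
      exact max_lt (by simpa only [this] using hPx.1) hPx.2
    refine ContinuousAt.comp (g := J) (f := fun t : ℝ => (rot t P.1, P.2)) (hrJ _ e).continuousAt ?_
    unfold rot
    fun_prop
  have hpot := hasDerivAt_rotPot hcont h3
  -- derivative of the action
  let LY : ℂ × ℂ := (Complex.I * P.1.1, -(Complex.I * P.1.2))
  have hL : HasDerivAt (fun s : ℝ => rot s P.1) LY 0 := by
    have h0 : HasDerivAt (fun s : ℝ => Complex.I * (s:ℂ)) Complex.I 0 := by
      simpa using (Complex.ofRealCLM.hasDerivAt (x := (0:ℝ))).const_mul Complex.I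
    have a1 := (h0.cexp).mul_const P.1.1
    have a2 := (h0.fun_neg.cexp).mul_const P.1.2
    have := a1.prodMk a2
    refine this.congr_deriv ?_
    simp [LY]
  have hLf : fderiv ℂ (rotPot J) P (LY, 0) = J P / rotMean J P - 1 := by
    have hd : HasFDerivAt (rotPot J) ((fderiv ℂ (rotPot J) P).restrictScalars ℝ)
        ((fun s : ℝ => (rot s P.1, P.2)) 0) := by
      simp only [Complex.ofReal_zero, rot_zero_left]
      exact h2.differentiableAt.hasFDerivAt.restrictScalars ℝ
    have := hd.comp_hasDerivAt (0:ℝ) (hL.prodMk (hasDerivAt_const (0:ℝ) P.2))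
    exact this.unique hpot
  set f := rotPot J P with hfdef
  let Rf : (ℂ × ℂ) →L[ℂ] (ℂ × ℂ) := (Complex.exp (Complex.I * f) • ContinuousLinearMap.id ℂ ℂ).prodMap
    (Complex.exp (-(Complex.I * f)) • ContinuousLinearMap.id ℂ ℂ)
  have hRdet : Rf.det = 1 := by
    rw [det_block Rf (Complex.exp (Complex.I * f) • ContinuousLinearMap.id ℂ ℂ) 0
      (Complex.exp (-(Complex.I * f)) • ContinuousLinearMap.id ℂ ℂ) (fun x => by rw [ContinuousLinearMap.zero_apply, add_zero]; rfl)]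
    simp only [ContinuousLinearMap.det, ContinuousLinearMap.toLinearMap_smul, LinearMap.det_smul]
    simp [← Complex.exp_add]
  let D : (ℂ × ℂ) →L[ℂ] ℂ := (fderiv ℂ (rotPot J) P).comp (ContinuousLinearMap.inl ℂ (ℂ × ℂ) R)
  let T : (ℂ × ℂ) →L[ℂ] (ℂ × ℂ) := ContinuousLinearMap.id ℂ _ + D.smulRight LY
  have hTdet : T.det = J P / rotMean J P := by
    rw [det_smul_add_rank_one T 1 one_ne_zero D LY (fun v => by simp [T]) (k := 1) (by simp)]
    have : D LY = J P / rotMean J P - 1 := hLf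
    rw [this]; ring
  have hθ : ((fderiv ℂ (fun P => rot (rotPot J P) P.1) P).comp (ContinuousLinearMap.inl ℂ (ℂ × ℂ) R))
      = Rf.comp T := by
    have hf' := h2.differentiableAt.hasFDerivAt
    have i1 : HasFDerivAt (fun P : (ℂ × ℂ) × R => P.1.1)
        ((ContinuousLinearMap.fst ℂ ℂ ℂ).comp (ContinuousLinearMap.fst ℂ (ℂ × ℂ) R)) P :=
      ((ContinuousLinearMap.fst ℂ ℂ ℂ).comp (ContinuousLinearMap.fst ℂ (ℂ × ℂ) R)).hasFDerivAt
    have i2 : HasFDerivAt (fun P : (ℂ × ℂ) × R => P.1.2)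
        ((ContinuousLinearMap.snd ℂ ℂ ℂ).comp (ContinuousLinearMap.fst ℂ (ℂ × ℂ) R)) P :=
      ((ContinuousLinearMap.snd ℂ ℂ ℂ).comp (ContinuousLinearMap.fst ℂ (ℂ × ℂ) R)).hasFDerivAt
    have a1 := ((hf'.const_mul Complex.I).cexp).mul i1
    have a2 := ((hf'.const_mul Complex.I).fun_neg.cexp).mul i2
    have a3 : HasFDerivAt (fun P => rot (rotPot J P) P.1) _ P := a1.prodMk a2
    rw [a3.fderiv]
    refine ContinuousLinearMap.ext fun v => ?_
    ext1
    · simp [Rf, T, D, LY, ← hfdef]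
      ring
    · simp [Rf, T, D, LY, ← hfdef]
      ring
  have hcomp : (Rf.comp T).det = Rf.det * T.det := LinearMap.det_comp _ _
  rw [hθ, hcomp]
  rw [hRdet, hTdet, one_mul, div_mul_cancel₀ _ h3]
end

/-! ### Radial means and merging of two variables -/

section Radial
variable {X : Type*} [NormedAddCommGroup X] [NormedSpace ℂ X]
set_option linter.unusedSectionVars false

/-- Weighted radial mean `(k+1) ∫₀¹ w(σ t², x) t^k dt`. -/
noncomputable def radMean (k : ℕ) (w : ℂ × X → ℂ) (p : ℂ × X) : ℂ :=
  ((k : ℂ) + 1) * ∫ t in (0:ℝ)..1, w (p.1 * (t:ℂ) ^ 2, p.2) * (t:ℂ) ^ k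

theorem analyticAt_radMean (k : ℕ) {w : ℂ × X → ℂ} (hw : AnalyticAt ℂ w 0) :
    AnalyticAt ℂ (radMean k w) 0 := by
  unfold radMean
  refine analyticAt_const.mul (analyticAt_integral
    (G := fun (p : ℂ × X) t => w (p.1 * t ^ 2, p.2) * t ^ k) zero_le_one fun t _ => ?_)
  refine AnalyticAt.mul (AnalyticAt.fun_comp (g := w)
    (f := fun p : (ℂ × X) × ℂ => (p.1.1 * p.2 ^ 2, p.1.2)) ?_ ?_) (AnalyticAt.pow (by fun_prop) _)
  · simp only [Prod.fst_zero, Prod.snd_zero, zero_mul]; exact hw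
  · have : AnalyticAt ℂ (fun p : (ℂ × X) × ℂ => p.1.1 * p.2 ^ 2) (0, (t:ℂ)) :=
      AnalyticAt.mul (by fun_prop) (AnalyticAt.pow (by fun_prop) _)
    fun_prop

theorem radMean_const_point (k : ℕ) (w : ℂ × X → ℂ) (x : X) : radMean k w (0, x) = w (0, x) := by
  have hk : (k : ℂ) + 1 ≠ 0 := by exact_mod_cast Nat.succ_ne_zero k
  simp only [radMean, zero_mul]
  rw [intervalIntegral.integral_const_mul]
  have : ∫ t in (0:ℝ)..1, ((t:ℂ)) ^ k = ((k:ℂ) + 1)⁻¹ := by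
    have h := integral_pow (a := 0) (b := 1) k
    have h2 : ∫ t in (0:ℝ)..1, ((t:ℂ)) ^ k = ((∫ t in (0:ℝ)..1, t ^ k : ℝ) : ℂ) := by
      rw [← intervalIntegral.integral_ofReal]
      simp
    rw [h2, h]
    simp
  rw [this]
  field_simp

/-- Euler-type differential equation satisfied by the radial mean. -/
theorem radMean_euler (k : ℕ) {w : ℂ × X → ℂ} (hw : AnalyticAt ℂ w 0) :
    ∀ᶠ p in 𝓝 (0 : ℂ × X), ((k : ℂ) + 1) * radMean k w p + 2 * p.1 * fderiv ℂ (radMean k w) p (1, 0)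
      = ((k : ℂ) + 1) * w p := by
  obtain ⟨r, hr, hrw⟩ := Metric.eventually_nhds_iff_ball.1 hw.eventually_analyticAt
  filter_upwards [(analyticAt_radMean k hw).eventually_analyticAt,
    Metric.ball_mem_nhds _ (by positivity : 0 < r / 4)] with p h1 h2
  have hp : ‖p.1‖ < r / 4 ∧ ‖p.2‖ < r / 4 := by simpa [Prod.norm_def] using h2
  let g : ℝ → ℂ := fun t => w (p.1 * (t:ℂ) ^ 2, p.2) * (t:ℂ) ^ k
  have hg : ContinuousOn g (Set.Ioo (-2) 2) := by
    intro t ht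
    refine ContinuousAt.continuousWithinAt ?_
    have e : (p.1 * (t:ℂ) ^ 2, p.2) ∈ Metric.ball (0 : ℂ × X) r := by
      rw [mem_ball_zero_iff, Prod.norm_def]
      refine max_lt ?_ (by linarith [hp.2])
      simp only [norm_mul, norm_pow, Complex.norm_real, Real.norm_eq_abs, sq_abs]
      have : t ^ 2 < 4 := by nlinarith [ht.1, ht.2]
      nlinarith [hp.1, norm_nonneg p.1, sq_nonneg t]
    have h3 : ContinuousAt (fun t : ℝ => w (p.1 * (t:ℂ) ^ 2, p.2)) t :=
      ContinuousAt.comp (g := w) (f := fun t : ℝ => (p.1 * (t:ℂ) ^ 2, p.2)) (hrw _ e).continuousAt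
        (by fun_prop)
    exact h3.mul (by fun_prop)
  have hform : ∀ s : ℝ, s ≠ 0 → (s:ℂ) ^ (k+1) * radMean k w (p.1 * (s:ℂ) ^ 2, p.2) =
      ((k:ℂ) + 1) * ∫ t in (0:ℝ)..s, g t := by
    intro s hs
    have h3 := intervalIntegral.smul_integral_comp_mul_left (a := 0) (b := 1) g s
    simp only [mul_zero, mul_one] at h3
    rw [← h3, radMean]
    rw [mul_left_comm]
    congr 1
    rw [Complex.real_smul, pow_succ' , mul_assoc, ← intervalIntegral.integral_const_mul]
    congr 2
    ext t
    simp only [g]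
    push_cast
    rw [mul_pow, mul_pow, mul_assoc]
    ring
  have hd1 : HasDerivAt (fun s : ℝ => ((k:ℂ) + 1) * ∫ t in (0:ℝ)..s, g t) (((k:ℂ) + 1) * g 1) 1 := by
    refine (intervalIntegral.integral_hasDerivAt_right ?_ ?_ ?_).const_mul _
    · exact (hg.mono (by
        intro t ht
        rw [Set.uIcc_of_le zero_le_one] at ht
        exact ⟨by linarith [ht.1], by linarith [ht.2]⟩)).intervalIntegrable
    · exact hg.stronglyMeasurableAtFilter isOpen_Ioo _ ⟨by norm_num, by norm_num⟩
    · exact hg.continuousAt (Ioo_mem_nhds (by norm_num) (by norm_num))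
  have hp1 : HasDerivAt (fun s : ℝ => (p.1 * (s:ℂ) ^ 2, p.2)) (p.1 * 2, (0:X)) 1 := by
    have h3 : HasDerivAt (fun s : ℝ => (s:ℂ)) 1 1 := by
      have := Complex.ofRealCLM.hasDerivAt (x := (1:ℝ))
      simp only [Complex.ofRealCLM_apply, Complex.ofReal_one] at this
      exact this
    have h4 := ((h3.fun_pow 2).const_mul p.1).prodMk (hasDerivAt_const (1:ℝ) p.2)
    refine h4.congr_deriv ?_
    simp
  have hd2 : HasDerivAt (fun s : ℝ => (s:ℂ) ^ (k+1) * radMean k w (p.1 * (s:ℂ) ^ 2, p.2))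
      (((k:ℂ) + 1) * radMean k w p + fderiv ℂ (radMean k w) p (p.1 * 2, 0)) 1 := by
    have h3 : HasDerivAt (fun s : ℝ => (s:ℂ)) 1 1 := by
      have := Complex.ofRealCLM.hasDerivAt (x := (1:ℝ))
      simp only [Complex.ofRealCLM_apply, Complex.ofReal_one] at this
      exact this
    have h5 : HasFDerivAt (radMean k w) ((fderiv ℂ (radMean k w) p).restrictScalars ℝ)
        ((fun s : ℝ => (p.1 * (s:ℂ) ^ 2, p.2)) 1) := by
      simp only [Complex.ofReal_one, one_pow, mul_one]
      exact h1.differentiableAt.hasFDerivAt.restrictScalars ℝ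
    have h6 := (h3.fun_pow (k+1)).mul (h5.comp_hasDerivAt (1:ℝ) hp1)
    refine h6.congr_deriv ?_
    simp
  have hev : (fun s : ℝ => (s:ℂ) ^ (k+1) * radMean k w (p.1 * (s:ℂ) ^ 2, p.2)) =ᶠ[𝓝 1]
      (fun s : ℝ => ((k:ℂ) + 1) * ∫ t in (0:ℝ)..s, g t) := by
    filter_upwards [isOpen_ne.mem_nhds (one_ne_zero)] with s hs using hform s hs
  have := hd2.unique (hd1.congr_of_eventuallyEq hev)
  have e2 : ((p.1 * 2, (0:X)) : ℂ × X) = (2 * p.1) • ((1:ℂ), (0:X)) := by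
    simp [mul_comm]
  rw [e2, map_smul, smul_eq_mul] at this
  rw [this]
  simp [g]

/-- The scaling `Y ↦ l(p(Y)) Y` of a `(k+1)`-dimensional space has Jacobian determinant
`l ^ k * (l + 2 σ ∂l/∂σ)` with `σ = p(Y)`; any nonvanishing function of `σ` arises so. -/
theorem exists_radial (k : ℕ) {w : ℂ × X → ℂ} (hw : AnalyticAt ℂ w 0) (hw0 : w 0 ≠ 0) :
    ∃ l : ℂ × X → ℂ, AnalyticAt ℂ l 0 ∧ l 0 ≠ 0 ∧ (w 0 = 1 → ∀ p, radMean k w p = 1 → l p = 1) ∧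
      ∀ᶠ p in 𝓝 (0 : ℂ × X), l p ^ k * (l p + 2 * p.1 * fderiv ℂ l p (1, 0)) = w p := by
  set Λ := radMean k w with hΛ
  have hΛa : AnalyticAt ℂ Λ 0 := analyticAt_radMean k hw
  have hΛ0 : Λ 0 = w 0 := radMean_const_point k w 0
  have hΛ0' : Λ 0 ≠ 0 := by rwa [hΛ0]
  let l : ℂ × X → ℂ := fun p => (Λ 0) ^ (((k+1 : ℕ) : ℂ)⁻¹) * (Λ p / Λ 0) ^ (((k+1 : ℕ) : ℂ)⁻¹)
  have hl : AnalyticAt ℂ l 0 := by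
    refine analyticAt_const.mul (AnalyticAt.cpow (hΛa.div_const) analyticAt_const ?_)
    rw [div_self hΛ0']
    simp
  have hpow : ∀ p, l p ^ (k+1) = Λ p := by
    intro p
    simp only [l, mul_pow]
    rw [Complex.cpow_nat_inv_pow _ (Nat.succ_ne_zero k), Complex.cpow_nat_inv_pow _ (Nat.succ_ne_zero k)]
    field_simp
  refine ⟨l, hl, ?_, ?_, ?_⟩
  · intro h
    apply hΛ0'
    rw [← hpow, h]; simp
  · intro h1 p hp
    simp only [l, hΛ0, h1, hp]
    simp
  · filter_upwards [radMean_euler k hw, hl.eventually_analyticAt] with p h1 h2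
    have hk : (k : ℂ) + 1 ≠ 0 := by exact_mod_cast Nat.succ_ne_zero k
    have hd : fderiv ℂ Λ p (1, 0) = (k+1) * l p ^ k * fderiv ℂ l p (1, 0) := by
      have h3 : Λ = fun p => l p ^ (k+1) := by ext p; exact (hpow p).symm
      have h4 := h2.differentiableAt.hasFDerivAt.pow (k+1)
      rw [h3, h4.fderiv]
      simp
    rw [← hΛ, hd, ← hpow p] at h1
    have := mul_left_cancel₀ hk (b := l p ^ k * (l p + 2 * p.1 * fderiv ℂ l p (1, 0))) (c := w p) (by
      rw [← h1]; ring)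
    exact this
end Radial

section Merge

theorem det_block' {E E₂ : Type*} [NormedAddCommGroup E] [NormedSpace ℂ E] [FiniteDimensional ℂ E]
    [NormedAddCommGroup E₂] [NormedSpace ℂ E₂] [FiniteDimensional ℂ E₂]
    (T : (E × E₂) →L[ℂ] (E × E₂)) (P : E →L[ℂ] E) (S : E →L[ℂ] E₂)
    (Q : E₂ →L[ℂ] E₂) (hT : ∀ x, T x = (P x.1, S x.1 + Q x.2)) : T.det = P.det * Q.det := by
  let e : (E × E₂) ≃L[ℂ] (E₂ × E) := ContinuousLinearEquiv.prodComm ℂ E E₂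
  have h1 : ((e : (E × E₂) →L[ℂ] (E₂ × E)).comp (T.comp (e.symm : (E₂ × E) →L[ℂ] (E × E₂)))).det = T.det :=
    LinearMap.det_conj (T : (E × E₂) →ₗ[ℂ] (E × E₂)) e.toLinearEquiv
  rw [← h1, det_block _ Q S P, mul_comm]
  intro x
  change e (T (e.symm x)) = _
  rw [hT]
  change (S x.2 + Q x.1, P x.2) = _
  rw [add_comm]

variable {E R : Type} [NormedAddCommGroup E] [NormedSpace ℂ E] [FiniteDimensional ℂ E]
  [NormedAddCommGroup R] [NormedSpace ℂ R] [CompleteSpace R]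

theorem euler_quadratic {p : E → ℂ} (hp : Differentiable ℂ p) (hp2 : ∀ (t : ℂ) Y, p (t • Y) = t ^ 2 * p Y)
    (Y : E) : fderiv ℂ p Y Y = 2 * p Y := by
  have h1 : HasDerivAt (fun t : ℂ => t • Y) Y 1 := by
    simpa using (hasDerivAt_id (1:ℂ)).smul_const Y
  have h2 : HasFDerivAt p (fderiv ℂ p Y) ((fun t : ℂ => t • Y) 1) := by
    simp only [one_smul]; exact (hp Y).hasFDerivAt
  have h3 := h2.comp_hasDerivAt (1:ℂ) h1
  have h4 : HasDerivAt (fun t : ℂ => t ^ 2 * p Y) (2 * p Y) 1 := by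
    simpa using ((hasDerivAt_id (1:ℂ)).fun_pow 2).mul_const (p Y)
  refine h3.unique (h4.congr_of_eventuallyEq (Eventually.of_forall fun t => ?_))
  exact hp2 t Y

/-- A density depending only on `p(Y)` and `u v` can be brought to a function of `p(Y) + u v`. -/
theorem exists_merge {k : ℕ} (hk : Module.finrank ℂ E = k + 1) {p : E → ℂ} (hp : Differentiable ℂ p)
    (hpa : AnalyticAt ℂ p 0)
    (hp2 : ∀ (t : ℂ) Y, p (t • Y) = t ^ 2 * p Y) {g : (ℂ × ℂ) × R → ℂ} (hg : AnalyticAt ℂ g 0)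
    (hg0 : g 0 ≠ 0) : ∃ c : ℂ × R → ℂ, AnalyticAt ℂ c 0 ∧ c 0 ≠ 0 ∧
      VRel (fun Y : E × (ℂ × ℂ) => p Y.1 + Y.2.1 * Y.2.2)
        (fun P : (E × (ℂ × ℂ)) × R => g ((p P.1.1, P.1.2.1 * P.1.2.2), P.2))
        (fun P => c (p P.1.1 + P.1.2.1 * P.1.2.2, P.2)) := by
  have hp0 : p 0 = 0 := by simpa using hp2 0 0
  let w' : ℂ × (ℂ × R) → ℂ := fun q => g ((q.1, q.2.1 - q.1), q.2.2)
  have hw' : AnalyticAt ℂ w' 0 := by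
    refine AnalyticAt.fun_comp (g := g) (f := fun q : ℂ × (ℂ × R) => ((q.1, q.2.1 - q.1), q.2.2)) ?_ ?_
    · simp only [Prod.fst_zero, Prod.snd_zero, sub_zero]; exact hg
    · have : AnalyticAt ℂ (fun q : ℂ × (ℂ × R) => q.2.1 - q.1) 0 := AnalyticAt.sub (by fun_prop) (by fun_prop)
      fun_prop
  have hw'0 : w' 0 = g 0 := by
    simp only [w', Prod.fst_zero, Prod.snd_zero, sub_zero]; rfl
  let c : ℂ × R → ℂ := fun q => radMean k w' (q.1, q)
  have hc : AnalyticAt ℂ c 0 :=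
    AnalyticAt.fun_comp (g := radMean k w') (f := fun q : ℂ × R => (q.1, q)) (analyticAt_radMean k hw')
      (by fun_prop)
  have hc00 : c 0 = g 0 := by
    rw [← hw'0]; exact radMean_const_point k w' 0
  have hc0 : c 0 ≠ 0 := by rwa [hc00]
  let w : ℂ × (ℂ × R) → ℂ := fun q => w' q / c q.2
  have hw : AnalyticAt ℂ w 0 := hw'.div (AnalyticAt.fun_comp (g := c) (f := fun q : ℂ × (ℂ × R) => q.2)
    hc (by fun_prop)) hc0
  have hw0 : w 0 = 1 := by
    change w' 0 / c 0 = 1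
    rw [hw'0, hc00, div_self hg0]
  have hwmean : ∀ q : ℂ × R, c q ≠ 0 → radMean k w (q.1, q) = 1 := by
    intro q hq
    have : radMean k w (q.1, q) = c q / c q := by
      simp only [radMean, w, c, div_mul_eq_mul_div]
      rw [intervalIntegral.integral_div, mul_div_assoc]
    rw [this, div_self hq]
  obtain ⟨l, hl, hl0, hl1, hlw⟩ := exists_radial k hw (by rw [hw0]; exact one_ne_zero)
  replace hl1 := hl1 hw0
  -- division of `l² - 1` by `σ - Q`
  obtain ⟨D, hD, hDf, -⟩ := exists_hadamard (X := ℂ × R) (Y := ℂ)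
    (f := fun q => l (q.1.1 + q.2, q.1) ^ 2 - 1) (by
      refine (AnalyticAt.pow (AnalyticAt.fun_comp (g := l)
        (f := fun q : (ℂ × R) × ℂ => (q.1.1 + q.2, q.1)) ?_ ?_) 2).sub analyticAt_const
      · simp only [Prod.fst_zero, Prod.snd_zero, add_zero]; exact hl
      · have : AnalyticAt ℂ (fun q : (ℂ × R) × ℂ => q.1.1 + q.2) 0 := AnalyticAt.add (by fun_prop) (by fun_prop)
        fun_prop)
  -- the two maps in coordinates
  let pf : (E × (ℂ × ℂ)) × R → ℂ := fun P => p P.1.1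
  have hpf : AnalyticAt ℂ pf 0 :=
    AnalyticAt.fun_comp (g := p) (f := fun P : (E × (ℂ × ℂ)) × R => P.1.1) hpa (by fun_prop)
  let uv : (E × (ℂ × ℂ)) × R → ℂ := fun P => P.1.2.1 * P.1.2.2
  have huv : AnalyticAt ℂ uv 0 := AnalyticAt.mul (by fun_prop) (by fun_prop)
  let Qf : (E × (ℂ × ℂ)) × R → ℂ := fun P => pf P + uv P
  have hQf : AnalyticAt ℂ Qf 0 := hpf.add huv
  have hpf0 : pf 0 = 0 := hp0
  have huv0 : uv 0 = 0 := by simp [uv]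
  have hQf0 : Qf 0 = 0 := by simp [Qf, hpf0, huv0]
  let s1 : (E × (ℂ × ℂ)) × R → ℂ × (ℂ × R) := fun P => (pf P, (Qf P, P.2))
  have hs1 : AnalyticAt ℂ s1 0 := by fun_prop
  have hs10 : s1 0 = 0 := by simp only [s1, hpf0, hQf0]; rfl
  let s2 : (E × (ℂ × ℂ)) × R → (ℂ × R) × ℂ := fun P => ((Qf P, P.2), -uv P)
  have hs2 : AnalyticAt ℂ s2 0 := by
    have := huv.fun_neg
    fun_prop
  have hs20 : s2 0 = 0 := by simp only [s2, huv0, hQf0, neg_zero]; rfl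
  have hs1t : Tendsto s1 (𝓝 0) (𝓝 0) := by simpa only [hs10] using hs1.continuousAt.tendsto
  have hs2t : Tendsto s2 (𝓝 0) (𝓝 0) := by simpa only [hs20] using hs2.continuousAt.tendsto
  have hls : AnalyticAt ℂ (fun P => l (s1 P)) 0 :=
    AnalyticAt.fun_comp (g := l) (f := s1) (by rwa [hs10]) hs1
  have hDs : AnalyticAt ℂ (fun P => D (s2 P) 1) 0 := by
    have : AnalyticAt ℂ (fun P => D (s2 P)) 0 :=
      AnalyticAt.fun_comp (g := D) (f := s2) (by rwa [hs20]) hs2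
    exact this.fp_clm_apply analyticAt_const
  let θ : (E × (ℂ × ℂ)) × R → E × (ℂ × ℂ) := fun P =>
    (l (s1 P) • P.1.1, ((1 + pf P * D (s2 P) 1) * P.1.2.1, P.1.2.2))
  have hθ : AnalyticAt ℂ θ 0 := by
    have a1 : AnalyticAt ℂ (fun P => l (s1 P) • P.1.1) 0 := hls.fun_smul (by fun_prop)
    have a2 : AnalyticAt ℂ (fun P => (1 + pf P * D (s2 P) 1) * P.1.2.1) 0 :=
      (analyticAt_const.add (hpf.mul hDs)).mul (by fun_prop)
    fun_prop
  have hθ0 : θ 0 = 0 := by simp [θ]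
  -- `θ` preserves the form
  have hform : ∀ᶠ P in 𝓝 (0 : (E × (ℂ × ℂ)) × R), p (θ P).1 + (θ P).2.1 * (θ P).2.2 = Qf P := by
    have hsnd : Tendsto (fun P => (Qf P, P.2)) (𝓝 0) (𝓝 (0 : ℂ × R)) := by
      have : AnalyticAt ℂ (fun P => (Qf P, P.2)) 0 := by fun_prop
      have := this.continuousAt.tendsto
      simp only [hQf0] at this
      exact this
    filter_upwards [hs2t.eventually hDf, hsnd.eventually (hc.continuousAt.eventually_ne hc0)] with P h1 h2
    have h3 := hl1 (Qf P, (Qf P, P.2)) (hwmean (Qf P, P.2) h2)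
    simp only [s2, add_zero, h3, one_pow, sub_self, zero_add] at h1
    have e1 : Qf P + -uv P = pf P := by simp [Qf]
    rw [e1] at h1
    have e2 : D ((Qf P, P.2), -uv P) (-uv P) = -uv P * D (s2 P) 1 := by
      rw [show -uv P = (-uv P) • (1:ℂ) by simp, map_smul, smul_eq_mul]
      simp [s2]
    rw [e2] at h1
    change p (l (s1 P) • P.1.1) + (1 + pf P * D (s2 P) 1) * P.1.2.1 * P.1.2.2 = pf P + P.1.2.1 * P.1.2.2
    rw [hp2]
    change l (pf P, (Qf P, P.2)) ^ 2 * pf P + _ = _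
    simp only [uv] at h1
    linear_combination pf P * h1
  -- Jacobian determinant
  have hdet : ∀ᶠ P in 𝓝 (0 : (E × (ℂ × ℂ)) × R), P.1.2.2 ≠ 0 →
      ((fderiv ℂ θ P).comp (ContinuousLinearMap.inl ℂ (E × (ℂ × ℂ)) R)).det = w (s1 P) := by
    filter_upwards [hform.eventually_nhds, hθ.eventually_analyticAt, hs1t.eventually hl.eventually_analyticAt,
      hs1t.eventually hlw, hs1t.eventually (hl.continuousAt.eventually_ne hl0)] with P h1 h2 h3 h4 hlne hv
    let G : E × (ℂ × ℂ) → E × (ℂ × ℂ) := fun Y => (Y.1, (p Y.1 + Y.2.1 * Y.2.2, Y.2.2))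
    let H : E × (ℂ × ℂ) → E × (ℂ × ℂ) := fun Y => (l (p Y.1, (Y.2.1, P.2)) • Y.1, Y.2)
    let θx : E × (ℂ × ℂ) → E × (ℂ × ℂ) := fun Y => θ (Y, P.2)
    have hincl : Tendsto (fun Y : E × (ℂ × ℂ) => (Y, P.2)) (𝓝 P.1) (𝓝 P) :=
      (by fun_prop : Continuous fun Y : E × (ℂ × ℂ) => (Y, P.2)).tendsto' _ _ rfl
    have hGH : (fun Y => G (θx Y)) =ᶠ[𝓝 P.1] fun Y => H (G Y) := by
      filter_upwards [hincl.eventually h1] with Y hY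
      change ((θ (Y, P.2)).1, (p (θ (Y, P.2)).1 + (θ (Y, P.2)).2.1 * (θ (Y, P.2)).2.2, (θ (Y, P.2)).2.2)) = _
      rw [hY]
    have hGd : ∀ Y, ∃ G' : E × (ℂ × ℂ) →L[ℂ] E × (ℂ × ℂ), HasFDerivAt G G' Y ∧ G'.det = Y.2.2 := by
      intro Y
      have i1 : HasFDerivAt (fun Y : E × (ℂ × ℂ) => Y.2.1)
          ((ContinuousLinearMap.fst ℂ ℂ ℂ).comp (ContinuousLinearMap.snd ℂ E (ℂ × ℂ))) Y :=
        ((ContinuousLinearMap.fst ℂ ℂ ℂ).comp (ContinuousLinearMap.snd ℂ E (ℂ × ℂ))).hasFDerivAt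
      have i2 : HasFDerivAt (fun Y : E × (ℂ × ℂ) => Y.2.2)
          ((ContinuousLinearMap.snd ℂ ℂ ℂ).comp (ContinuousLinearMap.snd ℂ E (ℂ × ℂ))) Y :=
        ((ContinuousLinearMap.snd ℂ ℂ ℂ).comp (ContinuousLinearMap.snd ℂ E (ℂ × ℂ))).hasFDerivAt
      have i3 : HasFDerivAt (fun Y : E × (ℂ × ℂ) => p Y.1)
          ((fderiv ℂ p Y.1).comp (ContinuousLinearMap.fst ℂ E (ℂ × ℂ))) Y :=
        HasFDerivAt.comp (g := p) Y (hp Y.1).hasFDerivAt hasFDerivAt_fst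
      refine ⟨_, hasFDerivAt_fst.prodMk ((i3.add (i1.mul i2)).prodMk i2), ?_⟩
      rw [det_block' (P := ContinuousLinearMap.id ℂ E)
        (S := (fderiv ℂ p Y.1).prod 0) (Q := ((Y.2.2 • ContinuousLinearMap.fst ℂ ℂ ℂ +
          Y.2.1 • ContinuousLinearMap.snd ℂ ℂ ℂ).prod (ContinuousLinearMap.snd ℂ ℂ ℂ)))]
      · rw [det_block (P := Y.2.2 • ContinuousLinearMap.id ℂ ℂ) (S := Y.2.1 • ContinuousLinearMap.id ℂ ℂ)
          (Q := ContinuousLinearMap.id ℂ ℂ)]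
        · simp [ContinuousLinearMap.det]
        · intro x
          simp
      · intro x
        simp
        ring
    have hHd : ∃ H' : E × (ℂ × ℂ) →L[ℂ] E × (ℂ × ℂ), HasFDerivAt H H' (G P.1) ∧ H'.det = w (s1 P) := by
      let ll := fderiv ℂ l (s1 P)
      have j0 : HasFDerivAt (fun Y : E × (ℂ × ℂ) => Y.2.1)
          ((ContinuousLinearMap.fst ℂ ℂ ℂ).comp (ContinuousLinearMap.snd ℂ E (ℂ × ℂ))) (G P.1) :=
        ((ContinuousLinearMap.fst ℂ ℂ ℂ).comp (ContinuousLinearMap.snd ℂ E (ℂ × ℂ))).hasFDerivAt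
      have i3 : HasFDerivAt (fun Y : E × (ℂ × ℂ) => p Y.1)
          ((fderiv ℂ p P.1.1).comp (ContinuousLinearMap.fst ℂ E (ℂ × ℂ))) (G P.1) :=
        HasFDerivAt.comp (g := p) (G P.1) (hp P.1.1).hasFDerivAt hasFDerivAt_fst
      have j1 := i3.prodMk (j0.prodMk (hasFDerivAt_const P.2 (G P.1)))
      have j2 : HasFDerivAt (fun Y : E × (ℂ × ℂ) => l (p Y.1, (Y.2.1, P.2))) (ll.comp _) (G P.1) :=
        HasFDerivAt.comp (g := l) (G P.1) (h3.differentiableAt.hasFDerivAt) j1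
      have j3 : HasFDerivAt H _ (G P.1) := (j2.smul hasFDerivAt_fst).prodMk hasFDerivAt_snd
      refine ⟨_, j3, ?_⟩
      have hpd := euler_quadratic hp hp2 P.1.1
      rw [det_block (P := l (s1 P) • ContinuousLinearMap.id ℂ E +
          ((ll (1, 0)) • fderiv ℂ p P.1.1).smulRight P.1.1)
        (S := (((ll.comp ((ContinuousLinearMap.inr ℂ ℂ (ℂ × R)).comp (ContinuousLinearMap.inl ℂ ℂ R))).comp
          (ContinuousLinearMap.fst ℂ ℂ ℂ)).smulRight P.1.1))
        (Q := ContinuousLinearMap.id ℂ (ℂ × ℂ))]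
      · rw [det_smul_add_rank_one _ (l (s1 P)) hlne ((ll (1, 0)) • fderiv ℂ p P.1.1) P.1.1
          (fun v => by simp) hk, ← h4]
        simp only [smul_apply, hpd, smul_eq_mul]
        simp [ContinuousLinearMap.det, s1, pf, ll]
        left
        ring
      · intro x
        have e : ∀ a b : ℂ, ll (a, (b, 0)) = a * ll (1, 0) + ll (0, (b, 0)) := by
          intro a b
          rw [show ((a, (b, 0)) : ℂ × (ℂ × R)) = a • (1, 0) + (0, (b, 0)) by
            simp, map_add, map_smul, smul_eq_mul]
        ext1
        · simp [G]
          rw [e]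
          simp [s1, Qf, pf, uv]
          module
        · simp
    obtain ⟨G1, hG1, hG1d⟩ := hGd P.1
    obtain ⟨G2, hG2, hG2d⟩ := hGd (θ P)
    obtain ⟨H1, hH1, hH1d⟩ := hHd
    have hθx : HasFDerivAt θx ((fderiv ℂ θ P).comp (ContinuousLinearMap.inl ℂ (E × (ℂ × ℂ)) R)) P.1 :=
      HasFDerivAt.comp (g := θ) (f := fun Y => (Y, P.2)) P.1 h2.differentiableAt.hasFDerivAt
        (hasFDerivAt_prodMk_left P.1 P.2)
    have k1 : HasFDerivAt (fun Y => G (θx Y)) _ P.1 := HasFDerivAt.comp (g := G) P.1 hG2 hθx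
    have k2 : HasFDerivAt (fun Y => H (G Y)) _ P.1 := HasFDerivAt.comp (g := H) P.1 hH1 hG1
    have k3 := congrArg ContinuousLinearMap.det (k1.unique (k2.congr_of_eventuallyEq hGH))
    have k4 : ∀ A B : E × (ℂ × ℂ) →L[ℂ] E × (ℂ × ℂ), (A.comp B).det = A.det * B.det :=
      fun A B => LinearMap.det_comp _ _
    rw [k4, k4, hG2d, hG1d, hH1d, mul_comm] at k3
    exact mul_right_cancel₀ hv k3
  have hdet' : ∀ᶠ P in 𝓝 (0 : (E × (ℂ × ℂ)) × R),
      ((fderiv ℂ θ P).comp (ContinuousLinearMap.inl ℂ (E × (ℂ × ℂ)) R)).det = w (s1 P) := by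
    have hws : AnalyticAt ℂ (fun P => w (s1 P)) 0 :=
      AnalyticAt.fun_comp (g := w) (f := s1) (by rwa [hs10]) hs1
    filter_upwards [hdet.eventually_nhds, hθ.eventually_analyticAt, hws.eventually_analyticAt] with P h1 h2 h3
    by_cases hv : P.1.2.2 = 0
    swap
    · exact h1.self_of_nhds hv
    let γ : ℂ → (E × (ℂ × ℂ)) × R := fun s => ((P.1.1, (P.1.2.1, s)), P.2)
    have hγ : Tendsto γ (𝓝 0) (𝓝 P) :=
      (by fun_prop : Continuous γ).tendsto' _ _ (by simp only [γ]; rw [← hv])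
    have hγ' : Tendsto γ (𝓝[≠] 0) (𝓝 P) := hγ.mono_left nhdsWithin_le_nhds
    have c1 : ContinuousAt (fun P => ((fderiv ℂ θ P).comp
        (ContinuousLinearMap.inl ℂ (E × (ℂ × ℂ)) R)).det) P := by
      refine ContinuousLinearMap.continuous_det.continuousAt.comp ?_
      exact h2.fderiv.continuousAt.clm_comp continuousAt_const
    refine tendsto_nhds_unique (c1.tendsto.comp hγ') ((h3.continuousAt.tendsto.comp hγ').congr' ?_)
    filter_upwards [hγ'.eventually h1, self_mem_nhdsWithin] with s hs1 hs2
    exact (hs1 hs2).symm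
  refine ⟨c, hc, hc0, θ, hθ, hθ0, ?_⟩
  have hsnd : Tendsto (fun P => (Qf P, P.2)) (𝓝 0) (𝓝 (0 : ℂ × R)) := by
    have : AnalyticAt ℂ (fun P => (Qf P, P.2)) 0 := by fun_prop
    have := this.continuousAt.tendsto
    simp only [hQf0] at this
    exact this
  filter_upwards [hform, hdet', hsnd.eventually (hc.continuousAt.eventually_ne hc0)] with P h1 h2 h3
  refine ⟨h1, ?_⟩
  simp only [h1, h2]
  change w' (s1 P) / c (Qf P, P.2) * c (Qf P, P.2) = _
  rw [div_mul_cancel₀ _ h3]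
  simp only [w', s1, Qf, add_sub_cancel_left]
  rfl
end Merge

/-! ### Density normalisation for the standard quadratic form -/

section
variable {E E₂ : Type} [NormedAddCommGroup E] [NormedSpace ℂ E] [FiniteDimensional ℂ E]
  [NormedAddCommGroup E₂] [NormedSpace ℂ E₂] [FiniteDimensional ℂ E₂]

theorem VP.transport {p : E₂ → ℂ} (hp : VP p) (L : E ≃L[ℂ] E₂) : VP (fun Y => p (L Y)) := by
  intro R _ _ _ J hJ hJ0
  let J₂ : E₂ × R → ℂ := fun P => J (L.symm P.1, P.2)
  have hs : AnalyticAt ℂ (fun P : E₂ × R => (L.symm P.1, P.2)) 0 :=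
    (((L.symm : E₂ →L[ℂ] E).analyticAt _).fun_comp (by fun_prop)).prod (by fun_prop)
  have h0 : ((L.symm (0 : E₂ × R).1, (0 : E₂ × R).2) : E × R) = 0 := by simp
  obtain ⟨c, hc, hc0, h⟩ := hp R J₂ (AnalyticAt.fun_comp (g := J)
    (f := fun P : E₂ × R => (L.symm P.1, P.2)) (by rw [h0]; exact hJ) hs)
    (by change J (L.symm (0 : E₂ × R).1, (0 : E₂ × R).2) ≠ 0; rw [h0]; exact hJ0)
  refine ⟨c, hc, hc0, ?_⟩
  have := h.transport L
  simpa [J₂] using this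

/-- Adding a hyperbolic plane. -/
theorem VP.step {k : ℕ} (hk : Module.finrank ℂ E = k + 1) {p : E → ℂ} (hp : Differentiable ℂ p)
    (hpa : AnalyticAt ℂ p 0) (hp2 : ∀ (t : ℂ) Y, p (t • Y) = t ^ 2 * p Y) (hVP : VP p) :
    VP (fun Y : E × (ℂ × ℂ) => p Y.1 + Y.2.1 * Y.2.2) := by
  intro R _ _ _ J hJ hJ0
  have hp0 : p 0 = 0 := by simpa using hp2 0 0
  obtain ⟨c₁, hc₁, hc₁0, h₁⟩ := hVP ((ℂ × ℂ) × R) (fun P => J ((P.1, P.2.1), P.2.2))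
    (AnalyticAt.fun_comp (g := J) (f := fun P : E × ((ℂ × ℂ) × R) => ((P.1, P.2.1), P.2.2)) hJ
      (by fun_prop)) hJ0
  have k₁ := VRel.lift (R := R) (fun q : ℂ × ℂ => q.1 * q.2) (J := J)
    (J' := fun P => c₁ (p P.1.1, (P.1.2, P.2))) h₁
  obtain ⟨c₂, hc₂, hc₂0, h₂⟩ := VP_mul (ℂ × R) (fun P => c₁ (P.2.1, (P.1, P.2.2)))
    (AnalyticAt.fun_comp (g := c₁) (f := fun P : (ℂ × ℂ) × (ℂ × R) => (P.2.1, (P.1, P.2.2))) hc₁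
      (by fun_prop)) hc₁0
  have hρ : AnalyticAt ℂ (fun q : E × R => (p q.1, q.2)) 0 :=
    (AnalyticAt.fun_comp (g := p) (f := fun q : E × R => q.1) hpa (by fun_prop)).prod (by fun_prop)
  have k₂ := h₂.pullback (R := E × R) (ρ := fun q => (p q.1, q.2)) hρ (by simp [hp0])
  have k₃ := VRel.lift (R := R) p (J := fun P : ((ℂ × ℂ) × E) × R => c₁ (p P.1.2, (P.1.1, P.2)))
    (J' := fun P => c₂ (P.1.1.1 * P.1.1.2, (p P.1.2, P.2))) k₂
  have k₄ := k₃.transport (ContinuousLinearEquiv.prodComm ℂ E (ℂ × ℂ))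
  obtain ⟨c, hc, hc0, k₅⟩ := exists_merge hk hp hpa hp2 (R := R)
    (g := fun q : (ℂ × ℂ) × R => c₂ (q.1.2, (q.1.1, q.2)))
    (AnalyticAt.fun_comp (g := c₂) (f := fun q : (ℂ × ℂ) × R => (q.1.2, (q.1.1, q.2))) hc₂
      (by fun_prop)) hc₂0
  refine ⟨c, hc, hc0, k₁.trans (VRel.trans ?_ k₅)⟩
  simpa [add_comm] using k₄

/-- `(a, b) ↦ (a + i b, a - i b)`. -/
noncomputable def isoPlane : (ℂ × ℂ) ≃L[ℂ] (ℂ × ℂ) :=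
  LinearEquiv.toContinuousLinearEquiv
  { toFun := fun Y => (Y.1 + Complex.I * Y.2, Y.1 - Complex.I * Y.2)
    map_add' := fun x y => by ext1 <;> simp <;> ring
    map_smul' := fun t x => by ext1 <;> simp <;> ring
    invFun := fun Y => ((Y.1 + Y.2) / 2, (Y.1 - Y.2) / (2 * Complex.I))
    left_inv := fun Y => by
      have := Complex.I_ne_zero
      ext1 <;> simp <;> field_simp <;> ring
    right_inv := fun Y => by
      have := Complex.I_ne_zero
      ext1 <;> simp <;> field_simp <;> ring }

theorem isoPlane_mul (Y : ℂ × ℂ) : (isoPlane Y).1 * (isoPlane Y).2 = Y.1 ^ 2 + Y.2 ^ 2 := by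
  change (Y.1 + Complex.I * Y.2) * (Y.1 - Complex.I * Y.2) = _
  linear_combination (-Y.2 ^ 2) * Complex.I_sq

theorem VP_plane : VP (fun Y : ℂ × ℂ => Y.1 ^ 2 + Y.2 ^ 2) := by
  have := VP_mul.transport isoPlane
  simpa only [isoPlane_mul] using this

/-- `(z, (a, b)) ↦ ((z, b), a)`. -/
noncomputable def swap3 : (ℂ × (ℂ × ℂ)) ≃L[ℂ] ((ℂ × ℂ) × ℂ) :=
  LinearEquiv.toContinuousLinearEquiv
  { toFun := fun Y => ((Y.1, Y.2.2), Y.2.1)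
    map_add' := fun x y => rfl
    map_smul' := fun t x => rfl
    invFun := fun Y => (Y.1.1, (Y.2, Y.1.2))
    left_inv := fun Y => rfl
    right_inv := fun Y => rfl }

/-- The three-dimensional case, which starts the induction in odd dimensions. -/
theorem VP_space : VP (fun Y : ℂ × (ℂ × ℂ) => Y.1 ^ 2 + (Y.2.1 ^ 2 + Y.2.2 ^ 2)) := by
  intro R _ _ _ J hJ hJ0
  -- rotations of the `(z, b)` plane
  obtain ⟨c₁, hc₁, hc₁0, h₁⟩ := VP_plane (ℂ × R) (fun P => J ((P.1.1, (P.2.1, P.1.2)), P.2.2))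
    (AnalyticAt.fun_comp (g := J) (f := fun P : (ℂ × ℂ) × (ℂ × R) =>
      ((P.1.1, (P.2.1, P.1.2)), P.2.2)) hJ (by fun_prop)) hJ0
  have k₁ := VRel.lift (R := R) (fun a : ℂ => a ^ 2)
    (J := fun P : ((ℂ × ℂ) × ℂ) × R => J ((P.1.1.1, (P.1.2, P.1.1.2)), P.2))
    (J' := fun P => c₁ (P.1.1.1 ^ 2 + P.1.1.2 ^ 2, (P.1.2, P.2))) h₁
  have k₁' : VRel (fun Y : ℂ × (ℂ × ℂ) => Y.1 ^ 2 + (Y.2.1 ^ 2 + Y.2.2 ^ 2)) J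
      (fun P => c₁ (P.1.1 ^ 2 + P.1.2.2 ^ 2, (P.1.2.1, P.2))) := by
    have e : (fun Y : ℂ × (ℂ × ℂ) => Y.1 ^ 2 + (Y.2.1 ^ 2 + Y.2.2 ^ 2)) = fun Y =>
        (swap3 Y).1.1 ^ 2 + (swap3 Y).1.2 ^ 2 + (swap3 Y).2 ^ 2 := by
      funext Y
      change _ = Y.1 ^ 2 + Y.2.2 ^ 2 + Y.2.1 ^ 2
      ring
    rw [e]
    exact k₁.transport swap3
  -- rotations of the `(a, b)` plane
  let f₂ : (ℂ × ℂ) × (ℂ × R) → ℂ × (ℂ × R) := fun P => (P.2.1 + P.1.2 ^ 2, (P.1.1, P.2.2))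
  have hf₂ : AnalyticAt ℂ f₂ 0 := by
    have : AnalyticAt ℂ (fun P : (ℂ × ℂ) × (ℂ × R) => P.2.1 + P.1.2 ^ 2) 0 :=
      AnalyticAt.add (by fun_prop) (AnalyticAt.pow (by fun_prop) 2)
    fun_prop
  have hf₂0 : f₂ 0 = 0 := by simp [f₂]
  obtain ⟨c₂, hc₂, hc₂0, h₂⟩ := VP_plane (ℂ × R) (fun P => c₁ (f₂ P))
    (AnalyticAt.fun_comp (g := c₁) (f := f₂) (by rwa [hf₂0]) hf₂) (by simpa only [hf₂0] using hc₁0)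
  have hρ : AnalyticAt ℂ (fun q : ℂ × R => (q.1 ^ 2, q.2)) 0 :=
    (AnalyticAt.pow (by fun_prop) 2).prod (by fun_prop)
  have k₂ := h₂.pullback (R := ℂ × R) (ρ := fun q => (q.1 ^ 2, q.2)) hρ (by simp)
  have k₃ := VRel.lift (R := R) (fun z : ℂ => z ^ 2)
    (J := fun P : ((ℂ × ℂ) × ℂ) × R => c₁ (P.1.2 ^ 2 + P.1.1.2 ^ 2, (P.1.1.1, P.2)))
    (J' := fun P => c₂ (P.1.1.1 ^ 2 + P.1.1.2 ^ 2, (P.1.2 ^ 2, P.2))) k₂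
  have k₄ := k₃.transport (ContinuousLinearEquiv.prodComm ℂ ℂ (ℂ × ℂ))
  obtain ⟨c, hc, hc0, k₅⟩ := exists_merge (E := ℂ) (k := 0) (by simp) (p := fun z => z ^ 2)
    (by fun_prop) (AnalyticAt.pow (by fun_prop) 2) (fun t Y => by simp [mul_pow]) (R := R)
    (g := fun q : (ℂ × ℂ) × R => c₂ (q.1.2, (q.1.1, q.2)))
    (AnalyticAt.fun_comp (g := c₂) (f := fun q : (ℂ × ℂ) × R => (q.1.2, (q.1.1, q.2))) hc₂
      (by fun_prop)) hc₂0
  have k₆ := k₅.transport ((ContinuousLinearEquiv.refl ℂ ℂ).prodCongr isoPlane)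
  simp only [ContinuousLinearEquiv.prodCongr_apply, ContinuousLinearEquiv.refl_apply, isoPlane_mul] at k₆
  refine ⟨c, hc, hc0, k₁'.trans (VRel.trans ?_ k₆)⟩
  simpa [add_comm] using k₄

/-- Splitting off a hyperbolic plane from the standard quadratic form. -/
noncomputable def splitPlane (k : ℕ) : (Fin (k + 2) → ℂ) ≃L[ℂ] (Fin k → ℂ) × (ℂ × ℂ) :=
  LinearEquiv.toContinuousLinearEquiv
  { toFun := fun z => (fun i => z i.succ.succ, isoPlane (z 0, z 1))
    map_add' := fun x y => by
      ext1
      · rfl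
      · exact map_add isoPlane (x 0, x 1) (y 0, y 1)
    map_smul' := fun t x => by
      ext1
      · rfl
      · exact map_smul isoPlane t (x 0, x 1)
    invFun := fun Y => Fin.cons (isoPlane.symm Y.2).1 (Fin.cons (isoPlane.symm Y.2).2 Y.1)
    left_inv := fun z => by
      funext i
      refine Fin.cases ?_ (fun i => ?_) i
      · simp
      · refine Fin.cases ?_ (fun i => ?_) i
        · simp
        · simp
    right_inv := fun Y => by
      ext1
      · funext i
        simp
      · have : (1 : Fin (k + 2)) = Fin.succ 0 := rfl
        simp only [this, Fin.cons_zero, Fin.cons_succ]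
        exact isoPlane.apply_symm_apply Y.2 }

theorem splitPlane_sqs (k : ℕ) (z : Fin (k + 2) → ℂ) :
    sqs (splitPlane k z).1 + (splitPlane k z).2.1 * (splitPlane k z).2.2 = sqs z := by
  have e : splitPlane k z = (fun i => z i.succ.succ, isoPlane (z 0, z 1)) := rfl
  rw [e]
  simp only [isoPlane_mul]
  have h1 : Fin.succ (0 : Fin (k + 1)) = 1 := rfl
  have h : sqs z = z 0 ^ 2 + (z 1 ^ 2 + ∑ i : Fin k, z i.succ.succ ^ 2) := by
    rw [sqs, Fin.sum_univ_succ, Fin.sum_univ_succ, h1]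
  rw [h, sqs]
  ring

/-- Induction on the dimension in steps of two, splitting off hyperbolic planes. -/
theorem VP_sqs (m : ℕ) : VP (fun z : Fin (m + 2) → ℂ => sqs z) := by
  induction m using Nat.twoStepInduction with
  | zero =>
    have := VP_plane.transport (ContinuousLinearEquiv.finTwoArrow ℂ ℂ)
    simpa [sqs, Fin.sum_univ_succ] using this
  | one =>
    let L : (Fin 3 → ℂ) ≃L[ℂ] ℂ × (ℂ × ℂ) := LinearEquiv.toContinuousLinearEquiv
      { toFun := fun z => (z 0, (z 1, z 2))
        map_add' := fun x y => rfl
        map_smul' := fun t x => rfl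
        invFun := fun Y => ![Y.1, Y.2.1, Y.2.2]
        left_inv := fun z => by funext i; fin_cases i <;> rfl
        right_inv := fun Y => rfl }
    have := VP_space.transport L
    have e : (fun z : Fin 3 → ℂ => sqs z) = fun z => (L z).1 ^ 2 + ((L z).2.1 ^ 2 + (L z).2.2 ^ 2) := by
      funext z
      change _ = z 0 ^ 2 + (z 1 ^ 2 + z 2 ^ 2)
      simp [sqs, Fin.sum_univ_succ]
    rw [e]
    exact this
  | more m ih _ =>
    have := (VP.step (k := m + 1) (by simp) (p := fun z : Fin (m + 2) → ℂ => sqs z)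
      (fun z => (analyticAt_sqs z).differentiableAt) (analyticAt_sqs 0)
      (fun t Y => sqs_smul t Y) ih).transport (splitPlane (m + 2))
    simpa only [splitPlane_sqs] using this
end

/-! ### The isochore Morse lemma -/

section Vey
theorem analyticAt_det {ι X : Type*} [Fintype ι] [DecidableEq ι] [NormedAddCommGroup X] [NormedSpace ℂ X]
    {T : X → (ι → ℂ) →L[ℂ] (ι → ℂ)} {a : X} (hT : AnalyticAt ℂ T a) :
    AnalyticAt ℂ (fun x => (T x).det) a := by
  have h : (fun x => (T x).det) = fun x => ∑ σ : Equiv.Perm ι, ((Equiv.Perm.sign σ : ℤ) : ℂ) *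
      ∏ i, T x (Pi.single i 1) (σ i) := by
    funext x
    rw [ContinuousLinearMap.det, ← LinearMap.det_toMatrix', Matrix.det_apply']
    simp [LinearMap.toMatrix'_apply]
  rw [h]
  refine Finset.analyticAt_fun_sum _ fun σ _ => analyticAt_const.mul ?_
  refine Finset.analyticAt_fun_prod _ fun i _ => ?_
  have h1 : AnalyticAt ℂ (fun x => T x (Pi.single i 1)) a := by fun_prop
  exact analyticAt_pi_iff.1 h1 (σ i)

theorem det_smul_id {n : ℕ} (μ : ℂ) :
    (μ • ContinuousLinearMap.id ℂ (Fin n → ℂ)).det = μ ^ n := by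
  rw [ContinuousLinearMap.det, ContinuousLinearMap.toLinearMap_smul, LinearMap.det_smul]
  simp

/-- A local inverse of an analytic map with nonzero Jacobian determinant. -/
theorem exists_local_inverse_det {n : ℕ} {φ : (Fin n → ℂ) → (Fin n → ℂ)} (hφ : AnalyticAt ℂ φ 0)
    (hφ0 : φ 0 = 0) (hd : (fderiv ℂ φ 0).det ≠ 0) :
    ∃ ι : (Fin n → ℂ) → (Fin n → ℂ), AnalyticAt ℂ ι 0 ∧ ι 0 = 0 ∧
      (∀ᶠ z in 𝓝 0, ι (φ z) = z) ∧ (∀ᶠ z in 𝓝 0, φ (ι z) = z) := by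
  obtain ⟨g, hg⟩ := exists_local_inverse hφ
    ((fderiv ℂ φ 0).toContinuousLinearEquivOfDetNeZero hd) (by ext; simp)
  rw [hφ0] at hg
  exact ⟨g, hg⟩

theorem exists_local_inverse_one {χ : ℂ → ℂ} (hχ : AnalyticAt ℂ χ 0) (hχ0 : χ 0 = 0)
    (hd : deriv χ 0 ≠ 0) : ∃ ψ : ℂ → ℂ, AnalyticAt ℂ ψ 0 ∧ ψ 0 = 0 ∧ deriv ψ 0 ≠ 0 ∧
      (∀ᶠ z in 𝓝 0, ψ (χ z) = z) ∧ (∀ᶠ z in 𝓝 0, χ (ψ z) = z) := by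
  obtain ⟨g, hg, hg0, h1, h2⟩ := exists_local_inverse hχ
    (ContinuousLinearEquiv.unitsEquivAut ℂ (Units.mk0 _ hd)) (by
      ext
      simp)
  rw [hχ0] at hg hg0 h2
  refine ⟨g, hg, hg0, ?_, h1, h2⟩
  intro h
  have k1 : HasDerivAt g (deriv g 0) (χ 0) := by
    rw [hχ0]; exact hg.differentiableAt.hasDerivAt
  have k2 := k1.comp (0:ℂ) hχ.differentiableAt.hasDerivAt
  rw [h, zero_mul] at k2
  have k3 := k2.unique ((hasDerivAt_id (0:ℂ)).congr_of_eventuallyEq h1)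
  exact one_ne_zero k3.symm

/-- Isochore Morse lemma: a function with nondegenerate quadratic part proportional to the
standard one is a function of `∑ zᵢ²` after a volume-preserving change of coordinates. -/
theorem exists_isochore_morse {m : ℕ} {h : (Fin (m + 2) → ℂ) → ℂ} (hh : AnalyticAt ℂ h 0)
    (h0 : h 0 = 0) (h1 : fderiv ℂ h 0 = 0) {l : ℂ} (hl : l ≠ 0)
    (h2 : ∀ u v, fderiv ℂ (fderiv ℂ h) 0 u v = l * ∑ i, u i * v i) :
    ∃ φ ι : (Fin (m + 2) → ℂ) → (Fin (m + 2) → ℂ), ∃ ψ : ℂ → ℂ,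
      AnalyticAt ℂ φ 0 ∧ AnalyticAt ℂ ι 0 ∧ φ 0 = 0 ∧ ι 0 = 0 ∧
      (∀ᶠ z in 𝓝 0, ι (φ z) = z) ∧ (∀ᶠ z in 𝓝 0, φ (ι z) = z) ∧
      (∀ᶠ z in 𝓝 0, (fderiv ℂ φ z).det = 1) ∧
      AnalyticAt ℂ ψ 0 ∧ ψ 0 = 0 ∧ deriv ψ 0 ≠ 0 ∧ ∀ᶠ z in 𝓝 0, h z = ψ (sqs (φ z)) := by
  obtain ⟨μ, φ₀, hμ, hφ₀, hφ₀0, hdφ₀, -, hhφ⟩ := exists_morse hh h0 h1 hl h2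
  have hdet0 : (fderiv ℂ φ₀ 0).det ≠ 0 := by
    have : fderiv ℂ φ₀ 0 = μ • ContinuousLinearMap.id ℂ (Fin (m + 2) → ℂ) := by
      refine ContinuousLinearMap.ext fun v => ?_
      rw [hdφ₀]; rfl
    rw [this, det_smul_id]
    exact pow_ne_zero _ hμ
  obtain ⟨ι₀, hι₀, hι₀0, hιφ, hφι⟩ := exists_local_inverse_det hφ₀ hφ₀0 hdet0
  have hdetφ : AnalyticAt ℂ (fun z => (fderiv ℂ φ₀ z).det) 0 := analyticAt_det hφ₀.fderiv
  let J : (Fin (m + 2) → ℂ) × ℂ → ℂ := fun P => ((fderiv ℂ φ₀ (ι₀ P.1)).det)⁻¹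
  have hJ : AnalyticAt ℂ J 0 := by
    refine AnalyticAt.inv (AnalyticAt.fun_comp (g := fun z => (fderiv ℂ φ₀ z).det)
      (f := fun P : (Fin (m + 2) → ℂ) × ℂ => ι₀ P.1) ?_ ?_) ?_
    · simp only [Prod.fst_zero, hι₀0]; exact hdetφ
    · exact AnalyticAt.fun_comp (g := ι₀) (f := fun P : (Fin (m + 2) → ℂ) × ℂ => P.1) hι₀ (by fun_prop)
    · simp only [Prod.fst_zero, hι₀0]; exact hdet0
  have hJ0 : J 0 ≠ 0 := by
    simp only [J, Prod.fst_zero, hι₀0]; exact inv_ne_zero hdet0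
  obtain ⟨c, hc, hc0, θ, hθ, hθ0, H⟩ := VP_sqs m ℂ J hJ hJ0
  obtain ⟨k, hk, hk0, -, hkw⟩ := exists_radial (m + 1) hc hc0
  let θ₀ : (Fin (m + 2) → ℂ) → (Fin (m + 2) → ℂ) := fun y => θ (y, 0)
  have hθ₀ : AnalyticAt ℂ θ₀ 0 :=
    AnalyticAt.fun_comp (g := θ) (f := fun y : Fin (m + 2) → ℂ => (y, (0:ℂ))) hθ (by fun_prop)
  have hθ₀0 : θ₀ 0 = 0 := hθ0
  have hincl : Tendsto (fun y : Fin (m + 2) → ℂ => (y, (0:ℂ))) (𝓝 0) (𝓝 0) :=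
    (by fun_prop : Continuous fun y : Fin (m + 2) → ℂ => (y, (0:ℂ))).tendsto' _ _ rfl
  have Hθ₀ : ∀ᶠ y in 𝓝 0, sqs (θ₀ y) = sqs y ∧ (fderiv ℂ θ₀ y).det * c (sqs y, 0) = J (y, 0) := by
    filter_upwards [hincl.eventually H, hincl.eventually hθ.eventually_analyticAt] with y k1 k2
    refine ⟨k1.1, ?_⟩
    have hd : HasFDerivAt θ₀ ((fderiv ℂ θ (y, 0)).comp (ContinuousLinearMap.inl ℂ _ ℂ)) y :=
      HasFDerivAt.comp (g := θ) (f := fun y : Fin (m + 2) → ℂ => (y, (0:ℂ))) y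
        k2.differentiableAt.hasFDerivAt (hasFDerivAt_prodMk_left y (0:ℂ))
    rw [hd.fderiv, ← k1.2]
    simp only [k1.1]
  let ρ : (Fin (m + 2) → ℂ) → (Fin (m + 2) → ℂ) := fun y => k (sqs y, 0) • y
  have hsq : AnalyticAt ℂ (fun y : Fin (m + 2) → ℂ => (sqs y, (0:ℂ))) 0 := by fun_prop
  have hsqt : Tendsto (fun y : Fin (m + 2) → ℂ => (sqs y, (0:ℂ))) (𝓝 0) (𝓝 0) := by
    have := hsq.continuousAt.tendsto
    simp only [sqs_zero] at this
    exact this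
  have hks : AnalyticAt ℂ (fun y : Fin (m + 2) → ℂ => k (sqs y, 0)) 0 :=
    AnalyticAt.fun_comp (g := k) (f := fun y : Fin (m + 2) → ℂ => (sqs y, (0:ℂ)))
      (by rw [sqs_zero]; exact hk) hsq
  have hρ : AnalyticAt ℂ ρ 0 := hks.fun_smul analyticAt_id
  have hρ0 : ρ 0 = 0 := by simp [ρ]
  have Hρ : ∀ᶠ y in 𝓝 0, (fderiv ℂ ρ y).det = c (sqs y, 0) := by
    filter_upwards [hsqt.eventually hk.eventually_analyticAt, hsqt.eventually hkw,
      hsqt.eventually (hk.continuousAt.eventually_ne hk0)] with y k1 k2 k3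
    have d1 : HasFDerivAt (fun y : Fin (m + 2) → ℂ => (sqs y, (0:ℂ)))
        ((fderiv ℂ sqs y).prod 0) y :=
      (analyticAt_sqs y).differentiableAt.hasFDerivAt.prodMk (hasFDerivAt_const (0:ℂ) y)
    have d2 : HasFDerivAt (fun y : Fin (m + 2) → ℂ => k (sqs y, 0)) _ y :=
      HasFDerivAt.comp (g := k) y k1.differentiableAt.hasFDerivAt d1
    have d3 : HasFDerivAt ρ _ y := d2.smul (hasFDerivAt_id y)
    have he := euler_quadratic (p := fun z : Fin (m + 2) → ℂ => sqs z)
      (fun z => (analyticAt_sqs z).differentiableAt) (fun t Y => sqs_smul t Y) y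
    have e : ∀ a : ℂ, fderiv ℂ k (sqs y, 0) (a, 0) = a * fderiv ℂ k (sqs y, 0) (1, 0) := by
      intro a
      rw [show ((a, 0) : ℂ × ℂ) = a • (1, 0) by simp, map_smul, smul_eq_mul]
    rw [det_smul_add_rank_one _ (k (sqs y, 0)) k3
      (fderiv ℂ k (sqs y, 0) (1, 0) • fderiv ℂ sqs y) y ?_ (k := m + 1) (by simp), ← k2]
    · have he' : fderiv ℂ sqs y y = 2 * sqs y := he
      simp only [smul_apply, he', smul_eq_mul]
      ring
    · intro v
      rw [d3.fderiv]
      have e' := e (fderiv ℂ sqs y v)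
      simp only [_root_.add_apply, smul_apply, ContinuousLinearMap.smulRight_apply,
        ContinuousLinearMap.comp_apply, ContinuousLinearMap.prod_apply, zero_apply,
        ContinuousLinearMap.id_apply, id_eq, smul_eq_mul, e', mul_comm]
  let φ : (Fin (m + 2) → ℂ) → (Fin (m + 2) → ℂ) := fun z => ρ (θ₀ (φ₀ z))
  have hθφ : AnalyticAt ℂ (fun z => θ₀ (φ₀ z)) 0 :=
    AnalyticAt.fun_comp (g := θ₀) (f := φ₀) (by rwa [hφ₀0]) hφ₀
  have hθφ0 : θ₀ (φ₀ 0) = 0 := by rw [hφ₀0, hθ₀0]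
  have hφ : AnalyticAt ℂ φ 0 := AnalyticAt.fun_comp (g := ρ) (by rwa [hθφ0]) hθφ
  have hφ0 : φ 0 = 0 := by simp only [φ, hθφ0, hρ0]
  have tφ₀ : Tendsto φ₀ (𝓝 0) (𝓝 0) := by simpa only [hφ₀0] using hφ₀.continuousAt.tendsto
  have tθ₀ : Tendsto (fun z => θ₀ (φ₀ z)) (𝓝 0) (𝓝 0) := by
    have := hθφ.continuousAt.tendsto
    simpa only [hθφ0] using this
  have hvol : ∀ᶠ z in 𝓝 0, (fderiv ℂ φ z).det = 1 := by
    filter_upwards [tθ₀.eventually Hρ, tφ₀.eventually Hθ₀, hιφ, tθ₀.eventually hρ.eventually_analyticAt,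
      tφ₀.eventually hθ₀.eventually_analyticAt, hφ₀.eventually_analyticAt,
      hdetφ.continuousAt.eventually_ne hdet0] with z a1 a2 a3 a4 a5 a6 a7
    have d1 : HasFDerivAt (fun z => θ₀ (φ₀ z)) _ z :=
      HasFDerivAt.comp (g := θ₀) z a5.differentiableAt.hasFDerivAt a6.differentiableAt.hasFDerivAt
    have d2 : HasFDerivAt φ _ z := HasFDerivAt.comp (g := ρ) z a4.differentiableAt.hasFDerivAt d1
    have k4 : ∀ A B : (Fin (m + 2) → ℂ) →L[ℂ] (Fin (m + 2) → ℂ), (A.comp B).det = A.det * B.det :=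
      fun A B => LinearMap.det_comp _ _
    rw [d2.fderiv, k4, k4, a1, a2.1, ← mul_assoc, mul_comm (c _), a2.2]
    simp only [J, a3]
    exact inv_mul_cancel₀ a7
  obtain ⟨ι, hι, hι0, b1, b2⟩ := exists_local_inverse_det hφ hφ0 (by
    rw [hvol.self_of_nhds]; exact one_ne_zero)
  let χ : ℂ → ℂ := fun t => k (t, 0) ^ 2 * t
  have hkt : AnalyticAt ℂ (fun t : ℂ => k (t, 0)) 0 :=
    AnalyticAt.fun_comp (g := k) (f := fun t : ℂ => (t, (0:ℂ))) hk (by fun_prop)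
  have hχ : AnalyticAt ℂ χ 0 := (hkt.fun_pow 2).mul analyticAt_id
  have hχd : deriv χ 0 ≠ 0 := by
    have := ((hkt.fun_pow 2).differentiableAt.hasDerivAt.mul (hasDerivAt_id (0:ℂ))).deriv
    have e : deriv χ 0 = k 0 ^ 2 := by
      refine this.trans ?_
      simp
      rfl
    rw [e]
    exact pow_ne_zero _ hk0
  obtain ⟨ψ, hψ, hψ0, hψd, c1, -⟩ := exists_local_inverse_one hχ (by simp [χ]) hχd
  refine ⟨φ, ι, ψ, hφ, hι, hφ0, hι0, b1, b2, hvol, hψ, hψ0, hψd, ?_⟩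
  have th : Tendsto h (𝓝 0) (𝓝 0) := by simpa only [h0] using hh.continuousAt.tendsto
  filter_upwards [hhφ, tφ₀.eventually Hθ₀, th.eventually c1] with z e1 e2 e3
  have : sqs (φ z) = χ (h z) := by
    simp only [φ, ρ, sqs_smul, e2.1, ← e1, χ]
  rw [this, e3]
end Vey

/-! ### The Levi condition in terms of the polarization -/

section
variable {n : ℕ}

/-- The totally real embedding `z ↦ (z, z̄)` as a real-linear map. -/
noncomputable def antidiag (n : ℕ) : (Fin n → ℂ) →L[ℝ] (Fin n → ℂ) × (Fin n → ℂ) :=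
  (ContinuousLinearMap.id ℝ (Fin n → ℂ)).prod (starL' ℝ : (Fin n → ℂ) ≃L[ℝ] (Fin n → ℂ))

theorem antidiag_apply (z : Fin n → ℂ) : antidiag n z = (z, star z) := rfl

theorem hasFDerivAt_antidiag {E : Type*} [NormedAddCommGroup E] [NormedSpace ℂ E]
    {B : (Fin n → ℂ) × (Fin n → ℂ) → E} {p : Fin n → ℂ}
    (hB : DifferentiableAt ℂ B (p, star p)) :
    HasFDerivAt (fun z => B (z, star z))
      (((fderiv ℂ B (p, star p)).restrictScalars ℝ).comp (antidiag n)) p :=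
  HasFDerivAt.comp (g := B) (f := antidiag n) p
    (hB.hasFDerivAt.restrictScalars ℝ) (antidiag n).hasFDerivAt

theorem fderiv_antidiag_single {B : (Fin n → ℂ) × (Fin n → ℂ) → ℂ} {p : Fin n → ℂ}
    (hB : DifferentiableAt ℂ B (p, star p)) (j : Fin n) (c : ℂ) :
    fderiv ℝ (fun z => B (z, star z)) p (Pi.single j c) =
      c * fderiv ℂ B (p, star p) (Pi.single j 1, 0) +
        star c * fderiv ℂ B (p, star p) (0, Pi.single j 1) := by
  rw [(hasFDerivAt_antidiag hB).fderiv]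
  have h1 : ((Pi.single j c, star (Pi.single j c)) : (Fin n → ℂ) × (Fin n → ℂ)) =
      c • (Pi.single j 1, 0) + star c • (0, Pi.single j 1) := by
    ext i
    · by_cases h : i = j
      · subst h; simp
      · simp [h]
    · by_cases h : i = j
      · subst h; simp
      · simp [h]
  rw [ContinuousLinearMap.comp_apply, antidiag_apply, h1,
    ContinuousLinearMap.coe_restrictScalars', map_add, map_smul, map_smul, smul_eq_mul, smul_eq_mul]

theorem wirtZ_antidiag {B : (Fin n → ℂ) × (Fin n → ℂ) → ℂ} {p : Fin n → ℂ}
    (hB : DifferentiableAt ℂ B (p, star p)) (j : Fin n) :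
    wirtZ (fun z => B (z, star z)) j p = fderiv ℂ B (p, star p) (Pi.single j 1, 0) := by
  rw [wirtZ, fderiv_antidiag_single hB, fderiv_antidiag_single hB]
  simp only [star_one, Complex.star_def, Complex.conj_I]
  linear_combination (-(fderiv ℂ B (p, star p) (Pi.single j 1, 0) -
    fderiv ℂ B (p, star p) (0, Pi.single j 1)) / 2) * Complex.I_mul_I

theorem wirtZbar_antidiag {B : (Fin n → ℂ) × (Fin n → ℂ) → ℂ} {p : Fin n → ℂ}
    (hB : DifferentiableAt ℂ B (p, star p)) (j : Fin n) :
    wirtZbar (fun z => B (z, star z)) j p = fderiv ℂ B (p, star p) (0, Pi.single j 1) := by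
  rw [wirtZbar, fderiv_antidiag_single hB, fderiv_antidiag_single hB]
  simp only [star_one, Complex.star_def, Complex.conj_I]
  linear_combination ((fderiv ℂ B (p, star p) (Pi.single j 1, 0) -
    fderiv ℂ B (p, star p) (0, Pi.single j 1)) / 2) * Complex.I_mul_I

theorem eventuallyEq_wirt {f g : (Fin n → ℂ) → ℂ} {p : Fin n → ℂ} (h : f =ᶠ[𝓝 p] g) (j : Fin n) :
    wirtZ f j p = wirtZ g j p ∧ wirtZbar f j p = wirtZbar g j p := by
  simp only [wirtZ, wirtZbar, h.fderiv_eq, and_self]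

theorem tendsto_antidiag : Tendsto (fun z : Fin n → ℂ => (z, star z)) (𝓝 0) (𝓝 0) := by
  have := (antidiag n).continuous.tendsto 0
  rwa [map_zero] at this

/-- The Levi condition expressed through the polarization `A` of `F`. -/
theorem levi_polarized {F : (Fin n → ℂ) → ℝ} {A : (Fin n → ℂ) × (Fin n → ℂ) → ℂ}
    (hA : AnalyticAt ℂ A 0) (hAF : ∀ᶠ z in 𝓝 0, A (z, star z) = F z) (hLF : LeviFlatGerm F) :
    ∀ᶠ p in 𝓝 (0 : Fin n → ℂ), A (p, star p) = 0 →
      (∃ w, fderiv ℂ A (p, star p) (w, star w) ≠ 0) →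
      ∀ v, fderiv ℂ A (p, star p) (v, 0) = 0 →
        fderiv ℂ (fderiv ℂ A) (p, star p) (0, star v) (v, 0) = 0 := by
  have hAa := tendsto_antidiag.eventually hA.eventually_analyticAt
  filter_upwards [hLF, hAF.eventually_nhds, hAa.eventually_nhds, hAF] with p hL hF hAn hFp h0 ⟨w, hw⟩ v hv
  have hAp := hAn.self_of_nhds
  have e1 : (fun z => ((F z : ℝ) : ℂ)) =ᶠ[𝓝 p] fun z => A (z, star z) := by
    filter_upwards [hF] with z hz using hz.symm
  have e2 : ∀ i, wirtZ (fun z => ((F z : ℝ) : ℂ)) i =ᶠ[𝓝 p]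
      fun z => (fun P => fderiv ℂ A P (Pi.single i 1, 0)) (z, star z) := by
    intro i
    filter_upwards [hF.eventually_nhds, hAn] with z hz hz'
    rw [(eventuallyEq_wirt (hz.mono fun y hy => hy.symm) i).1, wirtZ_antidiag hz'.differentiableAt]
  have hd : fderiv ℝ F p ≠ 0 := by
    intro hd
    apply hw
    have h1 := (hasFDerivAt_antidiag hAp.differentiableAt).congr_of_eventuallyEq e1
    have hFd : DifferentiableAt ℝ F p := by
      have : F = fun z => Complex.reCLM ((F z : ℝ) : ℂ) := by ext z; simp
      rw [this]
      exact Complex.reCLM.differentiableAt.comp p h1.differentiableAt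
    have h2 : HasFDerivAt (fun z => ((F z : ℝ) : ℂ)) (Complex.ofRealCLM.comp (fderiv ℝ F p)) p :=
      HasFDerivAt.comp (g := fun x : ℝ => (x : ℂ)) p Complex.ofRealCLM.hasFDerivAt hFd.hasFDerivAt
    have := congrArg (fun L => L w) (h1.unique h2)
    simpa [hd, antidiag_apply] using this
  have hF0 : F p = 0 := by
    rw [h0] at hFp; exact_mod_cast hFp.symm
  have hs : ∀ L : (Fin n → ℂ) × (Fin n → ℂ) →L[ℂ] ℂ, ∀ u,
      ∑ j, L (Pi.single j 1, 0) * u j = L (u, 0) := by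
    intro L u
    have : ((u, 0) : (Fin n → ℂ) × (Fin n → ℂ)) = ∑ j, u j • (Pi.single j 1, 0) := by
      rw [Prod.ext_iff]
      constructor
      · rw [Prod.fst_sum]; simpa using (sum_single_smul u).symm
      · rw [Prod.snd_sum]; simp
    rw [this, map_sum]
    refine Finset.sum_congr rfl fun j _ => ?_
    rw [map_smul, smul_eq_mul, mul_comm]
  have hs' : ∀ L : (Fin n → ℂ) × (Fin n → ℂ) →L[ℂ] ℂ, ∀ u,
      ∑ j, L (0, Pi.single j 1) * u j = L (0, u) := by
    intro L u
    have : ((0, u) : (Fin n → ℂ) × (Fin n → ℂ)) = ∑ j, u j • (0, Pi.single j 1) := by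
      rw [Prod.ext_iff]
      constructor
      · rw [Prod.fst_sum]; simp
      · rw [Prod.snd_sum]; simpa using (sum_single_smul u).symm
    rw [this, map_sum]
    refine Finset.sum_congr rfl fun j _ => ?_
    rw [map_smul, smul_eq_mul, mul_comm]
  have key := hL hF0 hd v (by
    rw [← hv, ← hs]
    refine Finset.sum_congr rfl fun j _ => ?_
    rw [(e2 j).self_of_nhds])
  have e3 : ∀ i j, wirtZbar (wirtZ (fun z => ((F z : ℝ) : ℂ)) i) j p =
      fderiv ℂ (fderiv ℂ A) (p, star p) (0, Pi.single j 1) (Pi.single i 1, 0) := by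
    intro i j
    have hd := hasFDerivAt_fderiv_apply hAp (Pi.single i (1:ℂ), (0 : Fin n → ℂ))
    rw [(eventuallyEq_wirt (e2 i) j).2, wirtZbar_antidiag hd.differentiableAt, hd.fderiv]
    rfl
  simp only [e3] at key
  have e4 : ∀ i, ∑ j, fderiv ℂ (fderiv ℂ A) (p, star p) (0, Pi.single j 1) (Pi.single i 1, 0) *
      v i * (starRingEnd ℂ) (v j) =
      fderiv ℂ (fderiv ℂ A) (p, star p) (0, star v) (Pi.single i 1, 0) * v i := by
    intro i
    have := hs' ((fderiv ℂ (fderiv ℂ A) (p, star p)).flip (Pi.single i 1, 0)) (star v)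
    simp only [ContinuousLinearMap.flip_apply] at this
    rw [← this, Finset.sum_mul]
    refine Finset.sum_congr rfl fun j _ => ?_
    simp only [Pi.star_apply, Complex.star_def]
    ring
  rw [← key, ← hs (fderiv ℂ (fderiv ℂ A) (p, star p) (0, star v)) v]
  exact Finset.sum_congr rfl fun i _ => (e4 i).symm

/-- The polarization of `Re (z₁² + ⋯ + zₙ²) + O(|z|³)` has the expected two-jet. -/
theorem polarization_jet {A : (Fin n → ℂ) × (Fin n → ℂ) → ℂ} (hA : AnalyticAt ℂ A 0)
    (h : (fun z : Fin n → ℂ => A (z, star z) - (((sqs z).re : ℝ) : ℂ)) =O[𝓝 0] fun z => ‖z‖ ^ 3) :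
    A 0 = 0 ∧ fderiv ℂ A 0 = 0 ∧
      ∀ u v, fderiv ℂ (fderiv ℂ A) 0 u v = (∑ i, u.1 i * v.1 i) + ∑ i, u.2 i * v.2 i := by
  have ns : ∀ z : Fin n → ℂ, ‖((z, star z) : (Fin n → ℂ) × (Fin n → ℂ))‖ = ‖z‖ := by
    intro z; rw [Prod.norm_def]; simp
  have hT := (taylor_two hA).comp_tendsto (tendsto_antidiag (n := n))
  have hR : (fun z : Fin n → ℂ => A 0 + fderiv ℂ A 0 (z, star z) +
      ((2⁻¹:ℂ) * fderiv ℂ (fderiv ℂ A) 0 (z, star z) (z, star z) - (((sqs z).re : ℝ) : ℂ)))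
      =O[𝓝 0] fun z => ‖z‖ ^ 3 := by
    have hT' : (fun z : Fin n → ℂ => A (z, star z) - A 0 - fderiv ℂ A 0 (z, star z) -
      (2⁻¹:ℂ) • fderiv ℂ (fderiv ℂ A) 0 (z, star z) (z, star z)) =O[𝓝 0] fun z => ‖z‖ ^ 3 := by
      refine hT.congr (fun z => rfl) fun z => ?_
      simp only [Function.comp, ns]
    refine (h.sub hT').congr_left fun z => ?_
    simp only [smul_eq_mul]; ring
  have hA0 : A 0 = 0 := by
    have h0 := Asymptotics.IsBigO.eq_zero_of_norm_pow (x₀ := (0 : Fin n → ℂ)) (n := 3)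
      (f := fun z : Fin n → ℂ => A 0 + fderiv ℂ A 0 (z, star z) +
      ((2⁻¹:ℂ) * fderiv ℂ (fderiv ℂ A) 0 (z, star z) (z, star z) - (((sqs z).re : ℝ) : ℂ)))
      (by simpa only [sub_zero] using hR) (by norm_num)
    have hz : ((0, star 0) : (Fin n → ℂ) × (Fin n → ℂ)) = 0 := by simp
    simpa only [hz, map_zero, sqs_zero, Complex.zero_re, Complex.ofReal_zero, mul_zero, sub_zero,
      add_zero] using h0
  have tneg : Tendsto (fun z : Fin n → ℂ => -z) (𝓝 0) (𝓝 0) := by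
    have := (continuous_neg (G := Fin n → ℂ)).tendsto 0
    rwa [neg_zero] at this
  have hpn : ∀ z : Fin n → ℂ, ((-z, star (-z)) : (Fin n → ℂ) × (Fin n → ℂ)) = -(z, star z) := by
    intro z; simp
  have hR' : (fun z : Fin n → ℂ => - fderiv ℂ A 0 (z, star z) +
      ((2⁻¹:ℂ) * fderiv ℂ (fderiv ℂ A) 0 (z, star z) (z, star z) - (((sqs z).re : ℝ) : ℂ)))
      =O[𝓝 0] fun z => ‖z‖ ^ 3 := by
    refine (hR.comp_tendsto tneg).congr (fun z => ?_) fun z => ?_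
    · simp only [Function.comp, hpn, map_neg, neg_apply, hA0, sqs_neg, neg_neg, zero_add]
    · simp only [Function.comp, norm_neg]
  have hlin : ∀ z : Fin n → ℂ, fderiv ℂ A 0 (z, star z) = 0 := by
    have hb : (fun z : Fin n → ℂ => fderiv ℂ A 0 (z, star z)) =O[𝓝 0] fun z => ‖z - 0‖ ^ 3 := by
      refine ((hR.sub hR').const_mul_left (2⁻¹:ℂ)).congr (fun z => ?_) fun z => by rw [sub_zero]
      rw [hA0]; ring
    have h1 := hb.hasFDerivAt (𝕜 := ℝ) (by norm_num)
    have h2 : HasFDerivAt (fun z : Fin n → ℂ => fderiv ℂ A 0 (z, star z))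
      (((fderiv ℂ A 0).restrictScalars ℝ).comp (antidiag n)) 0 :=
      (((fderiv ℂ A 0).restrictScalars ℝ).comp (antidiag n)).hasFDerivAt
    intro z
    exact congrArg (fun L => L z) (h2.unique h1)
  have hquad : ∀ z : Fin n → ℂ, fderiv ℂ (fderiv ℂ A) 0 (z, star z) (z, star z) =
      sqs z + sqs (star z) := by
    have hb : (fun z : Fin n → ℂ => (2⁻¹:ℂ) * fderiv ℂ (fderiv ℂ A) 0 (z, star z) (z, star z) -
        (((sqs z).re : ℝ) : ℂ)) =O[𝓝 0] fun z => ‖z‖ ^ 3 := by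
      refine hR.congr_left fun z => ?_
      rw [hA0, hlin]; ring
    intro z
    have h0 := eq_zero_of_homogeneous_of_isBigO (fun t y => ?_) hb z
    · have : (((sqs z).re : ℝ) : ℂ) = 2⁻¹ * (sqs z + sqs (star z)) := by
        have e : sqs (star z) = starRingEnd ℂ (sqs z) := by
          simp only [sqs, map_sum, map_pow, Pi.star_apply, Complex.star_def]
        rw [e, Complex.add_conj]; push_cast; ring
      rw [this] at h0
      linear_combination 2 * h0
    · have e : ((t • y, star (t • y)) : (Fin n → ℂ) × (Fin n → ℂ)) = (t : ℂ) • (y, star y) := by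
        ext i <;> simp
      have e' : sqs (t • y) = ((t ^ 2 : ℝ) : ℂ) * sqs y := by
        have : t • y = (t : ℂ) • y := by ext i; simp
        rw [this, sqs_smul]; push_cast; ring
      rw [e, e', Complex.re_ofReal_mul]
      simp only [map_smul, smul_apply, smul_eq_mul, Complex.real_smul]
      push_cast; ring
  have hgen : ∀ y : (Fin n → ℂ) × (Fin n → ℂ),
      fderiv ℂ (fderiv ℂ A) 0 y y = sqs y.1 + sqs y.2 := by
    let G : (Fin n → ℂ) × (Fin n → ℂ) → ℂ := fun y =>
      fderiv ℂ (fderiv ℂ A) 0 y y - (sqs y.1 + sqs y.2)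
    have hG : AnalyticAt ℂ G ((0 : Fin n → ℂ), star 0) := by
      refine AnalyticAt.sub ?_ (AnalyticAt.add (by fun_prop) (by fun_prop))
      exact AnalyticAt.fp_clm_apply ((fderiv ℂ (fderiv ℂ A) 0).analyticAt _) analyticAt_id
    have := eventually_zero_of_antidiag hG (Eventually.of_forall fun z => by
      simp only [G, hquad, sub_self])
    have hz : ((0, star 0) : (Fin n → ℂ) × (Fin n → ℂ)) = 0 := by simp
    rw [hz] at this
    intro y
    have ht : Tendsto (fun t : ℂ => t • y) (𝓝[≠] 0) (𝓝 0) := by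
      have : Tendsto (fun t : ℂ => t • y) (𝓝 0) (𝓝 ((0:ℂ) • y)) :=
        (continuous_id.smul continuous_const).tendsto 0
      rw [zero_smul] at this
      exact this.mono_left nhdsWithin_le_nhds
    obtain ⟨t, ht1, ht2⟩ := ((ht.eventually this).and self_mem_nhdsWithin).exists
    have ht0 : t ≠ 0 := ht2
    have : t ^ 2 * G y = 0 := by
      rw [← ht1]
      simp only [G, map_smul, smul_apply, smul_eq_mul, Prod.smul_fst, Prod.smul_snd, sqs_smul]
      ring
    have := (mul_eq_zero.mp this).resolve_left (pow_ne_zero 2 ht0)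
    exact sub_eq_zero.mp this
  refine ⟨hA0, ?_, fun u v => ?_⟩
  · have := eventually_zero_of_antidiag (n := n) (p := 0) (G := fun y => fderiv ℂ A 0 y)
      ((fderiv ℂ A 0).analyticAt _) (Eventually.of_forall hlin)
    have hz : ((0, star 0) : (Fin n → ℂ) × (Fin n → ℂ)) = 0 := by simp
    rw [hz] at this
    have h1 : HasFDerivAt (fun y => fderiv ℂ A 0 y) (0 : _ →L[ℂ] ℂ) 0 :=
      (hasFDerivAt_const (0:ℂ) 0).congr_of_eventuallyEq this
    exact (fderiv ℂ A 0).hasFDerivAt.unique h1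
  · have h1 := hgen (u + v)
    simp only [map_add, _root_.add_apply, Prod.fst_add, Prod.snd_add, sqs_add, hgen] at h1
    rw [second_fderiv_symm hA v u] at h1
    linear_combination h1 / 2
end

/-! ### The identity theorem on the quadric cone -/

section
variable {X : Type*} [NormedAddCommGroup X] [NormedSpace ℂ X]

/-- Points of a split quadric with non-zero first isotropic coordinate are dense in it. -/
theorem cone_dense {R : X → ℂ} (hR : Continuous R) (hd : ∀ x, ∃ᶠ x' in 𝓝 x, R x' ≠ 0)
    (y : X × (ℂ × ℂ)) (hy : R y.1 + y.2.1 * y.2.2 = 0) :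
    ∃ᶠ y' in 𝓝 y, R y'.1 + y'.2.1 * y'.2.2 = 0 ∧ y'.2.1 ≠ 0 := by
  obtain ⟨x, l, k⟩ := y
  simp only at hy
  by_cases hl : l = 0
  · subst hl
    have hx : R x = 0 := by simpa using hy
    by_cases hk : k = 0
    · subst hk
      have ht : Tendsto (fun t : ℂ => (x, (t, (0:ℂ)))) (𝓝[≠] 0) (𝓝 (x, ((0:ℂ), (0:ℂ)))) := by
        refine Tendsto.mono_left ?_ nhdsWithin_le_nhds
        exact Continuous.tendsto (f := fun t : ℂ => (x, (t, (0:ℂ)))) (by fun_prop) 0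
      refine ht.frequently (Eventually.frequently ?_)
      filter_upwards [self_mem_nhdsWithin] with t ht0
      exact ⟨by simp [hx], ht0⟩
    · have ht : Tendsto (fun x' : X => (x', (-R x' / k, k))) (𝓝 x) (𝓝 (x, ((0:ℂ), k))) := by
        have := Continuous.tendsto (f := fun x' : X => (x', (-R x' / k, k))) (by fun_prop) x
        simpa [hx] using this
      refine ht.frequently ((hd x).mono fun x' hx' => ⟨?_, ?_⟩)
      · simp only; field_simp; ring
      · simp [hx', hk]
  · intro h
    exact h.self_of_nhds ⟨hy, hl⟩

/-- Identity theorem on the quadric cone `R x + λ μ = 0`: a holomorphic function on an open set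
star-shaped about the vertex, vanishing on the cone near one of its points, vanishes on the whole
cone.  The cone is swept out by `(s, x) ↦ (s x, (s, -s R x))`. -/
theorem cone_identity {R : X → ℂ} (hR : ∀ x, AnalyticAt ℂ R x)
    (hRs : ∀ (t : ℂ) x, R (t • x) = t ^ 2 * R x) (hd : ∀ x, ∃ᶠ x' in 𝓝 x, R x' ≠ 0)
    {U : Set (X × (ℂ × ℂ))} (hU : IsOpen U)
    (hS : ∀ y ∈ U, ∀ t ∈ Set.Icc (0:ℝ) 1, (t : ℂ) • y ∈ U)
    {G : X × (ℂ × ℂ) → ℂ} (hG : ∀ y ∈ U, AnalyticAt ℂ G y)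
    {P : X × (ℂ × ℂ)} (hP : P ∈ U) (hPc : R P.1 + P.2.1 * P.2.2 = 0)
    (h : ∀ᶠ y in 𝓝 P, R y.1 + y.2.1 * y.2.2 = 0 → G y = 0) :
    ∀ y ∈ U, R y.1 + y.2.1 * y.2.2 = 0 → G y = 0 := by
  have hRc : Continuous R := continuous_iff_continuousAt.mpr fun x => (hR x).continuousAt
  let Φ : ℂ × X → X × (ℂ × ℂ) := fun p => (p.1 • p.2, (p.1, -(p.1 * R p.2)))
  have hΦ : ∀ p, AnalyticAt ℂ Φ p := by
    intro p
    have h2 : AnalyticAt ℂ (fun p : ℂ × X => R p.2) p :=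
      AnalyticAt.fun_comp (g := R) (f := fun p : ℂ × X => p.2) (hR _) analyticAt_snd
    exact (analyticAt_fst.fun_smul analyticAt_snd).prod
      (analyticAt_fst.prod (analyticAt_fst.fun_mul h2).fun_neg)
  have hΦc : Continuous Φ := by
    refine continuous_iff_continuousAt.mpr fun x => (hΦ x).continuousAt
  have hΦq : ∀ p, R (Φ p).1 + (Φ p).2.1 * (Φ p).2.2 = 0 := by
    intro p; simp only [Φ, hRs]; ring
  have hΦs : ∀ y : X × (ℂ × ℂ), R y.1 + y.2.1 * y.2.2 = 0 → y.2.1 ≠ 0 →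
      Φ (y.2.1, y.2.1⁻¹ • y.1) = y := by
    intro y hy hy0
    obtain ⟨x, l, k⟩ := y
    simp only at hy hy0
    simp only [Φ, hRs]
    refine Prod.ext ?_ (Prod.ext rfl ?_)
    · simp [smul_smul, hy0]
    · simp only
      field_simp
      linear_combination -hy
  let S : Set (ℂ × X) := Φ ⁻¹' U
  have hSo : IsOpen S := hU.preimage hΦc
  have h0U : (0 : X × (ℂ × ℂ)) ∈ U := by
    have := hS P hP 0 (by simp)
    simpa using this
  have hSp : IsPreconnected S := by
    refine isPreconnected_of_forall (0 : ℂ × X) fun p hp => ?_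
    let f1 : ℝ → ℂ × X := fun t => ((t : ℂ) * p.1, p.2)
    let f2 : ℝ → ℂ × X := fun t => (0, (t : ℂ) • p.2)
    have c1 : Continuous f1 := by fun_prop
    have c2 : Continuous f2 := by fun_prop
    refine ⟨Set.image f1 (Set.Icc 0 1) ∪ Set.image f2 (Set.Icc 0 1), ?_, Or.inr ⟨0, by simp, by ext <;> simp [f2]⟩,
      Or.inl ⟨1, by simp, by ext <;> simp [f1]⟩, ?_⟩
    · rintro _ (⟨t, ht, rfl⟩ | ⟨t, ht, rfl⟩)
      · have := hS _ hp t ht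
        have e : Φ (f1 t) = (t : ℂ) • Φ p := by
          simp only [Φ, f1]
          ext <;> simp [smul_smul, mul_assoc]
        simpa only [S, Set.mem_preimage, e] using this
      · have e : Φ (f2 t) = 0 := by
          simp only [Φ, f2]; ext <;> simp
        simpa only [S, Set.mem_preimage, e] using h0U
    · exact IsPreconnected.union (0, p.2) ⟨0, by simp, by ext <;> simp [f1]⟩
        ⟨1, by simp, by ext <;> simp [f2]⟩
        (isPreconnected_Icc.image _ c1.continuousOn) (isPreconnected_Icc.image _ c2.continuousOn)
  have hGΦ : AnalyticOnNhd ℂ (fun p => G (Φ p)) S := fun p hp =>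
    AnalyticAt.fun_comp (g := G) (f := Φ) (hG _ hp) (hΦ p)
  obtain ⟨P', ⟨hP'c, hP'0⟩, hP'e, hP'U⟩ := ((cone_dense hRc hd P hPc).and_eventually
    (h.eventually_nhds.and (hU.mem_nhds hP))).exists
  have hP'Φ := hΦs P' hP'c hP'0
  have hz : (fun p => G (Φ p)) =ᶠ[𝓝 (P'.2.1, P'.2.1⁻¹ • P'.1)] 0 := by
    have ht := hΦc.tendsto (P'.2.1, P'.2.1⁻¹ • P'.1)
    rw [hP'Φ] at ht
    filter_upwards [ht.eventually hP'e] with p hp using hp (hΦq p)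
  have hall := hGΦ.eqOn_zero_of_preconnected_of_eventuallyEq_zero hSp
    (by change Φ _ ∈ U; rw [hP'Φ]; exact hP'U) hz
  intro y hyU hyc
  by_contra hne
  obtain ⟨y', ⟨hc, h0⟩, hne', hU'⟩ := ((cone_dense hRc hd y hyc).and_eventually
    (((hG y hyU).continuousAt.eventually_ne hne).and (hU.mem_nhds hyU))).exists
  apply hne'
  have e := hΦs y' hc h0
  have := hall (x := (y'.2.1, y'.2.1⁻¹ • y'.1)) (by change Φ _ ∈ U; rw [e]; exact hU')
  simpa only [e, Pi.zero_apply] using this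

/-- `cone_identity` for the cone `q(Z) + q(W) = 0` in `ℂⁿ × ℂⁿ`, `n ≥ 2`. -/
theorem cone_tool {m : ℕ} {U : Set ((Fin (m + 2) → ℂ) × (Fin (m + 2) → ℂ))} (hU : IsOpen U)
    (hS : ∀ y ∈ U, ∀ t ∈ Set.Icc (0:ℝ) 1, (t : ℂ) • y ∈ U)
    {G : (Fin (m + 2) → ℂ) × (Fin (m + 2) → ℂ) → ℂ} (hG : ∀ y ∈ U, AnalyticAt ℂ G y)
    {P : (Fin (m + 2) → ℂ) × (Fin (m + 2) → ℂ)} (hP : P ∈ U) (hPc : sqs P.1 + sqs P.2 = 0)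
    (h : ∀ᶠ y in 𝓝 P, sqs y.1 + sqs y.2 = 0 → G y = 0) :
    ∀ y ∈ U, sqs y.1 + sqs y.2 = 0 → G y = 0 := by
  let L : ((Fin (m + 2) → ℂ) × (Fin (m + 2) → ℂ)) ≃L[ℂ]
      (((Fin m → ℂ) × (Fin (m + 2) → ℂ)) × (ℂ × ℂ)) :=
    { toFun := fun y => (((splitPlane m y.1).1, y.2), (splitPlane m y.1).2)
      invFun := fun p => ((splitPlane m).symm (p.1.1, p.2), p.1.2)
      map_add' := fun x y => by simp
      map_smul' := fun t y => by simp
      left_inv := fun y => by simp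
      right_inv := fun p => by simp
      continuous_toFun := by
        fun_prop
      continuous_invFun := by
        fun_prop }
  let R : (Fin m → ℂ) × (Fin (m + 2) → ℂ) → ℂ := fun x => sqs x.1 + sqs x.2
  have hL : ∀ y, L y = (((splitPlane m y.1).1, y.2), (splitPlane m y.1).2) := fun y => rfl
  have hLq : ∀ y, R (L y).1 + (L y).2.1 * (L y).2.2 = sqs y.1 + sqs y.2 := by
    intro y
    simp only [hL, R]
    rw [← splitPlane_sqs m y.1]; ring
  have hR : ∀ x, AnalyticAt ℂ R x := fun x => AnalyticAt.fun_add
    (AnalyticAt.fun_comp (g := sqs) (f := fun x : (Fin m → ℂ) × (Fin (m + 2) → ℂ) => x.1) (analyticAt_sqs _) analyticAt_fst)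
    (AnalyticAt.fun_comp (g := sqs) (f := fun x : (Fin m → ℂ) × (Fin (m + 2) → ℂ) => x.2) (analyticAt_sqs _) analyticAt_snd)
  have hRs : ∀ (t : ℂ) x, R (t • x) = t ^ 2 * R x := by
    intro t x; simp only [R, Prod.smul_fst, Prod.smul_snd, sqs_smul]; ring
  have hd : ∀ x, ∃ᶠ x' in 𝓝 x, R x' ≠ 0 := by
    intro x
    by_cases hx : R x = 0
    · -- moving along the basis vector `e` changes `R` by `2 t c + t²`
      let e : (Fin m → ℂ) × (Fin (m + 2) → ℂ) := (0, Pi.single 0 1)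
      have hq : ∀ t : ℂ, R (x + t • e) = t * (2 * x.2 0 + t) := by
        intro t
        have h1 : R (x + t • e) = R x + (2 * t * x.2 0 + t ^ 2) := by
          simp only [R, e, Prod.fst_add, Prod.snd_add, Prod.smul_fst, Prod.smul_snd, smul_zero,
            add_zero, sqs_add, sqs_smul]
          have : sqs (Pi.single (0 : Fin (m + 2)) (1:ℂ)) = 1 := by
            simp [sqs, Pi.single_apply]
          have h2 : ∑ i, x.2 i * (t • (Pi.single 0 1 : Fin (m + 2) → ℂ)) i = x.2 0 * t := by
            simp [Pi.single_apply]
          rw [this, h2]; ring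
        rw [h1, hx]; ring
      have ht : Tendsto (fun t : ℂ => x + t • e) (𝓝[≠] 0) (𝓝 x) := by
        refine Tendsto.mono_left ?_ nhdsWithin_le_nhds
        have := Continuous.tendsto (f := fun t : ℂ => x + t • e) (by fun_prop) 0
        simpa using this
      have hev : ∀ᶠ t : ℂ in 𝓝[≠] 0, 2 * x.2 0 + t ≠ 0 := by
        by_cases hc : x.2 0 = 0
        · filter_upwards [self_mem_nhdsWithin] with t ht
          simpa [hc] using ht
        · refine Eventually.filter_mono nhdsWithin_le_nhds ?_
          have : ContinuousAt (fun t : ℂ => 2 * x.2 0 + t) 0 := by fun_prop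
          exact this.eventually_ne (by simpa using hc)
      refine ht.frequently (Eventually.frequently ?_)
      filter_upwards [hev, self_mem_nhdsWithin] with t h1 h2
      rw [hq]
      exact mul_ne_zero h2 h1
    · intro hh
      exact hh.self_of_nhds hx
  have key := cone_identity hR hRs hd (U := L.symm ⁻¹' U) (hU.preimage L.symm.continuous)
    (fun y hy t ht => by
      simp only [Set.mem_preimage, map_smul] at hy ⊢
      exact hS _ hy t ht) (G := fun y => G (L.symm y))
    (fun y hy => AnalyticAt.fun_comp (g := G) (f := L.symm) (hG _ hy)
      (L.symm.toContinuousLinearMap.analyticAt _))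
    (P := L P) (by simpa using hP) (by rw [hLq, hPc]) (by
      have ht := L.symm.continuous.tendsto (L P)
      rw [L.symm_apply_apply] at ht
      filter_upwards [ht.eventually h] with y hy hq
      apply hy
      rw [← hLq, L.apply_symm_apply, hq])
  intro y hy hq
  have := key (L y) (by simpa using hy) (by rw [hLq, hq])
  simpa using this
end

/-! ### Coordinates straightening the complexified hypersurface -/

section
variable {ι : Type*} [Fintype ι]

/-- Coordinates `(Z(z), W(z, w))` in which the complexified hypersurface is exactly the quadric
cone `q(Z) + q(W) = 0`; `ζ` inverts `Z` and `(Z, Y) ↦ (ζ Z, η (Z, Y))` inverts the chart. -/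
theorem exists_cone_chart {A : (ι → ℂ) × (ι → ℂ) → ℂ} (hA : AnalyticAt ℂ A 0) (h0 : A 0 = 0)
    (h1 : fderiv ℂ A 0 = 0)
    (h2 : ∀ u v, fderiv ℂ (fderiv ℂ A) 0 u v = (∑ i, u.1 i * v.1 i) + ∑ i, u.2 i * v.2 i) :
    ∃ (Z ζ : (ι → ℂ) → (ι → ℂ)) (W η : (ι → ℂ) × (ι → ℂ) → (ι → ℂ)),
      (AnalyticAt ℂ Z 0 ∧ AnalyticAt ℂ ζ 0 ∧ AnalyticAt ℂ W 0 ∧ AnalyticAt ℂ η 0) ∧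
      (Z 0 = 0 ∧ ζ 0 = 0 ∧ W 0 = 0 ∧ η 0 = 0) ∧
      (∀ v, fderiv ℂ Z 0 v = v) ∧ (∀ v, fderiv ℂ W 0 v = v.2) ∧
      (∀ᶠ z in 𝓝 0, ζ (Z z) = z) ∧ (∀ᶠ z in 𝓝 0, Z (ζ z) = z) ∧
      (∀ᶠ p in 𝓝 0, η (Z p.1, W p) = p.2) ∧ (∀ᶠ p in 𝓝 0, W (ζ p.1, η p) = p.2) ∧
      ∀ᶠ p in 𝓝 0, A p = 2⁻¹ * (sqs (Z p.1) + sqs (W p)) := by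
  classical
  obtain ⟨W, e, hW, hW0, hDW, he, hAe⟩ := exists_param_morse hA (fun v => by rw [h1]; rfl)
    (fun u v => by rw [h2]; simp)
  have hsW : AnalyticAt ℂ (fun p => sqs (W p)) 0 := by fun_prop
  have hef : AnalyticAt ℂ (fun p : (ι → ℂ) × (ι → ℂ) => e p.1) 0 :=
    AnalyticAt.fun_comp (g := e) (f := fun p : (ι → ℂ) × (ι → ℂ) => p.1) he analyticAt_fst
  have hfd : ∀ᶠ p in 𝓝 0, fderiv ℂ A p = fderiv ℂ (fun p : (ι → ℂ) × (ι → ℂ) => e p.1) p +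
      (2⁻¹ : ℂ) • fderiv ℂ (fun p => sqs (W p)) p := by
    filter_upwards [hAe.eventually_nhds, hsW.eventually_analyticAt, hef.eventually_analyticAt]
      with p hp hp1 hp2
    rw [EventuallyEq.fderiv_eq hp]
    exact (hp2.differentiableAt.hasFDerivAt.add
      (hp1.differentiableAt.hasFDerivAt.const_mul (2⁻¹ : ℂ))).fderiv
  have hDe : ∀ p : (ι → ℂ) × (ι → ℂ), fderiv ℂ (fun p : (ι → ℂ) × (ι → ℂ) => e p.1) 0 p =
      fderiv ℂ e 0 p.1 := by
    intro p
    have : HasFDerivAt (fun p : (ι → ℂ) × (ι → ℂ) => e p.1)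
        ((fderiv ℂ e 0).comp (ContinuousLinearMap.fst ℂ (ι → ℂ) (ι → ℂ))) 0 :=
      HasFDerivAt.comp (g := e) (f := fun p : (ι → ℂ) × (ι → ℂ) => p.1) 0
        he.differentiableAt.hasFDerivAt hasFDerivAt_fst
    rw [this.fderiv]; rfl
  have hD2 : ∀ u v, fderiv ℂ (fderiv ℂ A) 0 u v = fderiv ℂ (fderiv ℂ e) 0 u.1 v.1 +
      ∑ i, fderiv ℂ W 0 u i * fderiv ℂ W 0 v i := by
    intro u v
    rw [EventuallyEq.fderiv_eq hfd]
    have hh : HasFDerivAt (fun p => fderiv ℂ (fun p : (ι → ℂ) × (ι → ℂ) => e p.1) p +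
      (2⁻¹ : ℂ) • fderiv ℂ (fun p => sqs (W p)) p) _ 0 :=
      (hef.fderiv.differentiableAt.hasFDerivAt.add
      (hsW.fderiv.differentiableAt.hasFDerivAt.const_smul (2⁻¹ : ℂ)))
    rw [hh.fderiv]
    simp only [_root_.add_apply, smul_apply, smul_eq_mul]
    have := second_fderiv_comp_clm (L := ContinuousLinearMap.fst ℂ (ι → ℂ) (ι → ℂ)) he u v
    simp only [ContinuousLinearMap.coe_fst'] at this
    rw [second_fderiv_sqs hW hW0, this]
    ring
  have hDW1 : ∀ u : ι → ℂ, fderiv ℂ W 0 (u, 0) = 0 := by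
    intro u
    ext j
    have e1 := hD2 (u, 0) (0, Pi.single j 1)
    rw [h2] at e1
    simpa [hDW, Pi.single_apply] using e1.symm
  have hDW2 : ∀ v : (ι → ℂ) × (ι → ℂ), fderiv ℂ W 0 v = v.2 := by
    intro v
    have : v = (v.1, 0) + (0, v.2) := by simp
    rw [this, map_add, hDW1, hDW]; simp
  have he0 : e 0 = 0 := by
    have := hAe.self_of_nhds
    simpa [h0, hW0, sqs_zero] using this.symm
  have hde : fderiv ℂ e 0 = 0 := by
    ext u
    have := congrArg (fun L => L (u, 0)) hfd.self_of_nhds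
    simpa [h1, hDe, fderiv_sqs hW.differentiableAt, hW0] using this.symm
  have hd2e : ∀ u v, fderiv ℂ (fderiv ℂ e) 0 u v = 1 * ∑ i, u i * v i := by
    intro u v
    have e1 := hD2 (u, 0) (v, 0)
    rw [h2] at e1
    simpa [hDW1] using e1.symm
  obtain ⟨μ, φ, hμ, hφ, hφ0, hDφ, hμ2, hφe⟩ := exists_morse he he0 hde one_ne_zero hd2e
  let Z : (ι → ℂ) → (ι → ℂ) := fun z => μ⁻¹ • φ z
  have hZ : AnalyticAt ℂ Z 0 := analyticAt_const.fun_smul hφ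
  have hZ0 : Z 0 = 0 := by simp [Z, hφ0]
  have hDZ : ∀ v, fderiv ℂ Z 0 v = v := by
    intro v
    have : HasFDerivAt Z (μ⁻¹ • fderiv ℂ φ 0) 0 := hφ.differentiableAt.hasFDerivAt.const_smul μ⁻¹
    rw [this.fderiv, smul_apply, hDφ, smul_smul, inv_mul_cancel₀ hμ, one_smul]
  obtain ⟨ζ, hζ, hζ0, hζZ, hZζ⟩ := exists_local_inverse_id (f := Z) hZ (by ext v; simp [hDZ])
  rw [hZ0] at hζ hζ0 hZζ
  obtain ⟨η₀, hη₀, hη₀0, hη₀W, hWη₀⟩ := exists_param_inverse (f := W) (x₀ := 0) (y₀ := 0) hW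
    (ContinuousLinearEquiv.refl ℂ (ι → ℂ)) (fun v => by
      exact hDW v)
  have hW00 : W (0, 0) = 0 := hW0
  rw [hW00] at hη₀ hη₀0 hWη₀
  have tZ : Tendsto Z (𝓝 0) (𝓝 0) := by
    have := hZ.continuousAt.tendsto; rwa [hZ0] at this
  have tζ : Tendsto ζ (𝓝 0) (𝓝 0) := by
    have := hζ.continuousAt.tendsto; rwa [hζ0] at this
  have tfst : Tendsto (fun p : (ι → ℂ) × (ι → ℂ) => p.1) (𝓝 0) (𝓝 0) := continuous_fst.tendsto 0
  have hz : AnalyticAt ℂ (fun p : (ι → ℂ) × (ι → ℂ) => (ζ p.1, p.2)) 0 :=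
    (AnalyticAt.fun_comp (g := ζ) (f := fun p : (ι → ℂ) × (ι → ℂ) => p.1) hζ analyticAt_fst).prod
      analyticAt_snd
  have tz : Tendsto (fun p : (ι → ℂ) × (ι → ℂ) => (ζ p.1, p.2)) (𝓝 0) (𝓝 (0, 0)) := by
    have := hz.continuousAt.tendsto
    simpa [hζ0] using this
  refine ⟨Z, ζ, W, fun p => η₀ (ζ p.1, p.2), ⟨hZ, hζ, hW, ?_⟩, ⟨hZ0, hζ0, hW0, ?_⟩, hDZ, hDW2,
    hζZ, hZζ, ?_, ?_, ?_⟩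
  · exact AnalyticAt.fun_comp (g := η₀) (f := fun p : (ι → ℂ) × (ι → ℂ) => (ζ p.1, p.2))
      (by simpa [hζ0] using hη₀) hz
  · simp [hζ0, hη₀0]
  · filter_upwards [tfst.eventually hζZ, hη₀W] with p hp hp'
    simp only [hp, hp']
  · filter_upwards [tz.eventually hWη₀] with p hp
    exact hp
  · filter_upwards [hAe, tfst.eventually hφe] with p hp hp'
    rw [hp, hp']
    have : sqs (Z p.1) = 2 * sqs (φ p.1) := by
      simp only [Z, sqs_smul]
      have h3 : μ⁻¹ ^ 2 = 2 := by
        field_simp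
        linear_combination -hμ2
      rw [h3]
    rw [this]; ring
end

/-! ### The antiholomorphic involution -/

section
variable {n : ℕ}

/-- The antiholomorphic involution `(z, w) ↦ (w̄, z̄)`, whose fixed points are the `(z, z̄)`. -/
def tau (P : (Fin n → ℂ) × (Fin n → ℂ)) : (Fin n → ℂ) × (Fin n → ℂ) := (star P.2, star P.1)

theorem tau_add (P Q : (Fin n → ℂ) × (Fin n → ℂ)) : tau (P + Q) = tau P + tau Q := by
  simp [tau]

theorem tau_sub (P Q : (Fin n → ℂ) × (Fin n → ℂ)) : tau (P - Q) = tau P - tau Q := by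
  simp [tau]

theorem tau_smul (c : ℂ) (P : (Fin n → ℂ) × (Fin n → ℂ)) : tau (c • P) = star c • tau P := by
  simp [tau]

theorem tau_antidiag (z : Fin n → ℂ) : tau (z, star z) = (z, star z) := by simp [tau]

theorem continuous_tau : Continuous (tau (n := n)) := by
  unfold tau; fun_prop

theorem eq_of_tau {P : (Fin n → ℂ) × (Fin n → ℂ)} (h : tau P = P) : P = (P.1, star P.1) := by
  have : star P.1 = P.2 := congrArg Prod.snd h
  rw [this]

theorem fderiv_tau {A : (Fin n → ℂ) × (Fin n → ℂ) → ℂ} {p : Fin n → ℂ}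
    (hA : AnalyticAt ℂ A (p, star p)) (hsym : ∀ P, A (tau P) = star (A P))
    (x : (Fin n → ℂ) × (Fin n → ℂ)) :
    fderiv ℂ A (p, star p) (tau x) = star (fderiv ℂ A (p, star p) x) := by
  have hl : ∀ y, HasDerivAt (fun t : ℝ => A ((p, star p) + t • y)) (fderiv ℂ A (p, star p) y) 0 := by
    intro y
    have h1 : HasDerivAt (fun t : ℝ => (p, star p) + t • y) y 0 := by
      simpa using ((hasDerivAt_id (0:ℝ)).smul_const y).const_add (p, star p)
    have h2 : HasFDerivAt A ((fderiv ℂ A (p, star p)).restrictScalars ℝ)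
      ((p, star p) + (0:ℝ) • y) := by
      rw [zero_smul, add_zero]; exact hA.differentiableAt.hasFDerivAt.restrictScalars ℝ
    exact h2.comp_hasDerivAt (0:ℝ) h1
  have h2 := (hl x).star
  refine (hl (tau x)).unique (h2.congr_of_eventuallyEq (Eventually.of_forall fun t => ?_))
  have : (p, star p) + t • tau x = tau ((p, star p) + t • x) := by
    rw [tau_add, tau_antidiag]; congr 1
    ext i <;> simp [tau]
  simp only [this, hsym]

/-- A holomorphic function vanishing on the real points of a smooth real hypersurface
`A (z, z̄) = 0` vanishes on the complexified hypersurface `A (z, w) = 0`.  The hypersurface is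
flattened by a map commuting with the real structure `tau`. -/
theorem zero_on_complexification {A G : (Fin n → ℂ) × (Fin n → ℂ) → ℂ} {p : Fin n → ℂ}
    (hA : AnalyticAt ℂ A (p, star p)) (hG : AnalyticAt ℂ G (p, star p))
    (hsym : ∀ P, A (tau P) = star (A P)) (hA0 : A (p, star p) = 0)
    (hw : ∃ w, fderiv ℂ A (p, star p) (w, star w) ≠ 0)
    (h : ∀ᶠ z in 𝓝 p, A (z, star z) = 0 → G (z, star z) = 0) :
    ∀ᶠ P in 𝓝 (p, star p), A P = 0 → G P = 0 := by
  obtain ⟨w, hw⟩ := hw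
  let P₀ : (Fin n → ℂ) × (Fin n → ℂ) := (p, star p)
  let l := fderiv ℂ A P₀
  have hl : ∀ x, l (tau x) = star (l x) := fderiv_tau hA hsym
  let ε : (Fin n → ℂ) × (Fin n → ℂ) := (l (w, star w))⁻¹ • (w, star w)
  have hε : tau ε = ε := by
    have : star (l (w, star w)) = l (w, star w) := by rw [← hl, tau_antidiag]
    simp only [ε]
    rw [tau_smul, tau_antidiag, star_inv₀, this]
  have hlε : l ε = 1 := by
    simp only [ε, map_smul, smul_eq_mul]
    exact inv_mul_cancel₀ hw
  let Ψ : (Fin n → ℂ) × (Fin n → ℂ) → (Fin n → ℂ) × (Fin n → ℂ) := fun x => x + (A x - l x) • ε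
  have hΨ : AnalyticAt ℂ Ψ P₀ :=
    analyticAt_id.fun_add ((hA.fun_sub (l.analyticAt _)).fun_smul analyticAt_const)
  have hDΨ : fderiv ℂ Ψ P₀ = ContinuousLinearMap.id ℂ _ := by
    have h1 : HasFDerivAt Ψ _ P₀ := (hasFDerivAt_id P₀).add
      ((hA.differentiableAt.hasFDerivAt.sub l.hasFDerivAt).smul_const ε)
    rw [h1.fderiv]
    ext v <;> simp [l, P₀]
  have hlΨ : ∀ x, l (Ψ x) = A x := by
    intro x
    simp only [Ψ, map_add, map_smul, hlε, smul_eq_mul]; ring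
  have hΨτ : ∀ x, Ψ (tau x) = tau (Ψ x) := by
    intro x
    simp only [Ψ, tau_add, tau_smul, hε, hl, hsym, star_sub]
  obtain ⟨Φ, hΦ, hΦ0, hΦΨ, hΨΦ⟩ := exists_local_inverse_id hΨ hDΨ
  let T : (Fin n → ℂ) × (Fin n → ℂ) → (Fin n → ℂ) × (Fin n → ℂ) := fun y => y - l y • ε
  have hlT : ∀ y, l (T y) = 0 := by
    intro y; simp [T, hlε]
  have hTc : Continuous T := by fun_prop
  have hy0 : T (Ψ P₀) = Ψ P₀ := by
    have : l (Ψ P₀) = 0 := by rw [hlΨ]; exact hA0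
    simp [T, this]
  have hy0' : Ψ P₀ = ((Ψ P₀).1, star (Ψ P₀).1) := eq_of_tau (by
    rw [← hΨτ]; congr 1; exact tau_antidiag p)
  have tT : Tendsto T (𝓝 (Ψ P₀)) (𝓝 (Ψ P₀)) := by
    have := hTc.tendsto (Ψ P₀); rwa [hy0] at this
  have tΦ : Tendsto Φ (𝓝 (Ψ P₀)) (𝓝 P₀) := by
    have := hΦ.continuousAt.tendsto; rwa [hΦ0] at this
  have tτ : Tendsto tau (𝓝 P₀) (𝓝 P₀) := by
    have := (continuous_tau (n := n)).tendsto P₀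
    rwa [show tau P₀ = P₀ from tau_antidiag p] at this
  have hT : AnalyticAt ℂ T (Ψ P₀) :=
    analyticAt_id.fun_sub ((l.analyticAt _).fun_smul analyticAt_const)
  have hΦT : AnalyticAt ℂ (fun y => Φ (T y)) (Ψ P₀) :=
    AnalyticAt.fun_comp (g := Φ) (f := T) (by rwa [hy0]) hT
  have hGt : AnalyticAt ℂ (fun y => G (Φ (T y))) (Ψ P₀) :=
    AnalyticAt.fun_comp (g := G) (f := fun y => Φ (T y)) (by rw [hy0, hΦ0]; exact hG) hΦT
  have hz : ∀ᶠ P in 𝓝 (Ψ P₀), G (Φ (T P)) = 0 := by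
    rw [hy0'] at hGt ⊢
    refine eventually_zero_of_antidiag hGt ?_
    have ta : Tendsto (fun z : Fin n → ℂ => (z, star z)) (𝓝 (Ψ P₀).1) (𝓝 (Ψ P₀)) := by
      have := (antidiag n).continuous.tendsto (Ψ P₀).1
      rwa [antidiag_apply, ← hy0'] at this
    have tTa := tT.comp ta
    have t1 : Tendsto (fun P : (Fin n → ℂ) × (Fin n → ℂ) => P.1) (𝓝 P₀) (𝓝 p) :=
      continuous_fst.tendsto P₀
    filter_upwards [tTa.eventually hΨΦ, (tτ.comp (tΦ.comp tTa)).eventually hΦΨ,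
      (t1.comp (tΦ.comp tTa)).eventually h] with z h1 h2 h3
    simp only [Function.comp] at h1 h2 h3
    have hτT : tau (T (z, star z)) = T (z, star z) := by
      simp only [T, tau_sub, tau_smul, hε, ← hl, tau_antidiag]
    have hfix : tau (Φ (T (z, star z))) = Φ (T (z, star z)) := by
      rw [hΨτ, h1, hτT] at h2
      exact h2.symm
    have e := eq_of_tau hfix
    rw [← e] at h3
    apply h3
    rw [← hlΨ, h1, hlT]
  have tΨ : Tendsto Ψ (𝓝 P₀) (𝓝 (Ψ P₀)) := hΨ.continuousAt.tendsto
  filter_upwards [tΨ.eventually hz, hΦΨ] with P h1 h2 h3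
  have : T (Ψ P) = Ψ P := by
    have : l (Ψ P) = 0 := by rw [hlΨ, h3]
    simp [T, this]
  rwa [this, h2] at h1
end

/-! ### The complexified Levi form -/

section
variable {n : ℕ}

/-- The kernel of a linear form `l` is spanned by the vectors `l(e_q) e_p - l(e_p) e_q`. -/
theorem eq_zero_of_ker_gens {l T : (Fin n → ℂ) →L[ℂ] ℂ} (hl : l ≠ 0)
    (hT : ∀ p q, T (l (Pi.single q 1) • Pi.single p 1 - l (Pi.single p 1) • Pi.single q 1) = 0)
    {u : Fin n → ℂ} (hu : l u = 0) : T u = 0 := by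
  have hex : ∀ L : (Fin n → ℂ) →L[ℂ] ℂ, ∀ v, L v = ∑ i, v i * L (Pi.single i 1) := by
    intro L v
    conv_lhs => rw [← sum_single_smul v]
    simp
  obtain ⟨p, hp⟩ : ∃ p, l (Pi.single p 1) ≠ 0 := by
    by_contra hcon
    push Not at hcon
    apply hl
    ext v
    rw [hex l v]; simp [hcon]
  have h1 : ∀ q, T (Pi.single p 1) * l (Pi.single q 1) = l (Pi.single p 1) * T (Pi.single q 1) := by
    intro q
    have := hT p q
    simp only [map_sub, map_smul, smul_eq_mul] at this
    linear_combination this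
  have h2 : l (Pi.single p 1) * T u = T (Pi.single p 1) * l u := by
    rw [hex T u, hex l u, Finset.mul_sum, Finset.mul_sum]
    exact Finset.sum_congr rfl fun q _ => by linear_combination -u q * h1 q
  rw [hu, mul_zero] at h2
  exact (mul_eq_zero.mp h2).resolve_left hp

/-- The component of the gradient of `A` in the direction of the `k`-th coordinate of the first
factor. -/
noncomputable def gradZ (A : (Fin n → ℂ) × (Fin n → ℂ) → ℂ) (k : Fin n)
    (P : (Fin n → ℂ) × (Fin n → ℂ)) : ℂ := fderiv ℂ A P (Pi.single k 1, 0)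

/-- The component of the gradient of `A` in the direction of the `k`-th coordinate of the second
factor. -/
noncomputable def gradW (A : (Fin n → ℂ) × (Fin n → ℂ) → ℂ) (k : Fin n)
    (P : (Fin n → ℂ) × (Fin n → ℂ)) : ℂ := fderiv ℂ A P (0, Pi.single k 1)

/-- Components of the Levi form of the complexified hypersurface `A = 0`: the mixed second
derivative evaluated on the standard tangent vectors `A_l e_k - A_k e_l` of the two factors. -/
noncomputable def leviE (A : (Fin n → ℂ) × (Fin n → ℂ) → ℂ) (k l p q : Fin n)
    (P : (Fin n → ℂ) × (Fin n → ℂ)) : ℂ :=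
  fderiv ℂ (fderiv ℂ A) P
    (0, gradW A q P • (Pi.single p 1 : Fin n → ℂ) - gradW A p P • (Pi.single q 1 : Fin n → ℂ))
    (gradZ A l P • (Pi.single k 1 : Fin n → ℂ) - gradZ A k P • (Pi.single l 1 : Fin n → ℂ), 0)

theorem analyticAt_gradZ {A : (Fin n → ℂ) × (Fin n → ℂ) → ℂ} {P : (Fin n → ℂ) × (Fin n → ℂ)}
    (hA : AnalyticAt ℂ A P) (k : Fin n) : AnalyticAt ℂ (gradZ A k) P :=
  AnalyticAt.fp_clm_apply hA.fderiv analyticAt_const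

theorem analyticAt_gradW {A : (Fin n → ℂ) × (Fin n → ℂ) → ℂ} {P : (Fin n → ℂ) × (Fin n → ℂ)}
    (hA : AnalyticAt ℂ A P) (k : Fin n) : AnalyticAt ℂ (gradW A k) P :=
  AnalyticAt.fp_clm_apply hA.fderiv analyticAt_const

theorem analyticAt_leviE {A : (Fin n → ℂ) × (Fin n → ℂ) → ℂ} {P : (Fin n → ℂ) × (Fin n → ℂ)}
    (hA : AnalyticAt ℂ A P) (k l p q : Fin n) : AnalyticAt ℂ (leviE A k l p q) P := by
  refine AnalyticAt.fp_clm_apply (AnalyticAt.fp_clm_apply hA.fderiv.fderiv ?_) ?_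
  · exact analyticAt_const.prod (((analyticAt_gradW hA q).fun_smul analyticAt_const).fun_sub
      ((analyticAt_gradW hA p).fun_smul analyticAt_const))
  · exact (((analyticAt_gradZ hA l).fun_smul analyticAt_const).fun_sub
      ((analyticAt_gradZ hA k).fun_smul analyticAt_const)).prod analyticAt_const

/-- Vanishing of the components `leviE` means vanishing of the Levi form on pairs of tangent
vectors. -/
theorem levi_of_leviE {A : (Fin n → ℂ) × (Fin n → ℂ) → ℂ} {P : (Fin n → ℂ) × (Fin n → ℂ)}
    (h : ∀ k l p q, leviE A k l p q P = 0) (hw : ∃ u, fderiv ℂ A P (0, u) ≠ 0)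
    (k l : Fin n) {u : Fin n → ℂ} (hu : fderiv ℂ A P (0, u) = 0) :
    fderiv ℂ (fderiv ℂ A) P (0, u)
      (gradZ A l P • (Pi.single k 1 : Fin n → ℂ) - gradZ A k P • (Pi.single l 1 : Fin n → ℂ), 0)
      = 0 := by
  let L := (fderiv ℂ A P).comp (ContinuousLinearMap.inr ℂ (Fin n → ℂ) (Fin n → ℂ))
  let T := ((fderiv ℂ (fderiv ℂ A) P).flip
      (gradZ A l P • (Pi.single k 1 : Fin n → ℂ) - gradZ A k P • (Pi.single l 1 : Fin n → ℂ), 0)).comp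
      (ContinuousLinearMap.inr ℂ (Fin n → ℂ) (Fin n → ℂ))
  have hL : ∀ u, L u = fderiv ℂ A P (0, u) := fun u => rfl
  refine eq_zero_of_ker_gens (l := L) (T := T) ?_ (fun p q => h k l p q) (by rw [hL]; exact hu)
  intro h0
  obtain ⟨u, hu⟩ := hw
  exact hu (by rw [← hL, h0]; rfl)

/-- At real points the Levi condition kills all components `leviE` (by polarization of the
Hermitian form). -/
theorem leviE_real {A : (Fin n → ℂ) × (Fin n → ℂ) → ℂ} {p : Fin n → ℂ}
    (hA : AnalyticAt ℂ A (p, star p)) (hsym : ∀ P, A (tau P) = star (A P))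
    (h : ∀ v, fderiv ℂ A (p, star p) (v, 0) = 0 →
        fderiv ℂ (fderiv ℂ A) (p, star p) (0, star v) (v, 0) = 0) (k l i j : Fin n) :
    leviE A k l i j (p, star p) = 0 := by
  set B := fderiv ℂ (fderiv ℂ A) (p, star p) with hB
  have hpol : ∀ u v, fderiv ℂ A (p, star p) (u, 0) = 0 → fderiv ℂ A (p, star p) (v, 0) = 0 →
      B (0, star u) (v, 0) = 0 := by
    intro u v hu hv
    have add0 : ∀ x y : Fin n → ℂ, ((x + y, 0) : (Fin n → ℂ) × (Fin n → ℂ)) = (x, 0) + (y, 0) := by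
      intro x y; simp
    have add0' : ∀ x y : Fin n → ℂ, ((0, x + y) : (Fin n → ℂ) × (Fin n → ℂ)) = (0, x) + (0, y) := by
      intro x y; simp
    have smul0 : ∀ (c : ℂ) (y : Fin n → ℂ), ((c • y, 0) : (Fin n → ℂ) × (Fin n → ℂ)) = c • (y, 0) := by
      intro x y; simp
    have smul0' : ∀ (c : ℂ) (y : Fin n → ℂ), ((0, c • y) : (Fin n → ℂ) × (Fin n → ℂ)) = c • (0, y) := by
      intro x y; simp
    have h1 := h (u + v) (by rw [add0, map_add, hu, hv, add_zero])
    have h2 := h (u + Complex.I • v) (by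
      rw [add0, smul0, map_add, map_smul, hu, hv, smul_zero, add_zero])
    have hu' := h u hu
    have hv' := h v hv
    simp only [star_add, star_smul, add0, add0', smul0, smul0', map_add, map_smul, _root_.add_apply,
      smul_apply, hu', hv', smul_eq_mul, Complex.star_def, Complex.conj_I] at h1 h2
    linear_combination h1 / 2 - Complex.I / 2 * h2 +
      (B (0, star u) (v, 0) / 2 - B (0, star v) (u, 0) / 2) * Complex.I_mul_I
  have hker : ∀ k l, fderiv ℂ A (p, star p) (gradZ A l (p, star p) • (Pi.single k 1 : Fin n → ℂ) -
      gradZ A k (p, star p) • (Pi.single l 1 : Fin n → ℂ), 0) = 0 := by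
    intro k l
    have : ((gradZ A l (p, star p) • (Pi.single k 1 : Fin n → ℂ) -
      gradZ A k (p, star p) • (Pi.single l 1 : Fin n → ℂ), 0) : (Fin n → ℂ) × (Fin n → ℂ)) =
      gradZ A l (p, star p) • (Pi.single k 1, 0) - gradZ A k (p, star p) • (Pi.single l 1, 0) := by
      simp
    rw [this, map_sub, map_smul, map_smul]
    simp only [gradZ, smul_eq_mul]; ring
  have hgw : ∀ k, gradW A k (p, star p) = star (gradZ A k (p, star p)) := by
    intro k
    rw [gradZ, ← fderiv_tau hA hsym, gradW]
    congr 1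
    ext i <;> simp [tau, Pi.single_apply]
  have := hpol _ _ (hker i j) (hker k l)
  rw [leviE, ← this]
  congr 2
  ext x
  · simp
  · simp [hgw, Pi.single_apply]
    split_ifs <;> simp

end

section
variable {m : ℕ}

/-- The gradient of `A` does not vanish at small non-zero real points. -/
theorem real_grad_ne {n : ℕ} {A : (Fin n → ℂ) × (Fin n → ℂ) → ℂ} (hA : AnalyticAt ℂ A 0)
    (h1 : fderiv ℂ A 0 = 0)
    (h2 : ∀ u v, fderiv ℂ (fderiv ℂ A) 0 u v = (∑ i, u.1 i * v.1 i) + ∑ i, u.2 i * v.2 i) :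
    ∀ᶠ p in 𝓝 (0 : Fin n → ℂ), p ≠ 0 → fderiv ℂ A (p, star p) (star p, star (star p)) ≠ 0 := by
  have hd := hA.fderiv.differentiableAt.hasFDerivAt.isLittleO
  have hd' := hd.def (c := 2⁻¹) (by norm_num)
  filter_upwards [tendsto_antidiag.eventually hd'] with p hp hp0 hz
  rw [h1, sub_zero, sub_zero] at hp
  have ns : ∀ z : Fin n → ℂ, ‖((z, star z) : (Fin n → ℂ) × (Fin n → ℂ))‖ = ‖z‖ := by
    intro z; rw [Prod.norm_def]; simp
  have h3 := (fderiv ℂ A (p, star p) - fderiv ℂ (fderiv ℂ A) 0 (p, star p)).le_opNorm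
    (star p, star (star p))
  rw [ns, norm_star, _root_.sub_apply, hz, h2, zero_sub, norm_neg] at h3
  rw [ns] at hp
  have h4 : (∑ i, p i * star p i) + ∑ i, star p i * star (star p) i =
      ((2 * ∑ i, ‖p i‖ ^ 2 : ℝ) : ℂ) := by
    have : ∀ i, p i * star p i = ((‖p i‖ ^ 2 : ℝ) : ℂ) := by
      intro i
      rw [Pi.star_apply, Complex.star_def, Complex.mul_conj, Complex.normSq_eq_norm_sq]
    simp only [star_star, mul_comm (star p _), this]
    push_cast; ring
  simp only [h4] at h3
  have hS : 0 ≤ ∑ i, ‖p i‖ ^ 2 := Finset.sum_nonneg fun i _ => by positivity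
  rw [Complex.norm_real, Real.norm_of_nonneg (by positivity)] at h3
  have hn : ‖p‖ ^ 2 ≤ ∑ i, ‖p i‖ ^ 2 := by
    have : ‖p‖ ≤ √(∑ i, ‖p i‖ ^ 2) := by
      refine (pi_norm_le_iff_of_nonneg (Real.sqrt_nonneg _)).mpr fun i => ?_
      refine Real.le_sqrt_of_sq_le ?_
      exact Finset.single_le_sum (f := fun i => ‖p i‖ ^ 2) (fun i _ => by positivity)
        (Finset.mem_univ i)
    calc ‖p‖ ^ 2 ≤ √(∑ i, ‖p i‖ ^ 2) ^ 2 := by gcongr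
      _ = _ := Real.sq_sqrt hS
  have hpp : 0 < ‖p‖ := norm_pos_iff.mpr hp0
  have : ‖fderiv ℂ A (p, star p) - fderiv ℂ (fderiv ℂ A) 0 (p, star p)‖ * ‖p‖ ≤ 2⁻¹ * ‖p‖ * ‖p‖ := by
    gcongr
  nlinarith

/-- The hypersurface `A (z, z̄) = 0` contains arbitrarily small non-zero real points. -/
theorem exists_real_point {A : (Fin (m + 2) → ℂ) × (Fin (m + 2) → ℂ) → ℂ} (hA : AnalyticAt ℂ A 0)
    (hsym : ∀ P, A (tau P) = star (A P)) (h0 : A 0 = 0) (h1 : fderiv ℂ A 0 = 0)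
    (h2 : ∀ u v, fderiv ℂ (fderiv ℂ A) 0 u v = (∑ i, u.1 i * v.1 i) + ∑ i, u.2 i * v.2 i) :
    ∃ᶠ p in 𝓝 (0 : Fin (m + 2) → ℂ), p ≠ 0 ∧ A (p, star p) = 0 := by
  intro hev
  obtain ⟨C, hC0, hC⟩ := (taylor_two hA).exists_pos
  have hC' := hC.bound
  have hall := hev.and ((tendsto_antidiag.eventually hA.eventually_analyticAt).and
    (tendsto_antidiag.eventually hC'))
  obtain ⟨r, hr, hball⟩ := Metric.eventually_nhds_iff.mp hall
  simp only [dist_zero_right] at hball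
  have ns : ∀ z : Fin (m + 2) → ℂ,
      ‖((z, star z) : (Fin (m + 2) → ℂ) × (Fin (m + 2) → ℂ))‖ = ‖z‖ := by
    intro z; rw [Prod.norm_def]; simp
  let v : ℂ → (Fin (m + 2) → ℂ) := fun c => Pi.single 0 c
  have hv : ∀ c, ‖v c‖ = ‖c‖ := fun c => Pi.norm_single (ι := Fin (m+2)) (G := fun _ => ℂ) (i := 0) c
  have hq : ∀ c, sqs (v c) = c ^ 2 := fun c => by
    simp only [sqs, v, Pi.single_apply]
    simp
  have hqs : ∀ c, sqs (star (v c)) = (star c) ^ 2 := fun c => by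
    simp only [sqs, v, Pi.single_apply, Pi.star_apply]
    rw [Finset.sum_eq_single 0]
    · simp
    · intro b _ hb; simp [hb]
    · simp
  have hD : ∀ y : (Fin (m + 2) → ℂ) × (Fin (m + 2) → ℂ),
      fderiv ℂ (fderiv ℂ A) 0 y y = sqs y.1 + sqs y.2 := by
    intro y; rw [h2]; simp [sqs, sq]
  have hest : ∀ c : ℂ, ‖c‖ < r → ‖A (v c, star (v c)) - 2⁻¹ * (c ^ 2 + star c ^ 2)‖ ≤ C * ‖c‖ ^ 3 := by
    intro c hc
    have := (hball (y := v c) (by rw [hv]; exact hc)).2.2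
    simp only [h0, h1, hD, ns, hv, hq, hqs, zero_apply, sub_zero, smul_eq_mul, norm_pow,
      norm_norm] at this
    exact this
  obtain ⟨t, ht0, htr, htC⟩ : ∃ t : ℝ, 0 < t ∧ t < r ∧ C * t < 1 := by
    refine ⟨min (r / 2) (2 * C)⁻¹, by positivity, ?_, ?_⟩
    · exact (min_le_left _ _).trans_lt (by linarith)
    · calc C * min (r / 2) (2 * C)⁻¹ ≤ C * (2 * C)⁻¹ := by gcongr; exact min_le_right _ _
        _ < 1 := by field_simp; norm_num
  let c : ℝ → ℂ := fun s => t * ((1 - s) + s * Complex.I)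
  have hcs : ∀ s ∈ Set.Icc (0:ℝ) 1, ‖c s‖ < r := by
    intro s hs
    have h1s : ‖((1 - s : ℝ) : ℂ) + s * Complex.I‖ ≤ (1 - s) + s := by
      refine (norm_add_le _ _).trans ?_
      rw [norm_mul, Complex.norm_I, mul_one, Complex.norm_real, Complex.norm_real,
        Real.norm_of_nonneg hs.1, Real.norm_of_nonneg (by linarith [hs.2])]
    have : ‖c s‖ ≤ t := by
      simp only [c, norm_mul, Complex.norm_real, Real.norm_of_nonneg ht0.le]
      push_cast at h1s
      nlinarith
    linarith
  have hc0 : ∀ s, c s ≠ 0 := by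
    intro s h
    have h' := (mul_eq_zero.mp h).resolve_left (by exact_mod_cast ht0.ne')
    have e1 := congrArg Complex.re h'
    have e2 := congrArg Complex.im h'
    simp at e1 e2
    rw [e2] at e1; norm_num at e1
  have hcc : Continuous c := by fun_prop
  have hvc : Continuous v := continuous_single (A := fun _ : Fin (m+2) => ℂ) 0
  let f : ℝ → ℝ := fun s => (A (v (c s), star (v (c s)))).re
  have hf : ContinuousOn f (Set.Icc 0 1) := by
    intro s hs
    have hAn := (hball (y := v (c s)) (by rw [hv]; exact hcs s hs)).2.1
    have e : ContinuousAt (fun s => (v (c s), star (v (c s)))) s := by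
      have : Continuous (fun s => (v (c s), star (v (c s)))) := by fun_prop
      exact this.continuousAt
    have : ContinuousAt (fun s => A (v (c s), star (v (c s)))) s :=
      ContinuousAt.comp (g := A) hAn.continuousAt e
    exact (Complex.continuous_re.continuousAt.comp this).continuousWithinAt
  have hre : ∀ s ∈ Set.Icc (0:ℝ) 1, ‖c s‖ = t →
      |f s - (2⁻¹ * (c s ^ 2 + star (c s) ^ 2)).re| ≤ C * t ^ 3 := by
    intro s hs hct
    have := hest (c s) (hcs s hs)
    rw [hct] at this
    refine le_trans ?_ this
    rw [← Complex.sub_re]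
    exact Complex.abs_re_le_norm _
  have htp : C * t ^ 3 < t ^ 2 := by
    have : 0 < t ^ 2 := by positivity
    nlinarith
  have e0 : c 0 = t := by simp [c]
  have e1 : c 1 = t * Complex.I := by simp [c]
  have f0 : 0 < f 0 := by
    have := hre 0 (by simp) (by rw [e0, Complex.norm_real, Real.norm_of_nonneg ht0.le])
    have e : (2⁻¹ * (c 0 ^ 2 + star (c 0) ^ 2)).re = t ^ 2 := by
      have : (2⁻¹ : ℂ) * (c 0 ^ 2 + star (c 0) ^ 2) = ((t ^ 2 : ℝ) : ℂ) := by
        rw [e0, Complex.star_def, Complex.conj_ofReal]; push_cast; ring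
      rw [this, Complex.ofReal_re]
    rw [e] at this
    linarith [(abs_le.mp this).1]
  have f1 : f 1 < 0 := by
    have := hre 1 (by simp) (by
      rw [e1, norm_mul, Complex.norm_I, mul_one, Complex.norm_real, Real.norm_of_nonneg ht0.le])
    have e : (2⁻¹ * (c 1 ^ 2 + star (c 1) ^ 2)).re = - t ^ 2 := by
      have : (2⁻¹ : ℂ) * (c 1 ^ 2 + star (c 1) ^ 2) = ((- t ^ 2 : ℝ) : ℂ) := by
        rw [e1, Complex.star_def, map_mul, Complex.conj_ofReal, Complex.conj_I]; push_cast
        linear_combination (t : ℂ) ^ 2 * Complex.I_mul_I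
      rw [this, Complex.ofReal_re]
    rw [e] at this
    linarith [(abs_le.mp this).2]
  obtain ⟨s, hs, hs0⟩ := intermediate_value_Icc' (by norm_num : (0:ℝ) ≤ 1) hf ⟨f1.le, f0.le⟩
  refine (hball (y := v (c s)) (by rw [hv]; exact hcs s hs)).1 ⟨?_, ?_⟩
  · rw [← norm_ne_zero_iff, hv, norm_ne_zero_iff]; exact hc0 s
  · have hst := hsym (v (c s), star (v (c s)))
    rw [tau_antidiag, Complex.star_def] at hst
    have him := Complex.conj_eq_iff_im.mp hst.symm
    exact Complex.ext hs0 him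
end

/-! ### Cone charts and continuation of the Levi condition -/

section
variable {m : ℕ}

/-- A chart `(ζ y.1, η y)` of `ℂⁿ × ℂⁿ`, fibred over the first factor and valid for `‖y‖ < b`, in
which `A` becomes the quadratic form `(sqs y.1 + sqs y.2) / 2`; its inverse is `(Z p.1, W p)`. -/
structure ConeChart (A : (Fin (m + 2) → ℂ) × (Fin (m + 2) → ℂ) → ℂ)
    (Z ζ : (Fin (m + 2) → ℂ) → (Fin (m + 2) → ℂ))
    (W η : (Fin (m + 2) → ℂ) × (Fin (m + 2) → ℂ) → (Fin (m + 2) → ℂ)) (b : ℝ) : Prop where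
  pos : 0 < b
  anζ : ∀ y : Fin (m + 2) → ℂ, ‖y‖ < b → AnalyticAt ℂ ζ y
  anη : ∀ y : (Fin (m + 2) → ℂ) × (Fin (m + 2) → ℂ), ‖y‖ < b → AnalyticAt ℂ η y
  anA : ∀ y : (Fin (m + 2) → ℂ) × (Fin (m + 2) → ℂ), ‖y‖ < b → AnalyticAt ℂ A (ζ y.1, η y)
  anW : ∀ y : (Fin (m + 2) → ℂ) × (Fin (m + 2) → ℂ), ‖y‖ < b → AnalyticAt ℂ W (ζ y.1, η y)
  eqA : ∀ y : (Fin (m + 2) → ℂ) × (Fin (m + 2) → ℂ), ‖y‖ < b →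
    A (ζ y.1, η y) = 2⁻¹ * (sqs y.1 + sqs y.2)
  ζ0 : ζ 0 = 0
  Z0 : Z 0 = 0
  η0 : η 0 = 0
  W0 : W 0 = 0
  anZ : AnalyticAt ℂ Z 0
  dZ : ∀ v, fderiv ℂ Z 0 v = v
  dW : ∀ v, fderiv ℂ W 0 v = v.2
  WW : ∀ y : (Fin (m + 2) → ℂ) × (Fin (m + 2) → ℂ), ‖y‖ < b → W (ζ y.1, η y) = y.2
  inv1 : ∀ᶠ z in 𝓝 (0 : Fin (m + 2) → ℂ), ζ (Z z) = z
  inv2 : ∀ᶠ p in 𝓝 (0 : (Fin (m + 2) → ℂ) × (Fin (m + 2) → ℂ)), η (Z p.1, W p) = p.2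

/-- Uniform domain for the germs of `exists_cone_chart`. -/
theorem exists_coneChart {A : (Fin (m + 2) → ℂ) × (Fin (m + 2) → ℂ) → ℂ} (hA : AnalyticAt ℂ A 0)
    (h0 : A 0 = 0) (h1 : fderiv ℂ A 0 = 0)
    (h2 : ∀ u v, fderiv ℂ (fderiv ℂ A) 0 u v = (∑ i, u.1 i * v.1 i) + ∑ i, u.2 i * v.2 i) :
    ∃ Z ζ W η b, ConeChart A Z ζ W η b := by
  obtain ⟨Z, ζ, W, η, ⟨aZ, aζ, aW, aη⟩, ⟨Z0, ζ0, W0, η0⟩, dZ, dW, i1, i2, i3, i4, hq⟩ :=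
    exists_cone_chart hA h0 h1 h2
  let Ξ : (Fin (m + 2) → ℂ) × (Fin (m + 2) → ℂ) → (Fin (m + 2) → ℂ) × (Fin (m + 2) → ℂ) :=
    fun y => (ζ y.1, η y)
  have tf : Tendsto (Prod.fst : (Fin (m + 2) → ℂ) × (Fin (m + 2) → ℂ) → _) (𝓝 0) (𝓝 0) :=
    continuous_fst.tendsto' _ _ rfl
  have tΞ : Tendsto Ξ (𝓝 0) (𝓝 0) := by
    have c1 : Tendsto (fun y : (Fin (m + 2) → ℂ) × (Fin (m + 2) → ℂ) => ζ y.1) (𝓝 0) (𝓝 0) := by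
      have := aζ.continuousAt.tendsto.comp tf
      rwa [ζ0] at this
    have c2 := aη.continuousAt.tendsto
    rw [η0] at c2
    exact c1.prodMk_nhds c2
  have hall := (((aζ.eventually_analyticAt).and i2).filter_mono (le_refl _))
  have e := (tf.eventually hall).and ((aη.eventually_analyticAt.and i4).and
    (tΞ.eventually ((hA.eventually_analyticAt.and aW.eventually_analyticAt).and hq)))
  obtain ⟨b, hb, H⟩ := Metric.eventually_nhds_iff.mp e
  simp only [dist_zero_right] at H
  have hζ : ∀ y : Fin (m + 2) → ℂ, ‖y‖ < b → AnalyticAt ℂ ζ y := by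
    intro y hy
    have : ‖((y, 0) : (Fin (m + 2) → ℂ) × (Fin (m + 2) → ℂ))‖ < b := by
      rw [Prod.norm_def]; simpa using hy
    exact (H this).1.1
  refine ⟨Z, ζ, W, η, b, hb, hζ, fun y hy => (H hy).2.1.1, fun y hy => (H hy).2.2.1.1,
    fun y hy => (H hy).2.2.1.2, fun y hy => ?_, ζ0, Z0, η0, W0, aZ, dZ, dW,
    fun y hy => (H hy).2.1.2, i1, i3⟩
  have h5 := (H hy).2.2.2
  have h6 := (H hy).1.2
  have h7 := (H hy).2.1.2
  simp only [Ξ] at h5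
  rw [h5, h6, h7]

variable {A : (Fin (m + 2) → ℂ) × (Fin (m + 2) → ℂ) → ℂ}
    {Z ζ : (Fin (m + 2) → ℂ) → (Fin (m + 2) → ℂ)}
    {W η : (Fin (m + 2) → ℂ) × (Fin (m + 2) → ℂ) → (Fin (m + 2) → ℂ)} {b : ℝ}

theorem ConeChart.analyticAt (h : ConeChart A Z ζ W η b)
    {y : (Fin (m + 2) → ℂ) × (Fin (m + 2) → ℂ)} (hy : ‖y‖ < b) :
    AnalyticAt ℂ (fun y : (Fin (m + 2) → ℂ) × (Fin (m + 2) → ℂ) => (ζ y.1, η y)) y := by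
  have : ‖y.1‖ < b := (norm_fst_le y).trans_lt hy
  exact (AnalyticAt.fun_comp (g := ζ) (f := Prod.fst) (h.anζ _ this) analyticAt_fst).prod (h.anη y hy)

/-- Analytic continuation along the complexified hypersurface: a function vanishing on it near
one point vanishes on all of it, inside a star-shaped piece of the chart. -/
theorem ConeChart.continuation (h : ConeChart A Z ζ W η b)
    {U : Set ((Fin (m + 2) → ℂ) × (Fin (m + 2) → ℂ))} (hU : IsOpen U)
    (hS : ∀ y ∈ U, ∀ t ∈ Set.Icc (0 : ℝ) 1, (t : ℂ) • y ∈ U) (hb : ∀ y ∈ U, ‖y‖ < b)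
    {G : (Fin (m + 2) → ℂ) × (Fin (m + 2) → ℂ) → ℂ}
    (hG : ∀ y ∈ U, AnalyticAt ℂ G (ζ y.1, η y))
    {P : (Fin (m + 2) → ℂ) × (Fin (m + 2) → ℂ)} (hP : P ∈ U) (hPA : A (ζ P.1, η P) = 0)
    (hGP : ∀ᶠ p in 𝓝 (ζ P.1, η P), A p = 0 → G p = 0) :
    ∀ y ∈ U, sqs y.1 + sqs y.2 = 0 → G (ζ y.1, η y) = 0 := by
  refine cone_tool hU hS (G := fun y => G (ζ y.1, η y))
    (fun y hy => AnalyticAt.fun_comp (g := G) (f := fun y : (Fin (m + 2) → ℂ) × (Fin (m + 2) → ℂ) =>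
      (ζ y.1, η y)) (hG y hy) (h.analyticAt (hb y hy))) hP ?_ ?_
  · have := h.eqA P (hb P hP)
    rw [hPA] at this
    linear_combination -2 * this
  · have := (h.analyticAt (hb P hP)).continuousAt.tendsto.eventually hGP
    filter_upwards [this, hU.mem_nhds hP] with y hy hyU hc
    refine hy ?_
    rw [h.eqA y (hb y hyU), hc, mul_zero]

/-- Inside the chart the fibre derivative of `A` vanishes only where `y.2 = 0`. -/
theorem ConeChart.exists_fderiv_ne (h : ConeChart A Z ζ W η b)
    {y : (Fin (m + 2) → ℂ) × (Fin (m + 2) → ℂ)} (hy : ‖y‖ < b) (hy2 : y.2 ≠ 0) :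
    ∃ u, fderiv ℂ A (ζ y.1, η y) (0, u) ≠ 0 := by
  obtain ⟨i, hi⟩ := Function.ne_iff.mp hy2
  refine ⟨fderiv ℂ η y (0, Pi.single i 1), ?_⟩
  -- differentiate `A (ζ y.1, η y) = (sqs y.1 + sqs y.2) / 2` along a line in the second factor
  let c : ℂ → (Fin (m + 2) → ℂ) × (Fin (m + 2) → ℂ) := fun t => y + t • (0, Pi.single i 1)
  have hc : HasDerivAt c (0, Pi.single i 1) 0 := by
    have := ((hasDerivAt_id (0 : ℂ)).smul_const
      ((0, Pi.single i 1) : (Fin (m + 2) → ℂ) × (Fin (m + 2) → ℂ))).const_add y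
    refine this.congr_deriv ?_
    rw [one_smul]
  have hc0 : c 0 = y := by simp [c]
  have hη : HasDerivAt (fun t => η (c t)) (fderiv ℂ η y (0, Pi.single i 1)) 0 := by
    have := (h.anη y hy).differentiableAt.hasFDerivAt
    rw [← hc0] at this
    have h2 := this.comp_hasDerivAt (0 : ℂ) hc
    rwa [hc0] at h2
  have hp : HasDerivAt (fun t => ((ζ y.1, η (c t)) : (Fin (m + 2) → ℂ) × (Fin (m + 2) → ℂ)))
      (0, fderiv ℂ η y (0, Pi.single i 1)) 0 := (hasDerivAt_const _ _).prodMk hη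
  have hAd : HasDerivAt (fun t => A (ζ y.1, η (c t)))
      (fderiv ℂ A (ζ y.1, η y) (0, fderiv ℂ η y (0, Pi.single i 1))) 0 := by
    have := (h.anA y hy).differentiableAt.hasFDerivAt
    rw [← hc0] at this
    have e : c 0 = y := hc0
    have h2 := HasFDerivAt.comp_hasDerivAt (f := fun t => ((ζ y.1, η (c t)) :
      (Fin (m + 2) → ℂ) × (Fin (m + 2) → ℂ))) (0 : ℂ) (by simpa [hc0] using this) hp
    simpa [hc0, Function.comp_def] using h2
  have hev : (fun t => A (ζ y.1, η (c t))) =ᶠ[𝓝 0]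
      fun t => 2⁻¹ * (sqs y.1 + (sqs y.2 + 2 * (t * y.2 i) + t ^ 2)) := by
    have hcc : Tendsto c (𝓝 0) (𝓝 y) := by
      have := hc.continuousAt.tendsto; rwa [hc0] at this
    have : ∀ᶠ x in 𝓝 y, ‖x‖ < b := (isOpen_lt continuous_norm continuous_const).mem_nhds hy
    filter_upwards [hcc.eventually this] with t ht
    have h3 := h.eqA (c t) ht
    have h4 : (c t).1 = y.1 := by simp [c]
    have h5 : (c t).2 = y.2 + t • Pi.single i 1 := by simp [c]
    rw [h4, h5, sqs_add, sqs_smul] at h3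
    rw [h3]
    have h6 : sqs (Pi.single i (1 : ℂ)) = 1 := by simp [sqs, Pi.single_apply]
    have h7 : ∑ j, y.2 j * (t • (Pi.single i 1 : Fin (m + 2) → ℂ)) j = t * y.2 i := by
      simp [Pi.single_apply, mul_comm]
    rw [h6, h7]; ring
  have hpoly : HasDerivAt (fun t : ℂ => 2⁻¹ * (sqs y.1 + (sqs y.2 + 2 * (t * y.2 i) + t ^ 2)))
      (y.2 i) 0 := by
    have := ((((((hasDerivAt_id (0 : ℂ)).mul_const (y.2 i)).const_mul 2).const_add
      (sqs y.2)).add ((hasDerivAt_id (0 : ℂ)).pow 2)).const_add (sqs y.1)).const_mul (2⁻¹ : ℂ)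
    refine this.congr_deriv ?_
    simp
  rw [(hAd.congr_of_eventuallyEq hev.symm).unique hpoly]
  exact hi

/-- Points near the origin have small chart coordinates, and the chart recovers them. -/
theorem ConeChart.eventually_coords (h : ConeChart A Z ζ W η b) {ε : ℝ} (hε : 0 < ε) :
    ∀ᶠ p in 𝓝 (0 : (Fin (m + 2) → ℂ) × (Fin (m + 2) → ℂ)),
      ‖((Z p.1, W p) : (Fin (m + 2) → ℂ) × (Fin (m + 2) → ℂ))‖ < ε ∧
        (ζ (Z p.1), η (Z p.1, W p)) = p := by
  have tf : Tendsto (Prod.fst : (Fin (m + 2) → ℂ) × (Fin (m + 2) → ℂ) → _) (𝓝 0) (𝓝 0) :=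
    continuous_fst.tendsto' _ _ rfl
  have c1 : Tendsto (fun y : (Fin (m + 2) → ℂ) × (Fin (m + 2) → ℂ) => Z y.1) (𝓝 0) (𝓝 0) := by
    have := h.anZ.continuousAt.tendsto.comp tf
    rwa [h.Z0] at this
  have hW : AnalyticAt ℂ W 0 := by
    have := h.anW 0 (by simpa using h.pos)
    rwa [Prod.fst_zero, h.ζ0, h.η0] at this
  have c2 := hW.continuousAt.tendsto
  rw [h.W0] at c2
  have c3 := (c1.prodMk_nhds c2).norm
  have : ‖((0, 0) : (Fin (m + 2) → ℂ) × (Fin (m + 2) → ℂ))‖ < ε := by simpa using hε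
  filter_upwards [c3.eventually (eventually_lt_nhds this), tf.eventually h.inv1, h.inv2] with p h1 h2 h3
  exact ⟨h1, Prod.ext h2 h3⟩

/-- The complexified Levi form vanishes along the whole complexified hypersurface. -/
theorem ConeChart.leviE_eq_zero (h : ConeChart A Z ζ W η b) (hA : AnalyticAt ℂ A 0)
    (hsym : ∀ P, A (tau P) = star (A P)) (h1 : fderiv ℂ A 0 = 0)
    (h2 : ∀ u v, fderiv ℂ (fderiv ℂ A) 0 u v = (∑ i, u.1 i * v.1 i) + ∑ i, u.2 i * v.2 i)
    (hL : ∀ᶠ p in 𝓝 (0 : Fin (m + 2) → ℂ), A (p, star p) = 0 →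
      (∃ w, fderiv ℂ A (p, star p) (w, star w) ≠ 0) →
      ∀ v, fderiv ℂ A (p, star p) (v, 0) = 0 →
        fderiv ℂ (fderiv ℂ A) (p, star p) (0, star v) (v, 0) = 0)
    (k l i j : Fin (m + 2)) :
    ∀ y : (Fin (m + 2) → ℂ) × (Fin (m + 2) → ℂ), ‖y‖ < b → sqs y.1 + sqs y.2 = 0 →
      leviE A k l i j (ζ y.1, η y) = 0 := by
  have h0 : A 0 = 0 := by
    have := h.eqA 0 (by simpa using h.pos)
    rwa [Prod.fst_zero, h.ζ0, h.η0, Prod.snd_zero, sqs_zero, add_zero, mul_zero] at this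
  have hall := (real_grad_ne hA h1 h2).and
    ((tendsto_antidiag.eventually (hA.eventually_analyticAt.and (h.eventually_coords h.pos))).and
    (hL.and (real_grad_ne hA h1 h2)).eventually_nhds)
  obtain ⟨p, ⟨hp0, hpA⟩, hgr, ⟨hAp, hpb, hpc⟩, hLp⟩ :=
    ((exists_real_point hA hsym h0 h1 h2).and_eventually hall).exists
  have key := zero_on_complexification hAp (analyticAt_leviE hAp k l i j) hsym hpA
    ⟨_, hgr hp0⟩ (by
      have hAp' : ∀ᶠ z in 𝓝 p, AnalyticAt ℂ A (z, star z) := by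
        have : Tendsto (fun z : Fin (m + 2) → ℂ => (z, star z)) (𝓝 p) (𝓝 (p, star p)) :=
          (continuous_id.prodMk continuous_star).tendsto p
        exact this.eventually hAp.eventually_analyticAt
      filter_upwards [hLp, hAp', isOpen_ne.mem_nhds hp0] with z hz hAz hz0 hzA
      exact leviE_real hAz hsym (hz.1 hzA ⟨_, hz.2 hz0⟩) k l i j)
  have hpc' : (ζ (((Z (p, star p).1, W (p, star p)) : (Fin (m + 2) → ℂ) × (Fin (m + 2) → ℂ)).1),
      η (Z (p, star p).1, W (p, star p))) = (p, star p) := hpc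
  have := h.continuation (U := {y | ‖y‖ < b}) (isOpen_lt continuous_norm continuous_const)
    (by
      intro y hy t ht
      simp only [Set.mem_ofPred_eq] at hy ⊢
      rw [norm_smul, Complex.norm_real, Real.norm_of_nonneg ht.1]
      exact (mul_le_of_le_one_left (norm_nonneg _) ht.2).trans_lt hy)
    (fun y hy => hy) (G := leviE A k l i j) (fun y hy => analyticAt_leviE (h.anA y hy) k l i j)
    (P := (Z (p, star p).1, W (p, star p))) hpb (by rw [hpc']; exact hpA)
    (by rw [hpc']; exact key)
  exact this

end

/-! ### Graphs inside the complexified hypersurface -/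

section
variable {n : ℕ}

theorem hasFDerivAt_gradZ {A : (Fin n → ℂ) × (Fin n → ℂ) → ℂ} {P : (Fin n → ℂ) × (Fin n → ℂ)}
    (hA : AnalyticAt ℂ A P) (k : Fin n) :
    HasFDerivAt (gradZ A k) ((fderiv ℂ (fderiv ℂ A) P).flip (Pi.single k 1, 0)) P :=
  hasFDerivAt_fderiv_apply hA _

/-- Along the graph `w = w₀ + h z • e` contained in `A = 0`, the gradient of `A` in the first
factor is proportional to that of `h`. -/
theorem graph_grad {A : (Fin n → ℂ) × (Fin n → ℂ) → ℂ} {h : (Fin n → ℂ) → ℂ} {w₀ e z : Fin n → ℂ}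
    (hA : AnalyticAt ℂ A (z, w₀ + h z • e)) (hh : AnalyticAt ℂ h z)
    (hg : ∀ᶠ z' in 𝓝 z, A (z', w₀ + h z' • e) = 0) (v : Fin n → ℂ) :
    fderiv ℂ A (z, w₀ + h z • e) (v, 0) =
      - (fderiv ℂ h z v * fderiv ℂ A (z, w₀ + h z • e) (0, e)) := by
  have h1 : HasFDerivAt (fun z' : Fin n → ℂ => ((z', w₀ + h z' • e) : (Fin n → ℂ) × (Fin n → ℂ)))
      ((ContinuousLinearMap.id ℂ (Fin n → ℂ)).prod ((fderiv ℂ h z).smulRight e)) z :=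
    (hasFDerivAt_id z).prodMk ((hh.differentiableAt.hasFDerivAt.smul_const e).const_add w₀)
  have h2 := (hA.differentiableAt.hasFDerivAt).comp (f := fun z' : Fin n → ℂ =>
    ((z', w₀ + h z' • e) : (Fin n → ℂ) × (Fin n → ℂ))) z h1
  have h3 : HasFDerivAt (A ∘ fun z' : Fin n → ℂ =>
    ((z', w₀ + h z' • e) : (Fin n → ℂ) × (Fin n → ℂ))) (0 : (Fin n → ℂ) →L[ℂ] ℂ) z :=
    (hasFDerivAt_const (0 : ℂ) z).congr_of_eventuallyEq hg
  have h4 := DFunLike.congr_fun (h2.unique h3) v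
  simp only [ContinuousLinearMap.comp_apply, ContinuousLinearMap.prod_apply,
    ContinuousLinearMap.id_apply, ContinuousLinearMap.smulRight_apply, zero_apply] at h4
  have h5 : ((v, fderiv ℂ h z v • e) : (Fin n → ℂ) × (Fin n → ℂ)) =
      (v, 0) + fderiv ℂ h z v • (0, e) := by simp
  rw [h5, map_add, map_smul, smul_eq_mul] at h4
  linear_combination h4

/-- Near a regular point of `A = 0`, Levi-flatness makes the conormal `∂_z A` independent of `w` up to a
factor, so it stays parallel to `dh` off the graph of `h` as well. -/
theorem parallel_near {A : (Fin n → ℂ) × (Fin n → ℂ) → ℂ} {h : (Fin n → ℂ) → ℂ}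
    {w₀ e z : Fin n → ℂ} (hA : AnalyticAt ℂ A (z, w₀ + h z • e)) (hh : AnalyticAt ℂ h z)
    (hg : ∀ᶠ z' in 𝓝 z, A (z', w₀ + h z' • e) = 0)
    (he : fderiv ℂ A (z, w₀ + h z • e) (0, e) ≠ 0) {l : Fin n}
    (hl : gradZ A l (z, w₀ + h z • e) ≠ 0)
    (hE : ∀ᶠ p in 𝓝 (z, w₀ + h z • e), A p = 0 → ∀ k l i j, leviE A k l i j p = 0) (k j : Fin n) :
    ∀ᶠ p in 𝓝 (z, w₀ + h z • e), A p = 0 →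
      gradZ A k p * fderiv ℂ h p.1 (Pi.single j 1) -
        gradZ A j p * fderiv ℂ h p.1 (Pi.single k 1) = 0 := by
  set P : (Fin n → ℂ) × (Fin n → ℂ) := (z, w₀ + h z • e) with hP
  have hlne : ∀ᶠ p in 𝓝 P, gradZ A l p ≠ 0 :=
    (analyticAt_gradZ hA l).continuousAt.eventually_ne hl
  have hene : ∀ᶠ p in 𝓝 P, fderiv ℂ A p (0, e) ≠ 0 :=
    (AnalyticAt.fp_clm_apply hA.fderiv analyticAt_const).continuousAt.eventually_ne he
  let γ : (Fin n → ℂ) × (Fin n → ℂ) → (Fin n → ℂ) × (Fin n → ℂ) := fun p => (p.1, w₀ + h p.1 • e)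
  have hγ : Tendsto γ (𝓝 P) (𝓝 P) := by
    have : ContinuousAt γ P := by
      have hc : ContinuousAt (fun p : (Fin n → ℂ) × (Fin n → ℂ) => h p.1) P :=
        ContinuousAt.comp (f := Prod.fst) (g := h) (x := P) hh.continuousAt continuousAt_fst
      exact continuousAt_fst.prodMk (continuousAt_const.add (hc.smul continuousAt_const))
    exact this
  have tf : Tendsto (Prod.fst : (Fin n → ℂ) × (Fin n → ℂ) → _) (𝓝 P) (𝓝 z) :=
    continuousAt_fst
  -- the ratios of the gradient components are constant along the fibres of `A = 0`
  have hratio : ∀ k, ∀ᶠ p in 𝓝 P, A p = 0 →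
      gradZ A k p * fderiv ℂ h p.1 (Pi.single l 1) =
        gradZ A l p * fderiv ℂ h p.1 (Pi.single k 1) := by
    intro k
    obtain ⟨N, hN, hc⟩ := fiber_const (f := fun p => gradZ A k p / gradZ A l p) hA
      ((analyticAt_gradZ hA k).fun_div (analyticAt_gradZ hA l) hl) he (by
        filter_upwards [hA.eventually_analyticAt, hlne, hene, hE] with p h1 h2 h3 h4 hp u hu
        have := levi_of_leviE (h4 hp) ⟨e, h3⟩ k l hu
        have hd := (hasFDerivAt_gradZ h1 k).mul ((hasFDerivAt_inv h2).comp p (hasFDerivAt_gradZ h1 l))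
        have hd' := hd.fderiv
        have e1 : (fun p => gradZ A k p / gradZ A l p) =
          gradZ A k * ((fun x => x⁻¹) ∘ gradZ A l) := by
          ext p; simp [div_eq_mul_inv]
        rw [e1, hd']
        have e2 : ((gradZ A l p • (Pi.single k 1 : Fin n → ℂ) -
          gradZ A k p • (Pi.single l 1 : Fin n → ℂ), 0) : (Fin n → ℂ) × (Fin n → ℂ)) =
          gradZ A l p • (Pi.single k 1, 0) - gradZ A k p • (Pi.single l 1, 0) := by simp
        rw [e2, map_sub, map_smul, map_smul] at this
        simp only [smul_eq_mul] at this
        simp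
        field_simp
        linear_combination this)
    filter_upwards [hN, hγ.eventually hN, hlne, hγ.eventually hlne, hγ.eventually hene,
      hγ.eventually hA.eventually_analyticAt, tf.eventually hh.eventually_analyticAt,
      tf.eventually hg.eventually_nhds] with p p1 p2 p3 p4 p5 p6 p7 p8 hp
    have h1 := hc p p1 (γ p) p2 rfl hp p8.self_of_nhds
    rw [div_eq_div_iff p3 p4] at h1
    have g1 := graph_grad p6 p7 p8 (Pi.single k 1)
    have g2 := graph_grad p6 p7 p8 (Pi.single l 1)
    have g1' : gradZ A k (γ p) = _ := g1
    have g2' : gradZ A l (γ p) = _ := g2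
    rw [g1', g2'] at h1
    have p5' : fderiv ℂ A (p.1, w₀ + h p.1 • e) (0, e) ≠ 0 := p5
    refine mul_right_cancel₀ p5' ?_
    linear_combination -h1
  filter_upwards [hratio k, hratio j, hlne, hγ.eventually hlne,
      hγ.eventually hA.eventually_analyticAt, tf.eventually hh.eventually_analyticAt,
      tf.eventually hg.eventually_nhds] with p p1 p2 p3 p4 p6 p7 p8 hp
  have g2 := graph_grad p6 p7 p8 (Pi.single l 1)
  have hne : fderiv ℂ h p.1 (Pi.single l 1) ≠ 0 := by
    intro h0
    rw [h0, zero_mul, neg_zero] at g2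
    exact p4 g2
  have q1 := p1 hp
  have q2 := p2 hp
  refine mul_left_cancel₀ hne ?_
  linear_combination fderiv ℂ h p.1 (Pi.single j 1) * q1 - fderiv ℂ h p.1 (Pi.single k 1) * q2

/-- A function `h` whose graph in direction `e` lies in `A = 0` is not of third order, as soon as
`A` has a nondegenerate second derivative in the first factor. -/
theorem graph_not_isBigO {A : (Fin n → ℂ) × (Fin n → ℂ) → ℂ} {h : (Fin n → ℂ) → ℂ}
    {w₀ e v : Fin n → ℂ} (hA : AnalyticAt ℂ A (0, w₀))
    (hg : ∀ᶠ z in 𝓝 (0 : Fin n → ℂ), A (z, w₀ + h z • e) = 0)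
    (hv : fderiv ℂ (fderiv ℂ A) (0, w₀) (v, 0) (v, 0) ≠ 0) (hh : ContinuousAt h 0) (h0 : h 0 = 0) :
    ¬ (h =O[𝓝 0] fun z => ‖z‖ ^ 3) := by
  intro hO
  let B : (Fin n → ℂ) × (Fin n → ℂ) → ℂ := fun p => A (p + (0, w₀))
  have hB : AnalyticAt ℂ B 0 := by
    have : AnalyticAt ℂ (fun p : (Fin n → ℂ) × (Fin n → ℂ) => p + (0, w₀)) 0 :=
      analyticAt_id.add analyticAt_const
    exact AnalyticAt.fun_comp (g := A) (f := fun p => p + (0, w₀)) (by simpa using hA) this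
  let L := ContinuousLinearMap.inl ℂ (Fin n → ℂ) (Fin n → ℂ)
  have hf : AnalyticAt ℂ (fun z => B (L z)) 0 :=
    AnalyticAt.fun_comp (g := B) (f := L) (by simpa using hB) (L.analyticAt 0)
  have hlip : (fun z => B (L z)) =O[𝓝 0] fun z => ‖z‖ ^ 3 := by
    have hd := hA.differentiableAt.hasFDerivAt
    have hs : HasStrictFDerivAt A (fderiv ℂ A (0, w₀)) (0, w₀) := hA.hasStrictFDerivAt
    have hO2 := hs.isBigO_sub
    have t : Tendsto (fun z : Fin n → ℂ => (((z, w₀ + h z • e), (z, w₀)) :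
        ((Fin n → ℂ) × (Fin n → ℂ)) × ((Fin n → ℂ) × (Fin n → ℂ)))) (𝓝 0)
        (𝓝 ((0, w₀), (0, w₀))) := by
      have c : ContinuousAt (fun z : Fin n → ℂ => (((z, w₀ + h z • e), (z, w₀)) :
        ((Fin n → ℂ) × (Fin n → ℂ)) × ((Fin n → ℂ) × (Fin n → ℂ)))) 0 := by
        fun_prop
      have := c.tendsto
      simpa [h0] using this
    have h3 := hO2.comp_tendsto t
    have h4 : (fun z => B (L z)) =ᶠ[𝓝 0] fun z => -(A (z, w₀ + h z • e) - A (z, w₀)) := by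
      filter_upwards [hg] with z hz
      rw [hz]; simp [B, L]
    refine (h4.trans_isBigO (Asymptotics.isBigO_neg_left.mpr h3)).trans ?_
    refine Asymptotics.IsBigO.trans ?_ hO
    refine Asymptotics.IsBigO.of_bound ‖e‖ (Eventually.of_forall fun z => ?_)
    simp [Prod.norm_def, norm_smul, mul_comm, mul_nonneg]
  have hf0 : B (L 0) = 0 := by
    have := hg.self_of_nhds
    simp [h0] at this
    simp [B, L, this]
  have hf1 : fderiv ℂ (fun z => B (L z)) 0 = 0 := by
    have : HasFDerivAt (fun z => B (L z)) (0 : (Fin n → ℂ) →L[ℂ] ℂ) 0 := by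
      rw [hasFDerivAt_iff_isLittleO_nhds_zero]
      simp only [zero_add, hf0, sub_zero, zero_apply]
      refine hlip.trans_isLittleO ?_
      have := (Asymptotics.isLittleO_norm_pow_id (E' := Fin n → ℂ) (n := 3) (by norm_num))
      exact this
    exact this.fderiv
  have key := second_fderiv_of_expansion (f := fun z => B (L z)) (Q := fun _ => 0) hf (by simp)
    (by simpa only [hf0, hf1, sub_zero, zero_apply] using hlip) v v
  have e1 : ∀ p, fderiv ℂ B p = fderiv ℂ A (p + (0, w₀)) := fun p => fderiv_comp_add_right _
  have e2 : fderiv ℂ (fderiv ℂ B) 0 = fderiv ℂ (fderiv ℂ A) (0, w₀) := by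
    rw [funext e1, fderiv_comp_add_right]; simp
  have := second_fderiv_comp_clm (L := L) hB v v
  rw [e2] at this
  rw [this] at key
  exact hv (by simpa [L] using key)

end

/-! ### The first integral -/

section
variable {m : ℕ} {A : (Fin (m + 2) → ℂ) × (Fin (m + 2) → ℂ) → ℂ}
    {Z ζ : (Fin (m + 2) → ℂ) → (Fin (m + 2) → ℂ)}
    {W η : (Fin (m + 2) → ℂ) × (Fin (m + 2) → ℂ) → (Fin (m + 2) → ℂ)} {b : ℝ}

/-- Implicit function theorem: `A = 0` is solved for the `e`-component of `w`. -/
theorem exists_graph {n : ℕ} {A : (Fin n → ℂ) × (Fin n → ℂ) → ℂ} {w₀ e : Fin n → ℂ}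
    (hA : AnalyticAt ℂ A (0, w₀)) (hA0 : A (0, w₀) = 0) (he : fderiv ℂ A (0, w₀) (0, e) ≠ 0) :
    ∃ h : (Fin n → ℂ) → ℂ, AnalyticAt ℂ h 0 ∧ h 0 = 0 ∧
      ∀ᶠ z in 𝓝 (0 : Fin n → ℂ), A (z, w₀ + h z • e) = 0 := by
  let ℓ : (Fin n → ℂ) × ℂ → (Fin n → ℂ) × (Fin n → ℂ) := fun q => (q.1, w₀ + q.2 • e)
  have hℓ : AnalyticAt ℂ ℓ (0, 0) := by
    exact analyticAt_fst.prod (analyticAt_const.add (analyticAt_snd.smul analyticAt_const))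
  have hℓ0 : ℓ (0, 0) = (0, w₀) := by simp [ℓ]
  have hf : AnalyticAt ℂ (fun q => A (ℓ q)) (0, 0) :=
    AnalyticAt.fun_comp (g := A) (f := ℓ) (by rw [hℓ0]; exact hA) hℓ
  obtain ⟨g, hg, hg0, -, hgi⟩ := exists_param_inverse (f := fun q => A (ℓ q)) hf
    (ContinuousLinearEquiv.unitsEquivAut ℂ (Units.mk0 _ he)) (by
      intro v
      have d1 : HasFDerivAt ℓ ((ContinuousLinearMap.fst ℂ (Fin n → ℂ) ℂ).prod
          ((ContinuousLinearMap.snd ℂ (Fin n → ℂ) ℂ).smulRight e)) (0, 0) :=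
        hasFDerivAt_fst.prodMk ((hasFDerivAt_snd.smul_const e).const_add w₀)
      have d2 : HasFDerivAt A (fderiv ℂ A (0, w₀)) (ℓ (0, 0)) := by
        rw [hℓ0]; exact hA.differentiableAt.hasFDerivAt
      have d3 := (d2.comp (0, 0) d1).fderiv
      have e3 : (fun q => A (ℓ q)) = A ∘ ℓ := rfl
      rw [e3, d3]
      have e5 : ((0, v • e) : (Fin n → ℂ) × (Fin n → ℂ)) = v • (0, e) := by simp
      simp only [ContinuousLinearMap.comp_apply, ContinuousLinearMap.prod_apply,
        ContinuousLinearMap.smulRight_apply, ContinuousLinearMap.coe_fst',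
        ContinuousLinearMap.coe_snd', ContinuousLinearEquiv.unitsEquivAut_apply, Units.val_mk0]
      rw [e5, map_smul, smul_eq_mul])
  rw [hℓ0, hA0] at hg hg0 hgi
  refine ⟨fun z => g (z, 0), ?_, hg0, ?_⟩
  · exact AnalyticAt.fun_comp (g := g) (f := fun z => (z, (0 : ℂ))) hg
      (analyticAt_id.prod analyticAt_const)
  · have t : Tendsto (fun z : Fin n → ℂ => (z, (0 : ℂ))) (𝓝 0) (𝓝 (0, 0)) :=
      (continuous_id.prodMk continuous_const).tendsto' _ _ rfl
    filter_upwards [t.eventually hgi] with z hz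
    exact hz

/-- A holomorphic function `h` of the first factor, not of third order, whose differential is
parallel to `∂_z A` along `A = 0`, so that `h` is locally constant on the leaves
`{z | A (z, w) = 0}`. -/
theorem ConeChart.exists_first_integral (C : ConeChart A Z ζ W η b) (hA : AnalyticAt ℂ A 0)
    (h2 : ∀ u v, fderiv ℂ (fderiv ℂ A) 0 u v = (∑ i, u.1 i * v.1 i) + ∑ i, u.2 i * v.2 i)
    (hE : ∀ k l i j, ∀ y : (Fin (m + 2) → ℂ) × (Fin (m + 2) → ℂ), ‖y‖ < b →
      sqs y.1 + sqs y.2 = 0 → leviE A k l i j (ζ y.1, η y) = 0) :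
    ∃ h : (Fin (m + 2) → ℂ) → ℂ, AnalyticAt ℂ h 0 ∧ h 0 = 0 ∧
      ¬ (h =O[𝓝 0] fun z => ‖z‖ ^ 3) ∧
      ∀ k j, ∀ᶠ p in 𝓝 (0 : (Fin (m + 2) → ℂ) × (Fin (m + 2) → ℂ)), A p = 0 →
        gradZ A k p * fderiv ℂ h p.1 (Pi.single j 1) -
          gradZ A j p * fderiv ℂ h p.1 (Pi.single k 1) = 0 := by
  -- a small isotropic vector `Y` gives a point `(0, η (0, Y))` of `A = 0`
  let e₀ : Fin (m + 2) → ℂ := Pi.single 0 1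
  let Y : ℝ → (Fin (m + 2) → ℂ) := fun s => (s : ℂ) • (Pi.single 0 1 + Complex.I • Pi.single 1 1)
  have hYq : ∀ s, sqs (Y s) = 0 := by
    intro s
    simp only [Y]
    rw [sqs_smul, sqs_add, sqs_smul]
    simp [sqs, Pi.single_apply]
  have hΞ0 : ((ζ (0 : (Fin (m + 2) → ℂ) × (Fin (m + 2) → ℂ)).1, η 0) :
      (Fin (m + 2) → ℂ) × (Fin (m + 2) → ℂ)) = 0 := by
    rw [Prod.fst_zero, C.ζ0, C.η0]; rfl
  have tΞ : Tendsto (fun y : (Fin (m + 2) → ℂ) × (Fin (m + 2) → ℂ) => (ζ y.1, η y)) (𝓝 0) (𝓝 0) := by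
    have := (C.analyticAt (y := 0) (by simpa using C.pos)).continuousAt.tendsto
    rwa [hΞ0] at this
  have hDne : ∀ᶠ p in 𝓝 (0 : (Fin (m + 2) → ℂ) × (Fin (m + 2) → ℂ)),
      fderiv ℂ (fderiv ℂ A) p (e₀, 0) (e₀, 0) ≠ 0 := by
    have hc : ContinuousAt (fun p => fderiv ℂ (fderiv ℂ A) p (e₀, 0) (e₀, 0)) 0 :=
      (AnalyticAt.fp_clm_apply (AnalyticAt.fp_clm_apply hA.fderiv.fderiv analyticAt_const)
        analyticAt_const).continuousAt
    refine hc.eventually_ne ?_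
    rw [h2]; simp [e₀, Pi.single_apply]
  have hev : ∀ᶠ y in 𝓝 (0 : (Fin (m + 2) → ℂ) × (Fin (m + 2) → ℂ)), ‖y‖ < b ∧
      fderiv ℂ (fderiv ℂ A) (ζ y.1, η y) (e₀, 0) (e₀, 0) ≠ 0 ∧
      ∀ᶠ p in 𝓝 (ζ y.1, η y), ‖((Z p.1, W p) : (Fin (m + 2) → ℂ) × (Fin (m + 2) → ℂ))‖ < b ∧
        (ζ (Z p.1), η (Z p.1, W p)) = p := by
    have : ∀ᶠ y in 𝓝 (0 : (Fin (m + 2) → ℂ) × (Fin (m + 2) → ℂ)), ‖y‖ < b :=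
      (isOpen_lt continuous_norm continuous_const).mem_nhds (by simpa using C.pos)
    filter_upwards [this, tΞ.eventually hDne,
      tΞ.eventually (C.eventually_coords C.pos).eventually_nhds] with y a1 a2 a3 using ⟨a1, a2, a3⟩
  have tY : Tendsto (fun s => ((0, Y s) : (Fin (m + 2) → ℂ) × (Fin (m + 2) → ℂ))) (𝓝[>] (0 : ℝ))
      (𝓝 0) := by
    have : Continuous (fun s => ((0, Y s) : (Fin (m + 2) → ℂ) × (Fin (m + 2) → ℂ))) := by
      simp only [Y]; fun_prop
    refine (this.tendsto' 0 0 ?_).mono_left nhdsWithin_le_nhds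
    simp [Y]
  obtain ⟨s, ⟨hyb, hD, hco⟩, hs⟩ := ((tY.eventually hev).and self_mem_nhdsWithin).exists
  have hs' : (0 : ℝ) < s := hs
  have hYne : Y s ≠ 0 := by
    intro h0
    have := congrFun h0 0
    simp [Y, hs'.ne'] at this
  set w₀ := η (0, Y s) with hw₀
  have hP : ((ζ ((0, Y s) : (Fin (m + 2) → ℂ) × (Fin (m + 2) → ℂ)).1, η (0, Y s)) :
      (Fin (m + 2) → ℂ) × (Fin (m + 2) → ℂ)) = (0, w₀) := by rw [C.ζ0]
  have hAP : AnalyticAt ℂ A (0, w₀) := by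
    have := C.anA _ hyb; rwa [hP] at this
  have hA0 : A (0, w₀) = 0 := by
    have := C.eqA _ hyb
    rw [hP] at this
    rw [this, hYq, sqs_zero]; simp
  obtain ⟨e, he⟩ := C.exists_fderiv_ne hyb hYne
  rw [hP] at he hD hco
  obtain ⟨h, hh, hh0, hg⟩ := exists_graph hAP hA0 he
  have hnO := graph_not_isBigO hAP hg hD hh.continuousAt hh0
  refine ⟨h, hh, hh0, hnO, fun k j => ?_⟩
  have tγ : Tendsto (fun z : Fin (m + 2) → ℂ => (z, w₀ + h z • e)) (𝓝 0) (𝓝 (0, w₀)) := by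
    have hc := hh.continuousAt
    have c : ContinuousAt (fun z : Fin (m + 2) → ℂ => (z, w₀ + h z • e)) 0 := by fun_prop
    have := c.tendsto
    simpa [hh0] using this
  have hene : ∀ᶠ p in 𝓝 ((0, w₀) : (Fin (m + 2) → ℂ) × (Fin (m + 2) → ℂ)),
      fderiv ℂ A p (0, e) ≠ 0 :=
    (AnalyticAt.fp_clm_apply hAP.fderiv analyticAt_const).continuousAt.eventually_ne he
  -- a radius on which `h ∘ ζ` is analytic
  obtain ⟨δ, hδ, Hδ⟩ : ∃ δ > 0, ∀ y : Fin (m + 2) → ℂ, ‖y‖ < δ → AnalyticAt ℂ h (ζ y) := by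
    have tζ : Tendsto ζ (𝓝 0) (𝓝 0) := by
      have := (C.anζ 0 (by simpa using C.pos)).continuousAt.tendsto
      rwa [C.ζ0] at this
    obtain ⟨δ, hδ, H⟩ := Metric.eventually_nhds_iff.mp (tζ.eventually hh.eventually_analyticAt)
    exact ⟨δ, hδ, fun y hy => H (by simpa using hy)⟩
  have tZ : ∀ᶠ z in 𝓝 (0 : Fin (m + 2) → ℂ), ‖Z z‖ < δ := by
    have := C.anZ.continuousAt.tendsto.norm
    rw [C.Z0, norm_zero] at this
    exact this.eventually (eventually_lt_nhds hδ)
  -- the gradient of `A` in the first factor does not vanish identically along the graph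
  have hfreq : ∃ᶠ z in 𝓝 (0 : Fin (m + 2) → ℂ), ∃ l, gradZ A l (z, w₀ + h z • e) ≠ 0 := by
    intro hcon
    apply hnO
    have hd : ∀ᶠ z in 𝓝 (0 : Fin (m + 2) → ℂ), fderiv ℂ h z = 0 := by
      filter_upwards [hcon, tγ.eventually hene, tγ.eventually hAP.eventually_analyticAt,
        hh.eventually_analyticAt, hg.eventually_nhds] with z a1 a2 a3 a4 a5
      push Not at a1
      ext v
      have hs : ∀ i, fderiv ℂ h z (Pi.single i 1) = 0 := by
        intro i
        have := graph_grad a3 a4 a5 (Pi.single i 1)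
        have a6 : fderiv ℂ A (z, w₀ + h z • e) (Pi.single i 1, 0) = 0 := a1 i
        rw [a6, eq_comm, neg_eq_zero, mul_eq_zero] at this
        exact this.resolve_right a2
      rw [← sum_single_smul v]
      simp [hs]
    obtain ⟨r, hr, H⟩ := Metric.eventually_nhds_iff_ball.mp (hd.and hh.eventually_analyticAt)
    have hz : ∀ᶠ z in 𝓝 (0 : Fin (m + 2) → ℂ), h z = 0 := by
      filter_upwards [Metric.ball_mem_nhds 0 hr] with z hz
      rw [← hh0]
      refine (convex_ball (0 : Fin (m + 2) → ℂ) r).is_const_of_fderivWithin_eq_zero (𝕜 := ℂ)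
        (f := h) (fun x hx => (H x hx).2.differentiableAt.differentiableWithinAt)
        (fun x hx => ?_) hz (Metric.mem_ball_self hr)
      rw [fderivWithin_of_isOpen Metric.isOpen_ball hx]
      exact (H x hx).1
    exact (Asymptotics.isBigO_zero _ _).congr' (hz.mono fun z hz => hz.symm) EventuallyEq.rfl
  obtain ⟨z, ⟨l, hl⟩, b1, b2, b3, b4, b5, b6⟩ := (hfreq.and_eventually (tZ.and
    (hh.eventually_analyticAt.and (hg.eventually_nhds.and
    ((tγ.eventually hene).and ((tγ.eventually hco.eventually_nhds).and
      (tγ.eventually hAP.eventually_analyticAt))))))).exists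
  have hE' : ∀ᶠ p in 𝓝 (z, w₀ + h z • e), A p = 0 → ∀ k l i j, leviE A k l i j p = 0 := by
    filter_upwards [b5] with p hp hpA k l i j
    have h1 := hE k l i j _ hp.1
    have h3 := C.eqA _ hp.1
    simp only [hp.2] at h1 h3
    refine h1 ?_
    rw [hpA] at h3
    linear_combination -2 * h3
  have hpar := parallel_near b6 b2 b3 b4 hl hE' k j
  have hc1 := b5.self_of_nhds
  have hc2 : ((ζ (((Z (z, w₀ + h z • e).1, W (z, w₀ + h z • e)) :
      (Fin (m + 2) → ℂ) × (Fin (m + 2) → ℂ)).1),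
      η (Z (z, w₀ + h z • e).1, W (z, w₀ + h z • e))) :
      (Fin (m + 2) → ℂ) × (Fin (m + 2) → ℂ)) = (z, w₀ + h z • e) := hc1.2
  have fin := C.continuation (U := {y | ‖y‖ < b ∧ ‖y.1‖ < δ})
    (G := fun p => gradZ A k p * fderiv ℂ h p.1 (Pi.single j 1) -
        gradZ A j p * fderiv ℂ h p.1 (Pi.single k 1))
    ((isOpen_lt continuous_norm continuous_const).inter
      (isOpen_lt (continuous_fst.norm) continuous_const))
    (by
      rintro y ⟨hy1, hy2⟩ t ht
      have ht' : ‖(t : ℂ)‖ ≤ 1 := by rw [Complex.norm_real, Real.norm_of_nonneg ht.1]; exact ht.2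
      refine ⟨?_, ?_⟩
      · rw [norm_smul]
        exact (mul_le_of_le_one_left (norm_nonneg _) ht').trans_lt hy1
      · rw [Prod.smul_fst, norm_smul]
        exact (mul_le_of_le_one_left (norm_nonneg _) ht').trans_lt hy2)
    (fun y hy => hy.1)
    (by
      rintro y ⟨hy1, hy2⟩
      have a1 := C.anA y hy1
      have a2 : AnalyticAt ℂ (fun p : (Fin (m + 2) → ℂ) × (Fin (m + 2) → ℂ) => fderiv ℂ h p.1)
          (ζ y.1, η y) :=
        AnalyticAt.fun_comp (g := fderiv ℂ h) (f := Prod.fst) (Hδ _ hy2).fderiv analyticAt_fst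
      exact ((analyticAt_gradZ a1 k).mul (AnalyticAt.fp_clm_apply a2 analyticAt_const)).sub
        ((analyticAt_gradZ a1 j).mul (AnalyticAt.fp_clm_apply a2 analyticAt_const)))
    (P := (Z (z, w₀ + h z • e).1, W (z, w₀ + h z • e))) ⟨hc1.1, b1⟩
    (by rw [hc2]; exact b3.self_of_nhds) (by rw [hc2]; exact hpar)
  filter_upwards [C.eventually_coords (lt_min C.pos hδ)] with p hp hpA
  have hlt := lt_min_iff.mp hp.1
  have h3 := C.eqA _ hlt.1
  have h4 := fin _ ⟨hlt.1, (norm_fst_le _).trans_lt hlt.2⟩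
  have h5 : ζ (Z p.1) = p.1 := congrArg Prod.fst hp.2
  simp only [hp.2] at h3 h4
  rw [h5] at h4
  refine h4 ?_
  rw [hpA] at h3
  linear_combination -2 * h3

end

/-! ### The leading term of the first integral -/

section
variable {m : ℕ} {A : (Fin (m + 2) → ℂ) × (Fin (m + 2) → ℂ) → ℂ}
    {Z ζ : (Fin (m + 2) → ℂ) → (Fin (m + 2) → ℂ)}
    {W η : (Fin (m + 2) → ℂ) × (Fin (m + 2) → ℂ) → (Fin (m + 2) → ℂ)} {b : ℝ}

/-- A section `w ↦ (σ w, w)` of the complexified hypersurface through the origin: it solves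
`W (z, w) = i Z z`. -/
theorem ConeChart.exists_section (C : ConeChart A Z ζ W η b) :
    ∃ σ : (Fin (m + 2) → ℂ) → (Fin (m + 2) → ℂ), AnalyticAt ℂ σ 0 ∧ σ 0 = 0 ∧
      (∀ v, fderiv ℂ σ 0 v = -Complex.I • v) ∧
      ∀ᶠ w in 𝓝 (0 : Fin (m + 2) → ℂ), A (σ w, w) = 0 := by
  have hW : AnalyticAt ℂ W 0 := by
    have := C.anW 0 (by simpa using C.pos)
    rwa [Prod.fst_zero, C.ζ0, C.η0] at this
  let f : (Fin (m + 2) → ℂ) × (Fin (m + 2) → ℂ) → (Fin (m + 2) → ℂ) :=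
    fun q => W (q.2, q.1) - Complex.I • Z q.2
  have hdf : HasFDerivAt f (((fderiv ℂ W 0).comp ((ContinuousLinearMap.snd ℂ _ _).prod
      (ContinuousLinearMap.fst ℂ _ _))) - Complex.I • (fderiv ℂ Z 0).comp
        (ContinuousLinearMap.snd ℂ _ _)) ((0, 0) : (Fin (m + 2) → ℂ) × (Fin (m + 2) → ℂ)) := by
    have d1 : HasFDerivAt (fun q : (Fin (m + 2) → ℂ) × (Fin (m + 2) → ℂ) => (q.2, q.1))
      ((ContinuousLinearMap.snd ℂ (Fin (m + 2) → ℂ) (Fin (m + 2) → ℂ)).prod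
      (ContinuousLinearMap.fst ℂ _ _)) (0, 0) := hasFDerivAt_snd.prodMk hasFDerivAt_fst
    have d2 : HasFDerivAt W (fderiv ℂ W 0) ((fun q : (Fin (m + 2) → ℂ) × (Fin (m + 2) → ℂ) =>
      (q.2, q.1)) (0, 0)) := hW.differentiableAt.hasFDerivAt
    have d3 : HasFDerivAt Z (fderiv ℂ Z 0)
      (((0, 0) : (Fin (m + 2) → ℂ) × (Fin (m + 2) → ℂ)).2) := C.anZ.differentiableAt.hasFDerivAt
    exact (d2.comp (0, 0) d1).sub ((d3.comp (0, 0) hasFDerivAt_snd).const_smul Complex.I)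
  have hf : AnalyticAt ℂ f (0, 0) := by
    refine AnalyticAt.sub ?_ ?_
    · exact AnalyticAt.fun_comp (g := W)
        (f := fun q : (Fin (m + 2) → ℂ) × (Fin (m + 2) → ℂ) => (q.2, q.1)) hW
        (analyticAt_snd.prod analyticAt_fst)
    · exact AnalyticAt.fun_const_smul (c := Complex.I) (AnalyticAt.fun_comp (g := Z) (x := ((0, 0) : (Fin (m + 2) → ℂ) × (Fin (m + 2) → ℂ)))
        (f := fun q : (Fin (m + 2) → ℂ) × (Fin (m + 2) → ℂ) => q.2) C.anZ analyticAt_snd)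
  have hf0 : f (0, 0) = 0 := by
    have : W (0, 0) = 0 := C.W0
    simp [f, this, C.Z0]
  obtain ⟨g, hg, hg0, -, hgi⟩ := exists_param_inverse hf
    (ContinuousLinearEquiv.smulLeft (Units.mk0 (-Complex.I) (by simp))) (by
      intro v
      rw [hdf.fderiv]
      simp [C.dZ, C.dW, Units.smul_def])
  rw [hf0] at hg hg0 hgi
  have t : Tendsto (fun z : Fin (m + 2) → ℂ => (z, (0 : Fin (m + 2) → ℂ))) (𝓝 0) (𝓝 (0, 0)) :=
    (continuous_id.prodMk continuous_const).tendsto' _ _ rfl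
  have hσ : AnalyticAt ℂ (fun w => g (w, 0)) 0 :=
    AnalyticAt.fun_comp (g := g) (f := fun z => (z, (0 : Fin (m + 2) → ℂ))) hg
      (analyticAt_id.prod analyticAt_const)
  refine ⟨fun w => g (w, 0), hσ, hg0, fun v => ?_, ?_⟩
  · have d1 : HasFDerivAt (fun w => (w, g (w, 0))) ((ContinuousLinearMap.id ℂ (Fin (m + 2) → ℂ)).prod
      (fderiv ℂ (fun w => g (w, 0)) 0)) 0 :=
      (hasFDerivAt_id _).prodMk hσ.differentiableAt.hasFDerivAt
    have d2 := HasFDerivAt.comp (g := f) (f := fun w => (w, g (w, 0))) 0 (by rw [hg0]; exact hdf) d1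
    have d3 : HasFDerivAt (f ∘ fun w => (w, g (w, 0))) (0 : (Fin (m + 2) → ℂ) →L[ℂ] _) 0 :=
      (hasFDerivAt_const (0 : Fin (m + 2) → ℂ) 0).congr_of_eventuallyEq (t.eventually hgi)
    have d4 := DFunLike.congr_fun (d2.unique d3) v
    simp [C.dZ, C.dW] at d4
    rw [sub_eq_zero] at d4
    conv_rhs => rw [d4]
    rw [smul_smul]; simp
  · have tσ : Tendsto (fun w => ((g (w, 0), w) : (Fin (m + 2) → ℂ) × (Fin (m + 2) → ℂ)))
        (𝓝 0) (𝓝 0) := by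
      have := hσ.continuousAt.tendsto
      simp only [hg0] at this
      exact this.prodMk_nhds tendsto_id
    filter_upwards [t.eventually hgi, tσ.eventually (C.eventually_coords C.pos)] with w h1 h2
    have h3 := C.eqA _ h2.1
    simp only [h2.2] at h3
    have h4 : W (g (w, 0), w) = Complex.I • Z (g (w, 0)) := sub_eq_zero.mp h1
    rw [h3, h4, sqs_smul]
    simp

/-- Second order comparison of two products of functions vanishing at `0`. -/
theorem deriv_mul_eq {a₁ a₂ b₁ b₂ : ℂ} {α₁ α₂ β₁ β₂ : ℂ → ℂ} (h1 : HasDerivAt α₁ a₁ 0)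
    (h2 : HasDerivAt α₂ a₂ 0) (k1 : HasDerivAt β₁ b₁ 0) (k2 : HasDerivAt β₂ b₂ 0)
    (z1 : α₁ 0 = 0) (z2 : α₂ 0 = 0) (y1 : β₁ 0 = 0) (y2 : β₂ 0 = 0)
    (h : ∀ᶠ t in 𝓝 0, α₁ t * β₁ t = α₂ t * β₂ t) : a₁ * b₁ = a₂ * b₂ := by
  rw [hasDerivAt_iff_tendsto_slope] at h1 h2 k1 k2
  refine tendsto_nhds_unique (h1.mul k1) ((h2.mul k2).congr' ?_)
  filter_upwards [h.filter_mono nhdsWithin_le_nhds] with t ht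
  simp only [slope_def_field, z1, z2, y1, y2, sub_zero]
  rw [div_mul_div_comm, div_mul_div_comm, ht]

/-- Along the section `σ` the parallelism of `dh` and `∂_z A` forces the leading part of `h` to be
proportional to that of `A` in `z`. -/
theorem first_integral_jet (hA : AnalyticAt ℂ A 0) (h1 : fderiv ℂ A 0 = 0)
    (h2 : ∀ u v, fderiv ℂ (fderiv ℂ A) 0 u v = (∑ i, u.1 i * v.1 i) + ∑ i, u.2 i * v.2 i)
    {σ : (Fin (m + 2) → ℂ) → (Fin (m + 2) → ℂ)} (hσ : AnalyticAt ℂ σ 0) (hσ0 : σ 0 = 0)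
    (hdσ : ∀ v, fderiv ℂ σ 0 v = -Complex.I • v)
    (hσA : ∀ᶠ w in 𝓝 (0 : Fin (m + 2) → ℂ), A (σ w, w) = 0)
    {h : (Fin (m + 2) → ℂ) → ℂ} (hh : AnalyticAt ℂ h 0) (hh0 : h 0 = 0)
    (hnO : ¬ (h =O[𝓝 0] fun z => ‖z‖ ^ 3))
    (hN : ∀ k j, ∀ᶠ p in 𝓝 (0 : (Fin (m + 2) → ℂ) × (Fin (m + 2) → ℂ)), A p = 0 →
        gradZ A k p * fderiv ℂ h p.1 (Pi.single j 1) -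
          gradZ A j p * fderiv ℂ h p.1 (Pi.single k 1) = 0) :
    fderiv ℂ h 0 = 0 ∧ ∃ l : ℂ, l ≠ 0 ∧
      ∀ u v, fderiv ℂ (fderiv ℂ h) 0 u v = l * ∑ i, u i * v i := by
  have dσ : ∀ v : Fin (m + 2) → ℂ, HasDerivAt (fun t : ℂ => σ (t • v)) (-Complex.I • v) 0 := by
    intro v
    have d1 : HasDerivAt (fun t : ℂ => t • v) v 0 := by
      simpa using (hasDerivAt_id (0 : ℂ)).smul_const v
    have d2 : HasFDerivAt σ (fderiv ℂ σ 0) ((fun t : ℂ => t • v) 0) := by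
      simpa using hσ.differentiableAt.hasFDerivAt
    have := d2.comp_hasDerivAt (0 : ℂ) d1
    rwa [hdσ] at this
  have dα : ∀ v k, HasDerivAt (fun t : ℂ => gradZ A k (σ (t • v), t • v)) (-Complex.I * v k) 0 := by
    intro v k
    have d1 : HasDerivAt (fun t : ℂ => t • v) v 0 := by
      simpa using (hasDerivAt_id (0 : ℂ)).smul_const v
    have d2 := (dσ v).prodMk d1
    have d3 : HasFDerivAt (gradZ A k) ((fderiv ℂ (fderiv ℂ A) 0).flip (Pi.single k 1, 0))
        ((fun t : ℂ => (σ (t • v), t • v)) 0) := by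
      have : (fun t : ℂ => (σ (t • v), t • v)) 0 = 0 := by simp [hσ0]
      rw [this]
      exact hasFDerivAt_gradZ hA k
    refine (d3.comp_hasDerivAt (0 : ℂ) d2).congr_deriv ?_
    rw [ContinuousLinearMap.flip_apply, h2]
    simp [Pi.single_apply]
  have dβ : ∀ v j, HasDerivAt (fun t : ℂ => fderiv ℂ h (σ (t • v)) (Pi.single j 1))
      (-Complex.I * fderiv ℂ (fderiv ℂ h) 0 v (Pi.single j 1)) 0 := by
    intro v j
    have d3 : HasFDerivAt (fun z => fderiv ℂ h z (Pi.single j 1))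
        ((fderiv ℂ (fderiv ℂ h) 0).flip (Pi.single j 1)) ((fun t : ℂ => σ (t • v)) 0) := by
      have : (fun t : ℂ => σ (t • v)) 0 = 0 := by simp [hσ0]
      rw [this]
      exact hasFDerivAt_fderiv_apply hh _
    refine (d3.comp_hasDerivAt (0 : ℂ) (dσ v)).congr_deriv ?_
    rw [ContinuousLinearMap.flip_apply]
    simp
  have α0 : ∀ (v : Fin (m + 2) → ℂ) k, gradZ A k (σ ((0 : ℂ) • v), (0 : ℂ) • v) = 0 := by
    intro v k
    rw [zero_smul, hσ0, gradZ]
    have : ((0, 0) : (Fin (m + 2) → ℂ) × (Fin (m + 2) → ℂ)) = 0 := rfl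
    rw [this, h1]; rfl
  have rel : ∀ v k j, ∀ᶠ t in 𝓝 (0 : ℂ), gradZ A k (σ (t • v), t • v) *
      fderiv ℂ h (σ (t • v)) (Pi.single j 1) = gradZ A j (σ (t • v), t • v) *
      fderiv ℂ h (σ (t • v)) (Pi.single k 1) := by
    intro v k j
    have t1 : Tendsto (fun t : ℂ => t • v) (𝓝 0) (𝓝 0) :=
      (continuous_id.smul continuous_const).tendsto' _ _ (by simp)
    have t2 : Tendsto (fun t : ℂ => ((σ (t • v), t • v) :
        (Fin (m + 2) → ℂ) × (Fin (m + 2) → ℂ))) (𝓝 0) (𝓝 0) := by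
      have := (dσ v).continuousAt.tendsto
      simp only [zero_smul, hσ0] at this
      exact this.prodMk_nhds t1
    filter_upwards [t1.eventually hσA, t2.eventually (hN k j)] with t a1 a2
    exact sub_eq_zero.mp (a2 a1)
  have hd : fderiv ℂ h 0 = 0 := by
    have hs : ∀ j, fderiv ℂ h 0 (Pi.single j 1) = 0 := by
      intro j
      obtain ⟨k, hk⟩ := exists_ne j
      have r := rel (Pi.single k 1) k j
      have d1 := (dα (Pi.single k 1) k).mul (dβ (Pi.single k 1) j)
      have d2 := (dα (Pi.single k 1) j).mul (dβ (Pi.single k 1) k)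
      have := d1.unique (d2.congr_of_eventuallyEq r)
      simp only [α0] at this
      simpa [hσ0, Pi.single_apply, hk.symm] using this
    ext v
    rw [← sum_single_smul v]
    simp [hs]
  refine ⟨hd, ?_⟩
  set B := fderiv ℂ (fderiv ℂ h) 0 with hB
  have key : ∀ v k j, v k * B v (Pi.single j 1) = v j * B v (Pi.single k 1) := by
    intro v k j
    have := deriv_mul_eq (dα v k) (dα v j) (dβ v j) (dβ v k) (α0 v k) (α0 v j)
      (by simp [hσ0, hd]) (by simp [hσ0, hd]) (rel v k j)
    linear_combination -this + (v k * B v (Pi.single j 1) - v j * B v (Pi.single k 1)) *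
      Complex.I_mul_I
  have hoff : ∀ k j, k ≠ j → B (Pi.single k 1) (Pi.single j 1) = 0 := by
    intro k j hkj
    have := key (Pi.single k 1) k j
    simpa [Pi.single_apply, hkj.symm] using this
  have hdiag : ∀ k, B (Pi.single k 1) (Pi.single k 1) = B (Pi.single 0 1) (Pi.single 0 1) := by
    intro k
    by_cases hk : k = 0
    · rw [hk]
    · have := key (Pi.single k 1 + Pi.single 0 1) k 0
      simp only [map_add, _root_.add_apply, hoff k 0 hk, hoff 0 k (Ne.symm hk)] at this
      simpa [Pi.single_apply, hk, Ne.symm hk] using this.symm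
  have hform : ∀ u v, B u v = B (Pi.single 0 1) (Pi.single 0 1) * ∑ i, u i * v i := by
    intro u v
    conv_lhs => rw [← sum_single_smul u, ← sum_single_smul v]
    simp only [map_sum, map_smul, _root_.sum_apply, smul_apply, smul_eq_mul]
    rw [Finset.mul_sum]
    refine Finset.sum_congr rfl fun i _ => ?_
    rw [Finset.sum_eq_single i]
    · rw [hdiag i]; ring
    · intro j _ hj; rw [hoff _ _ hj, mul_zero]
    · simp
  refine ⟨B (Pi.single 0 1) (Pi.single 0 1), fun hz => hnO ?_, hform⟩
  have := taylor_two hh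
  rw [hz] at hform
  simpa [hh0, hd, ← hB, hform] using this

end

/-! ### The first integral as a function of the second variable -/

section
variable {m : ℕ} {A : (Fin (m + 2) → ℂ) × (Fin (m + 2) → ℂ) → ℂ}
    {Z ζ : (Fin (m + 2) → ℂ) → (Fin (m + 2) → ℂ)}
    {W η : (Fin (m + 2) → ℂ) × (Fin (m + 2) → ℂ) → (Fin (m + 2) → ℂ)} {b : ℝ}

/-- On the complexified hypersurface the first integral `h z` is a function of `w` alone. -/
theorem ConeChart.first_integral_eq (C : ConeChart A Z ζ W η b) (hA : AnalyticAt ℂ A 0)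
    (h1 : fderiv ℂ A 0 = 0)
    (h2 : ∀ u v, fderiv ℂ (fderiv ℂ A) 0 u v = (∑ i, u.1 i * v.1 i) + ∑ i, u.2 i * v.2 i)
    {σ : (Fin (m + 2) → ℂ) → (Fin (m + 2) → ℂ)} (hσ : AnalyticAt ℂ σ 0) (hσ0 : σ 0 = 0)
    (hdσ : ∀ v, fderiv ℂ σ 0 v = -Complex.I • v)
    (hσA : ∀ᶠ w in 𝓝 (0 : Fin (m + 2) → ℂ), A (σ w, w) = 0)
    {h : (Fin (m + 2) → ℂ) → ℂ} (hh : AnalyticAt ℂ h 0)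
    (hN : ∀ k j, ∀ᶠ p in 𝓝 (0 : (Fin (m + 2) → ℂ) × (Fin (m + 2) → ℂ)), A p = 0 →
        gradZ A k p * fderiv ℂ h p.1 (Pi.single j 1) -
          gradZ A j p * fderiv ℂ h p.1 (Pi.single k 1) = 0) :
    ∀ᶠ p in 𝓝 (0 : (Fin (m + 2) → ℂ) × (Fin (m + 2) → ℂ)), A p = 0 → h p.1 - h (σ p.2) = 0 := by
  have tΞ : Tendsto (fun y : (Fin (m + 2) → ℂ) × (Fin (m + 2) → ℂ) => (ζ y.1, η y)) (𝓝 0) (𝓝 0) := by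
    have := (C.analyticAt (y := 0) (by simpa using C.pos)).continuousAt.tendsto
    rw [Prod.fst_zero, C.ζ0, C.η0] at this
    exact this
  have tσ : Tendsto σ (𝓝 0) (𝓝 0) := by
    have := hσ.continuousAt.tendsto; rwa [hσ0] at this
  have tf : Tendsto (Prod.fst : (Fin (m + 2) → ℂ) × (Fin (m + 2) → ℂ) → _) (𝓝 0) (𝓝 0) :=
    continuous_fst.tendsto' _ _ rfl
  have ts : Tendsto (Prod.snd : (Fin (m + 2) → ℂ) × (Fin (m + 2) → ℂ) → _) (𝓝 0) (𝓝 0) :=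
    continuous_snd.tendsto' _ _ rfl
  have hGan : ∀ᶠ p in 𝓝 (0 : (Fin (m + 2) → ℂ) × (Fin (m + 2) → ℂ)),
      AnalyticAt ℂ (fun p : (Fin (m + 2) → ℂ) × (Fin (m + 2) → ℂ) => h p.1 - h (σ p.2)) p := by
    filter_upwards [tf.eventually hh.eventually_analyticAt, ts.eventually hσ.eventually_analyticAt,
      ts.eventually (tσ.eventually hh.eventually_analyticAt)] with p a1 a2 a3
    refine AnalyticAt.fun_sub ?_ ?_
    · exact AnalyticAt.fun_comp (g := h) (f := Prod.fst) a1 analyticAt_fst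
    · exact AnalyticAt.fun_comp (g := h) (f := fun p : (Fin (m + 2) → ℂ) × (Fin (m + 2) → ℂ) => σ p.2)
        a3 (AnalyticAt.fun_comp (g := σ) (f := Prod.snd) a2 analyticAt_snd)
  obtain ⟨ε, hε, Hε⟩ := Metric.eventually_nhds_iff.mp (tΞ.eventually hGan)
  simp only [dist_zero_right] at Hε
  -- a base point on the section, where the gradient in the first factor does not vanish
  let v : Fin (m + 2) → ℂ := Pi.single 0 1
  have t1 : Tendsto (fun t : ℂ => t • v) (𝓝[≠] 0) (𝓝 0) :=
    ((continuous_id.smul continuous_const).tendsto' _ _ (by simp)).mono_left nhdsWithin_le_nhds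
  have t2 : Tendsto (fun w : Fin (m + 2) → ℂ => ((σ w, w) :
      (Fin (m + 2) → ℂ) × (Fin (m + 2) → ℂ))) (𝓝 0) (𝓝 0) := tσ.prodMk_nhds tendsto_id
  have hα : ∀ᶠ t in 𝓝[≠] (0 : ℂ), gradZ A 0 (σ (t • v), t • v) ≠ 0 := by
    have d1 : HasDerivAt (fun t : ℂ => t • v) v 0 := by
      simpa using (hasDerivAt_id (0 : ℂ)).smul_const v
    have d2 : HasFDerivAt σ (fderiv ℂ σ 0) ((fun t : ℂ => t • v) 0) := by
      simpa using hσ.differentiableAt.hasFDerivAt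
    have d4 := (d2.comp_hasDerivAt (0 : ℂ) d1).prodMk d1
    have d3 : HasFDerivAt (gradZ A 0) ((fderiv ℂ (fderiv ℂ A) 0).flip (Pi.single 0 1, 0))
        ((fun t : ℂ => (σ (t • v), t • v)) 0) := by
      have : (fun t : ℂ => (σ (t • v), t • v)) 0 = 0 := by simp [hσ0]
      rw [this]
      exact hasFDerivAt_gradZ hA 0
    have d5 := d3.comp_hasDerivAt (0 : ℂ) d4
    refine d5.eventually_ne ?_
    rw [ContinuousLinearMap.flip_apply, h2, hdσ]
    simp [v, Pi.single_apply]
  have hNev : ∀ᶠ p in 𝓝 (0 : (Fin (m + 2) → ℂ) × (Fin (m + 2) → ℂ)), ∀ k j, A p = 0 →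
        gradZ A k p * fderiv ℂ h p.1 (Pi.single j 1) -
          gradZ A j p * fderiv ℂ h p.1 (Pi.single k 1) = 0 := by
    rw [eventually_all]; intro k; rw [eventually_all]; exact hN k
  have hcoll := (t2.eventually ((hA.eventually_analyticAt.and hNev.eventually_nhds).and
    (C.eventually_coords (lt_min C.pos hε)))).and
    (hσA.eventually_nhds.and ((hσ.eventually_analyticAt).and
      (tσ.eventually hh.eventually_analyticAt)))
  obtain ⟨t, hgr, ⟨⟨hAP, hNP⟩, hyb, hyc⟩, hAw, hσw, hhw⟩ := (hα.and (t1.eventually hcoll)).exists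
  set w₁ := t • v with hw₁
  set P : (Fin (m + 2) → ℂ) × (Fin (m + 2) → ℂ) := (σ w₁, w₁) with hP
  have hgr' : ∀ᶠ p in 𝓝 P, gradZ A 0 p ≠ 0 :=
    (analyticAt_gradZ hAP 0).continuousAt.eventually_ne hgr
  have hAn : ∀ᶠ p in 𝓝 P, AnalyticAt ℂ A p := hAP.eventually_analyticAt
  have key : ∀ᶠ p in 𝓝 P, A p = 0 → h p.1 - h (σ p.2) = 0 := by
    have csw : ∀ Q : (Fin (m + 2) → ℂ) × (Fin (m + 2) → ℂ),
        Tendsto (Prod.swap : (Fin (m + 2) → ℂ) × (Fin (m + 2) → ℂ) → _) (𝓝 Q.swap) (𝓝 Q) :=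
      fun Q => continuous_swap.tendsto' _ _ (by simp)
    have dsw : ∀ q : (Fin (m + 2) → ℂ) × (Fin (m + 2) → ℂ), AnalyticAt ℂ A q.swap → ∀ u,
        fderiv ℂ (fun q : (Fin (m + 2) → ℂ) × (Fin (m + 2) → ℂ) => A q.swap) q (0, u) =
          fderiv ℂ A q.swap (u, 0) := by
      intro q hq u
      have d1 : HasFDerivAt (Prod.swap : (Fin (m + 2) → ℂ) × (Fin (m + 2) → ℂ) → _)
        ((ContinuousLinearMap.snd ℂ (Fin (m + 2) → ℂ) (Fin (m + 2) → ℂ)).prod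
        (ContinuousLinearMap.fst ℂ _ _)) q := hasFDerivAt_snd.prodMk hasFDerivAt_fst
      have := (hq.differentiableAt.hasFDerivAt.comp q d1).fderiv
      have e1 : (fun q : (Fin (m + 2) → ℂ) × (Fin (m + 2) → ℂ) => A q.swap) = A ∘ Prod.swap := rfl
      rw [e1, this]; simp
    have asw : ∀ q : (Fin (m + 2) → ℂ) × (Fin (m + 2) → ℂ), AnalyticAt ℂ A q.swap →
        AnalyticAt ℂ (fun q : (Fin (m + 2) → ℂ) × (Fin (m + 2) → ℂ) => A q.swap) q :=
      fun q hq => AnalyticAt.fun_comp (g := A) (f := Prod.swap) hq (analyticAt_snd.prod analyticAt_fst)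
    have hsingle : ∀ (L : (Fin (m + 2) → ℂ) × (Fin (m + 2) → ℂ) →L[ℂ] ℂ) (u : Fin (m + 2) → ℂ),
        L (u, 0) = ∑ i, u i * L (Pi.single i 1, 0) := by
      intro L u
      have : ∀ u, L (u, 0) = (L.comp (ContinuousLinearMap.inl ℂ _ _)) u := fun u => rfl
      simp only [this]
      conv_lhs => rw [← sum_single_smul u]
      simp only [map_sum, map_smul, smul_eq_mul]
    obtain ⟨N, hNn, hc⟩ := fiber_const (A := fun q : (Fin (m + 2) → ℂ) × (Fin (m + 2) → ℂ) => A q.swap)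
      (f := fun q : (Fin (m + 2) → ℂ) × (Fin (m + 2) → ℂ) => h q.2) (P := P.swap)
      (e := Pi.single 0 1) (asw _ (by simpa using hAP))
      (AnalyticAt.fun_comp (g := h) (f := Prod.snd) hhw analyticAt_snd)
      (by rw [dsw _ (by simpa using hAP)]; exact hgr) (by
        have thh : Tendsto (Prod.snd : (Fin (m + 2) → ℂ) × (Fin (m + 2) → ℂ) → _) (𝓝 P.swap)
          (𝓝 (σ w₁)) := continuous_snd.tendsto' _ _ rfl
        filter_upwards [(csw P).eventually hAn, (csw P).eventually hNP, (csw P).eventually hgr',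
          thh.eventually hhw.eventually_analyticAt] with q a1 a2 a3 a4 hqA u hu
        rw [dsw q a1] at hu
        have d1 := (a4.differentiableAt.hasFDerivAt.comp q (hasFDerivAt_snd (𝕜 := ℂ) (p := q))).fderiv
        have e1 : (fun q : (Fin (m + 2) → ℂ) × (Fin (m + 2) → ℂ) => h q.2) = h ∘ Prod.snd := rfl
        rw [e1, d1]
        simp only [ContinuousLinearMap.comp_apply, ContinuousLinearMap.coe_snd']
        rw [hsingle] at hu
        refine mul_left_cancel₀ a3 ?_
        rw [mul_zero]
        conv_lhs => rw [← sum_single_smul u]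
        simp only [map_sum, map_smul, smul_eq_mul, Finset.mul_sum]
        have : ∀ i, gradZ A 0 q.swap * (u i * fderiv ℂ h q.2 (Pi.single i 1)) =
            u i * fderiv ℂ A q.swap (Pi.single i 1, 0) * fderiv ℂ h q.2 (Pi.single 0 1) := by
          intro i
          have := a2 0 i hqA
          simp only [gradZ, Prod.fst_swap] at this ⊢
          linear_combination u i * this
        simp only [this]
        rw [← Finset.sum_mul, hu, zero_mul])
    have ts' : Tendsto (Prod.snd : (Fin (m + 2) → ℂ) × (Fin (m + 2) → ℂ) → _) (𝓝 P) (𝓝 w₁) :=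
      continuous_snd.tendsto' _ _ rfl
    have tN1 : ∀ᶠ p in 𝓝 P, p.swap ∈ N :=
      (continuous_swap.tendsto P).eventually hNn
    have tN2 : ∀ᶠ p in 𝓝 P, (p.2, σ p.2) ∈ N := by
      have hc : ContinuousAt (fun w => (w, σ w)) w₁ := continuousAt_id.prodMk hσw.continuousAt
      exact (hc.tendsto.comp ts').eventually hNn
    filter_upwards [tN1, tN2, ts'.eventually hAw] with p b1 b2 b3 hpA
    exact sub_eq_zero.mpr (hc _ b1 _ b2 rfl (by simpa using hpA) (by simpa using b3))
  have hyc' : ((ζ (((Z P.1, W P) : (Fin (m + 2) → ℂ) × (Fin (m + 2) → ℂ)).1), η (Z P.1, W P)) :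
      (Fin (m + 2) → ℂ) × (Fin (m + 2) → ℂ)) = P := hyc
  have fin := C.continuation (U := {y | ‖y‖ < min b ε})
    (G := fun p : (Fin (m + 2) → ℂ) × (Fin (m + 2) → ℂ) => h p.1 - h (σ p.2))
    (isOpen_lt continuous_norm continuous_const)
    (by
      intro y hy t ht
      simp only [Set.mem_ofPred_eq] at hy ⊢
      rw [norm_smul, Complex.norm_real, Real.norm_of_nonneg ht.1]
      exact (mul_le_of_le_one_left (norm_nonneg _) ht.2).trans_lt hy)
    (fun y hy => (lt_min_iff.mp hy).1) (fun y hy => Hε (lt_min_iff.mp hy).2)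
    (P := (Z P.1, W P)) hyb (by rw [hyc']; exact hAw.self_of_nhds) (by rw [hyc']; exact key)
  filter_upwards [C.eventually_coords (lt_min C.pos hε)] with p hp hpA
  have h3 := C.eqA _ (lt_min_iff.mp hp.1).1
  have h4 := fin _ hp.1
  have h5 : ζ (Z p.1) = p.1 := congrArg Prod.fst hp.2
  have h6 : η (Z p.1, W p) = p.2 := congrArg Prod.snd hp.2
  simp only [hp.2] at h3
  simp only [h5, h6] at h4
  refine h4 ?_
  rw [hpA] at h3
  linear_combination -2 * h3

end

/-! ### The hypersurface inside the zero set of a pluriharmonic function -/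

section
variable {m : ℕ}

/-- The 2-jet at `0` read off an expansion `f = c • sqs + O(3)`. -/
theorem jet_of_isBigO {n : ℕ} {f : (Fin n → ℂ) → ℂ} (hf : AnalyticAt ℂ f 0) {c : ℂ}
    (h : (fun y => f y - c * sqs y) =O[𝓝 0] fun y => ‖y‖ ^ 3) :
    f 0 = 0 ∧ fderiv ℂ f 0 = 0 ∧
      ∀ u v, fderiv ℂ (fderiv ℂ f) 0 u v = 2 * c * ∑ i, u i * v i := by
  have h0 : f 0 = 0 := by
    obtain ⟨C, hC⟩ := h.bound
    have := hC.self_of_nhds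
    simpa [sqs_zero] using this
  have hq : (fun y : Fin n → ℂ => c * sqs y) =O[𝓝 0] fun y => ‖y‖ ^ 2 := by
    refine Asymptotics.IsBigO.of_bound (‖c‖ * n) (Eventually.of_forall fun y => ?_)
    rw [norm_mul, mul_assoc, norm_pow, norm_norm]
    gcongr
    calc ‖sqs y‖ ≤ ∑ i : Fin n, ‖y i ^ 2‖ := norm_sum_le _ _
      _ ≤ ∑ i : Fin n, ‖y‖ ^ 2 := by
          gcongr with i
          rw [norm_pow]
          gcongr
          exact norm_le_pi_norm y i
      _ = n * ‖y‖ ^ 2 := by simp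
  have h1 : fderiv ℂ f 0 = 0 := by
    have : HasFDerivAt f (0 : (Fin n → ℂ) →L[ℂ] ℂ) 0 := by
      rw [hasFDerivAt_iff_isLittleO_nhds_zero]
      simp only [zero_add, h0, sub_zero, zero_apply]
      have a1 := h.trans_isLittleO (Asymptotics.isLittleO_norm_pow_id (E' := Fin n → ℂ) (n := 3)
        (by norm_num))
      have a2 := hq.trans_isLittleO (Asymptotics.isLittleO_norm_pow_id (E' := Fin n → ℂ) (n := 2)
        (by norm_num))
      simpa using a1.add a2
    exact this.fderiv
  refine ⟨h0, h1, fun u v => ?_⟩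
  rw [second_fderiv_of_expansion (Q := fun y => c * sqs y) hf
    (by
      intro t y
      have : t • y = (t : ℂ) • y := by ext i; simp
      simp only [this, sqs_smul, Complex.real_smul]; push_cast; ring)
    (by simpa only [h0, h1, sub_zero, zero_apply] using h), sqs_add]
  ring

theorem expansion_of_jet {n : ℕ} {f : (Fin n → ℂ) → ℂ} (hf : AnalyticAt ℂ f 0) {l : ℂ}
    (h0 : f 0 = 0) (h1 : fderiv ℂ f 0 = 0)
    (h2 : ∀ u v, fderiv ℂ (fderiv ℂ f) 0 u v = l * ∑ i, u i * v i) :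
    (fun y => f y - l / 2 * sqs y) =O[𝓝 0] fun y => ‖y‖ ^ 3 := by
  refine (taylor_two hf).congr_left fun y => ?_
  rw [h0, h1, h2]
  simp only [sqs, sq, zero_apply, smul_eq_mul]
  ring

theorem second_fderiv_comp {n : ℕ} {h : (Fin n → ℂ) → ℂ} {σ : (Fin n → ℂ) → (Fin n → ℂ)}
    (hh : AnalyticAt ℂ h 0) (hσ : AnalyticAt ℂ σ 0) (hσ0 : σ 0 = 0) (h1 : fderiv ℂ h 0 = 0) :
    fderiv ℂ (fun w => h (σ w)) 0 = 0 ∧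
    ∀ u v, fderiv ℂ (fderiv ℂ fun w => h (σ w)) 0 u v =
      fderiv ℂ (fderiv ℂ h) 0 (fderiv ℂ σ 0 u) (fderiv ℂ σ 0 v) := by
  have tσ : Tendsto σ (𝓝 0) (𝓝 0) := by
    have := hσ.continuousAt.tendsto; rwa [hσ0] at this
  have hev : ∀ᶠ w in 𝓝 (0 : Fin n → ℂ), fderiv ℂ (fun w => h (σ w)) w =
      (fderiv ℂ h (σ w)).comp (fderiv ℂ σ w) := by
    filter_upwards [hσ.eventually_analyticAt, tσ.eventually hh.eventually_analyticAt] with w a1 a2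
    exact fderiv_comp w a2.differentiableAt a1.differentiableAt
  refine ⟨by rw [hev.self_of_nhds, hσ0, h1]; simp, fun u v => ?_⟩
  have d1 : HasFDerivAt (fun w => fderiv ℂ h (σ w)) ((fderiv ℂ (fderiv ℂ h) 0).comp (fderiv ℂ σ 0)) 0 := by
    have : HasFDerivAt (fderiv ℂ h) (fderiv ℂ (fderiv ℂ h) 0) (σ 0) := by
      rw [hσ0]; exact hh.fderiv.differentiableAt.hasFDerivAt
    exact this.comp 0 hσ.differentiableAt.hasFDerivAt
  have d2 : HasFDerivAt (fderiv ℂ σ) (fderiv ℂ (fderiv ℂ σ) 0) 0 :=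
    hσ.fderiv.differentiableAt.hasFDerivAt
  have d3 := (d1.clm_comp d2).congr_of_eventuallyEq hev
  rw [d3.fderiv]
  simp [hσ0, h1]

/-- A Levi-flat hypersurface `A (z, z̄) = 0` with leading part `Re (sqs z)` lies in the zero set of
the real part of a holomorphic function with leading part `sqs z`. -/
theorem exists_holomorphic_re {A : (Fin (m + 2) → ℂ) × (Fin (m + 2) → ℂ) → ℂ}
    (hA : AnalyticAt ℂ A 0) (hsym : ∀ P, A (tau P) = star (A P)) (h0 : A 0 = 0)
    (h1 : fderiv ℂ A 0 = 0)
    (h2 : ∀ u v, fderiv ℂ (fderiv ℂ A) 0 u v = (∑ i, u.1 i * v.1 i) + ∑ i, u.2 i * v.2 i)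
    (hL : ∀ᶠ p in 𝓝 (0 : Fin (m + 2) → ℂ), A (p, star p) = 0 →
      (∃ w, fderiv ℂ A (p, star p) (w, star w) ≠ 0) →
      ∀ v, fderiv ℂ A (p, star p) (v, 0) = 0 →
        fderiv ℂ (fderiv ℂ A) (p, star p) (0, star v) (v, 0) = 0) :
    ∃ g : (Fin (m + 2) → ℂ) → ℂ, AnalyticAt ℂ g 0 ∧ g 0 = 0 ∧ fderiv ℂ g 0 = 0 ∧
      (∀ u v, fderiv ℂ (fderiv ℂ g) 0 u v = 2 * ∑ i, u i * v i) ∧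
      ∀ᶠ z in 𝓝 (0 : Fin (m + 2) → ℂ), A (z, star z) = 0 → (g z).re = 0 := by
  obtain ⟨Z, ζ, W, η, b, C⟩ := exists_coneChart hA h0 h1 h2
  obtain ⟨h, hh, hh0, hnO, hN⟩ := C.exists_first_integral hA h2
    (fun k l i j => C.leviE_eq_zero hA hsym h1 h2 hL k l i j)
  obtain ⟨σ, hσ, hσ0, hdσ, hσA⟩ := C.exists_section
  obtain ⟨hh1, l, hl, hh2⟩ := first_integral_jet hA h1 h2 hσ hσ0 hdσ hσA hh hh0 hnO hN
  have heq := C.first_integral_eq hA h1 h2 hσ hσ0 hdσ hσA hh hN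
  have hk : AnalyticAt ℂ (fun w => h (σ w)) 0 :=
    AnalyticAt.fun_comp (g := h) (f := σ) (by rwa [hσ0]) hσ
  obtain ⟨hk1, hk2⟩ := second_fderiv_comp hh hσ hσ0 hh1
  have hkO := expansion_of_jet hk (l := -l) (by rw [hσ0, hh0]) hk1 (by
    intro u v
    rw [hk2, hh2, hdσ, hdσ, Finset.mul_sum, Finset.mul_sum]
    refine Finset.sum_congr rfl fun i _ => ?_
    simp only [Pi.smul_apply, smul_eq_mul]
    linear_combination l * u i * v i * Complex.I_mul_I)
  have hhO := expansion_of_jet hh hh0 hh1 hh2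
  let K : (Fin (m + 2) → ℂ) → ℂ := fun z => star (h (σ (star z)))
  have hK : AnalyticAt ℂ K 0 :=
    AnalyticAt.star_star' (f := fun w => h (σ w)) (a := 0) (by simpa using hk)
  have hl' : star l ≠ 0 := star_ne_zero.mpr hl
  have hKO : (fun y => K y - (-star l / 2) * sqs y) =O[𝓝 0] fun y => ‖y‖ ^ 3 := by
    have tst : Tendsto (star : (Fin (m + 2) → ℂ) → _) (𝓝 0) (𝓝 0) :=
      continuous_star.tendsto' _ _ (by simp)
    have hq : ∀ y : Fin (m + 2) → ℂ, sqs (star y) = star (sqs y) := by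
      intro y; simp [sqs]
    have h5 := (hkO.comp_tendsto tst).norm_left
    refine Asymptotics.IsBigO.of_norm_left (h5.congr (fun y => ?_) fun y => ?_)
    · rw [← norm_star]
      simp only [Function.comp_apply, hq, K]
      congr 1
      simp
    · simp
  let g : (Fin (m + 2) → ℂ) → ℂ := fun z => l⁻¹ * h z - (star l)⁻¹ * K z
  have hg : AnalyticAt ℂ g 0 := (analyticAt_const.fun_mul hh).fun_sub (analyticAt_const.fun_mul hK)
  have hgO : (fun y => g y - 1 * sqs y) =O[𝓝 0] fun y => ‖y‖ ^ 3 := by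
    refine ((hhO.const_mul_left l⁻¹).sub (hKO.const_mul_left (star l)⁻¹)).congr_left fun y => ?_
    simp only [g]
    field_simp
    ring
  obtain ⟨g0, g1, g2⟩ := jet_of_isBigO hg hgO
  refine ⟨g, hg, g0, g1, by simpa using g2, ?_⟩
  filter_upwards [tendsto_antidiag.eventually heq] with z hz hzA
  have h3 : h z = star (K z) := by
    simp only [K, star_star]
    exact sub_eq_zero.mp (hz hzA)
  have h4 : g z = star ((star l)⁻¹ * K z) - (star l)⁻¹ * K z := by
    simp only [g, h3, star_mul', star_inv₀, star_star]
  rw [h4, Complex.sub_re, Complex.star_def, Complex.conj_re, sub_self]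

end

/-! ### Sign of a perturbation of `Re q` -/

section
variable {m : ℕ}

theorem re_sqs_eq {n : ℕ} (y : Fin n → ℂ) :
    (sqs y).re = ∑ i, ((y i).re ^ 2 - (y i).im ^ 2) := by
  simp only [sqs, Complex.re_sum]
  exact Finset.sum_congr rfl fun i _ => by simp [sq]

/-- The region `0 < Re (sqs y)` inside a ball is preconnected: it retracts onto the punctured real
ball, which is connected in dimension at least two. -/
theorem isPreconnected_re_sqs_pos {r : ℝ} :
    IsPreconnected {y : Fin (m + 2) → ℂ | ‖y‖ < r ∧ 0 < (sqs y).re} := by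
  let ρ : ℝ × (Fin (m + 2) → ℝ) → (Fin (m + 2) → ℂ) := fun q i => ((q.1 * q.2 i : ℝ) : ℂ)
  have hρc : Continuous ρ := by
    refine continuous_pi fun i => Complex.continuous_ofReal.comp ?_
    exact continuous_fst.mul ((continuous_apply i).comp continuous_snd)
  have hρn : ∀ q, ‖ρ q‖ = |q.1| * ‖q.2‖ := by
    intro q
    rw [← Real.norm_eq_abs, ← norm_smul]
    simp only [ρ, Pi.norm_def, Complex.nnnorm_real]
    rfl
  have hρq : ∀ q, (sqs (ρ q)).re = ∑ i, (q.1 * q.2 i) ^ 2 := by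
    intro q
    rw [re_sqs_eq]
    simp [ρ]
  set R := Set.image ρ (Set.Ioo 0 r ×ˢ Metric.sphere (0 : Fin (m + 2) → ℝ) 1) with hR
  have hRpre : IsPreconnected R := by
    refine (isPreconnected_Ioo.prod (isPreconnected_sphere ?_ _ _)).image _ hρc.continuousOn
    rw [rank_fun']
    simp
    norm_cast
    omega
  have hRsub : R ⊆ {y : Fin (m + 2) → ℂ | ‖y‖ < r ∧ 0 < (sqs y).re} := by
    rintro _ ⟨⟨s, u⟩, ⟨hs, hu⟩, rfl⟩
    simp only [mem_sphere_zero_iff_norm] at hu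
    refine ⟨?_, ?_⟩
    · rw [hρn, hu, mul_one, abs_of_pos hs.1]; exact hs.2
    · rw [hρq]
      have hu0 : u ≠ 0 := by rintro rfl; simp at hu
      obtain ⟨i, hi⟩ := Function.ne_iff.mp hu0
      refine Finset.sum_pos' (fun i _ => by positivity) ⟨i, Finset.mem_univ i, ?_⟩
      have : s * u i ≠ 0 := mul_ne_zero hs.1.ne' hi
      positivity
  refine isPreconnected_of_forall_pair fun x hx y hy => ?_
  -- each point is joined to the real points by shrinking its imaginary part
  have join : ∀ x : Fin (m + 2) → ℂ, ‖x‖ < r → 0 < (sqs x).re → ∃ T, T ⊆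
      {y : Fin (m + 2) → ℂ | ‖y‖ < r ∧ 0 < (sqs y).re} ∧ x ∈ T ∧ R ⊆ T ∧ IsPreconnected T := by
    intro x hx hq
    let c : ℝ → (Fin (m + 2) → ℂ) := fun t i => ((x i).re : ℂ) + (t * (x i).im : ℝ) * Complex.I
    have hc : Continuous c := by
      refine continuous_pi fun i => ?_
      fun_prop
    have hc1 : c 1 = x := by
      ext i; simp [c, Complex.re_add_im]
    have hS : IsPreconnected (Set.image c (Set.Icc 0 1)) := isPreconnected_Icc.image _ hc.continuousOn
    have hc0 : c 0 ∈ R := by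
      let a : Fin (m + 2) → ℝ := fun i => (x i).re
      have ha : a ≠ 0 := by
        intro h0
        rw [re_sqs_eq] at hq
        have : ∀ i, (x i).re = 0 := fun i => congrFun h0 i
        simp only [this] at hq
        refine absurd hq (not_lt.mpr (Finset.sum_nonpos fun i _ => by nlinarith [sq_nonneg (x i).im]))
      have han : 0 < ‖a‖ := norm_pos_iff.mpr ha
      have har : ‖a‖ < r := by
        refine lt_of_le_of_lt ?_ hx
        refine (pi_norm_le_iff_of_nonneg (norm_nonneg _)).mpr fun i => ?_
        exact (Complex.abs_re_le_norm _).trans (norm_le_pi_norm x i)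
      refine ⟨(‖a‖, ‖a‖⁻¹ • a), ⟨⟨han, har⟩, ?_⟩, ?_⟩
      · rw [mem_sphere_zero_iff_norm, norm_smul, norm_inv, norm_norm, inv_mul_cancel₀ han.ne']
      · ext i
        simp only [ρ, c, Pi.smul_apply, smul_eq_mul]
        rw [mul_inv_cancel_left₀ han.ne']
        simp [a]
    refine ⟨R ∪ Set.image c (Set.Icc 0 1), ?_, ?_, Set.subset_union_left, ?_⟩
    · refine Set.union_subset hRsub ?_
      rintro _ ⟨t, ht, rfl⟩
      have hre : ∀ i, (c t i).re = (x i).re := fun i => by simp [c]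
      have him : ∀ i, (c t i).im = t * (x i).im := fun i => by simp [c]
      have hle : ∀ i, (t * (x i).im) ^ 2 ≤ (x i).im ^ 2 := by
        intro i
        rw [mul_pow]
        exact mul_le_of_le_one_left (sq_nonneg _) (pow_le_one₀ ht.1 ht.2)
      refine ⟨lt_of_le_of_lt ?_ hx, hq.trans_le ?_⟩
      · refine (pi_norm_le_iff_of_nonneg (norm_nonneg _)).mpr fun i => ?_
        refine le_trans ?_ (norm_le_pi_norm x i)
        rw [Complex.norm_def, Complex.norm_def]
        refine Real.sqrt_le_sqrt ?_
        rw [Complex.normSq_apply, Complex.normSq_apply, hre, him]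
        nlinarith [hle i]
      · rw [re_sqs_eq, re_sqs_eq]
        refine Finset.sum_le_sum fun i _ => ?_
        rw [hre, him]
        linarith [hle i]
    · exact Or.inr ⟨1, by simp, hc1⟩
    · exact hRpre.union (c 0) hc0 ⟨0, by simp, rfl⟩ hS
  obtain ⟨T, h1, h2, h3, h4⟩ := join x hx.1 hx.2
  obtain ⟨T', h1', h2', h3b, h4b⟩ := join y hy.1 hy.2
  refine ⟨T ∪ T', Set.union_subset h1 h1', Or.inl h2, Or.inr h2', ?_⟩
  have hr : 0 < r := (norm_nonneg _).trans_lt hx.1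
  have hne : R.Nonempty := by
    refine Set.Nonempty.image _ (Set.Nonempty.prod ⟨r / 2, by constructor <;> linarith⟩ ?_)
    exact NormedSpace.sphere_nonempty.mpr zero_le_one
  obtain ⟨q, hq⟩ := hne
  exact h4.union q (h3 hq) (h3b hq) h4b

/-- `f` has constant sign on the connected region `Re (sqs y) > 0`, and is positive at small real points. -/
theorem pos_of_re_sqs_pos {f : (Fin (m + 2) → ℂ) → ℝ} {r : ℝ} (hr : 0 < r)
    (hc : ContinuousOn f {y | ‖y‖ < r})
    (hO : (fun y => f y - (sqs y).re) =O[𝓝 0] fun y => ‖y‖ ^ 3)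
    (hz : ∀ y, ‖y‖ < r → f y = 0 → (sqs y).re = 0) :
    ∀ y, ‖y‖ < r → 0 < (sqs y).re → 0 < f y := by
  obtain ⟨C, hC, hb⟩ := hO.exists_pos
  let v : ℝ → (Fin (m + 2) → ℂ) := fun t => Pi.single 0 (t : ℂ)
  have hv : ∀ t, ‖v t‖ = |t| := fun t => by
    rw [show ‖v t‖ = ‖(t : ℂ)‖ from
      Pi.norm_single (ι := Fin (m + 2)) (G := fun _ => ℂ) (i := 0) (t : ℂ), Complex.norm_real,
      Real.norm_eq_abs]
  have hq : ∀ t, sqs (v t) = ((t ^ 2 : ℝ) : ℂ) := fun t => by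
    simp only [sqs, v, Pi.single_apply]
    simp
  obtain ⟨r', hr', H⟩ := Metric.eventually_nhds_iff.mp hb.bound
  simp only [dist_zero_right] at H
  obtain ⟨t, ht0, htr, htr', htC⟩ : ∃ t : ℝ, 0 < t ∧ t < r ∧ t < r' ∧ C * t < 1 := by
    refine ⟨min (min (r / 2) (r' / 2)) (2 * C)⁻¹, by positivity, ?_, ?_, ?_⟩
    · exact ((min_le_left _ _).trans (min_le_left _ _)).trans_lt (by linarith)
    · exact ((min_le_left _ _).trans (min_le_right _ _)).trans_lt (by linarith)
    · calc C * min (min (r / 2) (r' / 2)) (2 * C)⁻¹ ≤ C * (2 * C)⁻¹ := by gcongr; exact min_le_right _ _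
        _ < 1 := by field_simp; norm_num
  have hvt : ‖v t‖ = t := by rw [hv, abs_of_pos ht0]
  have hpos : 0 < f (v t) := by
    have := H (y := v t) (by rw [hvt]; exact htr')
    rw [hq, hvt, Complex.ofReal_re, Real.norm_eq_abs, norm_pow, Real.norm_of_nonneg ht0.le] at this
    have h2 := (abs_le.mp this).1
    have h3 : C * t ^ 3 < t ^ 2 := by nlinarith [pow_pos ht0 2]
    linarith
  intro y hy hqy
  by_contra hneg
  push Not at hneg
  have hS := isPreconnected_re_sqs_pos (m := m) (r := r)
  have hsub : {y : Fin (m + 2) → ℂ | ‖y‖ < r ∧ 0 < (sqs y).re} ⊆ {y | ‖y‖ < r} := fun y hy => hy.1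
  obtain ⟨x, hx, hx0⟩ := hS.intermediate_value ⟨hy, hqy⟩
    (show v t ∈ {y : Fin (m + 2) → ℂ | ‖y‖ < r ∧ 0 < (sqs y).re} from
      ⟨by rw [hvt]; exact htr, by rw [hq, Complex.ofReal_re]; positivity⟩)
    (hc.mono hsub) ⟨hneg, hpos.le⟩
  exact hx.2.ne' (hz x hx.1 hx0)

/-- If `f` agrees with `Re (sqs y)` to third order and vanishes only where `Re (sqs y)` does, then
both have the same zeros: `f` has the sign of `Re (sqs y)` off the cone. -/
theorem zero_of_re_sqs_zero {f : (Fin (m + 2) → ℂ) → ℝ} {r : ℝ} (hr : 0 < r)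
    (hc : ContinuousOn f {y | ‖y‖ < r})
    (hO : (fun y => f y - (sqs y).re) =O[𝓝 0] fun y => ‖y‖ ^ 3)
    (hz : ∀ y, ‖y‖ < r → f y = 0 → (sqs y).re = 0) (y : Fin (m + 2) → ℂ) (hy : ‖y‖ < r)
    (hq : (sqs y).re = 0) : f y = 0 := by
  have hpos := pos_of_re_sqs_pos hr hc hO hz
  have hI : ∀ y : Fin (m + 2) → ℂ, ‖Complex.I • y‖ = ‖y‖ := fun y => by
    rw [norm_smul, Complex.norm_I, one_mul]
  have hIq : ∀ y : Fin (m + 2) → ℂ, (sqs (Complex.I • y)).re = -(sqs y).re := fun y => by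
    rw [sqs_smul, Complex.I_sq]; simp
  have hneg : ∀ y, ‖y‖ < r → (sqs y).re < 0 → f y < 0 := by
    have hcI : Continuous fun y : Fin (m + 2) → ℂ => Complex.I • y := continuous_const_smul _
    have := pos_of_re_sqs_pos (f := fun y => -f (Complex.I • y)) hr
      ((hc.comp hcI.continuousOn fun y hy => by
        simp only [Set.mem_ofPred_eq, hI] at hy ⊢; exact hy).neg)
      (by
        have t : Tendsto (fun y : Fin (m + 2) → ℂ => Complex.I • y) (𝓝 0) (𝓝 0) :=
          hcI.tendsto' _ _ (by simp)
        refine (hO.comp_tendsto t).neg_left.congr (fun y => ?_) fun y => ?_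
        · simp only [Function.comp_apply, hIq]; ring
        · simp only [Function.comp_apply, hI])
      (fun y hy h0 => by
        have := hz (Complex.I • y) (by rw [hI]; exact hy) (neg_eq_zero.mp h0)
        rw [hIq] at this
        linarith)
    intro y hy hqy
    have h1 := this (-(Complex.I • y)) (by rw [norm_neg, hI]; exact hy)
      (by rw [sqs_neg, hIq]; linarith)
    have h2 : Complex.I • -(Complex.I • y) = y := by
      rw [smul_neg, smul_smul, Complex.I_mul_I]; simp
    rw [h2] at h1
    linarith
  by_cases hy0 : y = 0
  · obtain ⟨C, hC⟩ := hO.bound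
    have := hC.self_of_nhds
    subst hy0
    simpa [sqs_zero] using this
  -- approach `y` along `y + t ȳ`, where `Re (sqs (y + t ȳ)) = 2 t |y|²`
  let c : ℝ → (Fin (m + 2) → ℂ) := fun t => y + (t : ℂ) • star y
  have hcc : Continuous c := by
    simp only [c]
    exact continuous_const.add (Complex.continuous_ofReal.smul continuous_const)
  have hc0 : c 0 = y := by simp [c]
  have hcq : ∀ t, (sqs (c t)).re = 2 * t * ∑ i, ‖y i‖ ^ 2 := by
    intro t
    simp only [c]
    have h1 : sqs (star y) = star (sqs y) := by simp [sqs]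
    have h2 : ∑ i, y i * ((t : ℂ) • star y) i = ((t * ∑ i, ‖y i‖ ^ 2 : ℝ) : ℂ) := by
      push_cast
      rw [Finset.mul_sum]
      refine Finset.sum_congr rfl fun i _ => ?_
      rw [Pi.smul_apply, Pi.star_apply, smul_eq_mul, Complex.star_def, mul_left_comm, Complex.mul_conj,
        Complex.normSq_eq_norm_sq]
      push_cast; ring
    rw [sqs_add, sqs_smul, h1, h2, Complex.add_re, Complex.add_re, hq, ← Complex.ofReal_pow,
      Complex.re_ofReal_mul, Complex.star_def, Complex.conj_re, hq]
    rw [mul_zero, show ((2 : ℂ) * ((t * ∑ i, ‖y i‖ ^ 2 : ℝ) : ℂ)).re = 2 * (t * ∑ i, ‖y i‖ ^ 2) by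
      rw [show (2 : ℂ) = ((2 : ℝ) : ℂ) by norm_num, ← Complex.ofReal_mul, Complex.ofReal_re]]
    ring
  have hSpos : 0 < ∑ i, ‖y i‖ ^ 2 := by
    obtain ⟨i, hi⟩ := Function.ne_iff.mp hy0
    refine Finset.sum_pos' (fun i _ => by positivity) ⟨i, Finset.mem_univ i, ?_⟩
    have : 0 < ‖y i‖ := norm_pos_iff.mpr hi
    positivity
  have hball : ∀ᶠ t in 𝓝 (0 : ℝ), ‖c t‖ < r := by
    have : Tendsto c (𝓝 0) (𝓝 y) := hcc.tendsto' _ _ hc0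
    exact this.eventually ((isOpen_lt continuous_norm continuous_const).mem_nhds hy)
  have hfc : Tendsto (fun t => f (c t)) (𝓝 0) (𝓝 (f y)) := by
    have h1 : ContinuousAt f y :=
      hc.continuousAt ((isOpen_lt continuous_norm continuous_const).mem_nhds hy)
    exact h1.tendsto.comp (hcc.tendsto' _ _ hc0)
  refine le_antisymm ?_ ?_
  · refine le_of_tendsto (hfc.mono_left (nhdsWithin_le_nhds (s := Set.Iio 0))) ?_
    filter_upwards [hball.filter_mono nhdsWithin_le_nhds, self_mem_nhdsWithin] with t h1 h2
    refine (hneg _ h1 ?_).le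
    rw [hcq]
    have h2' : t < 0 := h2
    nlinarith
  · refine ge_of_tendsto (hfc.mono_left (nhdsWithin_le_nhds (s := Set.Ioi 0))) ?_
    filter_upwards [hball.filter_mono nhdsWithin_le_nhds, self_mem_nhdsWithin] with t h1 h2
    refine (hpos _ h1 ?_).le
    rw [hcq]
    have h2' : 0 < t := h2
    positivity

end

/-! ### The zero set of `F` and conclusion -/

/-- If `F` and `Re g` agree to second order and `{F = 0} ⊆ {Re g = 0}`, then the two germs are
equal: in Morse coordinates for `g` this is `zero_of_re_sqs_zero`. -/
theorem zero_iff_re_zero {m : ℕ} {F : (Fin (m + 2) → ℂ) → ℝ} {g : (Fin (m + 2) → ℂ) → ℂ}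
    (hF : ∀ᶠ z in 𝓝 0, ContinuousAt F z)
    (hFO : (fun z => F z - (sqs z).re) =O[𝓝 0] fun z => ‖z‖ ^ 3)
    (hg : AnalyticAt ℂ g 0) (hg0 : g 0 = 0) (hg1 : fderiv ℂ g 0 = 0)
    (hg2 : ∀ u v, fderiv ℂ (fderiv ℂ g) 0 u v = 2 * ∑ i, u i * v i)
    (hz : ∀ᶠ z in 𝓝 0, F z = 0 → (g z).re = 0) :
    ∀ᶠ z in 𝓝 0, F z = 0 ↔ (g z).re = 0 := by
  obtain ⟨μ, φ, hμ, hφ, hφ0, hdφ, -, hgφ⟩ := exists_morse hg hg0 hg1 two_ne_zero hg2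
  obtain ⟨ι, hι, hι0, hιφ, hφι⟩ := exists_local_inverse hφ
    (ContinuousLinearEquiv.smulLeft (Units.mk0 μ hμ)) (by
      ext1 v
      rw [hdφ]
      simp [Units.smul_def])
  rw [hφ0] at hι hι0 hφι
  have hιt : Tendsto ι (𝓝 0) (𝓝 0) := by
    have := hι.continuousAt.tendsto
    rwa [hι0] at this
  have hφt : Tendsto φ (𝓝 0) (𝓝 0) := by
    have := hφ.continuousAt.tendsto
    rwa [hφ0] at this
  have hgι : ∀ᶠ y in 𝓝 0, g (ι y) = sqs y := by
    filter_upwards [hιt.eventually hgφ, hφι] with y h1 h2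
    rw [h1, h2]
  have hιO : ι =O[𝓝 0] fun y => ‖y‖ := by
    have := hι.differentiableAt.isBigO_sub
    simp only [hι0, sub_zero] at this
    exact this.norm_right
  have hO : (fun y => F (ι y) - (sqs y).re) =O[𝓝 0] fun y => ‖y‖ ^ 3 := by
    have h1 : (fun z => (g z - sqs z).re) =O[𝓝 0] fun z => ‖z‖ ^ 3 := by
      have := expansion_of_jet hg hg0 hg1 hg2
      simp only [div_self (two_ne_zero (α := ℂ)), one_mul] at this
      exact (Asymptotics.IsBigO.of_bound 1 (Eventually.of_forall fun z => by
        simpa using Complex.abs_re_le_norm (g z - sqs z))).trans this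
    have h2 := ((hFO.sub h1).comp_tendsto hιt).trans (hιO.norm_left.pow 3)
    refine h2.congr' ?_ EventuallyEq.rfl
    filter_upwards [hgι] with y hy
    simp only [Function.comp, Complex.sub_re, hy]
    ring
  have hev : ∀ᶠ y in 𝓝 0, ContinuousAt (fun y => F (ι y)) y ∧ (F (ι y) = 0 → (sqs y).re = 0) := by
    filter_upwards [hιt.eventually hF, hι.eventually_analyticAt, hιt.eventually hz, hgι]
      with y h1 h2 h3 h4
    exact ⟨h1.comp h2.continuousAt, fun h => h4 ▸ h3 h⟩
  obtain ⟨r, hr, hb⟩ := Metric.eventually_nhds_iff.mp hev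
  have key := zero_of_re_sqs_zero hr
    (fun y hy => (hb (by simpa using hy)).1.continuousWithinAt) hO
    (fun y hy => (hb (by simpa using hy)).2)
  have hball : ∀ᶠ z in 𝓝 (0 : Fin (m + 2) → ℂ), ‖φ z‖ < r := by
    filter_upwards [hφt.eventually (Metric.ball_mem_nhds 0 hr)] with z h
    simpa using h
  filter_upwards [hz, hgφ, hιφ, hball] with z h1 h2 h3 h4
  refine ⟨h1, fun h => ?_⟩
  have := key (φ z) h4 (h2 ▸ h)
  rwa [h3] at this

/-- **Theorem 2.** Isochore version of Burns–Gong's theorem: a singular Levi-flat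
hypersurface `{Re(z₁² + … + zₙ²) + O(|z|³) = 0}` can be brought, by a volume-preserving
biholomorphism, to the normal form `{Re(ψ(z₁² + … + zₙ²)) = 0}`. -/
theorem stmt_1 (n : ℕ) (hn : 2 ≤ n) (F H : (Fin n → ℂ) → ℝ)
    (hF : AnalyticAt ℝ F 0) (hH : AnalyticAt ℝ H 0)
    -- `F(z) = Re(z₁² + … + zₙ²) + H(z, z̄)` with `H = O(|z|³)`
    (hFeq : ∀ᶠ z in 𝓝 (0 : Fin n → ℂ), F z = (∑ i, (z i) ^ 2).re + H z)
    (hHord : (fun z : Fin n → ℂ => H z) =O[𝓝 0] fun z => ‖z‖ ^ 3)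
    -- `M = {F = 0}` is a singular hypersurface at `0`
    (hF0 : F 0 = 0) (hsing : fderiv ℝ F 0 = 0)
    (hirr : IrreducibleRGerm F)
    (hLF : LeviFlatGerm F) :
    ∃ φ ι : (Fin n → ℂ) → (Fin n → ℂ), IsGermBiholo φ ι ∧ IsVolumePreserving φ ∧
    ∃ ψ : ℂ → ℂ, IsGermAuto ψ ∧
      -- `φ(M) = {Re(ψ(z₁² + … + zₙ²)) = 0}` as germs of sets at `0`
      (∀ᶠ z in 𝓝 (0 : Fin n → ℂ), (F z = 0 ↔ (ψ (∑ i, (φ z i) ^ 2)).re = 0)) := by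
  obtain ⟨m, rfl⟩ : ∃ m, n = m + 2 := ⟨n - 2, by omega⟩
  obtain ⟨A, hA, hsym, hAF⟩ := exists_polarization hF
  have hFO : (fun z => F z - (sqs z).re) =O[𝓝 0] fun z => ‖z‖ ^ 3 := by
    refine hHord.congr' ?_ EventuallyEq.rfl
    filter_upwards [hFeq] with z hz
    rw [hz, sqs]
    ring
  obtain ⟨hA0, hA1, hA2⟩ := polarization_jet hA (by
    refine (hFO.norm_left.congr' ?_ EventuallyEq.rfl).of_norm_left
    filter_upwards [hAF] with z hz
    rw [hz, ← Complex.ofReal_sub, Complex.norm_real])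
  obtain ⟨g, hg, hg0, hg1, hg2, hAg⟩ :=
    exists_holomorphic_re hA hsym hA0 hA1 hA2 (levi_polarized hA hAF hLF)
  have hzero := zero_iff_re_zero (hF.eventually_analyticAt.mono fun z hz => hz.continuousAt)
    hFO hg hg0 hg1 hg2 (by
      filter_upwards [hAF, hAg] with z h1 h2 h
      exact h2 (by rw [h1, h, Complex.ofReal_zero]))
  obtain ⟨φ, ι, ψ, hφ, hι, hφ0, hι0, hιφ, hφι, hdet, hψ, hψ0, hψ1, hgψ⟩ :=
    exists_isochore_morse hg hg0 hg1 two_ne_zero hg2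
  refine ⟨φ, ι, ⟨hφ, hι, hφ0, hι0, hιφ, hφι⟩, hdet, ψ, ⟨hψ, hψ0, hψ1⟩, ?_⟩
  filter_upwards [hzero, hgψ] with z h1 h2
  rw [h1, h2, sqs]
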